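/- Let (R,𝔪) be an analytically unramified Cohen–Macaulay local ring of dimension 2 with infinite residue field and I, J 𝔪-primary ideals. Then the following are equivalent: (1) ē₂(IJ) = 0; (2) the normal joint reduction number of I and J is zero with respect to every good joint reduction, and r̄(I) ≤ 1 and r̄(J) ≤ 1; (3) the bigraded Rees ring R̄(I,J) is Cohen–Macaulay. Moreover, in this case P̄_{I,J}(r,s) = λ(R/(I^r J^s‾)) for all r, s ≥ 0 and P̄_{I,J}(x,y) = P̄_I(x) + e(I|J)·x·y + P̄_J(y). -/

import Mathlib

/-!
Write `F(r, s) = intCl (I ^ r * J ^ s)`, let `P` be the normal Hilbert polynomial of the pair and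
`H = P - λ(R/F)`. All three conditions say that `H` vanishes identically, and the idea is that `H` is
controlled by its second differences.

**Complete reductions.** For general `a₁, a₂ ∈ I` and `b₁, b₂ ∈ J` the parameter ideal
`(a₁ b₂, a₂ b₁)` is a reduction of `I J` (`exists_complete`, `exists_Cpl`). Since `R` is
Cohen–Macaulay of dimension two, all pairs of parameters involved are regular sequences, and
`λ(R/(a₁ F(r, s+1) + b₁ F(r+1, s)))` and `λ(R/((a₁, a₂) F(r+1, s)))` are given by explicit formulas
(`joint_count`, `row_count`). If `λ(R/(a₁, b₁))`, `λ(R/(a₁, a₂))`, `λ(R/(b₁, b₂))` are the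
coefficients of the quadratic part of `P`, then the second differences of `H` are the lengths of
`F(r+1, s+1)/(a₁ F(r, s+1) + b₁ F(r+1, s))`, `F(r+2, s)/(a₁, a₂) F(r+1, s)` and its mirror image. They
are nonnegative and `H` vanishes for large `r, s`, so `0 ≤ H ≤ H 0 0`, where `H 0 0` is the constant
term of `P` (`h_bounds`); this constant term is `ē₂(IJ)` (`HP.e2_eq`). Hence `ē₂(IJ) = 0` if and only
if `F(r+1, s+1) = a₁ F(r, s+1) + b₁ F(r+1, s)` for all `r, s` and the normal reduction numbers of `I`
and `J` with respect to `(a₁, a₂)` and `(b₁, b₂)` are at most one (`H_eq_zero`, `f00_eq_zero`). This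
gives (1) ⇔ (2) and the formulas for `P`.

**Identification of the quadratic part.** Each of these lengths, and also `λ(R/(a₂, b₂))`, is at least the
corresponding coefficient, so it is enough to compare the multiplicity `λ(R/(a₁ b₂, a₂ b₁))` with the coefficient
of the polynomial on the diagonal (`sum_eq`, `coeffs`). This uses analytic unramifiedness, in the
form `intCl (U ^ (n+1)) = U * intCl (U ^ n)` for large `n` and a parameter ideal `U = (c, d)`
(`intCl_pow_stable`), a weak version of Rees' theorem. It rests on two facts. First, in an
analytically unramified ring the ideals `intCl (U ^ n)` are cofinal with the powers of the maximal
ideal (`exists_intCl_pow_le`): the completion is a reduced Noetherian ring, in which the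
intersection of these ideals is zero, and Chevalley's argument applies. Second, the part of the
associated graded ring of the filtration killed modulo `c ^ (n+1)` by a power of `d` is trivial in
degree `n` (`key_mem`): modulo nilpotents, the fractions `x / d ^ n` with `x ∈ intCl (U ^ n)` are
integral over a polynomial ring `k[c/d]`, and a nonzero integral element cannot vanish at all places
at infinity (`eq_zero_of_pole`).

**The Rees ring.** By the conductor argument `reesBar2_noeth` the ring `R̄(I, J)` is Noetherian; it is
graded, so it is Cohen–Macaulay once its localization at the maximal ideal `M`, generated by the
maximal ideal of `R` and the elements of nonzero degree, is (`NGrading.isCMRing`). The elements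
`a₁ t₁`, `b₁ t₂` always form a regular sequence and `M` has height at least four. If the equalities
above hold, then `a₂ t₁ + b₂ t₂ - a₁ b₁` and `a₁ b₂ + a₂ b₁` extend it to a regular sequence of
length four with radical `M` (`Sys.nz3`, `Sys.nz4`, `Sys.le_Q`), which proves (1) ⇒ (3). Conversely,
the equalities hold for large `r` or `s` (`joint_ev`, `row_ev`), and a failing equality of largest
degree produces an element of the socle modulo the first two, respectively three, terms of the
sequence, contradicting Cohen–Macaulayness at `M` (`Sys.joint_of_CM`, `Sys.row_of_CM`).
-/

/-! ### Basic notions: integral closure of ideals, analytic unramifiedness,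
lengths, regular sequences, Cohen-Macaulayness, primary ideals -/

/-- `x` is integral over the ideal `I`: it satisfies an equation
`x^n + a₁ x^(n-1) + ⋯ + aₙ = 0` with `aᵢ ∈ Iⁱ`. -/
def IsIntegralOverIdeal {R : Type*} [CommRing R] (I : Ideal R) (x : R) : Prop :=
  ∃ n : ℕ, 0 < n ∧ ∃ c : ℕ → R, (∀ i, c i ∈ I ^ i) ∧
    x ^ n + ∑ i ∈ Finset.range n, c (i + 1) * x ^ (n - (i + 1)) = 0

/-- The integral closure `\overline{I}` of an ideal `I` (the set of elements integral
over `I` is an ideal, so it coincides with the ideal it spans). -/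
noncomputable def intCl {R : Type*} [CommRing R] (I : Ideal R) : Ideal R :=
  Ideal.span {x | IsIntegralOverIdeal I x}

/-- A local ring is analytically unramified if its `𝔪`-adic completion is reduced. -/
def AnalyticallyUnramified (R : Type*) [CommRing R] [IsLocalRing R] : Prop :=
  IsReduced (AdicCompletion (IsLocalRing.maximalIdeal R) R)

/-- The length `λ(M)` of a module, as the Krull dimension of its lattice of submodules. -/
noncomputable def moduleLength (R M : Type*) [Ring R] [AddCommGroup M] [Module R M] :
    WithBot ℕ∞ :=
  Order.krullDim (Submodule R M)

/-- `f` is a regular sequence on the module `M`. -/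
def IsRegularSeq {R : Type*} (M : Type*) [CommRing R] [AddCommGroup M] [Module R M]
    {n : ℕ} (f : Fin n → R) : Prop :=
  (∀ i : Fin n, ∀ z : M,
      f i • z ∈ Ideal.span (f '' {j | j < i}) • (⊤ : Submodule R M) →
      z ∈ Ideal.span (f '' {j | j < i}) • (⊤ : Submodule R M)) ∧
  Ideal.span (Set.range f) • (⊤ : Submodule R M) ≠ ⊤

/-- A local ring is Cohen-Macaulay if there is a regular sequence of length
`dim` inside the maximal ideal. -/
def IsCMLocalRing (A : Type*) [CommRing A] [IsLocalRing A] : Prop :=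
  ∃ (n : ℕ) (f : Fin n → A), (∀ i, f i ∈ IsLocalRing.maximalIdeal A) ∧
    IsRegularSeq A f ∧ (n : WithBot ℕ∞) = ringKrullDim A

/-- A commutative ring is Cohen-Macaulay if all its localizations at primes are. -/
def IsCMRing (A : Type*) [CommRing A] : Prop :=
  ∀ (P : Ideal A) (_ : P.IsPrime), IsCMLocalRing (Localization.AtPrime P)

/-- An ideal of a local ring is `𝔪`-primary if its radical is the maximal ideal. -/
def IsMPrimary {R : Type*} [CommRing R] [IsLocalRing R] (I : Ideal R) : Prop :=
  I.radical = IsLocalRing.maximalIdeal R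

/-- `I^r J^s` for `r s : ℤ`, with the convention that nonpositive powers give the
unit ideal. -/
noncomputable def IJ {R : Type*} [CommRing R] (I J : Ideal R) (r s : ℤ) : Ideal R :=
  I ^ r.toNat * J ^ s.toNat

/-- `\overline{I^r J^s}` for `r s : ℤ`. -/
noncomputable def IJbar {R : Type*} [CommRing R] (I J : Ideal R) (r s : ℤ) : Ideal R :=
  intCl (IJ I J r s)

/-- A good joint reduction `(a,b)` of the filtration `{\overline{I^r J^s}}`:
a joint reduction such that moreover `(a) ∩ \overline{I^r J^s} = a ⬝ \overline{I^{r-1} J^s}`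
for all `s` and all `r > 0`, and symmetrically for `b`. -/
def IsGoodJointReduction {R : Type*} [CommRing R] (I J : Ideal R) (a b : R) : Prop :=
  a ∈ I ∧ b ∈ J ∧
  (∃ N : ℤ, ∀ r s : ℤ, N ≤ r → N ≤ s →
      IJbar I J r s =
        Ideal.span {a} * IJbar I J (r - 1) s ⊔ Ideal.span {b} * IJbar I J r (s - 1)) ∧
  (∀ r s : ℤ, 0 < r →
      Ideal.span {a} ⊓ IJbar I J r s = Ideal.span {a} * IJbar I J (r - 1) s) ∧
  (∀ r s : ℤ, 0 < s →
      Ideal.span {b} ⊓ IJbar I J r s = Ideal.span {b} * IJbar I J r (s - 1))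
/-! ### Reductions of the filtration `{\overline{I^n}}` and the normal reduction number -/

/-- `K` is a reduction of the filtration `{\overline{I^n}}`. -/
def IsNormalReduction {R : Type*} [CommRing R] (I K : Ideal R) : Prop :=
  K ≤ I ∧ ∃ N : ℕ, ∀ n : ℕ, N ≤ n → K * intCl (I ^ n) = intCl (I ^ (n + 1))

/-- `K` is a minimal reduction of the filtration `{\overline{I^n}}`: a reduction minimal
with respect to inclusion. -/
def IsMinimalNormalReduction {R : Type*} [CommRing R] (I K : Ideal R) : Prop :=
  IsNormalReduction I K ∧ ∀ K' : Ideal R, K' ≤ K → IsNormalReduction I K' → K' = K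

/-- The normal reduction number of `I` is at most `m`: for some minimal reduction `K` of
`{\overline{I^n}}` one has `\overline{I^n} = K \overline{I^{n-1}}` for all `n > m`. -/
def NormalReductionNumberLE {R : Type*} [CommRing R] (I : Ideal R) (m : ℕ) : Prop :=
  ∃ K : Ideal R, IsMinimalNormalReduction I K ∧
    ∀ n : ℕ, m < n → intCl (I ^ n) = K * intCl (I ^ (n - 1))
/-! ### The (bi)graded Rees rings of the filtrations `{\overline{I^n}}` and
`{\overline{I^r J^s}}` -/

/-- the polynomial ring `R[t]`. -/
abbrev Amb1 (R : Type*) [CommRing R] := AddMonoidAlgebra R ℕ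

/-- the polynomial ring `R[t₁,t₂]`. -/
abbrev Amb2 (R : Type*) [CommRing R] := AddMonoidAlgebra R (ℕ × ℕ)

/-- the Rees ring `𝓡(I) = ⊕_{n ≥ 0} I^n t^n`. -/
noncomputable def rees1 {R : Type*} [CommRing R] (I : Ideal R) : Subalgebra R (Amb1 R) :=
  Algebra.adjoin R {x | ∃ a ∈ I, x = AddMonoidAlgebra.single 1 a}

/-- the Rees ring `\overline{𝓡}(I) = ⊕_{n ≥ 0} \overline{I^n} t^n` of the filtration
`{\overline{I^n}}`: by the theorem on integral closures of graded rings it is the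
integral closure of `𝓡(I)` in `R[t]`. -/
noncomputable def reesBar1 {R : Type*} [CommRing R] (I : Ideal R) : Subalgebra R (Amb1 R) :=
  (integralClosure (rees1 I) (Amb1 R)).restrictScalars R

/-- the bigraded Rees ring `𝓡(I,J) = ⊕_{r,s ≥ 0} I^r J^s t₁^r t₂^s`. -/
noncomputable def rees2 {R : Type*} [CommRing R] (I J : Ideal R) : Subalgebra R (Amb2 R) :=
  Algebra.adjoin R
    ({x | ∃ a ∈ I, x = AddMonoidAlgebra.single (1, 0) a} ∪
      {x | ∃ b ∈ J, x = AddMonoidAlgebra.single (0, 1) b})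

/-- the bigraded Rees ring `\overline{𝓡}(I,J) = ⊕_{r,s ≥ 0} \overline{I^r J^s} t₁^r t₂^s`
of the filtration `{\overline{I^r J^s}}`: the integral closure of `𝓡(I,J)` in
`R[t₁,t₂]`. -/
noncomputable def reesBar2 {R : Type*} [CommRing R] (I J : Ideal R) :
    Subalgebra R (Amb2 R) :=
  (integralClosure (rees2 I J) (Amb2 R)).restrictScalars R

set_option linter.unusedSectionVars false
set_option linter.style.haveILetI false

/-! ### Integral closure of ideals via reductions -/

/-- `𝔞` is a reduction of `𝔟`: `𝔞 ≤ 𝔟` and `𝔟 ^ (N + 1) = 𝔞 𝔟 ^ N` for some `N`. -/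
def Red {R : Type*} [CommRing R] (𝔞 𝔟 : Ideal R) : Prop :=
  𝔞 ≤ 𝔟 ∧ ∃ N : ℕ, 𝔟 ^ (N + 1) ≤ 𝔞 * 𝔟 ^ N

section RedSection

variable {R : Type*} [CommRing R]

lemma Red.refl (𝔞 : Ideal R) : Red 𝔞 𝔞 := ⟨le_rfl, 0, by simp⟩

lemma Red.pow_le {𝔞 𝔟 : Ideal R} {N : ℕ} (h : 𝔟 ^ (N + 1) ≤ 𝔞 * 𝔟 ^ N) (n : ℕ) :
    𝔟 ^ (N + n) ≤ 𝔞 ^ n * 𝔟 ^ N := by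
  induction n with
  | zero => simp
  | succ n ih =>
    calc 𝔟 ^ (N + (n + 1)) = 𝔟 * 𝔟 ^ (N + n) := by ring
      _ ≤ 𝔟 * (𝔞 ^ n * 𝔟 ^ N) := by gcongr
      _ = 𝔞 ^ n * 𝔟 ^ (N + 1) := by ring
      _ ≤ 𝔞 ^ n * (𝔞 * 𝔟 ^ N) := by gcongr
      _ = _ := by ring

lemma Red.trans {𝔞 𝔟 𝔠 : Ideal R} (h₁ : Red 𝔞 𝔟) (h₂ : Red 𝔟 𝔠) : Red 𝔞 𝔠 := by
  obtain ⟨hab, N, hN⟩ := h₁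
  obtain ⟨hbc, M, hM⟩ := h₂
  refine ⟨hab.trans hbc, M + N, ?_⟩
  calc 𝔠 ^ (M + N + 1) = 𝔠 ^ (M + (N + 1)) := by ring_nf
    _ ≤ 𝔟 ^ (N + 1) * 𝔠 ^ M := Red.pow_le hM _
    _ ≤ (𝔞 * 𝔟 ^ N) * 𝔠 ^ M := by gcongr
    _ ≤ (𝔞 * 𝔠 ^ N) * 𝔠 ^ M := by gcongr
    _ = _ := by ring

lemma Red.mul {𝔞 𝔟 𝔞' 𝔟' : Ideal R} (h₁ : Red 𝔞 𝔟) (h₂ : Red 𝔞' 𝔟') :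
    Red (𝔞 * 𝔞') (𝔟 * 𝔟') := by
  obtain ⟨hab, N, hN⟩ := h₁
  obtain ⟨hab', M, hM⟩ := h₂
  refine ⟨Ideal.mul_mono hab hab', N + M, ?_⟩
  have e1 : 𝔟 ^ (N + M + 1) ≤ 𝔞 * 𝔟 ^ (N + M) := by
    calc 𝔟 ^ (N + M + 1) = 𝔟 ^ (N + 1) * 𝔟 ^ M := by ring
      _ ≤ 𝔞 * 𝔟 ^ N * 𝔟 ^ M := by gcongr
      _ = _ := by ring
  have e2 : 𝔟' ^ (N + M + 1) ≤ 𝔞' * 𝔟' ^ (N + M) := by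
    calc 𝔟' ^ (N + M + 1) = 𝔟' ^ (M + 1) * 𝔟' ^ N := by ring
      _ ≤ 𝔞' * 𝔟' ^ M * 𝔟' ^ N := by gcongr
      _ = _ := by ring
  calc (𝔟 * 𝔟') ^ (N + M + 1) = 𝔟 ^ (N + M + 1) * 𝔟' ^ (N + M + 1) := mul_pow _ _ _
    _ ≤ (𝔞 * 𝔟 ^ (N + M)) * (𝔞' * 𝔟' ^ (N + M)) := Ideal.mul_mono e1 e2
    _ = _ := by rw [mul_pow]; ring

lemma Red.one : Red (1 : Ideal R) 1 := Red.refl _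

lemma Red.pow {𝔞 𝔟 : Ideal R} (h : Red 𝔞 𝔟) (n : ℕ) : Red (𝔞 ^ n) (𝔟 ^ n) := by
  induction n with
  | zero => simpa using Red.one
  | succ n ih => rw [pow_succ, pow_succ]; exact ih.mul h

/-- `x` is integral over `𝔞` as soon as `x ^ (n + 1) ∈ 𝔞 (𝔞 + (x)) ^ n`. -/
lemma Red.of_pow_mem {𝔞 : Ideal R} {x : R} {n : ℕ}
    (h : x ^ (n + 1) ∈ 𝔞 * (𝔞 ⊔ Ideal.span {x}) ^ n) : Red 𝔞 (𝔞 ⊔ Ideal.span {x}) := by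
  refine ⟨le_sup_left, n, ?_⟩
  have key : ∀ k, (𝔞 ⊔ Ideal.span {x}) ^ (k + 1) ≤
      𝔞 * (𝔞 ⊔ Ideal.span {x}) ^ k ⊔ Ideal.span {x ^ (k + 1)} := by
    intro k
    induction k with
    | zero => simp
    | succ k ih =>
      calc (𝔞 ⊔ Ideal.span {x}) ^ (k + 1 + 1)
          = (𝔞 ⊔ Ideal.span {x}) * (𝔞 ⊔ Ideal.span {x}) ^ (k + 1) := by ring
        _ = 𝔞 * (𝔞 ⊔ Ideal.span {x}) ^ (k + 1) ⊔
              Ideal.span {x} * (𝔞 ⊔ Ideal.span {x}) ^ (k + 1) := Ideal.sup_mul _ _ _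
        _ ≤ _ := by
          refine sup_le le_sup_left ?_
          refine (Ideal.mul_mono_right ih).trans ?_
          rw [Ideal.mul_sup]
          refine sup_le ?_ ?_
          · refine le_trans ?_ le_sup_left
            calc Ideal.span {x} * (𝔞 * (𝔞 ⊔ Ideal.span {x}) ^ k)
                = 𝔞 * (Ideal.span {x} * (𝔞 ⊔ Ideal.span {x}) ^ k) := by ring
              _ ≤ 𝔞 * ((𝔞 ⊔ Ideal.span {x}) * (𝔞 ⊔ Ideal.span {x}) ^ k) := by
                  gcongr; exact le_sup_right
              _ = _ := by ring
          · refine le_trans (le_of_eq ?_) le_sup_right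
            rw [Ideal.span_singleton_mul_span_singleton]; ring_nf
  refine (key n).trans (sup_le le_rfl ?_)
  rwa [Ideal.span_singleton_le_iff_mem]

lemma IsIntegralOverIdeal.red {𝔞 : Ideal R} {x : R} (h : IsIntegralOverIdeal 𝔞 x) :
    Red 𝔞 (𝔞 ⊔ Ideal.span {x}) := by
  obtain ⟨n, hn, c, hc, e⟩ := h
  obtain ⟨k, rfl⟩ : ∃ k, n = k + 1 := ⟨n - 1, by omega⟩
  refine Red.of_pow_mem (n := k) ?_
  rw [eq_neg_of_add_eq_zero_left e]
  refine neg_mem (Ideal.sum_mem _ fun i hi => ?_)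
  have hi := Finset.mem_range.1 hi
  have h1 : c (i + 1) * x ^ (k + 1 - (i + 1)) ∈
      𝔞 ^ (i + 1) * (𝔞 ⊔ Ideal.span {x}) ^ (k - i) := by
    refine Ideal.mul_mem_mul (hc _) ?_
    rw [show k + 1 - (i + 1) = k - i by omega]
    exact Ideal.pow_mem_pow (le_sup_right (a := 𝔞) (Ideal.mem_span_singleton_self x)) _
  refine (?_ : 𝔞 ^ (i + 1) * (𝔞 ⊔ Ideal.span {x}) ^ (k - i) ≤ _) h1
  calc 𝔞 ^ (i + 1) * (𝔞 ⊔ Ideal.span {x}) ^ (k - i)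
      = 𝔞 * (𝔞 ^ i * (𝔞 ⊔ Ideal.span {x}) ^ (k - i)) := by ring
    _ ≤ 𝔞 * ((𝔞 ⊔ Ideal.span {x}) ^ i * (𝔞 ⊔ Ideal.span {x}) ^ (k - i)) := by
        gcongr; exact le_sup_left
    _ = _ := by rw [← pow_add, show i + (k - i) = k by omega]

/-- The determinant trick. -/
lemma integral_of_mul_le {𝔞 Y : Ideal R} (hY : Y.FG) {x : R}
    (h : Ideal.span {x} * Y ≤ 𝔞 * Y) :
    ∃ n, ∃ c : ℕ → R, (∀ i, c i ∈ 𝔞 ^ i) ∧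
      ∀ y ∈ Y, (x ^ n + ∑ i ∈ Finset.range n, c (i + 1) * x ^ (n - (i + 1))) * y = 0 := by
  have : Module.Finite R Y := Module.Finite.iff_fg.2 hY
  let f : Y →ₗ[R] Y := LinearMap.lsmul R Y x
  have hf : LinearMap.range f ≤ 𝔞 • (⊤ : Submodule R Y) := by
    rintro _ ⟨y, rfl⟩
    have h1 : x * (y : R) ∈ 𝔞 * Y := h (Ideal.mul_mem_mul (Ideal.mem_span_singleton_self x) y.2)
    have h2 : (𝔞 • (⊤ : Submodule R Y)).map Y.subtype = 𝔞 * Y := by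
      rw [Submodule.map_smul'']; simp
    rw [← h2] at h1
    obtain ⟨w, hw, e⟩ := h1
    have : w = f y := Subtype.ext (by simpa [f] using e)
    exact this ▸ hw
  obtain ⟨p, hm, -, hp, hz⟩ :=
    LinearMap.exists_monic_and_natDegree_eq_and_coeff_mem_pow_and_aeval_eq_zero R f 𝔞 hf
  refine ⟨p.natDegree, fun i => if i ≤ p.natDegree then p.coeff (p.natDegree - i) else 0, ?_, ?_⟩
  · intro i
    dsimp only
    split_ifs with hi
    · have := hp (p.natDegree - i)
      rwa [show p.natDegree - (p.natDegree - i) = i by omega] at this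
    · exact zero_mem _
  · intro y hy
    have h1 : (Polynomial.aeval f p) ⟨y, hy⟩ = 0 := by rw [hz]; rfl
    have h2 : ∀ q : Polynomial R, ((Polynomial.aeval f q) ⟨y, hy⟩ : Y) = q.eval x • (⟨y, hy⟩ : Y) := by
      intro q
      have : f = algebraMap R (Module.End R Y) x := by ext z; simp [f]
      rw [this, Polynomial.aeval_algebraMap_apply, Polynomial.aeval_def, Polynomial.eval₂_eq_eval_map]
      simp
    rw [h2] at h1
    have h3 : p.eval x * y = 0 := by simpa using congrArg Subtype.val h1
    refine Eq.trans ?_ h3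
    congr 1
    rw [Polynomial.eval_eq_sum_range, Finset.sum_range_succ, hm.coeff_natDegree, one_mul, add_comm]
    congr 1
    rw [← Finset.sum_range_reflect]
    refine Finset.sum_congr rfl fun i hi => ?_
    have hi := Finset.mem_range.1 hi
    dsimp only
    rw [if_pos (by omega)]
    congr 2 <;> omega

end RedSection

section NoethA

variable {R : Type*} [CommRing R] [IsNoetherianRing R]

lemma Red.isIntegral {𝔞 𝔟 : Ideal R} (h : Red 𝔞 𝔟) {x : R} (hx : x ∈ 𝔟) :
    IsIntegralOverIdeal 𝔞 x := by
  obtain ⟨-, N, hN⟩ := h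
  have h1 : Ideal.span {x} * 𝔟 ^ N ≤ 𝔞 * 𝔟 ^ N := by
    refine le_trans ?_ hN
    rw [pow_succ']
    exact Ideal.mul_mono_left ((Ideal.span_singleton_le_iff_mem _).2 hx)
  obtain ⟨n, c, hc, e⟩ := integral_of_mul_le (IsNoetherian.noetherian _) h1
  have e1 := e (x ^ N) (Ideal.pow_mem_pow hx N)
  refine ⟨n + N + 1, by omega, fun i => if i ≤ n then c i else 0, ?_, ?_⟩
  · intro i; dsimp only; split_ifs
    · exact hc i
    · exact zero_mem _
  · have h2 : ∀ i ∈ Finset.range (n + N + 1), i ∉ Finset.range n →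
        (if i + 1 ≤ n then c (i + 1) else 0) * x ^ (n + N + 1 - (i + 1)) = 0 := by
      intro i _ hi
      rw [Finset.mem_range] at hi
      rw [if_neg (by omega), zero_mul]
    rw [← Finset.sum_subset (Finset.range_subset_range.2 (by omega)) h2]
    have h3 : ∀ i ∈ Finset.range n, (if i + 1 ≤ n then c (i + 1) else 0) * x ^ (n + N + 1 - (i + 1))
        = c (i + 1) * x ^ (n - (i + 1)) * x ^ (N + 1) := by
      intro i hi
      have hi := Finset.mem_range.1 hi
      rw [if_pos (by omega), mul_assoc, ← pow_add]
      congr 2; omega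
    rw [Finset.sum_congr rfl h3, ← Finset.sum_mul]
    linear_combination x * e1

lemma Red.sup_of_integral {𝔞 : Ideal R} : ∀ s : Finset R, (∀ x ∈ s, IsIntegralOverIdeal 𝔞 x) →
    Red 𝔞 (𝔞 ⊔ Ideal.span (s : Set R)) := by
  classical
  intro s
  induction s using Finset.induction_on with
  | empty => intro _; simpa using Red.refl 𝔞
  | insert x s hx ih =>
    intro h
    have h1 := ih fun y hy => h y (Finset.mem_insert_of_mem hy)
    obtain ⟨n, hn, c, hc, e⟩ := h x (Finset.mem_insert_self _ _)
    have h2 : IsIntegralOverIdeal (𝔞 ⊔ Ideal.span (s : Set R)) x :=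
      ⟨n, hn, c, fun i => Ideal.pow_right_mono le_sup_left i (hc i), e⟩
    have h3 := h1.trans h2.red
    rwa [sup_assoc, ← Ideal.span_union, Set.union_comm, Set.singleton_union,
      ← Finset.coe_insert] at h3

lemma red_intCl (𝔞 : Ideal R) : Red 𝔞 (intCl 𝔞) := by
  obtain ⟨s, hs, e⟩ := (Submodule.fg_span_iff_fg_span_finset_subset
    {x : R | IsIntegralOverIdeal 𝔞 x}).1 (IsNoetherian.noetherian (R := R) (M := R) _)
  have h1 := Red.sup_of_integral s (𝔞 := 𝔞) fun x hx => hs hx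
  have h2 : 𝔞 ≤ intCl 𝔞 := fun x hx => Ideal.subset_span (Red.isIntegral (Red.refl 𝔞) hx)
  have h3 : 𝔞 ⊔ Ideal.span (s : Set R) = intCl 𝔞 := by
    have : Ideal.span (s : Set R) = intCl 𝔞 := e.symm
    rw [this]; exact sup_eq_right.2 h2
  rwa [h3] at h1

lemma mem_intCl {𝔞 : Ideal R} {x : R} : x ∈ intCl 𝔞 ↔ IsIntegralOverIdeal 𝔞 x :=
  ⟨fun h => (red_intCl 𝔞).isIntegral h, fun h => Ideal.subset_span h⟩

lemma Red.le_intCl {𝔞 𝔟 : Ideal R} (h : Red 𝔞 𝔟) : 𝔟 ≤ intCl 𝔞 :=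
  fun _ hx => mem_intCl.2 (h.isIntegral hx)

lemma le_intCl (𝔞 : Ideal R) : 𝔞 ≤ intCl 𝔞 := (red_intCl 𝔞).1

lemma intCl_mono {𝔞 𝔟 : Ideal R} (h : 𝔞 ≤ 𝔟) : intCl 𝔞 ≤ intCl 𝔟 := by
  refine Ideal.span_mono ?_
  rintro x ⟨n, hn, c, hc, e⟩
  exact ⟨n, hn, c, fun i => Ideal.pow_right_mono h i (hc i), e⟩

lemma intCl_idem (𝔞 : Ideal R) : intCl (intCl 𝔞) = intCl 𝔞 :=
  le_antisymm ((red_intCl 𝔞).trans (red_intCl _)).le_intCl (le_intCl _)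

lemma intCl_le_of_le {𝔞 𝔟 : Ideal R} (h : 𝔞 ≤ intCl 𝔟) : intCl 𝔞 ≤ intCl 𝔟 :=
  (intCl_mono h).trans (intCl_idem 𝔟).le

lemma intCl_mul_le (𝔞 𝔟 : Ideal R) : intCl 𝔞 * intCl 𝔟 ≤ intCl (𝔞 * 𝔟) :=
  ((red_intCl 𝔞).mul (red_intCl 𝔟)).le_intCl

lemma intCl_pow_le (𝔞 : Ideal R) (n : ℕ) : (intCl 𝔞) ^ n ≤ intCl (𝔞 ^ n) :=
  ((red_intCl 𝔞).pow n).le_intCl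

lemma intCl_top : intCl (⊤ : Ideal R) = ⊤ := top_le_iff.1 (le_intCl _)

lemma mem_intCl_of_pow_mem {𝔞 : Ideal R} {x : R} {n : ℕ}
    (h : x ^ (n + 1) ∈ 𝔞 * (𝔞 ⊔ Ideal.span {x}) ^ n) : x ∈ intCl 𝔞 :=
  (Red.of_pow_mem h).le_intCl (le_sup_right (a := 𝔞) (Ideal.mem_span_singleton_self x))

lemma exists_pow_mem_of_mem_intCl {𝔞 : Ideal R} {x : R} (h : x ∈ intCl 𝔞) :
    ∃ n, x ^ (n + 1) ∈ 𝔞 * (𝔞 ⊔ Ideal.span {x}) ^ n := by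
  obtain ⟨-, N, hN⟩ := (mem_intCl.1 h).red
  exact ⟨N, hN (Ideal.pow_mem_pow (le_sup_right (a := 𝔞) (Ideal.mem_span_singleton_self x)) _)⟩

lemma mem_intCl_of_pow {𝔞 : Ideal R} {x : R} {t : ℕ} (ht : 0 < t)
    (h : x ^ t ∈ intCl (𝔞 ^ t)) : x ∈ intCl 𝔞 := by
  obtain ⟨n, hn⟩ := exists_pow_mem_of_mem_intCl h
  obtain ⟨k, rfl⟩ : ∃ k, t = k + 1 := ⟨t - 1, by omega⟩
  refine mem_intCl_of_pow_mem (n := k + (k + 1) * n) ?_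
  rw [← pow_mul] at hn
  rw [show k + (k + 1) * n + 1 = (k + 1) * (n + 1) by ring]
  refine (?_ : 𝔞 ^ (k + 1) * (𝔞 ^ (k + 1) ⊔ Ideal.span {x ^ (k + 1)}) ^ n ≤ _) hn
  have h1 : 𝔞 ^ (k + 1) ⊔ Ideal.span {x ^ (k + 1)} ≤ (𝔞 ⊔ Ideal.span {x}) ^ (k + 1) := by
    refine sup_le (Ideal.pow_right_mono le_sup_left _) ?_
    rw [← Ideal.span_singleton_pow]
    exact Ideal.pow_right_mono le_sup_right _
  calc 𝔞 ^ (k + 1) * (𝔞 ^ (k + 1) ⊔ Ideal.span {x ^ (k + 1)}) ^ n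
      ≤ 𝔞 ^ (k + 1) * ((𝔞 ⊔ Ideal.span {x}) ^ (k + 1)) ^ n := by gcongr
    _ = 𝔞 * (𝔞 ^ k * ((𝔞 ⊔ Ideal.span {x}) ^ (k + 1)) ^ n) := by ring
    _ ≤ 𝔞 * ((𝔞 ⊔ Ideal.span {x}) ^ k * ((𝔞 ⊔ Ideal.span {x}) ^ (k + 1)) ^ n) := by
        gcongr; exact le_sup_left
    _ = _ := by rw [← pow_mul, ← pow_add]

/-- Cancellation of an ideal containing a nonzerodivisor under integral closure. -/
lemma mem_intCl_of_mul_le {𝔞 Y : Ideal R} {x y z : R} (hy : y ∈ Y) (hy0 : y ∈ nonZeroDivisors R)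
    (hz : z ∈ 𝔞) (hz0 : z ∈ nonZeroDivisors R)
    (h : Ideal.span {x} * Y ≤ intCl (𝔞 * Y)) : x ∈ intCl 𝔞 := by
  obtain ⟨h0, N, hN⟩ := red_intCl (𝔞 * Y)
  have h1 : Ideal.span {x} * (Y * intCl (𝔞 * Y) ^ N) ≤ 𝔞 * (Y * intCl (𝔞 * Y) ^ N) := by
    calc Ideal.span {x} * (Y * intCl (𝔞 * Y) ^ N)
        = (Ideal.span {x} * Y) * intCl (𝔞 * Y) ^ N := by ring
      _ ≤ intCl (𝔞 * Y) * intCl (𝔞 * Y) ^ N := by gcongr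
      _ = intCl (𝔞 * Y) ^ (N + 1) := by ring
      _ ≤ _ := hN
      _ = _ := by ring
  obtain ⟨n, c, hc, e⟩ := integral_of_mul_le (IsNoetherian.noetherian _) h1
  have hm : y * (z * y) ^ N ∈ Y * intCl (𝔞 * Y) ^ N :=
    Ideal.mul_mem_mul hy (Ideal.pow_mem_pow (h0 (Ideal.mul_mem_mul hz hy)) N)
  have e1 := e _ hm
  have hnz : y * (z * y) ^ N ∈ nonZeroDivisors R :=
    mul_mem hy0 (pow_mem (mul_mem hz0 hy0) N)
  have e2 := (mul_right_mem_nonZeroDivisors_eq_zero_iff hnz).1 e1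
  rcases Nat.eq_zero_or_pos n with rfl | hn
  · have : (1 : R) = 0 := by simpa using e2
    rw [show x = 0 by rw [← mul_one x, this, mul_zero]]; exact zero_mem _
  · exact mem_intCl.2 ⟨n, hn, c, hc, e2⟩

lemma IsIntegralOverIdeal.map {R S : Type*} [CommRing R] [CommRing S] (f : R →+* S)
    {𝔞 : Ideal R} {x : R} (h : IsIntegralOverIdeal 𝔞 x) :
    IsIntegralOverIdeal (𝔞.map f) (f x) := by
  obtain ⟨n, hn, c, hc, e⟩ := h
  refine ⟨n, hn, fun i => f (c i), fun i => ?_, ?_⟩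
  · rw [← Ideal.map_pow]; exact Ideal.mem_map_of_mem f (hc i)
  · have := congrArg f e
    simpa using this

lemma intCl_map_le {S : Type*} [CommRing S] [IsNoetherianRing S] (f : R →+* S) (𝔞 : Ideal R) :
    (intCl 𝔞).map f ≤ intCl (𝔞.map f) := by
  rw [Ideal.map_le_iff_le_comap]
  intro x hx
  exact mem_intCl.2 ((mem_intCl.1 hx).map f)

end NoethA

/-! ### The completion of a Noetherian ring is Noetherian -/

section Compl

/-- The completion of a quotient is a quotient of the completion. -/
lemma adicCompletion_noeth_of_surj {S R : Type*} [CommRing S] [CommRing R] (φ : S →+* R)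
    (hφ : Function.Surjective φ) (I : Ideal S) (K : Ideal R) (hK : I.map φ = K)
    [IsNoetherianRing (AdicCompletion I S)] : IsNoetherianRing (AdicCompletion K R) := by
  have hpow : ∀ n, I ^ n ≤ (K ^ n).comap φ := by
    intro n
    rw [← Ideal.map_le_iff_le_comap, Ideal.map_pow, hK]
  let f : (n : ℕ) → AdicCompletion I S →+* R ⧸ K ^ n := fun n =>
    (Ideal.quotientMap (K ^ n) φ (hpow n)).comp (AdicCompletion.evalₐ I n : _ →+* _)
  have hf : ∀ {m n : ℕ} (hle : m ≤ n), (Ideal.Quotient.factorPow K hle).comp (f n) = f m := by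
    intro m n hle
    ext x
    obtain ⟨y, rfl⟩ := AdicCompletion.mk_surjective I S x
    simp only [f, RingHom.comp_apply, RingHom.coe_coe, AdicCompletion.evalₐ_mk,
      Ideal.quotientMap_mk]
    refine Ideal.Quotient.eq.2 ?_
    rw [← map_sub]
    have := y.2 hle
    rw [SModEq.sub_mem] at this
    refine hpow m ?_
    have h2 : y.1 m - y.1 n ∈ I ^ m := by simpa using this
    have h3 := neg_mem h2
    rwa [neg_sub] at h3
  refine isNoetherianRing_of_surjective _ _ (AdicCompletion.liftRingHom K f hf) ?_
  intro x
  obtain ⟨r, rfl⟩ := AdicCompletion.mk_surjective K R x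
  have hd : ∀ k, ∃ d ∈ I ^ k, φ d = r.1 (k + 1) - r.1 k := by
    intro k
    have h1 : r.1 (k + 1) - r.1 k ∈ K ^ k := by
      have := r.2 (Nat.le_succ k)
      rw [SModEq.sub_mem] at this
      have h2 : r.1 k - r.1 (k + 1) ∈ K ^ k := by simpa using this
      have h3 := neg_mem h2
      rwa [neg_sub] at h3
    have h2 : K ^ k = (I ^ k).map φ := by rw [Ideal.map_pow, hK]
    exact (Ideal.mem_map_iff_of_surjective φ hφ).1 (h2.le h1)
  choose d hdI hd using hd
  obtain ⟨s0, hs0⟩ := hφ (r.1 0)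
  let s : ℕ → S := fun n => s0 + ∑ k ∈ Finset.range n, d k
  have hs : ∀ n, φ (s n) = r.1 n := by
    intro n
    induction n with
    | zero => simpa [s] using hs0
    | succ n ih =>
      have : s (n + 1) = s n + d n := by simp [s, Finset.sum_range_succ, add_assoc]
      rw [this, map_add, ih, hd]; ring
  have hc : AdicCompletion.IsAdicCauchy I S s := by
    intro m n hmn
    rw [SModEq.sub_mem]
    have : s m - s n = - ∑ k ∈ Finset.Ico m n, d k := by
      simp only [s]
      rw [Finset.sum_Ico_eq_sub _ hmn]; ring
    rw [this]
    refine neg_mem ?_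
    have h2 : ∑ k ∈ Finset.Ico m n, d k ∈ I ^ m :=
      Ideal.sum_mem _ fun k hk => Ideal.pow_le_pow_right (Finset.mem_Ico.1 hk).1 (hdI k)
    simpa using h2
  obtain ⟨y, hy⟩ : ∃ y : AdicCompletion.AdicCauchySequence I S, ∀ n, φ (y.1 n) = r.1 n :=
    ⟨⟨s, hc⟩, hs⟩
  refine ⟨AdicCompletion.mk I S y, AdicCompletion.ext_evalₐ fun n => ?_⟩
  rw [AdicCompletion.evalₐ_liftRingHom]
  simp only [f, RingHom.comp_apply, RingHom.coe_coe, AdicCompletion.evalₐ_mk,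
      Ideal.quotientMap_mk]
  exact congrArg _ (hy n)

/-- The `K`-adic completion is a quotient of the completion of a polynomial ring at the ideal of the
variables, that is, of a power series ring over `R`. -/
lemma adicCompletion_noeth {R : Type*} [CommRing R] [IsNoetherianRing R] (K : Ideal R) :
    IsNoetherianRing (AdicCompletion K R) := by
  obtain ⟨n, g, hg⟩ := Submodule.fg_iff_exists_fin_generating_family.1
    (IsNoetherian.noetherian (R := R) (M := R) K)
  let φ : MvPolynomial (Fin n) R →+* R := (MvPolynomial.aeval g : _ →ₐ[R] R).toRingHom
  have hφ : Function.Surjective φ := fun r => ⟨MvPolynomial.C r, by simp [φ]⟩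
  have : IsNoetherianRing (AdicCompletion (MvPolynomial.idealOfVars (Fin n) R)
      (MvPolynomial (Fin n) R)) :=
    isNoetherianRing_of_ringEquiv _
      (MvPowerSeries.toAdicCompletionAlgEquiv (Fin n) R).toRingEquiv
  refine adicCompletion_noeth_of_surj φ hφ (MvPolynomial.idealOfVars (Fin n) R) K ?_
  rw [MvPolynomial.idealOfVars, Ideal.map_span, ← Set.range_comp, ← hg]
  congr 1
  ext x; simp [φ]

end Compl

/-! ### Intersections of integral closures of powers -/

section Blow

variable {R : Type*} [CommRing R] [IsNoetherianRing R]

open IsLocalization.Away in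
/-- The affine chart `R[𝔞/x]` of the blow-up of `𝔞`, inside `R[1/x]`. -/
lemma exists_blow (𝔞 : Ideal R) (x : R) :
    ∃ C : Subalgebra R (Localization.Away x), IsNoetherianRing C ∧
      (∀ a ∈ 𝔞, algebraMap R _ a * invSelf x ∈ C) ∧
      ∀ w ∈ C, ∃ l, ∃ y ∈ (𝔞 ⊔ Ideal.span {x}) ^ l,
        w * algebraMap R _ x ^ l = algebraMap R _ y := by
  obtain ⟨s, hs⟩ := IsNoetherian.noetherian (R := R) (M := R) 𝔞
  have hinv : algebraMap R (Localization.Away x) x * invSelf x = 1 := mul_invSelf x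
  let g : R → Localization.Away x := fun a => algebraMap R _ a * invSelf x
  let C := Algebra.adjoin R (g '' (s : Set R))
  refine ⟨C, ?_, ?_, ?_⟩
  · have : Algebra.FiniteType R C := (Subalgebra.fg_iff_finiteType C).1
      (Subalgebra.fg_def.2 ⟨_, s.finite_toSet.image g, rfl⟩)
    exact Algebra.FiniteType.isNoetherianRing R C
  · intro a ha
    rw [← hs] at ha
    induction ha using Submodule.span_induction with
    | mem a ha => exact Algebra.subset_adjoin ⟨a, ha, rfl⟩
    | zero => simp
    | add a b _ _ h1 h2 => rw [map_add, add_mul]; exact add_mem h1 h2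
    | smul r a _ h =>
      rw [smul_eq_mul, map_mul, mul_assoc, ← Algebra.smul_def]
      exact C.smul_mem h r
  · intro w hw
    have hup : ∀ (w : Localization.Away x) (l k : ℕ), (∃ y ∈ (𝔞 ⊔ Ideal.span {x}) ^ l,
        w * algebraMap R _ x ^ l = algebraMap R _ y) → ∃ y ∈ (𝔞 ⊔ Ideal.span {x}) ^ (l + k),
        w * algebraMap R _ x ^ (l + k) = algebraMap R _ y := by
      rintro w l k ⟨y, hy, e⟩
      refine ⟨y * x ^ k, ?_, ?_⟩
      · rw [pow_add]
        exact Ideal.mul_mem_mul hy (Ideal.pow_mem_pow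
          (le_sup_right (a := 𝔞) (Ideal.mem_span_singleton_self x)) _)
      · rw [pow_add, ← mul_assoc, e, map_mul, map_pow]
    induction hw using Algebra.adjoin_induction with
    | mem w hw =>
      obtain ⟨a, ha, rfl⟩ := hw
      refine ⟨1, a, ?_, ?_⟩
      · rw [pow_one]; refine le_sup_left (a := 𝔞) ?_
        rw [← hs]; exact Submodule.subset_span ha
      · simp only [g]; rw [pow_one, mul_assoc, mul_comm (invSelf x), hinv, mul_one]
    | algebraMap r => exact ⟨0, r, by simp, by simp⟩
    | add u v _ _ hu hv =>
      obtain ⟨l, hu⟩ := hu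
      obtain ⟨k, hv⟩ := hv
      obtain ⟨y, hy, e⟩ := hup u l k hu
      obtain ⟨z, hz, e'⟩ := hup v k l hv
      rw [add_comm k l] at hz e'
      exact ⟨l + k, y + z, add_mem hy hz, by rw [add_mul, e, e', map_add]⟩
    | mul u v _ _ hu hv =>
      obtain ⟨l, y, hy, e⟩ := hu
      obtain ⟨k, z, hz, e'⟩ := hv
      refine ⟨l + k, y * z, ?_, ?_⟩
      · rw [pow_add]; exact Ideal.mul_mem_mul hy hz
      · rw [map_mul, ← e, ← e']; ring

lemma mem_intCl_of_smul {x z : R} {𝔟 : Ideal R} (hx : x ∈ nonZeroDivisors R)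
    (h : x * z ∈ intCl (Ideal.span {x} * 𝔟)) : z ∈ intCl 𝔟 := by
  obtain ⟨n, hn, c, hc, e⟩ := mem_intCl.1 h
  have : ∀ i, ∃ d ∈ 𝔟 ^ i, x ^ i * d = c i := by
    intro i
    have := hc i
    rw [mul_pow, Ideal.span_singleton_pow, Ideal.mem_span_singleton_mul] at this
    exact this
  choose d hd hde using this
  refine mem_intCl.2 ⟨n, hn, d, hd, ?_⟩
  refine (mul_left_mem_nonZeroDivisors_eq_zero_iff (pow_mem hx n)).1 (Eq.trans ?_ e)
  rw [mul_add, mul_pow, Finset.mul_sum]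
  congr 1
  refine Finset.sum_congr rfl fun i hi => ?_
  have hi := Finset.mem_range.1 hi
  rw [← hde, mul_pow]
  have : x ^ n = x ^ (i + 1) * x ^ (n - (i + 1)) := by rw [← pow_add]; congr 1; omega
  rw [this]; ring

lemma intCl_bot [IsReduced R] : intCl (⊥ : Ideal R) = ⊥ := by
  rw [eq_bot_iff]
  intro x hx
  obtain ⟨n, hn⟩ := exists_pow_mem_of_mem_intCl hx
  rw [Ideal.bot_mul] at hn
  exact pow_eq_zero_iff (n := n + 1) (by omega) |>.1 hn

/-- In a Noetherian local domain all of whose nonzero primes are maximal, a nonzero element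
is not integral over all powers of a non-unit. -/
lemma eq_zero_of_mem_intCl_local {T : Type*} [CommRing T] [IsDomain T] [IsNoetherianRing T]
    (x y : T) (hx : ¬ IsUnit x) (hxy : x ∈ (Ideal.span {y}).radical)
    (h : ∀ t, y ∈ intCl (Ideal.span {x} ^ t)) : y = 0 := by
  by_contra hy
  obtain ⟨l, hl⟩ := hxy
  obtain ⟨w, hw⟩ := Ideal.mem_span_singleton.1 hl
  have hx0 : x ≠ 0 := by
    rintro rfl
    have h1 := h 1
    rw [pow_one, Ideal.span_singleton_eq_bot.2 rfl, intCl_bot] at h1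
    exact hy h1
  obtain ⟨n, hn, c, hc, e⟩ := mem_intCl.1 (h (l + 1))
  have : ∀ i, ∃ d, c i = x ^ ((l + 1) * i) * d := by
    intro i
    have := hc i
    rw [← pow_mul, Ideal.span_singleton_pow] at this
    exact Ideal.mem_span_singleton.1 this
  choose d hd using this
  have h2 : x ^ (l * n) * (1 + x * ∑ i ∈ Finset.range n, x ^ i * d (i + 1) * w ^ (i + 1)) = 0 := by
    have h3 := congrArg (· * w ^ n) e
    simp only [zero_mul, add_mul, Finset.sum_mul] at h3
    rw [← h3, mul_add, mul_one, pow_mul, hw, mul_pow]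
    congr 1
    rw [← mul_assoc, Finset.mul_sum]
    refine Finset.sum_congr rfl fun i hi => ?_
    have hi := Finset.mem_range.1 hi
    have e1 : y ^ (n - (i + 1)) * w ^ n = x ^ (l * (n - (i + 1))) * w ^ (i + 1) := by
      rw [pow_mul, hw, mul_pow, mul_assoc, ← pow_add]; congr 2; omega
    have e2 : y ^ n * w ^ n = x ^ (l * n) := by rw [pow_mul, hw, mul_pow]
    have e3 : x ^ (l * n) = x ^ (l * (i + 1)) * x ^ (l * (n - (i + 1))) := by
      rw [← pow_add, ← mul_add]; congr 2; omega
    calc y ^ n * w ^ n * x * (x ^ i * d (i + 1) * w ^ (i + 1))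
        = x ^ (l * n) * x * (x ^ i * d (i + 1) * w ^ (i + 1)) := by rw [e2]
      _ = c (i + 1) * (x ^ (l * (n - (i + 1))) * w ^ (i + 1)) := by rw [e3, hd]; ring
      _ = _ := by rw [← e1]; ring
  rcases mul_eq_zero.1 h2 with h3 | h3
  · exact pow_ne_zero _ hx0 h3
  · exact hx (IsUnit.of_mul_eq_one (-∑ i ∈ Finset.range n, x ^ i * d (i + 1) * w ^ (i + 1))
      (by linear_combination -h3))

end Blow

section Zer

lemma eq_zero_of_mem_intCl_principal {S : Type*} [CommRing S] [IsDomain S] [IsNoetherianRing S]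
    (x y : S) (hx : ¬ IsUnit x) (h : ∀ t, y ∈ intCl (Ideal.span {x} ^ t)) : y = 0 := by
  by_contra hy
  obtain ⟨P, hP⟩ := Ideal.nonempty_minimalPrimes
    (I := Ideal.span {x}) (by rwa [Ne, Ideal.span_singleton_eq_top])
  have hPp : P.IsPrime := hP.isPrime
  have hxP : x ∈ P := hP.1.2 (Ideal.mem_span_singleton_self x)
  have hht := Ideal.height_le_one_of_isPrincipal_of_mem_minimalPrimes _ P hP
  let T := Localization.AtPrime P
  have hnt : IsNoetherianRing T := IsLocalization.isNoetherianRing P.primeCompl T inferInstance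
  have hdom : IsDomain T := IsLocalization.isDomain_of_atPrime T P
  have hinj : Function.Injective (algebraMap S T) :=
    IsLocalization.injective T P.primeCompl_le_nonZeroDivisors
  have hdim : Ring.KrullDimLE 1 T := by
    rw [Ring.krullDimLE_iff, IsLocalization.AtPrime.ringKrullDim_eq_height P T]
    exact_mod_cast hht
  have hxm : algebraMap S T x ∈ IsLocalRing.maximalIdeal T :=
    (IsLocalization.AtPrime.to_map_mem_maximal_iff T P x).2 hxP
  have h0 : algebraMap S T y = 0 := by
    apply eq_zero_of_mem_intCl_local (algebraMap S T x)
    · exact hxm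
    · rw [Ideal.radical_eq_sInf, Ideal.mem_sInf]
      rintro q ⟨hq, hqp⟩
      have hq0 : q ≠ ⊥ := by
        rintro rfl
        have := hq (Ideal.mem_span_singleton_self _)
        rw [Ideal.mem_bot, map_eq_zero_iff _ hinj] at this
        exact hy this
      have := IsLocalRing.eq_maximalIdeal (hqp.isMaximal_of_ne_bot hq0)
      rwa [this]
    · intro t
      have := intCl_map_le (algebraMap S T) (Ideal.span {x} ^ t) (Ideal.mem_map_of_mem _ (h t))
      rwa [Ideal.map_pow, Ideal.map_span, Set.image_singleton] at this
  exact hy ((map_eq_zero_iff _ hinj).1 h0)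

lemma pow_le_pow_succ_sup {S : Type*} [CommRing S] {𝔫 𝔟 𝔠 : Ideal S} (hb : 𝔟 ≤ 𝔫) (hc : 𝔠 ≤ 𝔫)
    (h1 : ∃ l, 𝔟 ^ l ≤ 𝔫 ^ (l + 1)) (h2 : ∃ l, 𝔠 ^ l ≤ 𝔫 ^ (l + 1)) :
    ∃ l, (𝔟 ⊔ 𝔠) ^ l ≤ 𝔫 ^ (l + 1) := by
  obtain ⟨l, hl⟩ := h1
  obtain ⟨k, hk⟩ := h2
  refine ⟨l + k, ?_⟩
  rw [← Submodule.add_eq_sup, add_pow]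
  rw [Ideal.sum_eq_sup]
  refine Finset.sup_le fun i hi => Ideal.mul_le_left.trans ?_
  have hi := Finset.mem_range.1 hi
  rcases le_total l i with h | h
  · obtain ⟨j, rfl⟩ := Nat.exists_eq_add_of_le h
    calc 𝔟 ^ (l + j) * 𝔠 ^ (l + k - (l + j))
        = 𝔟 ^ l * 𝔟 ^ j * 𝔠 ^ (l + k - (l + j)) := by rw [pow_add]
      _ ≤ 𝔫 ^ (l + 1) * 𝔫 ^ j * 𝔫 ^ (l + k - (l + j)) := by gcongr
      _ = 𝔫 ^ (l + k + 1) := by rw [← pow_add, ← pow_add]; congr 1; omega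
  · obtain ⟨j, hj⟩ := Nat.exists_eq_add_of_le h
    calc 𝔟 ^ i * 𝔠 ^ (l + k - i)
        = 𝔟 ^ i * (𝔠 ^ k * 𝔠 ^ j) := by rw [← pow_add]; congr 2; omega
      _ ≤ 𝔫 ^ i * (𝔫 ^ (k + 1) * 𝔫 ^ j) := by gcongr
      _ = 𝔫 ^ (l + k + 1) := by rw [← pow_add, ← pow_add]; congr 1; omega

/-- Otherwise some power of `𝔫` would lie in all the powers of `𝔫`, against Krull's intersection theorem. -/
lemma exists_pow_notMem {S : Type*} [CommRing S] [IsDomain S] [IsNoetherianRing S]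
    {𝔫 : Ideal S} (h1 : 𝔫 ≠ ⊤) (h0 : 𝔫 ≠ ⊥) : ∃ x ∈ 𝔫, ∀ l, x ^ l ∉ 𝔫 ^ (l + 1) := by
  by_contra! hcon
  have key : ∀ s : Finset S, (s : Set S) ⊆ 𝔫 → ∃ l, (Ideal.span (s : Set S)) ^ l ≤ 𝔫 ^ (l + 1) := by
    intro s
    classical
    induction s using Finset.induction_on with
    | empty => intro _; exact ⟨1, by simp⟩
    | insert a s _ ih =>
      intro hs
      rw [Finset.coe_insert, Set.insert_subset_iff] at hs
      rw [Finset.coe_insert, Ideal.span_insert]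
      refine pow_le_pow_succ_sup ?_ (Ideal.span_le.2 hs.2) ?_ (ih hs.2)
      · exact (Ideal.span_singleton_le_iff_mem _).2 hs.1
      · obtain ⟨l, hl⟩ := hcon a hs.1
        exact ⟨l, by rwa [Ideal.span_singleton_pow, Ideal.span_singleton_le_iff_mem]⟩
  obtain ⟨s, hs⟩ := IsNoetherian.noetherian (R := S) (M := S) 𝔫
  obtain ⟨l, hl⟩ := key s (by rw [← hs]; exact Ideal.subset_span)
  replace hs : Ideal.span (s : Set S) = 𝔫 := hs
  rw [hs] at hl
  have h2 : ∀ k, 𝔫 ^ l ≤ 𝔫 ^ (l + k) := by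
    intro k
    induction k with
    | zero => exact le_rfl
    | succ k ih =>
      calc 𝔫 ^ l ≤ 𝔫 ^ (l + 1) := hl
        _ = 𝔫 ^ l * 𝔫 := pow_succ _ _
        _ ≤ 𝔫 ^ (l + k) * 𝔫 := by gcongr
        _ = _ := by rw [← pow_succ]; rfl
  have h3 : 𝔫 ^ l ≤ ⨅ i, 𝔫 ^ i := le_iInf fun i =>
    (h2 i).trans (Ideal.pow_le_pow_right (by omega))
  rw [Ideal.iInf_pow_eq_bot_of_isDomain 𝔫 h1, le_bot_iff] at h3
  exact h0 (eq_bot_iff.2 fun x hx => by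
    have := Ideal.pow_mem_pow hx l
    rw [h3, Ideal.mem_bot] at this
    exact (Ideal.mem_bot).2 (eq_zero_of_pow_eq_zero this))

open IsLocalization.Away in
/-- In a Noetherian domain, only `0` is integral over all the powers of a proper ideal. -/
lemma eq_zero_of_mem_intCl_pow {S : Type*} [CommRing S] [IsDomain S] [IsNoetherianRing S]
    {𝔫 : Ideal S} (h1 : 𝔫 ≠ ⊤) {y : S} (h : ∀ t, y ∈ intCl (𝔫 ^ t)) : y = 0 := by
  by_cases h0 : 𝔫 = ⊥
  · have := h 1
    rwa [pow_one, h0, intCl_bot] at this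
  obtain ⟨x, hx, hxl⟩ := exists_pow_notMem h1 h0
  have hx0 : x ≠ 0 := by
    rintro rfl
    exact hxl 1 (by simp)
  obtain ⟨C, hC, hC1, hC2⟩ := exists_blow 𝔫 x
  have hinj : Function.Injective (algebraMap S (Localization.Away x)) :=
    IsLocalization.injective (M := Submonoid.powers x) _ (powers_le_nonZeroDivisors_of_noZeroDivisors hx0)
  have hdom : IsDomain (Localization.Away x) :=
    IsLocalization.isDomain_localization (powers_le_nonZeroDivisors_of_noZeroDivisors hx0)
  have hsup : 𝔫 ⊔ Ideal.span {x} = 𝔫 :=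
    sup_eq_left.2 ((Ideal.span_singleton_le_iff_mem _).2 hx)
  have hu : ¬ IsUnit (algebraMap S C x) := by
    intro hu
    obtain ⟨w, hw⟩ := hu.exists_right_inv
    obtain ⟨l, z, hz, e⟩ := hC2 w w.2
    rw [hsup] at hz
    refine hxl l ?_
    have hw' : algebraMap S (Localization.Away x) x * w = 1 := congrArg Subtype.val hw
    have : x ^ l = z * x := by
      apply hinj
      rw [map_mul, ← e, map_pow, mul_right_comm, mul_comm _ (algebraMap _ _ x), hw', one_mul]
    rw [this, pow_succ]
    exact Ideal.mul_mem_mul hz hx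
  have h2 : algebraMap S C y = 0 := by
    refine eq_zero_of_mem_intCl_principal _ _ hu fun t => ?_
    have h3 := intCl_map_le (algebraMap S C) (𝔫 ^ t) (Ideal.mem_map_of_mem _ (h t))
    rw [Ideal.map_pow] at h3
    refine intCl_mono (Ideal.pow_right_mono ?_ t) h3
    rw [Ideal.map_le_iff_le_comap]
    intro a ha
    rw [Ideal.mem_comap, Ideal.mem_span_singleton]
    refine ⟨⟨_, hC1 a ha⟩, Subtype.ext ?_⟩
    change algebraMap S (Localization.Away x) a = algebraMap S _ x * (algebraMap S _ a * invSelf x)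
    rw [mul_left_comm, mul_invSelf, mul_one]
  exact hinj (by rw [map_zero]; exact congrArg Subtype.val h2)

lemma mem_of_forall_mem_intCl {C : Type*} [CommRing C] [IsNoetherianRing C] {P N 𝔫 : Ideal C}
    (hPp : P.IsPrime) (hPN : P ≤ N) (hN : N ≠ ⊤) (hle : 𝔫 ≤ N) {y : C}
    (h : ∀ l, y ∈ intCl (𝔫 ^ l)) : y ∈ P := by
  rw [← Ideal.Quotient.eq_zero_iff_mem]
  refine eq_zero_of_mem_intCl_pow (𝔫 := 𝔫.map (Ideal.Quotient.mk P)) ?_ fun l => ?_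
  · intro h5
    have : N.map (Ideal.Quotient.mk P) = ⊤ := top_le_iff.1 (h5 ▸ Ideal.map_mono hle)
    have h6 := congrArg (Ideal.comap (Ideal.Quotient.mk P)) this
    rw [Ideal.comap_map_of_surjective _ Ideal.Quotient.mk_surjective, Ideal.comap_top,
      ← RingHom.ker_eq_comap_bot, Ideal.mk_ker, sup_eq_left.2 hPN] at h6
    exact hN h6
  · have h5 := intCl_map_le (Ideal.Quotient.mk P) (𝔫 ^ l) (Ideal.mem_map_of_mem _ (h l))
    rwa [Ideal.map_pow] at h5

open IsLocalization.Away in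
/-- If `c x^l` is integral over `𝔞^l` for all `l`, with `c` a nonzerodivisor,
then `x` is integral over `𝔞`. -/
lemma mem_intCl_of_forall {R : Type*} [CommRing R] [IsNoetherianRing R] {𝔞 : Ideal R} {x c : R}
    (hc : c ∈ nonZeroDivisors R) (h : ∀ l, c * x ^ l ∈ intCl (𝔞 ^ l)) : x ∈ intCl 𝔞 := by
  obtain ⟨C, hC, hC1, hC2⟩ := exists_blow 𝔞 x
  let 𝔫 : Ideal C := Ideal.span {w | ∃ a ∈ 𝔞, (w : Localization.Away x) = algebraMap R _ a * invSelf x}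
  have hinv : algebraMap R (Localization.Away x) x * invSelf x = 1 := mul_invSelf x
  have hxC : algebraMap R C x ∈ nonZeroDivisors C := by
    rw [mem_nonZeroDivisors_iff_right]
    intro z hz
    have hz' : (z : Localization.Away x) * algebraMap R _ x = 0 := congrArg Subtype.val hz
    apply Subtype.ext
    rw [← mul_one (z : Localization.Away x), ← hinv, ← mul_assoc, hz', zero_mul]; rfl
  have hcC : algebraMap R C c ∈ nonZeroDivisors C := by
    rw [mem_nonZeroDivisors_iff_right]
    intro z hz
    have hz' : (z : Localization.Away x) * algebraMap R _ c = 0 := congrArg Subtype.val hz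
    apply Subtype.ext
    exact (mul_right_mem_nonZeroDivisors_eq_zero_iff
      (IsLocalization.map_nonZeroDivisors_le (Submonoid.powers x) (Localization.Away x)
        (Submonoid.mem_map_of_mem (algebraMap R (Localization.Away x)) hc))).1 hz'
  by_cases htop : 𝔫 = ⊤
  · have key : ∀ w ∈ 𝔫, ∃ l, ∃ y ∈ 𝔞 * (𝔞 ⊔ Ideal.span {x}) ^ l,
        (w : Localization.Away x) * algebraMap R _ x ^ (l + 1) = algebraMap R _ y := by
      have hup : ∀ (w : Localization.Away x) (l k : ℕ), (∃ y ∈ 𝔞 * (𝔞 ⊔ Ideal.span {x}) ^ l,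
          w * algebraMap R _ x ^ (l + 1) = algebraMap R _ y) →
          ∃ y ∈ 𝔞 * (𝔞 ⊔ Ideal.span {x}) ^ (l + k),
          w * algebraMap R _ x ^ (l + k + 1) = algebraMap R _ y := by
        rintro w l k ⟨y, hy, e⟩
        refine ⟨y * x ^ k, ?_, ?_⟩
        · rw [pow_add, ← mul_assoc]
          exact Ideal.mul_mem_mul hy (Ideal.pow_mem_pow
            (le_sup_right (a := 𝔞) (Ideal.mem_span_singleton_self x)) _)
        · rw [map_mul, map_pow, ← e]; ring
      intro w hw
      induction hw using Submodule.span_induction with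
      | mem w hw =>
        obtain ⟨a, ha, e⟩ := hw
        exact ⟨0, a, by simpa using ha, by rw [e, zero_add, pow_one, mul_assoc, mul_comm (invSelf x), hinv, mul_one]⟩
      | zero => exact ⟨0, 0, zero_mem _, by simp⟩
      | add u v _ _ hu hv =>
        obtain ⟨l, hu⟩ := hu
        obtain ⟨k, hv⟩ := hv
        obtain ⟨y, hy, e⟩ := hup u l k hu
        obtain ⟨z, hz, e'⟩ := hup v k l hv
        rw [add_comm k l] at hz e'
        refine ⟨l + k, y + z, add_mem hy hz, ?_⟩
        rw [map_add, ← e, ← e', ← add_mul]; rfl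
      | smul r u _ hu =>
        obtain ⟨l, y, hy, e⟩ := hu
        obtain ⟨k, z, hz, e'⟩ := hC2 r r.2
        refine ⟨l + k, y * z, ?_, ?_⟩
        · rw [pow_add, ← mul_assoc]; exact Ideal.mul_mem_mul hy hz
        · rw [map_mul, ← e, ← e', smul_eq_mul, MulMemClass.coe_mul]; ring
    obtain ⟨l, y, hy, e⟩ := key 1 (by rw [htop]; trivial)
    rw [OneMemClass.coe_one, one_mul, ← map_pow] at e
    obtain ⟨⟨_, k, rfl⟩, e⟩ := (IsLocalization.eq_iff_exists (Submonoid.powers x) _).1 e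
    refine mem_intCl_of_pow_mem (n := k + l) ?_
    have e : x ^ k * x ^ (l + 1) = x ^ k * y := e
    rw [add_assoc, pow_add x, e, pow_add, mul_left_comm]
    exact Ideal.mul_mem_mul (Ideal.pow_mem_pow
            (le_sup_right (a := 𝔞) (Ideal.mem_span_singleton_self x)) _) hy
  · exfalso
    have hmem : ∀ l, algebraMap R C c ∈ intCl (𝔫 ^ l) := by
      intro l
      have h3 := intCl_map_le (algebraMap R C) (𝔞 ^ l) (Ideal.mem_map_of_mem _ (h l))
      refine mem_intCl_of_smul (pow_mem hxC l) ?_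
      rw [map_mul, map_pow, mul_comm] at h3
      refine intCl_mono ?_ h3
      rw [← Ideal.span_singleton_pow, ← mul_pow, Ideal.map_pow]
      refine Ideal.pow_right_mono ?_ l
      rw [Ideal.map_le_iff_le_comap]
      intro a ha
      rw [Ideal.mem_comap, Ideal.mem_span_singleton_mul]
      refine ⟨⟨_, hC1 a ha⟩, Ideal.subset_span ⟨a, ha, rfl⟩, Subtype.ext ?_⟩
      change algebraMap R (Localization.Away x) x * (algebraMap R _ a * invSelf x) = algebraMap R _ a
      rw [mul_left_comm, hinv, mul_one]
    obtain ⟨N, hN, hle⟩ := Ideal.exists_le_maximal 𝔫 htop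
    obtain ⟨P, hP, hPN⟩ := Ideal.exists_minimalPrimes_le (I := (⊥ : Ideal C)) (J := N) bot_le
    have h4 := mem_of_forall_mem_intCl hP.isPrime hPN hN.ne_top hle hmem
    exact Set.disjoint_left.1 (Ideal.disjoint_nonZeroDivisors_of_mem_minimalPrimes hP) h4 hcC

end Zer

section Chev
open IsLocalRing

/-- Krull: ideals of a Noetherian local ring are closed. -/
lemma mem_of_forall_mem_sup_pow {S : Type*} [CommRing S] [IsLocalRing S] [IsNoetherianRing S]
    {X : Ideal S} {x : S} (h : ∀ j, x ∈ X ⊔ maximalIdeal S ^ j) : x ∈ X := by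
  rw [← Ideal.Quotient.eq_zero_iff_mem]
  have := Ideal.iInf_pow_smul_eq_bot_of_isLocalRing (M := S ⧸ X) (maximalIdeal S)
    (Ideal.IsPrime.ne_top inferInstance)
  have h1 : (Ideal.Quotient.mk X x) ∈ (⨅ i : ℕ, maximalIdeal S ^ i • ⊤ : Submodule S (S ⧸ X)) := by
    rw [Submodule.mem_iInf]
    intro j
    obtain ⟨u, hu, v, hv, rfl⟩ := Submodule.mem_sup.1 (h j)
    rw [map_add, Ideal.Quotient.eq_zero_iff_mem.2 hu, zero_add]
    have : Ideal.Quotient.mk X v = v • (1 : S ⧸ X) := by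
      rw [Algebra.smul_def, mul_one]; rfl
    rw [this]
    exact Submodule.smul_mem_smul hv trivial
  rw [this] at h1
  exact (Submodule.mem_bot _).1 h1

variable {R : Type*} [CommRing R] [IsLocalRing R] [IsNoetherianRing R]

lemma isArtinianRing_quot {X : Ideal R} {j : ℕ} (hX : maximalIdeal R ^ j ≤ X) :
    IsArtinianRing (R ⧸ X) := by
  have : Ring.KrullDimLE 0 (R ⧸ X) := by
    rw [Ring.krullDimLE_zero_iff]
    intro P hP
    have h1 : (P.comap (Ideal.Quotient.mk X)).IsPrime := Ideal.comap_isPrime _ _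
    have h2 : X ≤ P.comap (Ideal.Quotient.mk X) := by
      intro x hx
      rw [Ideal.mem_comap, Ideal.Quotient.eq_zero_iff_mem.2 hx]; exact zero_mem _
    have h3 : maximalIdeal R = P.comap (Ideal.Quotient.mk X) :=
      (maximalIdeal.isMaximal R).eq_of_le h1.ne_top (h1.le_of_pow_le (hX.trans h2))
    have h4 : P = (maximalIdeal R).map (Ideal.Quotient.mk X) := by
      rw [h3, Ideal.map_comap_of_surjective _ Ideal.Quotient.mk_surjective]
    have h5 := Ideal.map_eq_top_or_isMaximal_of_surjective (Ideal.Quotient.mk X)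
      Ideal.Quotient.mk_surjective (maximalIdeal.isMaximal R)
    rw [← h4] at h5
    exact h5.resolve_left hP.ne_top
  exact IsNoetherianRing.isArtinianRing_of_krullDimLE_zero

lemma exists_stab (F : ℕ → Ideal R) (hF : Antitone F) (j : ℕ) :
    ∃ n, ∀ k, n ≤ k → F k ⊔ maximalIdeal R ^ j = F n ⊔ maximalIdeal R ^ j := by
  have hart : IsArtinianRing (R ⧸ maximalIdeal R ^ j) := isArtinianRing_quot le_rfl
  let G : ℕ →o (Ideal (R ⧸ maximalIdeal R ^ j))ᵒᵈ :=
    ⟨fun n => OrderDual.toDual ((F n).map (Ideal.Quotient.mk _)), fun a b h => Ideal.map_mono (hF h)⟩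
  obtain ⟨n, hn⟩ := IsArtinian.monotone_stabilizes (R := R ⧸ maximalIdeal R ^ j) G
  refine ⟨n, fun k hk => ?_⟩
  have h1 : (F n).map (Ideal.Quotient.mk (maximalIdeal R ^ j)) = (F k).map (Ideal.Quotient.mk _) :=
    hn k hk
  have h2 := congrArg (Ideal.comap (Ideal.Quotient.mk (maximalIdeal R ^ j))) h1
  rw [Ideal.comap_map_of_surjective _ Ideal.Quotient.mk_surjective,
    Ideal.comap_map_of_surjective _ Ideal.Quotient.mk_surjective,
    ← RingHom.ker_eq_comap_bot, Ideal.mk_ker] at h2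
  exact h2.symm

/-- In an analytically unramified local ring, the integral closures of the powers of a proper
ideal define a topology finer than the `𝔪`-adic one. -/
lemma exists_intCl_pow_le (hur : AnalyticallyUnramified R) {𝔞 : Ideal R} (ha : 𝔞 ≤ maximalIdeal R)
    (j : ℕ) : ∃ n, intCl (𝔞 ^ n) ≤ maximalIdeal R ^ j := by
  by_contra! hcon
  let F : ℕ → Ideal R := fun n => intCl (𝔞 ^ n)
  have hF : Antitone F := fun a b h => intCl_mono (Ideal.pow_le_pow_right h)
  choose N hN using exists_stab F hF
  let W : ℕ → Ideal R := fun i => F (N i) ⊔ maximalIdeal R ^ i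
  have hW : ∀ i n, W i ≤ F n ⊔ maximalIdeal R ^ i := by
    intro i n
    rcases le_total (N i) n with h | h
    · rw [hN i n h]
    · exact sup_le_sup_right (hF h) _
  have hstep : ∀ i x, x ∈ W i → ∃ x', x' ∈ W (i + 1) ∧ x - x' ∈ maximalIdeal R ^ i := by
    intro i x hx
    obtain ⟨u, hu, v, hv, rfl⟩ := Submodule.mem_sup.1 (hW i (N (i + 1)) hx)
    exact ⟨u, le_sup_left (a := F _) hu, by simpa using hv⟩
  obtain ⟨x0, hx0, hx0'⟩ : ∃ x ∈ W j, x ∉ maximalIdeal R ^ j := by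
    obtain ⟨x, hx, hx'⟩ := SetLike.not_le_iff_exists.1 (hcon (N j))
    exact ⟨x, le_sup_left (a := F _) hx, hx'⟩
  choose! g hg1 hg2 using hstep
  -- a Cauchy sequence starting at index `j`; it is constant before
  let y : ℕ → R := fun k => Nat.rec x0 (fun i x => g (j + i) x) k
  have hy : ∀ k, y k ∈ W (j + k) := by
    intro k
    induction k with
    | zero => exact hx0
    | succ k ih => exact hg1 _ _ ih
  have hy2 : ∀ k, y k - y (k + 1) ∈ maximalIdeal R ^ (j + k) := fun k => hg2 _ _ (hy k)
  let R' := AdicCompletion (maximalIdeal R) R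
  let s : AdicCompletion.AdicCauchySequence (maximalIdeal R) R :=
    AdicCompletion.AdicCauchySequence.mk (maximalIdeal R) R y (fun n => by
      rw [SModEq.sub_mem, smul_eq_mul, Ideal.mul_top]
      exact Ideal.pow_le_pow_right (by omega) (hy2 n))
  let z : R' := AdicCompletion.mk (maximalIdeal R) R s
  have hnoeth : IsNoetherianRing R' := adicCompletion_noeth _
  have hred : IsReduced R' := hur
  have hsub : ∀ k, z - algebraMap R R' (y k) ∈ maximalIdeal R' ^ k := by
    intro k
    rw [AdicCompletion.maximalIdeal_eq_map, ← Ideal.map_pow, ← Submodule.restrictScalars_mem R,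
      ← Ideal.smul_top_eq_map,
      AdicCompletion.pow_smul_top_eq_ker_eval (maximalIdeal R).fg_of_isNoetherianRing]
    rw [LinearMap.mem_ker, map_sub, sub_eq_zero]
    rfl
  have hz0 : z ≠ 0 := by
    intro h0
    have h1 := congrArg (AdicCompletion.evalₐ (maximalIdeal R) j) h0
    rw [map_zero, AdicCompletion.evalₐ_mk] at h1
    have h2 : y j ∈ maximalIdeal R ^ j := Ideal.Quotient.eq_zero_iff_mem.1 h1
    have h3 : ∀ k, x0 - y k ∈ maximalIdeal R ^ j := by
      intro k
      induction k with
      | zero => simp [y]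
      | succ k ih =>
        have := add_mem ih (Ideal.pow_le_pow_right (by omega) (hy2 k) : _ ∈ maximalIdeal R ^ j)
        simpa using this
    exact hx0' (by simpa using add_mem (h3 j) h2)
  have hz : ∀ n, z ∈ intCl ((𝔞.map (algebraMap R R')) ^ n) := by
    intro n
    rw [← Ideal.map_pow]
    refine intCl_map_le (algebraMap R R') (𝔞 ^ n) (mem_of_forall_mem_sup_pow fun k => ?_)
    have h0 : F n ⊔ maximalIdeal R ^ (j + k) ≤ F n ⊔ maximalIdeal R ^ k :=
      sup_le_sup_left (Ideal.pow_le_pow_right (by omega)) _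
    have h1 : y k ∈ F n ⊔ maximalIdeal R ^ k := h0 (hW _ n (hy k))
    have h2 := Ideal.mem_map_of_mem (algebraMap R R') h1
    rw [Ideal.map_sup, Ideal.map_pow, ← AdicCompletion.maximalIdeal_eq_map] at h2
    have := add_mem (le_sup_right (a := (F n).map (algebraMap R R')) (hsub k)) h2
    simpa using this
  apply hz0
  have h4 : z ∈ nilradical R' := by
    rw [nilradical_eq_sInf, Ideal.mem_sInf]
    intro P hP
    refine mem_of_forall_mem_intCl hP (le_maximalIdeal hP.ne_top)
      (Ideal.IsPrime.ne_top inferInstance) ?_ hz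
    rw [AdicCompletion.maximalIdeal_eq_map]
    exact Ideal.map_mono ha
  rw [nilradical_eq_zero] at h4
  exact h4

end Chev

/-! ### Colengths of ideals -/

section Len
open IsLocalRing

/-- `X` contains a power of the maximal ideal. -/
def MP {R : Type*} [CommRing R] [IsLocalRing R] (X : Ideal R) : Prop :=
  ∃ j : ℕ, maximalIdeal R ^ j ≤ X

/-- The colength `λ(R/X)` of an ideal, as a natural number. -/
noncomputable def cl {R : Type*} [CommRing R] (X : Ideal R) : ℕ :=
  (Module.length R (R ⧸ X)).toNat

variable {R : Type*} [CommRing R] [IsLocalRing R] [IsNoetherianRing R]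

lemma MP.mono {X Y : Ideal R} (h : MP X) (hle : X ≤ Y) : MP Y := by
  obtain ⟨j, hj⟩ := h; exact ⟨j, hj.trans hle⟩

lemma MP.mul {X Y : Ideal R} (h : MP X) (h' : MP Y) : MP (X * Y) := by
  obtain ⟨j, hj⟩ := h
  obtain ⟨k, hk⟩ := h'
  exact ⟨j + k, by rw [pow_add]; exact Ideal.mul_mono hj hk⟩

lemma MP.top : MP (⊤ : Ideal R) := ⟨0, le_top⟩

lemma MP.max : MP (maximalIdeal R) := ⟨1, by simp⟩

lemma MP.pow {X : Ideal R} (h : MP X) (n : ℕ) : MP (X ^ n) := by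
  induction n with
  | zero => exact ⟨0, by simp⟩
  | succ n ih => rw [pow_succ]; exact ih.mul h

lemma MP.inf {X Y : Ideal R} (h : MP X) (h' : MP Y) : MP (X ⊓ Y) :=
  (h.mul h').mono Ideal.mul_le_inf

lemma MP.intCl {X : Ideal R} (h : MP X) : MP (intCl X) := h.mono (le_intCl X)

lemma MP.length_ne_top {X : Ideal R} (h : MP X) : Module.length R (R ⧸ X) ≠ ⊤ := by
  obtain ⟨j, hj⟩ := h
  have := isArtinianRing_quot hj
  have h2 : IsArtinian R (R ⧸ X) :=
    isArtinian_of_surjective_algebraMap (Ideal.Quotient.mk_surjective (I := X))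
  exact Module.length_ne_top

lemma MP.coe_cl {X : Ideal R} (h : MP X) : (cl X : ℕ∞) = Module.length R (R ⧸ X) :=
  ENat.natCast_toNat h.length_ne_top

lemma cl_eq_of_moduleLength {X : Ideal R} {n : ℕ} (h : moduleLength R (R ⧸ X) = (n : WithBot ℕ∞)) :
    cl X = n := by
  have h1 : ((Module.length R (R ⧸ X) : ℕ∞) : WithBot ℕ∞) = ((n : ℕ∞) : WithBot ℕ∞) := by
    rw [Module.coe_length]; exact h
  rw [cl, WithBot.coe_injective h1]; rfl

lemma cl_top : cl (⊤ : Ideal R) = 0 := by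
  have : Subsingleton (R ⧸ (⊤ : Ideal R)) := Ideal.Quotient.subsingleton_iff.2 rfl
  rw [cl, Module.length_eq_zero]; rfl

lemma eq_top_of_cl {X : Ideal R} (h : MP X) (h0 : cl X = 0) : X = ⊤ := by
  have := h.coe_cl
  rw [h0] at this
  have h1 := Module.length_eq_zero_iff.1 this.symm
  exact Ideal.Quotient.subsingleton_iff.1 h1

lemma length_eq_ker_range {M N : Type*} [AddCommGroup M] [AddCommGroup N] [Module R M] [Module R N]
    (f : M →ₗ[R] N) : Module.length R N =
      Module.length R (M ⧸ LinearMap.ker f) + Module.length R (N ⧸ LinearMap.range f) := by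
  rw [f.quotKerEquivRange.length_eq]
  exact Module.length_eq_add_of_exact (LinearMap.range f).subtype (LinearMap.range f).mkQ
    (Submodule.subtype_injective _) (Submodule.mkQ_surjective _)
    (LinearMap.exact_subtype_mkQ _)

lemma length_quot_range {M : Type*} [AddCommGroup M] [Module R M] (Z V : Submodule R M)
    (N : Submodule R (M ⧸ Z)) (hZV : Z ≤ V) (h : N = V.map Z.mkQ) :
    Module.length R ((M ⧸ Z) ⧸ N) = Module.length R (M ⧸ V) := by
  subst h
  exact (Submodule.quotientQuotientEquivQuotient Z V hZV).length_eq

/-- The kernel and the cokernel of `f` restricted to `Y`, modulo `Z`. -/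
lemma length_tool {M : Type*} [AddCommGroup M] [Module R M] (f : M →ₗ[R] M)
    (Z Y W V : Submodule R M) (hV : V = Z ⊔ Y.map f) (hW : W = Y ⊓ Z.comap f) :
    Module.length R (M ⧸ Z) + Module.length R (M ⧸ Y) =
      Module.length R (M ⧸ V) + Module.length R (M ⧸ W) := by
  have h1 := length_eq_ker_range (Z.mkQ.comp (f.comp Y.subtype))
  have h2 := length_eq_ker_range (W.mkQ.comp Y.subtype)
  have hk : LinearMap.ker (Z.mkQ.comp (f.comp Y.subtype)) = LinearMap.ker (W.mkQ.comp Y.subtype) := by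
    rw [LinearMap.ker_comp, LinearMap.ker_comp, Submodule.ker_mkQ, Submodule.ker_mkQ, hW,
      Submodule.comap_inf, Submodule.comap_subtype_self, top_inf_eq, Submodule.comap_comp]
  rw [hk, length_quot_range Z V _ (hV ▸ le_sup_left)] at h1
  · rw [length_quot_range W Y _ (hW ▸ inf_le_left)] at h2
    · rw [h1, h2]; ring
    · rw [LinearMap.range_comp, Submodule.range_subtype]
  · rw [LinearMap.range_comp, LinearMap.range_comp, Submodule.range_subtype, hV, Submodule.map_sup]
    have h1 : Submodule.map (Submodule.mkQ Z) Z = ⊥ := by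
      rw [eq_bot_iff, Submodule.map_le_iff_le_comap, Submodule.comap_bot, Submodule.ker_mkQ]
    rw [h1, bot_sup_eq]

/-- The kernel and the cokernel of multiplication by `a` from `Y` to `R/Z`. -/
lemma cl_tool {Z Y W V : Ideal R} (hZ : MP Z) (hY : MP Y) (a : R)
    (hV : V = Z ⊔ Ideal.span {a} * Y)
    (hW : ∀ z, z ∈ W ↔ z ∈ Y ∧ a * z ∈ Z) : cl Z + cl Y = cl V + cl W := by
  have hWm : MP W := (hZ.mul hY).mono fun z hz =>
    (hW z).2 ⟨Ideal.mul_le_right hz, Z.mul_mem_left a (Ideal.mul_le_left hz)⟩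
  have hVm : MP V := hZ.mono (hV ▸ le_sup_left)
  have h := length_tool (LinearMap.mulLeft R a) Z Y W V (by
    rw [hV]; congr 1; ext z; simp [Ideal.mem_span_singleton_mul]) (by
    ext z; rw [hW]; rfl)
  have : (cl Z + cl Y : ℕ∞) = cl V + cl W := by
    rw [hZ.coe_cl, hY.coe_cl, hWm.coe_cl, hVm.coe_cl, h]
  exact_mod_cast this

lemma cl_tool' {Z W V : Ideal R} (hZ : MP Z) (a : R) (hV : V = Z ⊔ Ideal.span {a})
    (hW : ∀ z, z ∈ W ↔ a * z ∈ Z) : cl Z = cl V + cl W := by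
  have := cl_tool (V := V) (W := W) hZ (MP.top (R := R)) a (by rw [hV, Ideal.mul_top]) (by simpa using hW)
  rwa [cl_top, add_zero] at this

lemma cl_mono {X Y : Ideal R} (hX : MP X) (h : X ≤ Y) : cl Y ≤ cl X := by
  have h2 := hX.coe_cl
  have h3 := (hX.mono h).coe_cl
  have : (cl Y : ℕ∞) ≤ cl X := by
    rw [h2, h3]
    exact Module.length_le_of_surjective (Submodule.factor h) (Submodule.factor_surjective h)
  exact_mod_cast this

lemma eq_of_cl {X Y : Ideal R} (hX : MP X) (h : X ≤ Y) (he : cl X ≤ cl Y) : X = Y := by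
  refine le_antisymm h fun b hb => ?_
  let W := X.colon {b}
  have hW : ∀ z, z ∈ W ↔ b * z ∈ X := by
    intro z; rw [Submodule.mem_colon_singleton, smul_eq_mul, mul_comm]
  have h1 := cl_tool' (W := W) hX b rfl hW
  have h2 : X ⊔ Ideal.span {b} ≤ Y := sup_le h ((Ideal.span_singleton_le_iff_mem _).2 hb)
  have h3 := cl_mono (hX.mono le_sup_left) h2
  have hWm : MP W := hX.mono fun z hz => (hW z).2 (X.mul_mem_left b hz)
  have h4 := eq_top_of_cl hWm (by omega)
  have := (hW 1).1 (h4 ▸ trivial)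
  simpa using this

lemma cl_lt {X Y : Ideal R} (hX : MP X) (h : X < Y) : cl Y < cl X := by
  by_contra! h2
  exact h.ne (eq_of_cl hX h.le h2)

/-- `α, β` is a regular sequence in the order `β, α`. -/
def Reg2 (α β : R) : Prop := (∀ z, β * z = 0 → z = 0) ∧ ∀ x y, α * x = β * y → ∃ w, x = β * w

/-- The colength of `α X + β Y` for a regular sequence `α, β`; `W = (X : β) ∩ (Y : α)` accounts for the
relations. -/
lemma cl_two {α β : R} (hr : Reg2 α β) {X Y W V : Ideal R} (hαβ : MP (Ideal.span {α, β}))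
    (hX : MP X) (hY : MP Y) (hV : V = Ideal.span {α} * X ⊔ Ideal.span {β} * Y)
    (hW : ∀ z, z ∈ W ↔ β * z ∈ X ∧ α * z ∈ Y) :
    cl V + cl W = cl (Ideal.span {α, β}) + cl X + cl Y := by
  obtain ⟨hr1, hr2⟩ := hr
  rw [Ideal.span_insert] at hαβ ⊢
  have hVm : MP V := by
    refine (hαβ.mul (hX.mul hY)).mono ?_
    rw [hV, Ideal.sup_mul]
    exact sup_le_sup (Ideal.mul_mono_right Ideal.mul_le_left) (Ideal.mul_mono_right Ideal.mul_le_right)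
  -- `P = X : β`
  let P := X.colon {β}
  have hP : ∀ z, z ∈ P ↔ β * z ∈ X := by
    intro z; rw [Submodule.mem_colon_singleton, smul_eq_mul, mul_comm]
  have hPm : MP P := hX.mono fun z hz => (hP z).2 (X.mul_mem_left _ hz)
  have hW' : ∀ z, z ∈ W ↔ z ∈ P ∧ α * z ∈ Y := by intro z; rw [hW, hP]
  have t1 := cl_tool (V := Y ⊔ Ideal.span {α} * P) hY hPm α rfl hW'
  have t2 := cl_tool' (V := X ⊔ Ideal.span {β}) hX β rfl hP
  have t3 := cl_tool' (V := Ideal.span {α} * X ⊔ Ideal.span {β})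
    (W := Y ⊔ Ideal.span {α} * P) hVm β (by
      rw [hV, sup_assoc, sup_eq_right.2 (Ideal.mul_le_left (I := Ideal.span {β}) (J := Y))]) (by
      intro z
      rw [hV]
      constructor
      · intro hz
        obtain ⟨y, hy, u, hu, rfl⟩ := Submodule.mem_sup.1 hz
        obtain ⟨w, hw, rfl⟩ := Ideal.mem_span_singleton_mul.1 hu
        rw [mul_add]
        refine add_mem (Ideal.mem_sup_right (Ideal.mul_mem_mul (Ideal.mem_span_singleton_self _) hy)) ?_
        rw [mul_left_comm]
        exact Ideal.mem_sup_left (Ideal.mul_mem_mul (Ideal.mem_span_singleton_self _) ((hP w).1 hw))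
      · intro hz
        obtain ⟨u, hu, v, hv, e⟩ := Submodule.mem_sup.1 hz
        obtain ⟨x, hx, rfl⟩ := Ideal.mem_span_singleton_mul.1 hu
        obtain ⟨y, hy, rfl⟩ := Ideal.mem_span_singleton_mul.1 hv
        obtain ⟨w, rfl⟩ := hr2 x (z - y) (by linear_combination e)
        have : z = y + α * w := by
          have := hr1 (z - y - α * w) (by linear_combination -e)
          linear_combination this
        rw [this]
        exact add_mem (Ideal.mem_sup_left hy) (Ideal.mem_sup_right
          (Ideal.mul_mem_mul (Ideal.mem_span_singleton_self _) ((hP w).2 hx))))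
  have t4 := cl_tool' (Z := Ideal.span {α} * X ⊔ Ideal.span {β})
    (V := Ideal.span {α} ⊔ Ideal.span {β})
    (W := X ⊔ Ideal.span {β}) (hVm.mono (by
      rw [hV]; exact sup_le_sup_left Ideal.mul_le_left _)) α (by
      rw [sup_right_comm, sup_eq_right.2 (Ideal.mul_le_left (I := Ideal.span {α}) (J := X))]) (by
      intro z
      constructor
      · intro hz
        obtain ⟨x, hx, u, hu, rfl⟩ := Submodule.mem_sup.1 hz
        rw [mul_add]
        exact add_mem (Ideal.mem_sup_left (Ideal.mul_mem_mul (Ideal.mem_span_singleton_self _) hx))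
          (Ideal.mem_sup_right (Ideal.mul_mem_left _ _ hu))
      · intro hz
        obtain ⟨u, hu, v, hv, e⟩ := Submodule.mem_sup.1 hz
        obtain ⟨x, hx, rfl⟩ := Ideal.mem_span_singleton_mul.1 hu
        obtain ⟨y, rfl⟩ := Ideal.mem_span_singleton.1 hv
        obtain ⟨w, hw⟩ := hr2 (z - x) y (by linear_combination -e)
        rw [show z = x + β * w by linear_combination hw]
        exact add_mem (Ideal.mem_sup_left hx) (Ideal.mem_sup_right
          (Ideal.mul_mem_right _ _ (Ideal.mem_span_singleton_self _))))
  omega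

lemma cl_mul {x y z : R} (hr : Reg2 x z) (h : MP (Ideal.span {x * y, z})) :
    cl (Ideal.span {x * y, z}) = cl (Ideal.span {x, z}) + cl (Ideal.span {y, z}) := by
  obtain ⟨hr1, hr2⟩ := hr
  refine cl_tool' h x ?_ ?_
  · refine le_antisymm (Ideal.span_le.2 ?_) (sup_le (Ideal.span_le.2 ?_) ?_)
    · rintro _ (rfl | rfl)
      · exact Ideal.mem_sup_right (Ideal.mem_span_singleton_self _)
      · exact Ideal.mem_sup_left (Ideal.subset_span (by simp))
    · rintro _ (rfl | rfl)
      · exact Ideal.mul_mem_right _ _ (Ideal.subset_span (by simp))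
      · exact Ideal.subset_span (by simp)
    · rw [Ideal.span_singleton_le_iff_mem]; exact Ideal.subset_span (by simp)
  · intro w
    simp only [Ideal.mem_span_pair]
    constructor
    · rintro ⟨p, q, rfl⟩
      exact ⟨p, q * x, by ring⟩
    · rintro ⟨p, q, e⟩
      obtain ⟨v, hv⟩ := hr2 (w - p * y) q (by linear_combination -e)
      exact ⟨p, v, by linear_combination -hv⟩

end Len

/-! ### Associated primes, depth and the Cohen–Macaulay property -/

section CMone
open IsLocalRing

variable {A : Type*} [CommRing A]

/-- `p` is an associated prime of `A/𝔞`. -/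
def IsAss (𝔞 p : Ideal A) : Prop := p.IsPrime ∧ ∃ z, ∀ w, w ∈ p ↔ w * z ∈ 𝔞

/-- `x` is a nonzerodivisor modulo `𝔞`. -/
def NZ (𝔞 : Ideal A) (x : A) : Prop := ∀ z, x * z ∈ 𝔞 → z ∈ 𝔞

/-- `x` is a nonzerodivisor modulo `𝔞` after localizing at `P`. -/
def NZL (P 𝔞 : Ideal A) (x : A) : Prop := ∀ z, x * z ∈ 𝔞 → ∃ s, s ∉ P ∧ s * z ∈ 𝔞

/-- `𝔞` is generated by `k` elements of `P` forming a regular sequence after localizing at `P`. -/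
inductive RSL (P : Ideal A) : ℕ → Ideal A → Prop
  | nil : RSL P 0 ⊥
  | cons {k : ℕ} {𝔞 : Ideal A} {x : A} : RSL P k 𝔞 → x ∈ P → NZL P 𝔞 x →
      RSL P (k + 1) (𝔞 ⊔ Ideal.span {x})

/-- There is a regular sequence of length `n` on `A/𝔞` in the maximal ideal. -/
def Dep {A : Type*} [CommRing A] [IsLocalRing A] : ℕ → Ideal A → Prop
  | 0, 𝔞 => 𝔞 ≠ ⊤
  | n + 1, 𝔞 => ∃ x ∈ maximalIdeal A, NZ 𝔞 x ∧ Dep n (𝔞 ⊔ Ideal.span {x})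

lemma isAss_iff [IsNoetherianRing A] {𝔞 p : Ideal A} : IsAss 𝔞 p ↔ p ∈ associatedPrimes A (A ⧸ 𝔞) := by
  rw [AssociatedPrimes.mem_iff, isAssociatedPrime_iff, IsAss]
  refine and_congr_right fun _ => ⟨?_, ?_⟩
  · rintro ⟨z, hz⟩
    refine ⟨Ideal.Quotient.mk 𝔞 z, ?_⟩
    ext w
    rw [hz, Submodule.mem_colon_singleton, Submodule.mem_bot, ← Ideal.Quotient.eq_zero_iff_mem, map_mul]
    rfl
  · rintro ⟨z, hz⟩
    obtain ⟨z, rfl⟩ := Ideal.Quotient.mk_surjective z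
    refine ⟨z, fun w => ?_⟩
    rw [hz, Submodule.mem_colon_singleton, Submodule.mem_bot, ← Ideal.Quotient.eq_zero_iff_mem, map_mul]
    rfl

lemma finite_ass [IsNoetherianRing A] (𝔞 : Ideal A) : {p | IsAss 𝔞 p}.Finite := by
  refine (associatedPrimes.finite A (A ⧸ 𝔞)).subset fun p hp => isAss_iff.1 hp

lemma exists_ass [IsNoetherianRing A] {𝔞 : Ideal A} {z : A} (hz : z ∉ 𝔞) :
    ∃ p, IsAss 𝔞 p ∧ ∀ w, w * z ∈ 𝔞 → w ∈ p := by
  obtain ⟨p, hp, hle⟩ := exists_le_isAssociatedPrime_of_isNoetherianRing A (Ideal.Quotient.mk 𝔞 z)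
    (by rwa [Ne, Ideal.Quotient.eq_zero_iff_mem])
  refine ⟨p, isAss_iff.2 hp, fun w hw => hle ?_⟩
  rw [Submodule.mem_colon_singleton, Submodule.mem_bot]
  rw [← Ideal.Quotient.eq_zero_iff_mem, map_mul] at hw
  exact hw

lemma IsAss.le {𝔞 p : Ideal A} (h : IsAss 𝔞 p) : 𝔞 ≤ p := by
  obtain ⟨_, z, hz⟩ := h
  exact fun w hw => (hz w).2 (Ideal.mul_mem_right _ _ hw)

lemma NZ.notMem {𝔞 p : Ideal A} {x : A} (h : NZ 𝔞 x) (hp : IsAss 𝔞 p) : x ∉ p := by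
  obtain ⟨hp, z, hz⟩ := hp
  intro hx
  refine hp.ne_top ((Ideal.eq_top_iff_one _).2 ((hz 1).2 ?_))
  rw [one_mul]; exact h _ ((hz x).1 hx)

lemma nz_of_ass [IsNoetherianRing A] {𝔞 : Ideal A} {x : A} (h : ∀ p, IsAss 𝔞 p → x ∉ p) : NZ 𝔞 x := by
  intro z hz
  by_contra hz'
  obtain ⟨p, hp, hw⟩ := exists_ass hz'
  exact h p hp (hw x hz)

lemma nzl_of_ass [IsNoetherianRing A] {𝔞 P : Ideal A} [P.IsPrime] {x : A}
    (h : ∀ p, IsAss 𝔞 p → p ≤ P → x ∉ p) : NZL P 𝔞 x := by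
  classical
  -- `𝔟` is the contraction of the extension of `𝔞` to the localization
  let 𝔟 : Ideal A :=
    { carrier := {z | ∃ s, s ∉ P ∧ s * z ∈ 𝔞}
      zero_mem' := ⟨1, fun h => Ideal.IsPrime.ne_top' ((Ideal.eq_top_iff_one P).2 h), by simp⟩
      add_mem' := by
        rintro a b ⟨s, hs, ha⟩ ⟨t, ht, hb⟩
        refine ⟨s * t, fun h => (Ideal.IsPrime.mem_or_mem ‹_› h).elim hs ht, ?_⟩
        rw [show s * t * (a + b) = t * (s * a) + s * (t * b) by ring]
        exact add_mem (Ideal.mul_mem_left _ _ ha) (Ideal.mul_mem_left _ _ hb)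
      smul_mem' := by
        rintro c a ⟨s, hs, ha⟩
        refine ⟨s, hs, ?_⟩
        rw [smul_eq_mul, mul_left_comm]; exact Ideal.mul_mem_left _ _ ha }
  obtain ⟨T, hT⟩ := (inferInstance : IsNoetherianRing A).noetherian 𝔟
  -- a single denominator `t` works for all of `𝔟`
  have ht : ∃ t, t ∉ P ∧ ∀ z ∈ 𝔟, t * z ∈ 𝔞 := by
    have : ∀ z : T, ∃ s, s ∉ P ∧ s * (z : A) ∈ 𝔞 := fun z =>
      (show (z : A) ∈ 𝔟 from hT ▸ Ideal.subset_span z.2)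
    choose s hs hs' using this
    refine ⟨∏ z : T, s z, fun h => ?_, fun z hz => ?_⟩
    · obtain ⟨z, -, hz⟩ := (Ideal.IsPrime.prod_mem_iff).1 h
      exact hs z hz
    · have : 𝔟 ≤ 𝔞.colon {∏ z : T, s z} := by
        rw [← hT, Submodule.span_le]
        intro z hz
        rw [SetLike.mem_coe, Submodule.mem_colon_singleton, smul_eq_mul, mul_comm,
          ← Finset.mul_prod_erase _ _ (Finset.mem_univ (⟨z, hz⟩ : T)), mul_right_comm]
        exact Ideal.mul_mem_right _ _ (hs' ⟨z, hz⟩)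
      have := this hz
      rwa [Submodule.mem_colon_singleton, smul_eq_mul, mul_comm] at this
  obtain ⟨t, htP, ht⟩ := ht
  intro z hz
  by_contra hcon
  have hzb : z ∉ 𝔟 := hcon
  obtain ⟨p, ⟨hp, y, hy⟩, hw⟩ := exists_ass hzb
  have hyb : y ∉ 𝔟 := fun h => hp.ne_top ((Ideal.eq_top_iff_one _).2 ((hy 1).2 (by rwa [one_mul])))
  have hpP : p ≤ P := by
    intro w hw
    by_contra hwP
    obtain ⟨s, hs, hsw⟩ := (hy w).1 hw
    refine hyb ⟨s * w, fun h => (Ideal.IsPrime.mem_or_mem ‹_› h).elim hs hwP, ?_⟩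
    rwa [mul_assoc]
  refine h p ⟨hp, t * y, fun w => ?_⟩ hpP (hw x ⟨1, fun h => Ideal.IsPrime.ne_top'
    ((Ideal.eq_top_iff_one P).2 h), by rwa [one_mul]⟩)
  constructor
  · intro hw
    rw [mul_left_comm]; exact ht _ ((hy w).1 hw)
  · intro hw
    exact (hy w).2 ⟨t, htP, by rwa [mul_left_comm]⟩

lemma avoid {S : Set (Ideal A)} (hS : S.Finite) (hp : ∀ p ∈ S, p.IsPrime) {I : Ideal A}
    (h : ∀ p ∈ S, ¬ I ≤ p) : ∃ x ∈ I, ∀ p ∈ S, x ∉ p := by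
  by_contra! hcon
  have := (Ideal.subset_union_prime_finite hS (f := id) ⊤ ⊤ (fun i hi _ _ => hp i hi) (I := I)).1 (by
    intro x hx
    obtain ⟨p, hp, hxp⟩ := hcon x hx
    exact Set.mem_biUnion hp hxp)
  obtain ⟨p, hp, hle⟩ := this
  exact h p hp hle

lemma NZ.nzl {P 𝔞 : Ideal A} {x : A} (h : NZ 𝔞 x) (hP : P ≠ ⊤) : NZL P 𝔞 x :=
  fun z hz => ⟨1, fun h => hP ((Ideal.eq_top_iff_one P).2 h), by rw [one_mul]; exact h z hz⟩

lemma RSL.le {P : Ideal A} {k : ℕ} {𝔞 : Ideal A} (h : RSL P k 𝔞) : 𝔞 ≤ P := by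
  induction h with
  | nil => exact bot_le
  | cons _ hx _ ih => exact sup_le ih ((Ideal.span_singleton_le_iff_mem _).2 hx)

lemma RSL.height_le {P : Ideal A} {k : ℕ} {𝔞 : Ideal A} (h : RSL P k 𝔞) {Q : Ideal A} [hQ : Q.IsPrime]
    (h1 : 𝔞 ≤ Q) (h2 : Q ≤ P) : (k : ℕ∞) ≤ Q.height := by
  induction h generalizing Q with
  | nil => simp
  | @cons k 𝔞 x _ hx hnz ih =>
    have key : ∀ n s, s ∉ Q → x ^ n * s ∉ 𝔞 := by
      intro n
      induction n with
      | zero => intro s hs h; exact hs (h1 (Ideal.mem_sup_left (by simpa using h)))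
      | succ n ihn =>
        intro s hs h
        rw [pow_succ', mul_assoc] at h
        obtain ⟨s', hs', h'⟩ := hnz _ h
        refine ihn (s' * s) (fun hh => (hQ.mem_or_mem hh).elim (fun hh => hs' (h2 hh)) hs) ?_
        rwa [mul_left_comm] 
    let S : Submonoid A := Submonoid.powers x ⊔ Q.primeCompl
    have hS : Disjoint (𝔞 : Set A) S := by
      rw [Set.disjoint_left]
      intro w hw hwS
      obtain ⟨y, ⟨n, rfl⟩, s, hs, rfl⟩ := Submonoid.mem_sup.1 hwS
      exact key n s hs hw
    obtain ⟨Q', hQ', hle, hdis⟩ := Ideal.exists_le_prime_disjoint 𝔞 S hS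
    rw [Set.disjoint_left] at hdis
    have hQQ : Q' < Q := by
      refine lt_of_le_of_ne (fun w hw => ?_) ?_
      · by_contra hwQ
        exact hdis hw (Submonoid.mem_sup_right (show w ∈ Q.primeCompl from hwQ))
      · rintro rfl
        refine hdis (h1 (Ideal.mem_sup_right (Ideal.mem_span_singleton_self x)))
          (Submonoid.mem_sup_left (Submonoid.mem_powers x))
    have h3 := ih hle (hQQ.le.trans h2)
    have h4 := Ideal.height_add_one_le_of_lt_of_isPrime hQQ
    push_cast
    exact (add_le_add_left h3 1).trans h4

lemma RSL.exists_finset {P : Ideal A} {k : ℕ} {𝔞 : Ideal A} (h : RSL P k 𝔞) :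
    ∃ s : Finset A, s.card ≤ k ∧ 𝔞 = Ideal.span s := by
  classical
  induction h with
  | nil => exact ⟨∅, by simp, by simp⟩
  | @cons k 𝔞 x _ _ _ ih =>
    obtain ⟨s, hs, rfl⟩ := ih
    refine ⟨insert x s, (Finset.card_insert_le _ _).trans (by omega), ?_⟩
    rw [Finset.coe_insert, Ideal.span_insert, sup_comm]

lemma RSL.height_le_of_minimal [IsNoetherianRing A] {P : Ideal A} {k : ℕ} {𝔞 : Ideal A}
    (h : RSL P k 𝔞) (hm : P ∈ 𝔞.minimalPrimes) : P.height ≤ k := by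
  obtain ⟨s, hs, rfl⟩ := h.exists_finset
  exact (Ideal.height_le_card_of_mem_minimalPrimes_span_finset hm).trans (by exact_mod_cast hs)

section Loc
variable [IsLocalRing A] [IsNoetherianRing A]

lemma NZL.nz {𝔞 : Ideal A} {x : A} (h : NZL (maximalIdeal A) 𝔞 x) : NZ 𝔞 x := by
  intro z hz
  obtain ⟨s, hs, h⟩ := h z hz
  have : IsUnit s := by simpa using hs
  exact (Ideal.unit_mul_mem_iff_mem 𝔞 this).1 h

lemma Dep.ne_top : ∀ {n : ℕ} {𝔞 : Ideal A}, Dep n 𝔞 → 𝔞 ≠ ⊤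
  | 0, _, h => h
  | n + 1, 𝔞, ⟨x, _, _, h⟩ => by
    rintro rfl
    exact Dep.ne_top h (by simp)

/-- Passing to the quotient by a nonzerodivisor, an associated prime specializes properly. -/
lemma Dep.step {n : ℕ} {𝔞 : Ideal A} (h : Dep (n + 1) 𝔞) {p : Ideal A} (hp : IsAss 𝔞 p) :
    ∃ (𝔟 q : Ideal A), Dep n 𝔟 ∧ IsAss 𝔟 q ∧ p < q := by
  obtain ⟨x, hx, hnz, hd⟩ := h
  have hxp := hnz.notMem hp
  have hpp := hp.1
  obtain ⟨_, z, hz⟩ := hp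
  have hz𝔞 : z ∉ 𝔞 := fun h => hpp.ne_top ((Ideal.eq_top_iff_one _).2 ((hz 1).2 (by rwa [one_mul])))
  let N : Ideal A := 𝔞.colon (p : Set A)
  have hN : ∀ w, w ∈ N ↔ ∀ y ∈ p, y * w ∈ 𝔞 := by
    intro w; simp only [N, Submodule.mem_colon, smul_eq_mul, SetLike.mem_coe, mul_comm w]
  have hNx : ¬ N ≤ 𝔞 ⊔ Ideal.span {x} := by
    intro hcon
    have h2 : N ≤ 𝔞 ⊔ Ideal.span {x} • N := by
      intro w hw
      obtain ⟨a, ha, b, hb, rfl⟩ := Submodule.mem_sup.1 (hcon hw)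
      obtain ⟨c, rfl⟩ := Ideal.mem_span_singleton.1 hb
      refine add_mem (Ideal.mem_sup_left ha) (Ideal.mem_sup_right
        (Submodule.smul_mem_smul (Ideal.mem_span_singleton_self x) ((hN c).2 fun y hy => hnz _ ?_)))
      have := (hN _).1 hw y hy
      rw [mul_add] at this
      have := (Ideal.add_mem_iff_right _ (Ideal.mul_mem_left _ y ha)).1 this
      rwa [mul_left_comm]
    have h3 := Submodule.le_of_le_smul_of_le_jacobson_bot
      ((inferInstance : IsNoetherianRing A).noetherian N)
      (by rw [IsLocalRing.jacobson_eq_maximalIdeal _ bot_ne_top,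
            Ideal.span_singleton_le_iff_mem]; exact hx) h2
    exact hz𝔞 (h3 ((hN z).2 fun y hy => (hz y).1 hy))
  obtain ⟨w, hw, hw'⟩ := Set.not_subset.1 hNx
  obtain ⟨q, hq, hqw⟩ := exists_ass hw'
  have hpq : p < q := by
    refine lt_of_le_of_ne (fun y hy => hqw y (Ideal.mem_sup_left ((hN w).1 hw y hy))) ?_
    rintro rfl
    exact hxp (hqw x (Ideal.mem_sup_right
      (Ideal.mul_mem_right _ _ (Ideal.mem_span_singleton_self x))))
  exact ⟨_, q, hd, hq, hpq⟩

/-- In terms of heights: depth is at most the dimension of the quotient by any associated prime. -/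
lemma Dep.height {n : ℕ} {𝔞 : Ideal A} (h : Dep n 𝔞) {p : Ideal A} (hp : IsAss 𝔞 p) :
    p.height + n ≤ (maximalIdeal A).height := by
  induction n generalizing 𝔞 p with
  | zero =>
    have := hp.1
    simpa using Ideal.height_mono (le_maximalIdeal this.ne_top)
  | succ n ih =>
    obtain ⟨𝔟, q, hd, hq, hpq⟩ := h.step hp
    have := hp.1
    have := hq.1
    have h1 := Ideal.height_add_one_le_of_lt_of_isPrime hpq
    have h2 := ih hd hq
    refine le_trans ?_ h2
    push_cast
    rw [add_comm (n : ℕ∞) 1, ← add_assoc]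
    exact add_le_add_left h1 _

/-- Interchange of two elements of a regular sequence. -/
lemma NZ.swap {𝔞 : Ideal A} {x w : A} (hx : NZ 𝔞 x) (hw : NZ (𝔞 ⊔ Ideal.span {x}) w) :
    NZ (𝔞 ⊔ Ideal.span {w}) x := by
  intro z hz
  obtain ⟨a, ha, b, hb, e⟩ := Submodule.mem_sup.1 hz
  obtain ⟨u, rfl⟩ := Ideal.mem_span_singleton.1 hb
  have h1 : u ∈ 𝔞 ⊔ Ideal.span {x} := by
    apply hw
    rw [show w * u = x * z - a by rw [← e]; ring]
    exact sub_mem (Ideal.mem_sup_right (Ideal.mul_mem_right _ _ (Ideal.mem_span_singleton_self x)))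
      (Ideal.mem_sup_left ha)
  obtain ⟨a', ha', b', hb', rfl⟩ := Submodule.mem_sup.1 h1
  obtain ⟨v, rfl⟩ := Ideal.mem_span_singleton.1 hb'
  have h2 : z - w * v ∈ 𝔞 := by
    apply hx
    rw [show x * (z - w * v) = a + w * a' by linear_combination -e]
    exact add_mem ha (Ideal.mul_mem_left _ _ ha')
  rw [show z = (z - w * v) + w * v by ring]
  exact add_mem (Ideal.mem_sup_left h2) (Ideal.mem_sup_right
    (Ideal.mul_mem_right _ _ (Ideal.mem_span_singleton_self w)))

/-- Depth at least one means that there is no socle. -/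
lemma Dep.not_ass {n : ℕ} {𝔞 : Ideal A} (h : Dep (n + 1) 𝔞) : ¬ IsAss 𝔞 (maximalIdeal A) := by
  obtain ⟨x, hx, hnz, _⟩ := h
  exact fun h => hnz.notMem h hx

/-- Any nonzerodivisor in the maximal ideal is the beginning of a regular sequence of maximal length. -/
lemma Dep.exchange {n : ℕ} {𝔞 : Ideal A} (h : Dep (n + 1) 𝔞) {x : A} (hx : x ∈ maximalIdeal A)
    (hnz : NZ 𝔞 x) : Dep n (𝔞 ⊔ Ideal.span {x}) := by
  induction n generalizing 𝔞 x with
  | zero =>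
    have h1 := le_maximalIdeal h.ne_top
    exact ne_top_of_le_ne_top (maximalIdeal.isMaximal A).ne_top
      (sup_le h1 ((Ideal.span_singleton_le_iff_mem _).2 hx))
  | succ k ih =>
    have hna := h.not_ass
    obtain ⟨y, hy, hynz, hyd⟩ := h
    have hnay := hyd.not_ass
    have hnax : ¬ IsAss (𝔞 ⊔ Ideal.span {x}) (maximalIdeal A) := by
      rintro ⟨_, z, hz⟩
      obtain ⟨y2, hy2, hy2nz, _⟩ := hyd
      obtain ⟨a, ha, b, hb, e⟩ := Submodule.mem_sup.1 ((hz y).1 hy)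
      obtain ⟨u, rfl⟩ := Ideal.mem_span_singleton.1 hb
      have h1 : ∀ w ∈ maximalIdeal A, w * u ∈ 𝔞 ⊔ Ideal.span {y} := by
        intro w hw
        obtain ⟨a', ha', b', hb', e'⟩ := Submodule.mem_sup.1 ((hz w).1 hw)
        obtain ⟨v, rfl⟩ := Ideal.mem_span_singleton.1 hb'
        have : w * u - y * v ∈ 𝔞 := by
          apply hnz
          rw [show x * (w * u - y * v) = y * a' - w * a by linear_combination w * e - y * e']
          exact sub_mem (Ideal.mul_mem_left _ _ ha') (Ideal.mul_mem_left _ _ ha)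
        rw [show w * u = (w * u - y * v) + y * v by ring]
        exact add_mem (Ideal.mem_sup_left this) (Ideal.mem_sup_right
          (Ideal.mul_mem_right _ _ (Ideal.mem_span_singleton_self y)))
      have h2 := hy2nz _ (h1 y2 hy2)
      obtain ⟨a', ha', b', hb', rfl⟩ := Submodule.mem_sup.1 h2
      obtain ⟨v, rfl⟩ := Ideal.mem_span_singleton.1 hb'
      have h3 : z - x * v ∈ 𝔞 := by
        apply hynz
        rw [show y * (z - x * v) = a + x * a' by linear_combination -e]
        exact add_mem ha (Ideal.mul_mem_left _ _ ha')
      have h4 : z ∈ 𝔞 ⊔ Ideal.span {x} := by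
        rw [show z = (z - x * v) + x * v by ring]
        exact add_mem (Ideal.mem_sup_left h3) (Ideal.mem_sup_right
          (Ideal.mul_mem_right _ _ (Ideal.mem_span_singleton_self x)))
      have := (hz 1).2 (by rwa [one_mul])
      exact (maximalIdeal.isMaximal A).ne_top ((Ideal.eq_top_iff_one _).2 this)
    obtain ⟨w, hw, hwn⟩ := avoid (I := maximalIdeal A)
      (((finite_ass 𝔞).union (finite_ass (𝔞 ⊔ Ideal.span {x}))).union
        (finite_ass (𝔞 ⊔ Ideal.span {y}))) (by
        rintro p ((hp | hp) | hp) <;> exact hp.1) (by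
        have aux : ∀ 𝔟, ¬ IsAss 𝔟 (maximalIdeal A) → ∀ p, IsAss 𝔟 p → ¬ maximalIdeal A ≤ p := by
          intro 𝔟 h𝔟 p hp hle
          have := (maximalIdeal.isMaximal A).eq_of_le hp.1.ne_top hle
          exact h𝔟 (this ▸ hp)
        rintro p ((hp | hp) | hp)
        exacts [aux _ hna p hp, aux _ hnax p hp, aux _ hnay p hp])
    have w1 : NZ 𝔞 w := nz_of_ass fun p hp => hwn p (Or.inl (Or.inl hp))
    have w2 : NZ (𝔞 ⊔ Ideal.span {x}) w := nz_of_ass fun p hp => hwn p (Or.inl (Or.inr hp))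
    have w3 : NZ (𝔞 ⊔ Ideal.span {y}) w := nz_of_ass fun p hp => hwn p (Or.inr hp)
    have d1 := ih hyd hw w3
    rw [sup_right_comm] at d1
    have d2 : Dep (k + 1) (𝔞 ⊔ Ideal.span {w}) := ⟨y, hy, hynz.swap w3, d1⟩
    have d3 := ih d2 hx (hnz.swap w2)
    rw [sup_right_comm] at d3
    exact ⟨w, hw, w2, d3⟩

lemma RSL.dep {k : ℕ} {𝔞 : Ideal A} (h : RSL (maximalIdeal A) k 𝔞) {n : ℕ}
    (hd : Dep (n + k) (⊥ : Ideal A)) : Dep n 𝔞 := by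
  induction h generalizing n with
  | nil => exact hd
  | @cons k 𝔞 x _ hx hnz ih =>
    exact (ih (n := n + 1) (by rwa [add_assoc, add_comm 1 k])).exchange hx hnz.nz

lemma RSL.dep' {k : ℕ} {𝔞 : Ideal A} (h : RSL (maximalIdeal A) k 𝔞) {n : ℕ}
    (hd : Dep n 𝔞) : Dep (n + k) (⊥ : Ideal A) := by
  induction h generalizing n with
  | nil => exact hd
  | @cons k 𝔞 x _ hx hnz ih =>
    have := ih (n := n + 1) ⟨x, hx, hnz.nz, hd⟩
    rwa [add_assoc, add_comm 1 k] at this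

end Loc
end CMone

section CMtwo
open IsLocalRing

variable {A : Type*} [CommRing A]

lemma mem_map_loc {P : Ideal A} [P.IsPrime] {𝔞 : Ideal A} {z : A} :
    algebraMap A (Localization.AtPrime P) z ∈ 𝔞.map (algebraMap A (Localization.AtPrime P)) ↔
      ∃ s, s ∉ P ∧ s * z ∈ 𝔞 := by
  rw [IsLocalization.algebraMap_mem_map_algebraMap_iff P.primeCompl]
  rfl

lemma NZL.loc {P : Ideal A} [P.IsPrime] {𝔞 : Ideal A} {x : A} (h : NZL P 𝔞 x) :
    NZ (𝔞.map (algebraMap A (Localization.AtPrime P))) (algebraMap A (Localization.AtPrime P) x) := by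
  intro z hz
  obtain ⟨a, s, rfl⟩ := IsLocalization.exists_mk'_eq P.primeCompl z
  have hu := IsLocalization.map_units (Localization.AtPrime P) s
  have h1 : algebraMap A (Localization.AtPrime P) (x * a) ∈ 𝔞.map (algebraMap A (Localization.AtPrime P)) := by
    rw [map_mul, ← IsLocalization.mk'_spec _ a s, ← mul_assoc]
    exact Ideal.mul_mem_right _ _ hz
  obtain ⟨s', hs', h2⟩ := mem_map_loc.1 h1
  rw [mul_left_comm] at h2
  obtain ⟨s'', hs'', h3⟩ := h _ h2
  rw [← mul_assoc] at h3
  have h4 : algebraMap A (Localization.AtPrime P) a ∈ 𝔞.map (algebraMap A (Localization.AtPrime P)) :=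
    mem_map_loc.2 ⟨s'' * s', fun h => (Ideal.IsPrime.mem_or_mem ‹_› h).elim hs'' hs', h3⟩
  rw [← IsLocalization.mk'_spec _ a s, mul_comm] at h4
  exact (Ideal.unit_mul_mem_iff_mem _ hu).1 h4

lemma NZ.of_loc {P : Ideal A} [P.IsPrime] {𝔞 : Ideal A} {x : A}
    (h : NZ (𝔞.map (algebraMap A (Localization.AtPrime P))) (algebraMap A (Localization.AtPrime P) x)) :
    NZL P 𝔞 x := by
  intro z hz
  refine mem_map_loc.1 (h _ ?_)
  rw [← map_mul]; exact Ideal.mem_map_of_mem _ hz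

lemma RSL.loc {P : Ideal A} [P.IsPrime] {k : ℕ} {𝔞 : Ideal A} (h : RSL P k 𝔞) :
    RSL (maximalIdeal (Localization.AtPrime P)) k (𝔞.map (algebraMap A (Localization.AtPrime P))) := by
  induction h with
  | nil => rw [Ideal.map_bot]; exact RSL.nil
  | @cons k 𝔞 x _ hx hnz ih =>
    rw [Ideal.map_sup, Ideal.map_span, Set.image_singleton]
    refine RSL.cons ih ?_ (hnz.loc.nzl (maximalIdeal.isMaximal _).ne_top)
    rw [← Localization.AtPrime.map_eq_maximalIdeal]
    exact Ideal.mem_map_of_mem _ hx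

lemma RSL.exists_fin {P : Ideal A} {k : ℕ} {𝔞 : Ideal A} (h : RSL P k 𝔞) :
    ∃ f : Fin k → A, (∀ i, f i ∈ P) ∧ Ideal.span (Set.range f) = 𝔞 ∧
      ∀ i, NZL P (Ideal.span (f '' {j | j < i})) (f i) := by
  induction h with
  | nil => exact ⟨Fin.elim0, fun i => i.elim0, by simp, fun i => i.elim0⟩
  | @cons k 𝔞 x _ hx hnz ih =>
    obtain ⟨f, hf1, hf2, hf3⟩ := ih
    refine ⟨Fin.snoc f x, ?_, ?_, ?_⟩
    · intro i
      refine Fin.lastCases ?_ (fun i => ?_) i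
      · simpa using hx
      · simpa using hf1 i
    · rw [← hf2, ← Ideal.span_union]
      congr 1
      ext w
      simp only [Set.mem_range, Set.mem_union, Set.mem_singleton_iff]
      constructor
      · rintro ⟨i, rfl⟩
        refine Fin.lastCases ?_ (fun i => ?_) i
        · right; simp
        · left; exact ⟨i, by simp⟩
      · rintro (⟨i, rfl⟩ | rfl)
        · exact ⟨i.castSucc, by simp⟩
        · exact ⟨Fin.last k, by simp⟩
    · intro i
      refine Fin.lastCases ?_ (fun i => ?_) i
      · rw [Fin.snoc_last]
        convert hnz
        rw [← hf2]
        congr 1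
        ext w
        simp only [Set.mem_image, Set.mem_ofPred_eq, Set.mem_range]
        constructor
        · rintro ⟨j, hj, rfl⟩
          refine ⟨j.castPred hj.ne, ?_⟩
          conv_rhs => rw [← Fin.castSucc_castPred j hj.ne, Fin.snoc_castSucc]
        · rintro ⟨j, rfl⟩
          exact ⟨j.castSucc, Fin.castSucc_lt_last j, by simp⟩
      · rw [Fin.snoc_castSucc]
        convert hf3 i using 2
        ext w
        simp only [Set.mem_image, Set.mem_ofPred_eq]
        constructor
        · rintro ⟨j, hj, rfl⟩
          have hj' : j ≠ Fin.last k := (hj.trans (Fin.castSucc_lt_last i)).ne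
          refine ⟨j.castPred hj', ?_, ?_⟩
          · rw [← Fin.castSucc_lt_castSucc_iff, Fin.castSucc_castPred]; exact hj
          · conv_rhs => rw [← Fin.castSucc_castPred j hj', Fin.snoc_castSucc]
        · rintro ⟨j, hj, rfl⟩
          exact ⟨j.castSucc, by simpa using hj, by simp⟩

section L
variable [IsLocalRing A] [IsNoetherianRing A]

lemma isCM_of_RSL {k : ℕ} {𝔞 : Ideal A} (h : RSL (maximalIdeal A) k 𝔞)
    (hk : (maximalIdeal A).height = k) : IsCMLocalRing A := by
  have hle := h.le
  obtain ⟨f, hf1, hf2, hf3⟩ := h.exists_fin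
  refine ⟨k, f, hf1, ⟨fun i z hz => ?_, ?_⟩, ?_⟩
  · rw [smul_eq_mul, Ideal.mul_top] at hz ⊢
    exact (hf3 i).nz z (by simpa using hz)
  · rw [smul_eq_mul, Ideal.mul_top, hf2]
    exact ne_top_of_le_ne_top (maximalIdeal.isMaximal A).ne_top hle
  · rw [← IsLocalRing.maximalIdeal_height_eq_ringKrullDim, hk]; rfl

lemma IsCMLocalRing.dep (h : IsCMLocalRing A) : ∃ d, Dep d (⊥ : Ideal A) ∧ (maximalIdeal A).height = d := by
  obtain ⟨n, f, hf1, ⟨hf2, hf3⟩, hd⟩ := h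
  refine ⟨n, ?_, ?_⟩
  · rw [smul_eq_mul, Ideal.mul_top] at hf3
    have key : ∀ i ≤ n, RSL (maximalIdeal A) i (Ideal.span (f '' {j | j.val < i})) := by
      intro i
      induction i with
      | zero => intro _; simpa using RSL.nil
      | succ i ih =>
        intro hi
        have h1 := ih (by omega)
        have h2 := h1.cons (hf1 ⟨i, hi⟩) (NZ.nzl (fun z hz => by
          have := hf2 ⟨i, hi⟩ z (by rw [smul_eq_mul, smul_eq_mul, Ideal.mul_top]; exact hz)
          rwa [smul_eq_mul, Ideal.mul_top] at this) (maximalIdeal.isMaximal A).ne_top)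
        convert h2 using 1
        rw [← Ideal.span_union]
        congr 1
        ext w
        simp only [Set.mem_image, Set.mem_ofPred_eq, Set.mem_union, Set.mem_singleton_iff]
        constructor
        · rintro ⟨j, hj, rfl⟩
          rcases Nat.lt_succ_iff_lt_or_eq.1 hj with h | h
          · exact Or.inl ⟨j, h, rfl⟩
          · right; congr 1; exact Fin.ext h
        · rintro (⟨j, hj, rfl⟩ | rfl)
          · exact ⟨j, by omega, rfl⟩
          · exact ⟨⟨i, hi⟩, by simp, rfl⟩
    have h1 := (key n le_rfl).dep' (n := 0) (by
      convert hf3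
      ext w
      simp)
    rwa [zero_add] at h1
  · rw [← IsLocalRing.maximalIdeal_height_eq_ringKrullDim] at hd
    exact (WithBot.coe_injective hd).symm

/-- In a Cohen–Macaulay local ring a regular sequence which is not maximal has no socle. -/
lemma IsCMLocalRing.not_ass (h : IsCMLocalRing A) {k : ℕ} {𝔞 : Ideal A} (hs : RSL (maximalIdeal A) k 𝔞)
    (hk : (k : ℕ∞) < (maximalIdeal A).height) : ¬ IsAss 𝔞 (maximalIdeal A) := by
  obtain ⟨d, hd, he⟩ := h.dep
  rw [he] at hk
  have hk : k < d := by exact_mod_cast hk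
  obtain ⟨n, rfl⟩ := Nat.exists_eq_add_of_lt hk
  exact (hs.dep (n := n + 1) (by convert hd using 1; omega)).not_ass

/-- Every prime of a Cohen–Macaulay local ring contains a regular sequence of length its height. -/
lemma IsCMLocalRing.exists_RSL (h : IsCMLocalRing A) (P : Ideal A) [hP : P.IsPrime] :
    ∃ (k : ℕ) (𝔞 : Ideal A), RSL P k 𝔞 ∧ P.height = k := by
  obtain ⟨d, hd, he⟩ := h.dep
  -- regular sequences of `A` consisting of elements of `P`
  let good : ℕ → Prop := fun k => ∃ 𝔞, RSL (maximalIdeal A) k 𝔞 ∧ RSL P k 𝔞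
  have hPm := le_maximalIdeal hP.ne_top
  have hb : ∀ k, good k → k ≤ d := by
    rintro k ⟨𝔞, h1, h2⟩
    have := h2.height_le h2.le le_rfl
    have := this.trans (Ideal.height_mono hPm)
    rw [he] at this
    exact_mod_cast this
  have h0 : good 0 := ⟨⊥, RSL.nil, RSL.nil⟩
  classical
  let k := Nat.findGreatest good d
  have hk : good k := Nat.findGreatest_spec (P := good) (Nat.zero_le d) h0
  have hk' : ¬ good (k + 1) := fun h =>
    Nat.findGreatest_is_greatest (P := good) (n := d) (k := k + 1) (Nat.lt_succ_self _) (hb _ h) h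
  obtain ⟨𝔞, h1, h2⟩ := hk
  have hkd : k ≤ d := hb k ⟨𝔞, h1, h2⟩
  obtain ⟨q, hq, hPq⟩ : ∃ q, IsAss 𝔞 q ∧ P ≤ q := by
    by_contra! hcon
    obtain ⟨x, hx, hxn⟩ := avoid (finite_ass 𝔞) (fun p hp => hp.1) hcon
    have hn : NZ 𝔞 x := nz_of_ass hxn
    exact hk' ⟨_, h1.cons (hPm hx) (hn.nzl (maximalIdeal.isMaximal A).ne_top),
      h2.cons hx (hn.nzl hP.ne_top)⟩
  have hd' : Dep (d - k) 𝔞 := h1.dep (by rwa [Nat.sub_add_cancel hkd])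
  have h3 := hd'.height hq
  have hqp := hq.1
  have h4 := h2.height_le h2.le le_rfl
  have h5 : P.height ≤ q.height := Ideal.height_mono hPq
  refine ⟨k, 𝔞, h2, ?_⟩
  have hPt : P.height ≠ ⊤ := by
    intro h
    rw [h, top_le_iff] at h5
    rw [h5, he] at h3
    simp at h3
  have hqt : q.height ≠ ⊤ := by
    intro h5
    rw [h5, he] at h3
    simp at h3
  lift P.height to ℕ using hPt with u
  lift q.height to ℕ using hqt with v
  rw [he] at h3
  norm_cast at *
  omega

end L

variable [IsNoetherianRing A]

lemma height_loc (P : Ideal A) [P.IsPrime] : (maximalIdeal (Localization.AtPrime P)).height = P.height := by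
  have h1 := IsLocalization.AtPrime.ringKrullDim_eq_height P (Localization.AtPrime P)
  rw [← IsLocalRing.maximalIdeal_height_eq_ringKrullDim] at h1
  exact WithBot.coe_injective h1

lemma isCM_loc_of_RSL {P : Ideal A} [P.IsPrime] {k : ℕ} {𝔞 : Ideal A} (h : RSL P k 𝔞)
    (hk : P.height ≤ k) : IsCMLocalRing (Localization.AtPrime P) :=
  isCM_of_RSL h.loc ((height_loc P).trans (le_antisymm hk (h.height_le h.le le_rfl)))

lemma not_ass_of_isCM_loc {P : Ideal A} [hP : P.IsPrime] (hc : IsCMLocalRing (Localization.AtPrime P))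
    {k : ℕ} {𝔞 : Ideal A} (h : RSL P k 𝔞) (hk : (k : ℕ∞) < P.height) : ¬ IsAss 𝔞 P := by
  rintro ⟨_, z, hz⟩
  refine hc.not_ass h.loc (by rwa [height_loc]) ⟨(maximalIdeal.isMaximal _).isPrime,
    algebraMap A _ z, fun w => ?_⟩
  have hz' : ¬ ∃ s, s ∉ P ∧ s * z ∈ 𝔞 := by
    rintro ⟨s, hs, h⟩
    exact hs ((hz s).2 h)
  rw [← mem_map_loc] at hz'
  constructor
  · intro hw
    rw [← Localization.AtPrime.map_eq_maximalIdeal] at hw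
    have : P.map (algebraMap A (Localization.AtPrime P)) ≤
        (𝔞.map (algebraMap A (Localization.AtPrime P))).colon {algebraMap A (Localization.AtPrime P) z} := by
      rw [Ideal.map_le_iff_le_comap]
      intro y hy
      rw [Ideal.mem_comap, Submodule.mem_colon_singleton, smul_eq_mul, ← map_mul]
      exact Ideal.mem_map_of_mem _ ((hz y).1 hy)
    have := this hw
    rwa [Submodule.mem_colon_singleton] at this
  · intro hw
    by_contra hwm
    have hu : IsUnit w := by simpa using hwm
    exact hz' ((Ideal.unit_mul_mem_iff_mem _ hu).1 hw)

/-- Pull back a regular sequence of `A_M` lying in `QA_M` to a sequence of `A` in `Q`. -/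
lemma RSL.of_loc {M Q : Ideal A} [M.IsPrime] [hQ : Q.IsPrime] (hQM : Q ≤ M) {k : ℕ}
    {𝔟 : Ideal (Localization.AtPrime M)} (h : RSL (Q.map (algebraMap A (Localization.AtPrime M))) k 𝔟) :
    ∃ 𝔞 : Ideal A, 𝔞.map (algebraMap A _) = 𝔟 ∧ RSL Q k 𝔞 := by
  induction h with
  | nil => exact ⟨⊥, Ideal.map_bot, RSL.nil⟩
  | @cons k 𝔟 x _ hx hnz ih =>
    obtain ⟨𝔞, rfl, h⟩ := ih
    obtain ⟨y, s, rfl⟩ := IsLocalization.exists_mk'_eq M.primeCompl x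
    have hu := IsLocalization.map_units (Localization.AtPrime M) s
    have hy : algebraMap A (Localization.AtPrime M) y =
        IsLocalization.mk' _ y s * algebraMap A (Localization.AtPrime M) s :=
      (IsLocalization.mk'_spec _ y s).symm
    have hyQ' : algebraMap A (Localization.AtPrime M) y ∈ Q.map (algebraMap A (Localization.AtPrime M)) := by
      rw [hy]; exact Ideal.mul_mem_right _ _ hx
    have hQof : ∀ t, t ∉ M → ∀ z, t * z ∈ Q → z ∈ Q := fun t ht z hz =>
      (hQ.mem_or_mem hz).resolve_left fun h => ht (hQM h)
    have hyQ : y ∈ Q := by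
      obtain ⟨t, ht, h⟩ := mem_map_loc.1 hyQ'
      exact hQof t ht y h
    refine ⟨𝔞 ⊔ Ideal.span {y}, ?_, h.cons hyQ ?_⟩
    · rw [Ideal.map_sup, Ideal.map_span, Set.image_singleton]
      congr 1
      rw [hy]
      exact Ideal.span_singleton_mul_right_unit hu _
    · intro z hz
      have h1 : IsLocalization.mk' (Localization.AtPrime M) y s * algebraMap A _ z ∈
          𝔞.map (algebraMap A (Localization.AtPrime M)) := by
        have : algebraMap A (Localization.AtPrime M) (y * z) ∈ 𝔞.map (algebraMap A _) :=
          Ideal.mem_map_of_mem _ hz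
        rw [map_mul, hy, mul_right_comm, mul_comm] at this
        exact (Ideal.unit_mul_mem_iff_mem _ hu).1 this
      obtain ⟨t, ht, h2⟩ := hnz _ h1
      obtain ⟨t1, t2, rfl⟩ := IsLocalization.exists_mk'_eq M.primeCompl t
      have h3 : algebraMap A (Localization.AtPrime M) (t1 * z) ∈ 𝔞.map (algebraMap A _) := by
        rw [map_mul, ← IsLocalization.mk'_spec (Localization.AtPrime M) t1 t2, mul_right_comm]
        exact Ideal.mul_mem_right _ _ h2
      obtain ⟨t3, ht3, h4⟩ := mem_map_loc.1 h3
      refine ⟨t3 * t1, fun h => ?_, by rwa [mul_assoc]⟩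
      have h5 := hQof t3 ht3 _ h
      apply ht
      have : algebraMap A (Localization.AtPrime M) t1 ∈ Q.map (algebraMap A _) := Ideal.mem_map_of_mem _ h5
      rw [← IsLocalization.mk'_spec (Localization.AtPrime M) t1 t2, mul_comm] at this
      exact (Ideal.unit_mul_mem_iff_mem _ (IsLocalization.map_units (Localization.AtPrime M) t2)).1 this

/-- The Cohen–Macaulay property passes from `A_M` to `A_Q` for `Q ≤ M`. -/
lemma isCM_loc_of_le {M Q : Ideal A} [M.IsPrime] [hQ : Q.IsPrime] (hQM : Q ≤ M)
    (h : IsCMLocalRing (Localization.AtPrime M)) : IsCMLocalRing (Localization.AtPrime Q) := by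
  have hd : Disjoint (M.primeCompl : Set A) (Q : Set A) :=
    Set.disjoint_left.2 fun x hx hxQ => hx (hQM hxQ)
  have hp : (Q.map (algebraMap A (Localization.AtPrime M))).IsPrime :=
    IsLocalization.isPrime_of_isPrime_disjoint M.primeCompl _ Q hQ hd
  obtain ⟨k, 𝔟, h1, h2⟩ := h.exists_RSL (Q.map (algebraMap A (Localization.AtPrime M)))
  obtain ⟨𝔞, -, h3⟩ := h1.of_loc hQM
  refine isCM_loc_of_RSL h3 ?_
  rw [← h2]
  have := IsLocalization.height_under M.primeCompl (Q.map (algebraMap A (Localization.AtPrime M)))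
  rw [IsLocalization.under_map_of_isPrime_disjoint M.primeCompl _ hQ hd] at this
  exact this.le

end CMtwo

section CMthree
open IsLocalRing
variable {R : Type*} [CommRing R] [IsLocalRing R] [IsNoetherianRing R]

lemma MP.eq_max {X q : Ideal R} (h : MP X) [hq : q.IsPrime] (hle : X ≤ q) : q = maximalIdeal R := by
  obtain ⟨j, hj⟩ := h
  exact le_antisymm (le_maximalIdeal hq.ne_top) (hq.le_of_pow_le (hj.trans hle))

/-- Two elements generating an `𝔪`-primary ideal of a two-dimensional Cohen–Macaulay local ring
form a regular sequence. -/
lemma reg2_of_MP (hCM : IsCMLocalRing R) (hdim : ringKrullDim R = 2) {α β : R}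
    (hα : α ∈ maximalIdeal R) (hβ : β ∈ maximalIdeal R) (h : MP (Ideal.span {α, β})) : Reg2 α β := by
  obtain ⟨d, hd, he⟩ := hCM.dep
  have hd2 : d = 2 := by
    rw [← IsLocalRing.maximalIdeal_height_eq_ringKrullDim, he] at hdim
    have h2 : ((d : ℕ∞) : WithBot ℕ∞) = ((2 : ℕ∞) : WithBot ℕ∞) := hdim
    exact_mod_cast WithBot.coe_injective h2
  subst hd2
  have hspan : ∀ q : Ideal R, α ∈ q → β ∈ q → Ideal.span {α, β} ≤ q := by
    intro q h1 h2
    rw [Ideal.span_le]; rintro x (rfl | rfl)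
    exacts [h1, h2]
  have hnz : NZ ⊥ β := by
    refine nz_of_ass fun p hp hβp => ?_
    obtain ⟨𝔟, q, hd1, hq, hpq⟩ := hd.step hp
    have hqm : q ≠ maximalIdeal R := fun h => hd1.not_ass (h ▸ hq)
    have hpp := hp.1
    have hqp := hq.1
    have hmin : maximalIdeal R ∈ (p ⊔ Ideal.span {α}).minimalPrimes := by
      refine ⟨⟨(maximalIdeal.isMaximal R).isPrime, sup_le (le_maximalIdeal hpp.ne_top)
        ((Ideal.span_singleton_le_iff_mem _).2 hα)⟩, ?_⟩
      rintro q' ⟨hq', hle⟩ -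
      exact (h.eq_max (hspan q' (hle (Ideal.mem_sup_right (Ideal.mem_span_singleton_self α)))
        (hle (Ideal.mem_sup_left hβp)))).ge
    have h1 := Ideal.map_height_le_one_of_mem_minimalPrimes hmin
    have hs := Ideal.Quotient.mk_surjective (I := p)
    have aux : ∀ q' : Ideal R, p ≤ q' → q'.IsPrime → (q'.map (Ideal.Quotient.mk p)).IsPrime := by
      intro q' h1 h2
      exact Ideal.map_isPrime_of_surjective hs (by rwa [Ideal.mk_ker])
    have h2 := aux q hpq.le hqp
    have h3 := aux _ (le_maximalIdeal hpp.ne_top) (maximalIdeal.isMaximal R).isPrime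
    have aux2 : ∀ q1 q2 : Ideal R, p ≤ q1 → p ≤ q2 → q1 < q2 →
        q1.map (Ideal.Quotient.mk p) < q2.map (Ideal.Quotient.mk p) := by
      intro q1 q2 hp1 hp2 hlt
      refine lt_of_le_of_ne (Ideal.map_mono hlt.le) fun heq => hlt.ne ?_
      have := congrArg (Ideal.comap (Ideal.Quotient.mk p)) heq
      rwa [Ideal.comap_map_mk hp1, Ideal.comap_map_mk hp2] at this
    have h5 := Ideal.height_add_one_le_of_lt_of_isPrime (aux2 q _ hpq.le (le_maximalIdeal hpp.ne_top)
      (lt_of_le_of_ne (le_maximalIdeal hqp.ne_top) hqm))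
    have h0 := aux p le_rfl hpp
    have h6 := Ideal.height_add_one_le_of_lt_of_isPrime (aux2 p q le_rfl hpq.le hpq)
    have : (2 : ℕ∞) ≤ 1 := by
      calc (2 : ℕ∞) = 0 + 1 + 1 := by norm_num
        _ ≤ _ := add_le_add_left (add_le_add_left bot_le 1) 1
        _ ≤ _ := add_le_add_left h6 1
        _ ≤ _ := h5
        _ ≤ 1 := h1
    exact absurd this (by norm_num)
  refine ⟨fun z hz => by simpa using hnz z (by simpa using hz), fun x y hxy => ?_⟩
  have hd1 := hd.exchange hβ hnz
  have hα' : NZ (⊥ ⊔ Ideal.span {β}) α := by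
    refine nz_of_ass fun p hp hαp => ?_
    have := hp.1
    have hm := h.eq_max (hspan p hαp (hp.le (Ideal.mem_sup_right (Ideal.mem_span_singleton_self β))))
    exact hd1.not_ass (hm ▸ hp)
  have hx : α * x ∈ (⊥ ⊔ Ideal.span {β} : Ideal R) := by
    rw [hxy]
    exact Ideal.mem_sup_right (Ideal.mul_mem_right _ _ (Ideal.mem_span_singleton_self β))
  have := hα' x hx
  rw [bot_sup_eq] at this
  exact Ideal.mem_span_singleton.1 this

end CMthree

/-! ### Forms in a regular sequence of length two -/

section Forms
open IsLocalRing Polynomial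

/-- The value at `(c, d)` of the degree `n` homogenization `∑ pᵢ cⁱ dⁿ⁻ⁱ` of `p`. -/
noncomputable def hf {R : Type*} [CommRing R] (c d : R) (n : ℕ) (p : R[X]) : R :=
  MvPolynomial.eval ![c, d] (p.homogenize n)

variable {R : Type*} [CommRing R]

lemma hf_eq (c d : R) (n : ℕ) (p : R[X]) :
    hf c d n p = ∑ i ∈ Finset.range (n + 1), p.coeff i * (c ^ i * d ^ (n - i)) := by
  rw [hf, Polynomial.homogenize, Finset.Nat.sum_antidiagonal_eq_sum_range_succ_mk, map_sum]
  refine Finset.sum_congr rfl fun i _ => ?_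
  rw [MvPolynomial.eval_monomial]
  congr 1
  rw [Finsupp.prod_fintype _ _ (by simp)]
  simp [Fin.prod_univ_two]

lemma hf_mul (c d : R) {m n : ℕ} {p q : R[X]} (hp : p.natDegree ≤ m) (hq : q.natDegree ≤ n) :
    hf c d (m + n) (p * q) = hf c d m p * hf c d n q := by
  simp [hf, Polynomial.homogenize_mul p q hp hq]

lemma hf_add (c d : R) (n : ℕ) (p q : R[X]) : hf c d n (p + q) = hf c d n p + hf c d n q := by
  simp [hf]

lemma hf_sub (c d : R) (n : ℕ) (p q : R[X]) : hf c d n (p - q) = hf c d n p - hf c d n q := by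
  simp [hf]

lemma hf_C_mul (c d : R) (n : ℕ) (r : R) (p : R[X]) : hf c d n (C r * p) = r * hf c d n p := by
  simp [hf]

lemma hf_monomial (c d : R) {i n : ℕ} (h : i ≤ n) (r : R) :
    hf c d n (monomial i r) = r * (c ^ i * d ^ (n - i)) := by
  rw [hf_eq, Finset.sum_eq_single i]
  · simp
  · intro j _ hj
    rw [coeff_monomial_of_ne _ hj, zero_mul]
  · simp; omega

lemma mul_pow_mem_span_pair (c d : R) (i j : ℕ) : c ^ i * d ^ j ∈ Ideal.span {c, d} ^ (i + j) := by
  rw [pow_add]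
  exact Ideal.mul_mem_mul (Ideal.pow_mem_pow (Ideal.subset_span (by simp)) i)
    (Ideal.pow_mem_pow (Ideal.subset_span (by simp)) j)

lemma hf_mem (c d : R) (n : ℕ) (p : R[X]) {𝔞 : Ideal R} (h : ∀ i, p.coeff i ∈ 𝔞) :
    hf c d n p ∈ 𝔞 * Ideal.span {c, d} ^ n := by
  rw [hf_eq]
  refine Ideal.sum_mem _ fun i hi => Ideal.mul_mem_mul (h i) ?_
  have : i + (n - i) = n := by have := Finset.mem_range.1 hi; omega
  have h2 := mul_pow_mem_span_pair c d i (n - i)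
  rwa [this] at h2

lemma hf_mem' (c d : R) (n : ℕ) (p : R[X]) : hf c d n p ∈ Ideal.span {c, d} ^ n := by
  simpa using hf_mem c d n p (𝔞 := ⊤) (by simp)

lemma exists_hf_of_mem {c d : R} {𝔞 : Ideal R} (n : ℕ) {z : R} (hz : z ∈ 𝔞 * Ideal.span {c, d} ^ n) :
    ∃ p : R[X], p.natDegree ≤ n ∧ (∀ i, p.coeff i ∈ 𝔞) ∧ hf c d n p = z := by
  have key : ∀ w ∈ Ideal.span {c, d} ^ n, ∃ p : R[X], p.natDegree ≤ n ∧ hf c d n p = w := by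
    clear hz
    induction n with
    | zero => intro w _; exact ⟨C w, by simp, by simp [hf_eq]⟩
    | succ n ih =>
      intro w hw
      rw [pow_succ] at hw
      refine Submodule.mul_induction_on hw ?_ ?_
      · intro u hu v hv
        obtain ⟨p, hp, rfl⟩ := ih u hu
        obtain ⟨a, b, rfl⟩ := Ideal.mem_span_pair.1 hv
        have hq : (C a * X + C b).natDegree ≤ 1 := natDegree_linear_le
        refine ⟨p * (C a * X + C b), natDegree_mul_le.trans (add_le_add hp hq), ?_⟩
        rw [hf_mul c d hp hq]
        congr 1
        simp [hf_eq, Finset.sum_range_succ, coeff_X, coeff_C]; ring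
      · rintro u v ⟨p, hp, rfl⟩ ⟨q, hq, rfl⟩
        exact ⟨p + q, natDegree_add_le_of_degree_le hp hq, hf_add _ _ _ _ _⟩
  refine Submodule.mul_induction_on hz ?_ ?_
  · intro a ha w hw
    obtain ⟨p, hp, rfl⟩ := key w hw
    refine ⟨C a * p, (natDegree_C_mul_le _ _).trans hp, fun i => ?_, hf_C_mul _ _ _ _ _⟩
    rw [coeff_C_mul]; exact Ideal.mul_mem_right _ _ ha
  · rintro u v ⟨p, hp, hp', rfl⟩ ⟨q, hq, hq', rfl⟩
    refine ⟨p + q, natDegree_add_le_of_degree_le hp hq, fun i => ?_, hf_add _ _ _ _ _⟩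
    rw [coeff_add]; exact add_mem (hp' i) (hq' i)

lemma exists_hf_of_mem' {c d : R} (n : ℕ) {z : R} (hz : z ∈ Ideal.span {c, d} ^ n) :
    ∃ p : R[X], p.natDegree ≤ n ∧ hf c d n p = z := by
  obtain ⟨p, h1, -, h3⟩ := exists_hf_of_mem (𝔞 := ⊤) n (by simpa using hz)
  exact ⟨p, h1, h3⟩

lemma Reg2.pow {c d : R} (h : Reg2 c d) (n : ℕ) {x y : R} (e : c ^ n * x = d * y) : ∃ w, x = d * w := by
  induction n generalizing x y with
  | zero => exact ⟨y, by simpa using e⟩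
  | succ n ih =>
    obtain ⟨w, hw⟩ := ih (x := c * x) (y := y) (by rw [← e]; ring)
    exact h.2 x w hw

/-- Quasi-regularity of a regular sequence of length two. -/
lemma quasiReg {c d : R} (h : Reg2 c d) (n : ℕ) (r : ℕ → R)
    (e : ∑ i ∈ Finset.range (n + 1), r i * (c ^ i * d ^ (n - i)) = 0) :
    ∀ i ≤ n, r i ∈ Ideal.span {c, d} := by
  have hc : c ∈ Ideal.span {c, d} := Ideal.subset_span (by simp)
  have hd : d ∈ Ideal.span {c, d} := Ideal.subset_span (by simp)
  induction n generalizing r with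
  | zero =>
    intro i hi
    obtain rfl : i = 0 := by omega
    have : r 0 = 0 := by simpa using e
    rw [this]; exact zero_mem _
  | succ n ih =>
    rw [Finset.sum_range_succ] at e
    have e1 : ∑ i ∈ Finset.range (n + 1), r i * (c ^ i * d ^ (n + 1 - i)) =
        d * ∑ i ∈ Finset.range (n + 1), r i * (c ^ i * d ^ (n - i)) := by
      rw [Finset.mul_sum]
      refine Finset.sum_congr rfl fun i hi => ?_
      have : n + 1 - i = (n - i) + 1 := by have := Finset.mem_range.1 hi; omega
      rw [this]; ring
    rw [e1] at e
    obtain ⟨w, hw⟩ := h.pow (n + 1) (x := r (n + 1))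
      (y := - ∑ i ∈ Finset.range (n + 1), r i * (c ^ i * d ^ (n - i))) (by
        have : n + 1 - (n + 1) = 0 := by omega
        rw [this] at e
        linear_combination e)
    have e2 : ∑ i ∈ Finset.range (n + 1), r i * (c ^ i * d ^ (n - i)) + w * c ^ (n + 1) = 0 := by
      apply h.1
      rw [hw] at e
      have : n + 1 - (n + 1) = 0 := by omega
      rw [this] at e
      linear_combination e
    have e3 := ih (fun i => if i = n then r n + w * c else r i) (by
      rw [Finset.sum_range_succ] at e2 ⊢
      rw [Finset.sum_congr rfl (g := fun i => r i * (c ^ i * d ^ (n - i)))]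
      · simp only [if_true]
        have : n - n = 0 := by omega
        rw [this] at e2 ⊢
        linear_combination e2
      · intro i hi
        rw [if_neg (by have := Finset.mem_range.1 hi; omega)])
    intro i hi
    rcases Nat.lt_or_ge i n with hlt | hge
    · have := e3 i hlt.le
      rwa [if_neg (by omega)] at this
    · rcases eq_or_ne i n with rfl | hne
      · have := e3 i le_rfl
        rw [if_pos rfl] at this
        have h2 := sub_mem this (Ideal.mul_mem_left _ w hc)
        rwa [add_sub_cancel_right] at h2
      · obtain rfl : i = n + 1 := by omega
        rw [hw]; exact Ideal.mul_mem_right _ _ hd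

lemma coeff_mem_of_hf {c d : R} (h : Reg2 c d) {n : ℕ} {p : R[X]} (hp : p.natDegree ≤ n)
    (hm : hf c d n p ∈ Ideal.span {c, d} ^ (n + 1)) : ∀ i, p.coeff i ∈ Ideal.span {c, d} := by
  rw [pow_succ'] at hm
  obtain ⟨q, hq, hq', e⟩ := exists_hf_of_mem n hm
  intro i
  rcases Nat.lt_or_ge n i with hlt | hge
  · rw [coeff_eq_zero_of_natDegree_lt (by omega)]; exact zero_mem _
  · have := quasiReg h n (fun i => (p - q).coeff i) (by
      rw [← hf_eq, hf_sub, e, sub_self]) i hge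
    simp only [coeff_sub] at this
    have h2 := add_mem this (hq' i)
    rwa [sub_add_cancel] at h2

/-- A form with a unit coefficient is a non-zero-divisor on the associated graded ring of a
regular sequence. -/
lemma hf_cancel {c d : R} (h : Reg2 c d) {D : ℕ} {f : R[X]} (hf' : f.natDegree ≤ D)
    (hu : ∃ i, IsUnit (f.coeff i)) (j : ℕ) {z : R}
    (hz : hf c d D f * z ∈ Ideal.span {c, d} ^ (j + D)) : z ∈ Ideal.span {c, d} ^ j := by
  induction j with
  | zero => simp
  | succ j ih =>
    have h1 := ih (Ideal.pow_le_pow_right (by omega) hz)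
    obtain ⟨q, hq, rfl⟩ := exists_hf_of_mem' j h1
    rw [← hf_mul c d hf' hq] at hz
    have h2 := coeff_mem_of_hf h (p := f * q) (n := D + j)
      (natDegree_mul_le.trans (add_le_add hf' hq)) (by convert hz using 2; omega)
    set U := Ideal.span {c, d}
    have h3 : f.map (Ideal.Quotient.mk U) * q.map (Ideal.Quotient.mk U) = 0 := by
      rw [← Polynomial.map_mul]
      ext i
      rw [coeff_map, coeff_zero, Ideal.Quotient.eq_zero_iff_mem]
      exact h2 i
    have h4 : f.map (Ideal.Quotient.mk U) ∈ nonZeroDivisors (R ⧸ U)[X] := by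
      by_contra hcon
      obtain ⟨a, ha, hb⟩ := Polynomial.notMem_nonZeroDivisors_iff.1 hcon
      obtain ⟨i, hi⟩ := hu
      have := congrArg (fun p => p.coeff i) hb
      simp only [coeff_smul, coeff_map, coeff_zero, smul_eq_mul] at this
      exact ha ((hi.map (Ideal.Quotient.mk U)).mul_left_eq_zero.1 this)
    have h5 := (mem_nonZeroDivisors_iff.1 h4).1 _ h3
    have h6 : ∀ i, q.coeff i ∈ U := by
      intro i
      rw [← Ideal.Quotient.eq_zero_iff_mem, ← coeff_map, h5, coeff_zero]
    rw [pow_succ']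
    exact hf_mem c d j q h6

variable [IsNoetherianRing R]

lemma Reg2.nzd {c d : R} (h : Reg2 c d) : d ∈ nonZeroDivisors R :=
  mem_nonZeroDivisors_iff_right.2 fun z hz => h.1 z (by rwa [mul_comm])

lemma exists_mul_mem_pow {𝔞 : Ideal R} {d : R} (hd : d ∈ 𝔞) {n : ℕ} {x : R} (h : x ∈ intCl (𝔞 ^ n)) :
    ∃ N, ∀ l, d ^ N * x ^ l ∈ 𝔞 ^ (n * l) := by
  obtain ⟨-, N, hN⟩ := red_intCl (𝔞 ^ n)
  refine ⟨n * N, fun l => ?_⟩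
  have h1 := Red.pow_le hN l
  have h2 : d ^ (n * N) * x ^ l ∈ intCl (𝔞 ^ n) ^ (N + l) := by
    rw [pow_add]
    refine Ideal.mul_mem_mul ?_ (Ideal.pow_mem_pow h l)
    rw [pow_mul]
    exact Ideal.pow_mem_pow (le_intCl _ (Ideal.pow_mem_pow hd n)) N
  have := Ideal.mul_le_left (h1 h2)
  rwa [← pow_mul] at this

/-- Cancellation of forms with a unit coefficient in the filtration of integral closures. -/
lemma intCl_cancel {c d : R} (h : Reg2 c d) {D : ℕ} {f : R[X]} (hf' : f.natDegree ≤ D)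
    (hu : ∃ i, IsUnit (f.coeff i)) (n : ℕ) {x : R}
    (hx : hf c d D f * x ∈ intCl (Ideal.span {c, d} ^ (n + D))) :
    x ∈ intCl (Ideal.span {c, d} ^ n) := by
  have hd : d ∈ Ideal.span {c, d} := Ideal.subset_span (by simp)
  obtain ⟨N, hN⟩ := exists_mul_mem_pow hd hx
  refine mem_intCl_of_forall (c := d ^ N) (pow_mem h.nzd N) fun l => le_intCl _ ?_
  have key : ∀ l k, ∀ z, hf c d D f ^ l * z ∈ Ideal.span {c, d} ^ (k + D * l) →
      z ∈ Ideal.span {c, d} ^ k := by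
    intro l
    induction l with
    | zero => intro k z hz; simpa using hz
    | succ l ih =>
      intro k z hz
      refine hf_cancel h hf' hu k (ih (k + D) _ ?_)
      convert hz using 1
      · ring
      · ring_nf
  rw [← pow_mul]
  refine key l _ _ ?_
  have := hN l
  rw [mul_pow] at this
  convert this using 1
  · ring
  · ring_nf

lemma intCl_cancel_pow {c d : R} (h : Reg2 c d) (n k : ℕ) {x : R}
    (hx : c ^ k * x ∈ intCl (Ideal.span {c, d} ^ (n + k))) : x ∈ intCl (Ideal.span {c, d} ^ n) := by
  refine intCl_cancel h (D := k) (f := monomial k 1) (natDegree_monomial_le _) ⟨k, by simp⟩ n ?_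
  rw [hf_monomial c d le_rfl]
  simpa using hx

lemma intCl_cancel_pow' {c d : R} (h : Reg2 c d) (n k : ℕ) {x : R}
    (hx : d ^ k * x ∈ intCl (Ideal.span {c, d} ^ (n + k))) : x ∈ intCl (Ideal.span {c, d} ^ n) := by
  refine intCl_cancel h (D := k) (f := monomial 0 1) ((natDegree_monomial_le _).trans (Nat.zero_le _))
    ⟨0, by simp⟩ n ?_
  rw [hf_monomial c d (Nat.zero_le _)]
  simpa using hx

end Forms

/-! ### Rationality of the order function of the filtration of integral closures -/

section Rat
open IsLocalRing Polynomial

section Gen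
variable {R : Type*} [CommRing R] [IsNoetherianRing R] {U : Ideal R}

lemma F_anti {p q : ℕ} (h : p ≤ q) : intCl (U ^ q) ≤ intCl (U ^ p) :=
  intCl_mono (Ideal.pow_le_pow_right h)

lemma F_mul {x y : R} {p q : ℕ} (hx : x ∈ intCl (U ^ p)) (hy : y ∈ intCl (U ^ q)) :
    x * y ∈ intCl (U ^ (p + q)) := by
  rw [pow_add]; exact intCl_mul_le _ _ (Ideal.mul_mem_mul hx hy)

lemma F_pow {x : R} {p : ℕ} (hx : x ∈ intCl (U ^ p)) (l : ℕ) : x ^ l ∈ intCl (U ^ (p * l)) := by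
  rw [pow_mul]; exact intCl_pow_le _ _ (Ideal.pow_mem_pow hx l)

lemma F_root {x : R} {p l : ℕ} (hl : 0 < l) (h : x ^ l ∈ intCl (U ^ (p * l))) : x ∈ intCl (U ^ p) :=
  mem_intCl_of_pow hl (by rwa [← pow_mul])

lemma F_ratio {x : R} {t p t' p' : ℕ} (ht : 0 < t) (h : x ^ t ∈ intCl (U ^ p)) (hle : p' * t ≤ p * t') :
    x ^ t' ∈ intCl (U ^ p') := by
  refine F_root ht ?_
  have := F_anti hle (F_pow h t')
  rwa [← pow_mul, mul_comm t t', pow_mul x] at this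

/-- The elements of value at least `P / T` form an ideal. -/
def Wid (U : Ideal R) (P T : ℕ) (hT : 0 < T) : Ideal R where
  carrier := {y | y ^ T ∈ intCl (U ^ P)}
  zero_mem' := by simp [zero_pow hT.ne']
  add_mem' := by
    intro y w hy hw
    change (y + w) ^ T ∈ intCl (U ^ P)
    rw [add_pow]
    refine Ideal.sum_mem _ fun i hi => Ideal.mul_mem_right _ _ ?_
    have hi' : i ≤ T := by have := Finset.mem_range.1 hi; omega
    refine F_root hT ?_
    have h1 := F_mul (F_pow (hy : y ^ T ∈ intCl (U ^ P)) i) (F_pow (hw : w ^ T ∈ intCl (U ^ P)) (T - i))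
    rw [← mul_add, Nat.add_sub_cancel' hi'] at h1
    convert h1 using 1
    rw [mul_pow, ← pow_mul, ← pow_mul, ← pow_mul, ← pow_mul, mul_comm i, mul_comm (T - i)]
  smul_mem' := by
    intro r y hy
    change (r * y) ^ T ∈ intCl (U ^ P)
    rw [mul_pow]; exact Ideal.mul_mem_left _ _ hy

lemma mem_Wid {P T : ℕ} {hT : 0 < T} {y : R} : y ∈ Wid U P T hT ↔ y ^ T ∈ intCl (U ^ P) := Iff.rfl

lemma intCl_cancel_iter {c d : R} (h : Reg2 c d) {D : ℕ} {f : R[X]} (hf' : f.natDegree ≤ D)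
    (hu : ∃ i, IsUnit (f.coeff i)) (l n : ℕ) {x : R}
    (hx : hf c d D f ^ l * x ∈ intCl (Ideal.span {c, d} ^ (n + D * l))) :
    x ∈ intCl (Ideal.span {c, d} ^ n) := by
  induction l generalizing n x with
  | zero => simpa using hx
  | succ l ih =>
    refine intCl_cancel h hf' hu n (ih (n + D) ?_)
    convert hx using 1
    · ring
    · ring_nf

end Gen

variable {R : Type*} [CommRing R] [IsLocalRing R] [IsNoetherianRing R]

lemma intCl_le_max {U : Ideal R} (h : U ≤ maximalIdeal R) : intCl U ≤ maximalIdeal R := by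
  intro x hx
  obtain ⟨n, hn, a, ha, e⟩ := mem_intCl.1 hx
  refine (maximalIdeal.isMaximal R).isPrime.mem_of_pow_mem n (h ?_)
  rw [eq_neg_of_add_eq_zero_left e]
  refine neg_mem (Ideal.sum_mem _ fun i _ => Ideal.mul_mem_right _ _ ?_)
  exact Ideal.pow_le_self (by omega) (ha (i + 1))

lemma intCl_pow_le_max {U : Ideal R} (h : U ≤ maximalIdeal R) {n : ℕ} (hn : 0 < n) :
    intCl (U ^ n) ≤ maximalIdeal R := intCl_le_max ((Ideal.pow_le_self hn.ne').trans h)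

/-- If no form of degree `D` with a unit coefficient is killed by `g` modulo `Y`, then `g (c, d) ^ D` has
length at least `D + 1` modulo `Y`, the number of monomials. -/
lemma cl_add_forms {c d g : R} {Y : Ideal R} (hY : MP Y) (D : ℕ)
    (h : ∀ f : R[X], f.natDegree ≤ D → (∃ i, IsUnit (f.coeff i)) → g * hf c d D f ∉ Y) :
    cl (Y ⊔ Ideal.span {g} * Ideal.span {c, d} ^ D) + (D + 1) ≤ cl Y := by
  have key : ∀ k ≤ D + 1, ∃ Z : Ideal R, Y ≤ Z ∧
      (∀ z ∈ Z, ∃ p : R[X], p.natDegree ≤ D ∧ (∀ i, k ≤ i → p.coeff i = 0) ∧ z - g * hf c d D p ∈ Y) ∧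
      cl Z + k ≤ cl Y := by
    intro k
    induction k with
    | zero => exact fun _ => ⟨Y, le_rfl, fun z hz => ⟨0, by simp, by simp, by simpa [hf] using hz⟩,
        by simp⟩
    | succ k ih =>
      intro hk
      obtain ⟨Z, hYZ, h1, h3⟩ := ih (by omega)
      have hk' : k ≤ D := by omega
      set y := g * (c ^ k * d ^ (D - k)) with hy
      have hyZ : y ∉ Z := by
        intro hmem
        obtain ⟨p, hp, hp', hpY⟩ := h1 y hmem
        refine h (monomial k 1 - p) ?_ ⟨k, ?_⟩ ?_
        · exact (natDegree_sub_le_of_le ((natDegree_monomial_le _).trans hk') hp).trans (max_self D).le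
        · rw [coeff_sub, hp' k le_rfl]; simp
        · rw [hf_sub, hf_monomial c d hk']
          convert hpY using 1
          rw [hy]; ring
      refine ⟨Z ⊔ Ideal.span {y}, hYZ.trans le_sup_left, ?_, ?_⟩
      · intro z hz
        obtain ⟨z1, hz1, z2, hz2, rfl⟩ := Submodule.mem_sup.1 hz
        obtain ⟨r, rfl⟩ := Ideal.mem_span_singleton'.1 hz2
        obtain ⟨p, hp, hp', hpY⟩ := h1 z1 hz1
        refine ⟨p + monomial k r, natDegree_add_le_of_degree_le hp
          ((natDegree_monomial_le _).trans hk'), ?_, ?_⟩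
        · intro i hi
          rw [coeff_add, hp' i (by omega), coeff_monomial_of_ne _ (by omega), zero_add]
        · rw [hf_add, hf_monomial c d hk']
          convert hpY using 1
          rw [hy]; ring
      · have : Z < Z ⊔ Ideal.span {y} := by
          refine lt_of_le_of_ne le_sup_left fun he => hyZ ?_
          rw [he]; exact Ideal.mem_sup_right (Ideal.mem_span_singleton_self _)
        have := cl_lt (hY.mono hYZ) this
        omega
  obtain ⟨Z, hYZ, h1, h3⟩ := key (D + 1) le_rfl
  have hle : Z ≤ Y ⊔ Ideal.span {g} * Ideal.span {c, d} ^ D := by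
    intro z hz
    obtain ⟨p, -, -, hp⟩ := h1 z hz
    rw [← sub_add_cancel z (g * hf c d D p)]
    exact add_mem (Ideal.mem_sup_left hp) (Ideal.mem_sup_right
      (Ideal.mul_mem_mul (Ideal.mem_span_singleton_self g) (hf_mem' c d D p)))
  have := cl_mono (hY.mono hYZ) hle
  omega

/-- Under linear growth of `λ(F(n)/F(n+1))`, every element has rational value. -/
lemma exists_rational {c d : R} (h : Reg2 c d) (hm : Ideal.span {c, d} ≤ maximalIdeal R)
    (hMP : MP (Ideal.span {c, d}))
    (hg : ∃ A N : ℕ, ∀ n, N ≤ n → cl (intCl (Ideal.span {c, d} ^ (n + 1))) ≤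
      cl (intCl (Ideal.span {c, d} ^ n)) + A * (n + 1))
    {x : R} {k : ℕ} (hx : x ∉ intCl (Ideal.span {c, d} ^ k)) :
    ∃ t p : ℕ, 0 < t ∧ x ^ t ∈ intCl (Ideal.span {c, d} ^ p) ∧
      ∀ l, 0 < l → x ^ (t * l) ∉ intCl (Ideal.span {c, d} ^ (p * l + 1)) := by
  have hd : d ∈ Ideal.span {c, d} := Ideal.subset_span (by simp)
  set U := Ideal.span {c, d} with hU
  set S : Set ℝ := {θ | ∃ t p : ℕ, 0 < t ∧ x ^ t ∈ intCl (U ^ p) ∧ θ = p / t} with hS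
  have hbd : BddAbove S := by
    refine ⟨k, ?_⟩
    rintro θ ⟨t, p, ht, hxp, rfl⟩
    rw [div_le_iff₀ (by exact_mod_cast ht)]
    by_contra hcon
    push Not at hcon
    refine hx (F_root ht (F_anti ?_ hxp))
    exact_mod_cast hcon.le
  have h0S : (0 : ℝ) ∈ S := ⟨1, 0, one_pos, by simp [intCl_top], by simp⟩
  set q := sSup S with hq
  have hq0 : 0 ≤ q := le_csSup hbd h0S
  have hb : ∀ t p : ℕ, 0 < t → x ^ t ∈ intCl (U ^ p) → (p : ℝ) ≤ t * q := by
    intro t p ht hxp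
    have := le_csSup hbd ⟨t, p, ht, hxp, rfl⟩
    rw [div_le_iff₀ (by exact_mod_cast ht)] at this
    rwa [mul_comm]
  have ha : ∀ t p : ℕ, (p : ℝ) < t * q → x ^ t ∈ intCl (U ^ p) := by
    intro t p hlt
    rcases Nat.eq_zero_or_pos t with rfl | ht
    · have : (p : ℝ) < 0 := by simpa using hlt
      exact absurd this (not_lt.2 (Nat.cast_nonneg p))
    have ht' : (0 : ℝ) < t := by exact_mod_cast ht
    obtain ⟨θ, ⟨t1, p1, ht1, hx1, rfl⟩, hlt1⟩ := exists_lt_of_lt_csSup ⟨0, h0S⟩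
      (show (p : ℝ) / t < sSup S by rw [div_lt_iff₀ ht']; linarith)
    refine F_ratio ht1 hx1 ?_
    rw [div_lt_div_iff₀ ht' (by exact_mod_cast ht1)] at hlt1
    exact_mod_cast hlt1.le
  by_cases hrat : ∃ t p : ℕ, 0 < t ∧ (p : ℝ) = t * q
  · obtain ⟨t, p, ht, e⟩ := hrat
    have ht' : (0 : ℝ) < t := by exact_mod_cast ht
    refine ⟨t, p, ht, ?_, ?_⟩
    · refine mem_intCl_of_forall h.nzd fun l => ?_
      rw [← pow_mul, ← pow_mul]
      rcases Nat.eq_zero_or_pos (p * l) with h0 | hpos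
      · rw [h0]; simp [intCl_top]
      · have h1 := ha (t * l) (p * l - 1) (by
          rw [Nat.cast_sub hpos]; push_cast; nlinarith)
        have h2 := F_mul (U := U) (p := 1) (by simpa using le_intCl U hd) h1
        rwa [Nat.add_sub_cancel' hpos] at h2
    · intro l hl hcon
      have := hb _ _ (Nat.mul_pos ht hl) hcon
      push_cast at this
      nlinarith
  push Not at hrat
  exfalso
  set fl : ℕ → ℕ := fun t => ⌊(t : ℝ) * q⌋₊ with hfl
  have hfl1 : ∀ t : ℕ, (fl t : ℝ) ≤ t * q := fun t => Nat.floor_le (by positivity)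
  have hfl2 : ∀ t : ℕ, (t * q : ℝ) < fl t + 1 := fun t => Nat.lt_floor_add_one _
  set fr : ℕ → ℝ := fun t => t * q - fl t with hfr
  have hinj : ∀ t t', t < t' → fr t ≠ fr t' := by
    intro t t' hlt e
    simp only [hfr] at e
    have hle : fl t ≤ fl t' := Nat.floor_le_floor (by
      apply mul_le_mul_of_nonneg_right _ hq0; exact_mod_cast hlt.le)
    refine hrat (t' - t) (fl t' - fl t) (by omega) ?_
    rw [Nat.cast_sub hle, Nat.cast_sub hlt.le]
    linarith
  have hinj' : ∀ t t', t ≠ t' → fr t ≠ fr t' := by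
    intro t t' hne
    rcases lt_or_gt_of_ne hne with h1 | h1
    · exact hinj _ _ h1
    · exact (hinj _ _ h1).symm
  have hmem : ∀ t, x ^ t ∈ intCl (U ^ fl t) := by
    intro t
    rcases Nat.eq_zero_or_pos t with rfl | ht
    · simp [hfl, intCl_top]
    · exact ha t _ (lt_of_le_of_ne (hfl1 t) (hrat t _ ht))
  have hFMP : ∀ n, MP (intCl (U ^ n)) := fun n => (hMP.pow n).intCl
  have main : ∀ n (s : Finset ℕ), (∀ t ∈ s, fl t ≤ n) →
      ∃ Y : Ideal R, intCl (U ^ (n + 1)) ≤ Y ∧ Y ≤ intCl (U ^ n) ∧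
      (∀ P T : ℕ, (hT : 0 < T) → P ≤ (n + 1) * T → (∀ t ∈ s, (P : ℝ) < T * (n + fr t)) →
        Y ≤ Wid U P T hT) ∧
      cl Y + ∑ t ∈ s, (n - fl t + 1) ≤ cl (intCl (U ^ (n + 1))) := by
    intro n s
    induction s using Finset.induction_on_min_value fr with
    | empty =>
      intro _
      refine ⟨_, le_rfl, F_anti (by omega), ?_, by simp⟩
      intro P T hT hP _ y hy
      exact F_anti hP (F_pow hy T)
    | insert a s has hmin ih =>
      intro hs
      obtain ⟨Y, hY1, hY2, hY3, hY4⟩ := ih fun t ht => hs t (Finset.mem_insert_of_mem ht)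
      have han : fl a ≤ n := hs a (Finset.mem_insert_self _ _)
      refine ⟨Y ⊔ Ideal.span {x ^ a} * U ^ (n - fl a), hY1.trans le_sup_left, sup_le hY2 ?_, ?_, ?_⟩
      · rw [Ideal.span_singleton_mul_le_iff]
        intro z hz
        have := F_mul (hmem a) (le_intCl _ hz)
        rwa [Nat.add_sub_cancel' han] at this
      · intro P T hT hP hlt
        refine sup_le (hY3 P T hT hP fun t ht => hlt t (Finset.mem_insert_of_mem ht)) ?_
        rw [Ideal.span_singleton_mul_le_iff]
        intro z hz
        rw [mem_Wid, mul_pow, ← pow_mul]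
        have h1 := hlt a (Finset.mem_insert_self _ _)
        have h2 : z ^ T ∈ intCl (U ^ ((n - fl a) * T)) := F_pow (le_intCl _ hz) T
        rcases le_total P ((n - fl a) * T) with hle | hle
        · exact Ideal.mul_mem_left _ _ (F_anti hle h2)
        · have h3 := ha (a * T) (P - (n - fl a) * T) (by
            rw [Nat.cast_sub hle]; push_cast; rw [Nat.cast_sub han]
            simp only [hfr] at h1
            linarith)
          have := F_mul h3 h2
          rwa [Nat.sub_add_cancel hle] at this
      · have hra : ∀ t ∈ s, fr a < fr t := fun t ht =>
          lt_of_le_of_ne (hmin t ht) (hinj' _ _ fun e => has (e ▸ ht))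
        have hra1 : fr a < 1 := by have := hfl2 a; simp only [hfr]; linarith
        have hra0 : 0 ≤ fr a := by have := hfl1 a; simp only [hfr]; linarith
        obtain ⟨ρ, hρ1, hρ2, hρ3⟩ : ∃ ρ : ℝ, fr a < ρ ∧ ρ ≤ 1 ∧ ∀ t ∈ s, ρ ≤ fr t := by
          clear hs ih hY4 hY3 hmin has
          induction s using Finset.induction_on with
          | empty => exact ⟨1, hra1, le_rfl, by simp⟩
          | insert b s hbs ih =>
            obtain ⟨ρ, h1, h2, h3⟩ := ih fun t ht => hra t (Finset.mem_insert_of_mem ht)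
            refine ⟨min ρ (fr b), lt_min h1 (hra b (Finset.mem_insert_self _ _)),
              (min_le_left _ _).trans h2, fun t ht => ?_⟩
            rcases Finset.mem_insert.1 ht with rfl | ht
            · exact min_le_right _ _
            · exact (min_le_left _ _).trans (h3 t ht)
        obtain ⟨κ, hκ1, hκ2⟩ := exists_rat_btwn hρ1
        have hκ0 : 0 ≤ κ := by
          have : (0 : ℝ) ≤ κ := by linarith
          exact_mod_cast this
        obtain ⟨P0, T, hT, e⟩ : ∃ P0 T : ℕ, 0 < T ∧ (κ : ℝ) * T = P0 := by
          refine ⟨κ.num.toNat, κ.den, κ.den_pos, ?_⟩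
          have h1 : ((κ.num.toNat : ℤ)) = κ.num := Int.toNat_of_nonneg (Rat.num_nonneg.2 hκ0)
          have h2 := Rat.mul_den_eq_num κ
          have h3 : (κ : ℝ) * κ.den = (κ.num : ℤ) := by exact_mod_cast h2
          rw [h3]; exact_mod_cast h1.symm
        have hT' : (0 : ℝ) < T := by exact_mod_cast hT
        have hYW := hY3 (n * T + P0) T hT (by
            have : (P0 : ℝ) ≤ T := by rw [← e]; nlinarith
            have : P0 ≤ T := by exact_mod_cast this
            nlinarith) (by
            intro t ht
            push_cast
            rw [← e]
            have := hρ3 t ht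
            nlinarith)
        have hstep := cl_add_forms (c := c) (d := d) (g := x ^ a) (Y := Y) ((hFMP _).mono hY1)
          (n - fl a) (by
          intro f hf1 hf2 hcon
          have h1 := hYW hcon
          rw [mem_Wid, mul_pow, ← pow_mul, mul_comm (x ^ _)] at h1
          have hle : (n - fl a) * T ≤ n * T + P0 :=
            (Nat.mul_le_mul_right _ (Nat.sub_le _ _)).trans (Nat.le_add_right _ _)
          have h2 := intCl_cancel_iter h hf1 hf2 T (n * T + P0 - (n - fl a) * T) (x := x ^ (a * T)) (by
            rwa [Nat.sub_add_cancel hle])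
          have h4 : (P0 : ℝ) + fl a * T ≤ a * T * q := by
            rcases Nat.eq_zero_or_pos a with rfl | hapos
            · exfalso
              have hP0 : 0 < P0 := by
                have : (0 : ℝ) < P0 := by
                  rw [← e]
                  have : (0 : ℝ) < κ := by linarith
                  positivity
                exact_mod_cast this
              have hlt : 0 < n * T + P0 - (n - fl 0) * T := by
                have : (n - fl 0) * T ≤ n * T := Nat.mul_le_mul_right _ (Nat.sub_le _ _)
                omega
              have := intCl_pow_le_max hm hlt h2
              simp at this
            · have h3 := hb _ _ (Nat.mul_pos hapos hT) h2
              rw [Nat.cast_sub hle] at h3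
              push_cast at h3
              rw [Nat.cast_sub han] at h3
              linarith
          rw [← e] at h4
          simp only [hfr] at hκ1
          nlinarith)
        rw [Finset.sum_insert has]
        simp only [← hU] at hstep
        omega
  obtain ⟨A, N, hg⟩ := hg
  set B := ∑ t ∈ Finset.range (A + 1), fl t with hB
  have hflB : ∀ t ∈ Finset.range (A + 1), fl t ≤ B := fun t ht =>
    Finset.single_le_sum (f := fl) (fun _ _ => Nat.zero_le _) ht
  obtain ⟨Y, hY1, hY2, -, hY4⟩ := main (N + B) (Finset.range (A + 1)) fun t ht => (hflB t ht).trans (by omega)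
  have h1 := cl_mono ((hFMP (N + B + 1)).mono hY1) hY2
  have h2 := hg (N + B) (by omega)
  have h3 : ∑ t ∈ Finset.range (A + 1), (N + B - fl t + 1) + B = (A + 1) * (N + B + 1) := by
    suffices h4 : ∑ t ∈ Finset.range (A + 1), (N + B - fl t + 1) + ∑ t ∈ Finset.range (A + 1), fl t =
        (A + 1) * (N + B + 1) by rwa [← hB] at h4
    rw [← Finset.sum_add_distrib, Finset.sum_congr rfl (g := fun _ => N + B + 1)]
    · simp
    · intro t ht
      have := hflB t ht
      omega
  nlinarith

end Rat

/-! ### Poles at infinity of integral functions -/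

section K0
open Polynomial

lemma monic_aux {A : Type*} [CommRing A] (N : ℕ) (c : ℕ → A) :
    (X ^ N + ∑ i ∈ Finset.range N, C (c i) * X ^ (N - (i + 1)) : A[X]).Monic := by
  refine monic_X_pow_add ((Polynomial.mem_degreeLT (R := A) (n := N)).1 ?_)
  refine Submodule.sum_mem _ fun i hi => Polynomial.mem_degreeLT.2 ?_
  refine lt_of_le_of_lt (degree_C_mul_X_pow_le _ _) ?_
  have := Finset.mem_range.1 hi
  exact_mod_cast (by omega : N - (i + 1) < N)

lemma div_aux {L : Type*} [Field L] {q w a y : L} (hq : q ≠ 0) : q * w * (a / q * y) = a * (w * y) := by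
  field_simp

lemma norm_mem_of_eq {K F : Type*} [Field K] [Field F] [Algebra K F] [FiniteDimensional K F]
    (S : Subring K) (hS : ∀ x : K, IsIntegral S x → x ∈ S) (y : F) {N : ℕ} (c : ℕ → K)
    (hc : ∀ i, c i ∈ S)
    (e : y ^ N + ∑ i ∈ Finset.range N, algebraMap K F (c (i + 1)) * y ^ (N - (i + 1)) = 0) :
    Algebra.norm K y ∈ S := by
  refine hS _ (Algebra.isIntegral_norm K ?_)
  refine ⟨X ^ N + ∑ i ∈ Finset.range N, C (⟨c (i + 1), hc _⟩ : S) * X ^ (N - (i + 1)), ?_, ?_⟩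
  · exact monic_aux N fun i => (⟨c (i + 1), hc _⟩ : S)
  · simp only [eval₂_add, eval₂_pow, eval₂_X, eval₂_finsetSum, eval₂_mul, eval₂_C]
    exact e

/-- A nonzero element integral over `k[X]` cannot vanish at all the places at infinity. -/
lemma eq_zero_of_pole {k E : Type*} [Field k] [CommRing E] [IsDomain E] (φ : k[X] →+* E)
    (hφ : Function.Injective φ) {b β : E} {J p : ℕ} (hJ : p < J) (hb : φ X ^ J * b = β)
    {N : ℕ} (c : ℕ → k[X])
    (e : b ^ N + ∑ i ∈ Finset.range N, φ (c (i + 1)) * b ^ (N - (i + 1)) = 0)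
    {N' : ℕ} (c' : ℕ → k[X]) (hc' : ∀ i, (c' i).natDegree ≤ p * i)
    (e' : β ^ N' + ∑ i ∈ Finset.range N', φ (c' (i + 1)) * β ^ (N' - (i + 1)) = 0) : b = 0 := by
  classical
  by_contra hb0
  let L := FractionRing E
  have hg : Function.Injective ((algebraMap E L).comp φ) :=
    (IsFractionRing.injective E L).comp hφ
  let ψ : RatFunc k →+* L := IsFractionRing.lift hg
  letI : Algebra (RatFunc k) L := ψ.toAlgebra
  have hψ : ∀ f : k[X], algebraMap E L (φ f) =
      algebraMap (RatFunc k) L (algebraMap k[X] (RatFunc k) f) := fun f =>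
    (IsFractionRing.lift_algebraMap hg f).symm
  set b' : L := algebraMap E L b with hb'
  have hb'0 : b' ≠ 0 := by
    rw [hb', Ne, FaithfulSMul.algebraMap_eq_zero_iff]; exact hb0
  have eb : b' ^ N + ∑ i ∈ Finset.range N,
      algebraMap (RatFunc k) L (algebraMap k[X] (RatFunc k) (c (i + 1))) * b' ^ (N - (i + 1)) = 0 := by
    have := congrArg (algebraMap E L) e
    simpa only [map_add, map_pow, map_sum, map_mul, map_zero, hψ, ← hb'] using this
  set x : RatFunc k := algebraMap k[X] (RatFunc k) X with hx
  have hx0 : x ≠ 0 := by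
    rw [hx, Ne, FaithfulSMul.algebraMap_eq_zero_iff]; exact X_ne_zero
  set x' : L := algebraMap (RatFunc k) L x with hx'
  have hx'0 : x' ≠ 0 := by
    rw [hx', Ne, FaithfulSMul.algebraMap_eq_zero_iff]; exact hx0
  have eβ : algebraMap E L β = x' ^ p * (x' ^ (J - p) * b') := by
    rw [← hb, map_mul, map_pow, hψ, ← mul_assoc, ← pow_add, Nat.add_sub_cancel' hJ.le]
  have eb2 : (x' ^ (J - p) * b') ^ N' + ∑ i ∈ Finset.range N',
      algebraMap (RatFunc k) L (algebraMap k[X] (RatFunc k) (c' (i + 1)) / x ^ (p * (i + 1))) *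
        (x' ^ (J - p) * b') ^ (N' - (i + 1)) = 0 := by
    have h1 := congrArg (algebraMap E L) e'
    simp only [map_add, map_pow, map_sum, map_mul, map_zero, hψ, eβ] at h1
    set y := x' ^ (J - p) * b'
    have : (x' ^ p) ^ N' * (y ^ N' + ∑ i ∈ Finset.range N',
      algebraMap (RatFunc k) L (algebraMap k[X] (RatFunc k) (c' (i + 1)) / x ^ (p * (i + 1))) *
        y ^ (N' - (i + 1))) = 0 := by
      rw [← h1, mul_add, mul_pow (x' ^ p) y N', Finset.mul_sum]
      refine congrArg _ ?_
      refine Finset.sum_congr rfl fun i hi => ?_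
      have hi' := Finset.mem_range.1 hi
      have : (x' ^ p) ^ N' = x' ^ (p * (i + 1)) * (x' ^ p) ^ (N' - (i + 1)) := by
        rw [pow_mul, ← pow_add, Nat.add_sub_cancel' (by omega)]
      rw [this, map_div₀, map_pow, ← hx', mul_pow (x' ^ p) y]
      exact div_aux (pow_ne_zero _ hx'0)
    rcases mul_eq_zero.1 this with h2 | h2
    · exact absurd h2 (pow_ne_zero _ (pow_ne_zero _ hx'0))
    · exact h2
  -- pass to the finite extension generated by `b'`
  have hbInt : IsIntegral (RatFunc k) b' := by
    refine ⟨X ^ N + ∑ i ∈ Finset.range N,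
      C (algebraMap k[X] (RatFunc k) (c (i + 1))) * X ^ (N - (i + 1)), ?_, ?_⟩
    · exact monic_aux N fun i => algebraMap k[X] (RatFunc k) (c (i + 1))
    · simp only [eval₂_add, eval₂_pow, eval₂_X, eval₂_finsetSum, eval₂_mul, eval₂_C]
      exact eb
  let F := IntermediateField.adjoin (RatFunc k) {b'}
  haveI : FiniteDimensional (RatFunc k) F := IntermediateField.adjoin.finiteDimensional hbInt
  let bF : F := ⟨b', IntermediateField.mem_adjoin_simple_self _ _⟩
  have hF : Function.Injective (algebraMap F L) := (algebraMap F L).injective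
  have hFt : ∀ z, algebraMap F L (algebraMap (RatFunc k) F z) = algebraMap (RatFunc k) L z := fun z =>
    (IsScalarTower.algebraMap_apply _ _ _ z).symm
  have hbF : algebraMap F L bF = b' := rfl
  have ebF : bF ^ N + ∑ i ∈ Finset.range N,
      algebraMap (RatFunc k) F (algebraMap k[X] (RatFunc k) (c (i + 1))) * bF ^ (N - (i + 1)) = 0 := by
    apply hF
    simp only [map_add, map_pow, map_sum, map_mul, map_zero, hFt, hbF]
    exact eb
  have eyF : (algebraMap (RatFunc k) F (x ^ (J - p)) * bF) ^ N' + ∑ i ∈ Finset.range N',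
      algebraMap (RatFunc k) F (algebraMap k[X] (RatFunc k) (c' (i + 1)) / x ^ (p * (i + 1))) *
        (algebraMap (RatFunc k) F (x ^ (J - p)) * bF) ^ (N' - (i + 1)) = 0 := by
    apply hF
    simp only [map_add, map_pow, map_sum, map_mul, map_zero, hFt, hbF]
    exact eb2
  have h1 := norm_mem_of_eq (algebraMap k[X] (RatFunc k)).range (by
    intro z hz
    have hz' : IsIntegral k[X] z := by
      obtain ⟨P, hP, hPz⟩ := hz
      have : P ∈ lifts ((algebraMap k[X] (RatFunc k)).rangeRestrict) := by
        rw [mem_lifts]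
        obtain ⟨Q, hQ⟩ := Polynomial.map_surjective _ (algebraMap k[X] (RatFunc k)).rangeRestrict_surjective P
        exact ⟨Q, hQ⟩
      obtain ⟨Q, hQ, -, hQm⟩ := lifts_and_natDegree_eq_and_monic this hP
      refine ⟨Q, hQm, ?_⟩
      rw [← hQ, eval₂_map] at hPz
      exact hPz
    obtain ⟨w, hw⟩ := IsIntegrallyClosed.isIntegral_iff.1 hz'
    exact ⟨w, hw⟩) bF (fun i => algebraMap k[X] (RatFunc k) (c i)) (fun i => ⟨_, rfl⟩) ebF
  obtain ⟨g, hg⟩ := h1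
  have hbF0 : bF ≠ 0 := fun h => hb'0 (by rw [← hbF, h, map_zero])
  have hg0 : g ≠ 0 := by
    rintro rfl
    rw [map_zero] at hg
    exact (Algebra.norm_ne_zero_iff.2 hbF0) hg.symm
  have hvp : ∀ f : k[X], f ≠ 0 → RatFunc.inftyValuation k (algebraMap k[X] (RatFunc k) f) =
      WithZero.exp (f.natDegree : ℤ) := fun f hf => RatFunc.inftyValuation.polynomial k hf
  have h2 := norm_mem_of_eq (RatFunc.inftyValuation k).integer (fun z hz =>
      (Valuation.integer.integers (RatFunc.inftyValuation k)).mem_of_integral hz)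
    (algebraMap (RatFunc k) F (x ^ (J - p)) * bF)
    (fun i => algebraMap k[X] (RatFunc k) (c' i) / x ^ (p * i)) (by
      intro i
      rw [Valuation.mem_integer_iff, map_div₀]
      by_cases h0 : c' i = 0
      · simp [h0]
      rw [← map_pow, hvp _ h0, hvp _ (pow_ne_zero _ X_ne_zero), ← WithZero.exp_sub,
        ← WithZero.exp_zero, WithZero.exp_le_exp, natDegree_X_pow]
      have := hc' i
      omega) eyF
  rw [Valuation.mem_integer_iff, map_mul, Algebra.norm_algebraMap, ← hg, ← map_pow, ← map_pow, ← map_mul,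
    hvp _ (mul_ne_zero (pow_ne_zero _ (pow_ne_zero _ X_ne_zero)) hg0), ← WithZero.exp_zero,
    WithZero.exp_le_exp, natDegree_mul (pow_ne_zero _ (pow_ne_zero _ X_ne_zero)) hg0, ← pow_mul,
    natDegree_X_pow] at h2
  have h3 : 0 < Module.finrank (RatFunc k) F := Module.finrank_pos
  have h4 : 0 < (J - p) * Module.finrank (RatFunc k) F := Nat.mul_pos (by omega) h3
  omega
end K0

/-! ### Integral elements of the associated graded ring have no poles -/

section B2
open IsLocalRing Polynomial

section Gen
variable {R : Type*} [CommRing R] [IsNoetherianRing R]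

/-- `y` has degree `n` and is nilpotent in the associated graded ring of `{intCl (U ^ n)}`. -/
def NilF (U : Ideal R) (n : ℕ) (y : R) : Prop :=
  y ∈ intCl (U ^ n) ∧ ∃ l, 0 < l ∧ y ^ l ∈ intCl (U ^ (n * l + 1))

variable {U : Ideal R}

lemma NilF.zero (n : ℕ) : NilF U n 0 := ⟨zero_mem _, 1, one_pos, by simp⟩

lemma NilF.add {n : ℕ} {y w : R} (hy : NilF U n y) (hw : NilF U n w) : NilF U n (y + w) := by
  obtain ⟨hy, l, hl, hyl⟩ := hy
  obtain ⟨hw, m, hm, hwm⟩ := hw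
  refine ⟨add_mem hy hw, l + m, by omega, ?_⟩
  rw [add_pow]
  refine Ideal.sum_mem _ fun i hi => Ideal.mul_mem_right _ _ ?_
  have hi' := Finset.mem_range.1 hi
  rcases le_total l i with h | h
  · have := F_mul (F_mul hyl (F_pow hy (i - l))) (F_pow hw (l + m - i))
    rw [← pow_add, Nat.add_sub_cancel' h] at this
    convert this using 3
    obtain ⟨a, rfl⟩ := Nat.exists_eq_add_of_le h
    obtain ⟨b, rfl⟩ : ∃ b, m = a + b := ⟨m - a, by omega⟩
    rw [show l + a - l = a by omega, show l + (a + b) - (l + a) = b by omega]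
    ring
  · have := F_mul (F_pow hy i) (F_mul hwm (F_pow hw (l - i)))
    rw [← pow_add, show m + (l - i) = l + m - i by omega] at this
    convert this using 3
    obtain ⟨a, rfl⟩ := Nat.exists_eq_add_of_le h
    rw [show i + a - i = a by omega]
    ring

lemma NilF.mul {n m : ℕ} {y w : R} (hw : w ∈ intCl (U ^ m)) (hy : NilF U n y) :
    NilF U (m + n) (w * y) := by
  obtain ⟨hy, l, hl, hyl⟩ := hy
  refine ⟨F_mul hw hy, l, hl, ?_⟩
  rw [mul_pow, add_mul, add_assoc]
  exact F_mul (F_pow hw l) hyl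

lemma NilF.neg {n : ℕ} {y : R} (hy : NilF U n y) : NilF U n (-y) := by
  have := NilF.mul (m := 0) (w := -1) (U := U) (by simp [intCl_top]) hy
  simpa using this

lemma NilF.sum {ι : Type*} {n : ℕ} (s : Finset ι) (f : ι → R) (h : ∀ i ∈ s, NilF U n (f i)) :
    NilF U n (∑ i ∈ s, f i) := by
  classical
  induction s using Finset.induction_on with
  | empty => simpa using NilF.zero n
  | insert a s has ih =>
    rw [Finset.sum_insert has]
    exact (h a (Finset.mem_insert_self _ _)).add (ih fun i hi => h i (Finset.mem_insert_of_mem hi))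

variable (c d : R)

/-- The ring of fractions `x / d ^ n` with `x ∈ intCl ((c, d) ^ n)`. -/
def Dring : Subring (Localization.Away d) where
  carrier := {z | ∃ n x, x ∈ intCl (Ideal.span {c, d} ^ n) ∧
    algebraMap R _ d ^ n * z = algebraMap R _ x}
  zero_mem' := ⟨0, 0, zero_mem _, by simp⟩
  one_mem' := ⟨0, 1, by simp [intCl_top], by simp⟩
  add_mem' := by
    rintro z w ⟨n, x, hx, ex⟩ ⟨m, y, hy, ey⟩
    have hd : ∀ k, d ^ k ∈ intCl (Ideal.span {c, d} ^ k) := fun k =>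
      le_intCl _ (Ideal.pow_mem_pow (Ideal.subset_span (by simp)) k)
    refine ⟨n + m, x * d ^ m + d ^ n * y, add_mem (F_mul hx (hd m)) (F_mul (hd n) hy), ?_⟩
    rw [map_add, map_mul, map_mul, ← ex, ← ey, map_pow, map_pow]
    ring
  mul_mem' := by
    rintro z w ⟨n, x, hx, ex⟩ ⟨m, y, hy, ey⟩
    refine ⟨n + m, x * y, F_mul hx hy, ?_⟩
    rw [map_mul, ← ex, ← ey]
    ring
  neg_mem' := by
    rintro z ⟨n, x, hx, ex⟩
    exact ⟨n, -x, neg_mem hx, by rw [map_neg, ← ex]; ring⟩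

/-- The ideal of fractions `x / d ^ n` with `x` nilpotent in degree `n` of the associated graded ring. -/
def Dnil : Ideal (Dring c d) where
  carrier := {z | ∃ n x, NilF (Ideal.span {c, d}) n x ∧
    algebraMap R (Localization.Away d) d ^ n * z = algebraMap R _ x}
  zero_mem' := ⟨0, 0, NilF.zero 0, by simp⟩
  add_mem' := by
    rintro z w ⟨n, x, hx, ex⟩ ⟨m, y, hy, ey⟩
    have hd : ∀ k, d ^ k ∈ intCl (Ideal.span {c, d} ^ k) := fun k =>
      le_intCl _ (Ideal.pow_mem_pow (Ideal.subset_span (by simp)) k)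
    have h1 := NilF.mul (hd m) hx
    rw [add_comm m n] at h1
    refine ⟨n + m, d ^ m * x + d ^ n * y, h1.add (NilF.mul (hd n) hy), ?_⟩
    rw [map_add, map_mul, map_mul, ← ex, ← ey, map_pow, map_pow, Subring.coe_add]
    ring
  smul_mem' := by
    rintro w z ⟨n, x, hx, ex⟩
    obtain ⟨m, y, hy, ey⟩ := w.2
    refine ⟨m + n, y * x, NilF.mul hy hx, ?_⟩
    rw [map_mul, ← ex, ← ey, smul_eq_mul, Subring.coe_mul]
    ring

variable {c d}

lemma mem_Dnil {z : Dring c d} : z ∈ Dnil c d ↔ ∃ n x, NilF (Ideal.span {c, d}) n x ∧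
    algebraMap R (Localization.Away d) d ^ n * z = algebraMap R _ x := Iff.rfl

lemma isUnit_d : IsUnit (algebraMap R (Localization.Away d) d) :=
  IsLocalization.Away.algebraMap_isUnit d

lemma loc_inj (hd : d ∈ nonZeroDivisors R) : Function.Injective (algebraMap R (Localization.Away d)) :=
  IsLocalization.injective (M := Submonoid.powers d) _ (by
    rintro x ⟨n, rfl⟩; exact pow_mem hd n)

lemma hf_eval {v : Localization.Away d} (hv : algebraMap R _ d * v = algebraMap R _ c) {n : ℕ} {p : R[X]}
    (hp : p.natDegree ≤ n) :
    algebraMap R (Localization.Away d) (hf c d n p) =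
      algebraMap R _ d ^ n * eval₂ (algebraMap R _) v p := by
  rw [hf_eq, map_sum, eval₂_eq_sum_range' _ (Nat.lt_succ_of_le hp), Finset.mul_sum]
  refine Finset.sum_congr rfl fun i hi => ?_
  have hi' : i ≤ n := Nat.lt_succ_iff.1 (Finset.mem_range.1 hi)
  rw [map_mul, map_mul, map_pow, map_pow, ← hv]
  obtain ⟨k, rfl⟩ := Nat.exists_eq_add_of_le hi'
  rw [Nat.add_sub_cancel_left]
  ring

lemma frac_eqn {v : Localization.Away d} (hv : algebraMap R _ d * v = algebraMap R _ c) {p : ℕ} {x : R}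
    (hx : x ∈ intCl (Ideal.span {c, d} ^ p)) {z : Localization.Away d}
    (hz : algebraMap R _ d ^ p * z = algebraMap R _ x) :
    ∃ (N : ℕ) (f : ℕ → R[X]), (∀ i, (f i).natDegree ≤ p * i) ∧
      z ^ N + ∑ i ∈ Finset.range N, eval₂ (algebraMap R _) v (f (i + 1)) * z ^ (N - (i + 1)) = 0 := by
  obtain ⟨N, hN, a, ha, e⟩ := mem_intCl.1 hx
  have : ∀ i, ∃ f : R[X], f.natDegree ≤ p * i ∧ hf c d (p * i) f = a i := fun i =>
    exists_hf_of_mem' (p * i) (by rw [pow_mul]; exact ha i)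
  choose f hf1 hf2 using this
  refine ⟨N, f, hf1, ?_⟩
  have h1 := congrArg (algebraMap R (Localization.Away d)) e
  simp only [map_add, map_pow, map_sum, map_mul, map_zero, ← hf2, hf_eval hv (hf1 _), ← hz] at h1
  refine (isUnit_d.pow (p * N)).mul_left_cancel ((Eq.trans ?_ h1).trans (mul_zero _).symm)
  rw [mul_add, Finset.mul_sum]
  refine congrArg₂ _ (by ring) (Finset.sum_congr rfl fun i hi => ?_)
  obtain ⟨k, rfl⟩ := Nat.exists_eq_add_of_le (Nat.succ_le_of_lt (Finset.mem_range.1 hi))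
  rw [Nat.succ_eq_add_one, Nat.add_sub_cancel_left]
  ring

end Gen

variable {R : Type*} [CommRing R] [IsLocalRing R] [IsNoetherianRing R] {c d : R}

/-- If `(c / d) ^ J * (x' / d ^ p')` equals `x / d ^ p` modulo nilpotents and `p < J`, then `x' / d ^ p'`
vanishes at all places at infinity, so it is itself nilpotent. -/
lemma nil_of_pole (h : Reg2 c d) (hm : Ideal.span {c, d} ≤ maximalIdeal R)
    (hMP : MP (Ideal.span {c, d})) {p p' J : ℕ} (hJ : p < J) {x x' : R}
    (hx : x ∈ intCl (Ideal.span {c, d} ^ p)) (hx' : x' ∈ intCl (Ideal.span {c, d} ^ p'))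
    {E : ℕ} (hE : p + E = p' + J) (hxx : NilF (Ideal.span {c, d}) (p + E) (c ^ J * x' - d ^ E * x)) :
    NilF (Ideal.span {c, d}) p' x' := by
  set S := Localization.Away d
  set ι := algebraMap R S with hι
  have hu : IsUnit (ι d) := isUnit_d
  have hinj : Function.Injective ι := loc_inj h.nzd
  by_contra hnil
  have hc1 : c ∈ intCl (Ideal.span {c, d} ^ 1) := le_intCl _ (by
    rw [pow_one]; exact Ideal.subset_span (by simp))
  obtain ⟨v, hv⟩ := hu.exists_right_inv
  have hdiv : ∀ (n : ℕ) (x : R), ι d ^ n * (v ^ n * ι x) = ι x := by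
    intro n x; rw [← mul_assoc, ← mul_pow, hv, one_pow, one_mul]
  have hX : ι d * (v * ι c) = ι c := by rw [← mul_assoc, hv, one_mul]
  let X0 : Dring c d := ⟨v * ι c, 1, c, hc1, by rw [pow_one]; exact hX⟩
  let b : Dring c d := ⟨v ^ p' * ι x', p', x', hx', hdiv _ _⟩
  let β : Dring c d := ⟨v ^ p * ι x, p, x, hx, hdiv _ _⟩
  let jj : R →+* Dring c d := ι.codRestrict (Dring c d) fun r => ⟨0, r, by simp [intCl_top], by rw [pow_zero, one_mul]⟩
  have hev : ∀ f : R[X], ((eval₂ jj X0 f : Dring c d) : S) = eval₂ ι (v * ι c) f := fun f =>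
    (Polynomial.hom_eval₂ f jj (Dring c d).subtype X0)
  -- the multiplicative set
  let M : Submonoid (Dring c d) :=
    { carrier := {z | ∃ (f : R[X]) (l : ℕ), f.map (residue R) ≠ 0 ∧ z = eval₂ jj X0 f * b ^ l}
      one_mem' := ⟨1, 0, by simp, by simp⟩
      mul_mem' := by
        rintro _ _ ⟨f, l, hf, rfl⟩ ⟨g, m, hg, rfl⟩
        refine ⟨f * g, l + m, by rw [Polynomial.map_mul]; exact mul_ne_zero hf hg, ?_⟩
        rw [eval₂_mul]; ring }
  have hdisj : Disjoint (Dnil c d : Set (Dring c d)) M := by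
    rw [Set.disjoint_left]
    rintro z hz ⟨f, l, hf', rfl⟩
    obtain ⟨n, y, ⟨hy, l', hl', hyl⟩, e⟩ := mem_Dnil.1 hz
    set D := f.natDegree
    have e2 : hf c d D f * x' ^ l * d ^ n = y * d ^ (D + p' * l) := by
      apply hinj
      rw [map_mul, map_mul, map_pow, map_pow, hι, hf_eval hX le_rfl, ← hι, map_mul, ← e, map_pow,
        Subring.coe_mul, hev, Subring.coe_pow]
      have : ι x' = ι d ^ p' * (v ^ p' * ι x') := (hdiv _ _).symm
      conv_lhs => rw [this]
      change _ = ι d ^ n * (_ * (v ^ p' * ι x') ^ l) * _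
      ring
    have hd : ∀ k, d ^ k ∈ intCl (Ideal.span {c, d} ^ k) := fun k =>
      le_intCl _ (Ideal.pow_mem_pow (Ideal.subset_span (by simp)) k)
    have h3 : d ^ (n * l') * (hf c d D f ^ l' * x' ^ (l * l')) ∈
        intCl (Ideal.span {c, d} ^ ((p' * (l * l') + 1 + D * l') + n * l')) := by
      have h4 := F_mul hyl (hd ((D + p' * l) * l'))
      convert h4 using 1
      · ring_nf
      · rw [pow_mul d (D + p' * l), ← mul_pow, ← e2]; ring
    have h5 := intCl_cancel_iter h (D := D) (f := f) le_rfl (by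
      by_contra hcon
      push Not at hcon
      apply hf'
      ext i
      rw [coeff_map, coeff_zero, residue_eq_zero_iff]
      exact hcon i) l' (p' * (l * l') + 1) (intCl_cancel_pow' h _ _ h3)
    rcases Nat.eq_zero_or_pos l with rfl | hl
    · have := intCl_pow_le_max hm (by omega) h5
      simp at this
    · exact hnil ⟨hx', l * l', Nat.mul_pos hl hl', h5⟩
  obtain ⟨P, hP, hNP, hPM⟩ := Ideal.exists_le_prime_disjoint _ _ hdisj
  have hbM : b ∈ M := ⟨1, 1, by simp, by simp⟩
  have hbP : b ∉ P := fun hb => Set.disjoint_left.1 hPM hb hbM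
  let E' := Dring c d ⧸ P
  let π : Dring c d →+* E' := Ideal.Quotient.mk P
  have hker : ∀ r ∈ maximalIdeal R, (π.comp jj) r = 0 := by
    intro r hr
    refine Ideal.Quotient.eq_zero_iff_mem.2 (hNP ?_)
    obtain ⟨j, hj⟩ := hMP
    refine mem_Dnil.2 ⟨0, r, ⟨by simp [intCl_top], j + 1, by omega, ?_⟩, by simp; rfl⟩
    rw [zero_mul, zero_add, pow_one]
    exact le_intCl _ (hj (Ideal.pow_le_pow_right (by omega) (Ideal.pow_mem_pow hr (j + 1))))
  let κ : ResidueField R →+* E' := Ideal.Quotient.lift (maximalIdeal R) (π.comp jj) hker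
  have hκ : ∀ r, κ (residue R r) = π (jj r) := fun r => Ideal.Quotient.lift_mk _ _ _
  let φ : (ResidueField R)[X] →+* E' := eval₂RingHom κ (π X0)
  have hφ : ∀ f : R[X], φ (f.map (residue R)) = π (eval₂ jj X0 f) := by
    intro f
    rw [coe_eval₂RingHom, eval₂_map, hom_eval₂]
    congr 1
  have hφi : Function.Injective φ := by
    rw [injective_iff_map_eq_zero]
    intro g hg
    by_contra hg0
    obtain ⟨f, rfl⟩ := Polynomial.map_surjective (residue R) residue_surjective g
    rw [hφ] at hg
    exact Set.disjoint_left.1 hPM (Ideal.Quotient.eq_zero_iff_mem.1 hg) ⟨f, 0, hg0, by simp⟩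
  have heq : ∀ (q : ℕ) (y : R) (hy : y ∈ intCl (Ideal.span {c, d} ^ q)) (z : Dring c d),
      (z : S) = v ^ q * ι y → ∃ (N : ℕ) (g : ℕ → (ResidueField R)[X]), (∀ i, (g i).natDegree ≤ q * i) ∧
      (π z) ^ N + ∑ i ∈ Finset.range N, φ (g (i + 1)) * (π z) ^ (N - (i + 1)) = 0 := by
    intro q y hy z hz
    obtain ⟨N, f, hf1, hf2⟩ := frac_eqn hX hy (z := (z : S)) (by rw [hz]; exact hdiv _ _)
    refine ⟨N, fun i => (f i).map (residue R), fun i => natDegree_map_le.trans (hf1 i), ?_⟩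
    have : z ^ N + ∑ i ∈ Finset.range N, eval₂ jj X0 (f (i + 1)) * z ^ (N - (i + 1)) = 0 := by
      apply Subtype.ext
      push_cast
      simp only [hev]
      exact hf2
    have := congrArg π this
    simpa only [map_add, map_pow, map_sum, map_mul, map_zero, ← hφ] using this
  obtain ⟨N, g, -, e1⟩ := heq p' x' hx' b rfl
  obtain ⟨N', g', hg', e2⟩ := heq p x hx β rfl
  have hrel : φ X ^ J * π b = π β := by
    have : φ X = π X0 := by simp [φ]
    rw [this, ← map_pow, ← map_mul, ← sub_eq_zero, ← map_sub]
    refine Ideal.Quotient.eq_zero_iff_mem.2 (hNP (mem_Dnil.2 ⟨_, _, hxx, ?_⟩))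
    rw [AddSubgroupClass.coe_sub, Subring.coe_mul, Subring.coe_pow]
    change ι d ^ (p + E) * ((v * ι c) ^ J * (v ^ p' * ι x') - v ^ p * ι x) = ι _
    rw [map_sub, map_mul, map_mul, map_pow, map_pow, mul_sub]
    congr 1
    · rw [hE]
      calc _ = (ι d * v) ^ (p' + J) * (ι c ^ J * ι x') := by ring
        _ = _ := by rw [hv, one_pow, one_mul]
    · calc _ = (ι d * v) ^ p * (ι d ^ E * ι x) := by ring
        _ = _ := by rw [hv, one_pow, one_mul]
  have := eq_zero_of_pole φ hφi hJ hrel g e1 g' hg' e2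
  exact hbP (Ideal.Quotient.eq_zero_iff_mem.1 this)

/-- If `d ^ e * x ∈ (c ^ (n + 1)) + F(n + e + 1)` with `x ∈ F(n)`, then `x ∈ F(n + 1)`. -/
lemma key_mem (h : Reg2 c d) (hm : Ideal.span {c, d} ≤ maximalIdeal R)
    (hMP : MP (Ideal.span {c, d}))
    (hg : ∃ A N : ℕ, ∀ n, N ≤ n → cl (intCl (Ideal.span {c, d} ^ (n + 1))) ≤
      cl (intCl (Ideal.span {c, d} ^ n)) + A * (n + 1))
    {x x' z : R} {n e : ℕ} (hz : z ∈ intCl (Ideal.span {c, d} ^ (n + e + 1)))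
    (he : d ^ e * x = c ^ (n + 1) * x' + z) : x ∈ intCl (Ideal.span {c, d} ^ (n + 1)) := by
  have hd : ∀ k, d ^ k ∈ intCl (Ideal.span {c, d} ^ k) := fun k =>
    le_intCl _ (Ideal.pow_mem_pow (Ideal.subset_span (by simp)) k)
  have hc : ∀ k, c ^ k ∈ intCl (Ideal.span {c, d} ^ k) := fun k =>
    le_intCl _ (Ideal.pow_mem_pow (Ideal.subset_span (by simp)) k)
  -- enlarge `e`
  wlog hen : n + 1 ≤ e generalizing e x' z
  · refine this (e := e + (n + 1)) (x' := d ^ (n + 1) * x') (z := d ^ (n + 1) * z) ?_ ?_ (by omega)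
    · convert F_mul (hd (n + 1)) hz using 3; ring
    · rw [pow_add, mul_right_comm, he]; ring
  by_contra hx
  obtain ⟨t, p, ht, hxt, hxl⟩ := exists_rational h hm hMP hg hx
  have hpt : p < (n + 1) * t := by
    by_contra hcon
    exact hx (F_root ht (F_anti (not_lt.1 hcon) hxt))
  have hcx : (c ^ (n + 1) * x') ^ t = ∑ i ∈ Finset.range t,
      ((d ^ e * x) ^ i * (-z) ^ (t - i) * (t.choose i)) + d ^ (e * t) * x ^ t := by
    rw [show c ^ (n + 1) * x' = d ^ e * x + -z by rw [he]; ring, add_pow, Finset.sum_range_succ]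
    simp [mul_pow, pow_mul]
  have hnil : NilF (Ideal.span {c, d}) (p + e * t) (c ^ ((n + 1) * t) * x' ^ t - d ^ (e * t) * x ^ t) := by
    rw [pow_mul c, ← mul_pow, hcx, add_sub_cancel_right]
    refine NilF.sum _ _ fun i hi => ?_
    have hi' := Finset.mem_range.1 hi
    rw [mul_comm _ ((t.choose i : ℕ) : R)]
    have hmain : ((d ^ e * x) ^ i * (-z) ^ (t - i)) ^ t ∈
        intCl (Ideal.span {c, d} ^ ((p + e * t) * t + 1)) := by
      have h1 := F_mul (F_pow (F_mul (hd (e * t)) hxt) i) (F_pow (neg_mem hz) ((t - i) * t))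
      have h2 : (p + e * t) * t + 1 ≤ (e * t + p) * i + (n + e + 1) * ((t - i) * t) := by
        obtain ⟨a, rfl⟩ := Nat.exists_eq_add_of_lt hi'
        rw [show i + a + 1 - i = a + 1 by omega]
        set t := i + a + 1
        have : (p + e * t) * t = (p + e * t) * i + (p + e * t) * (a + 1) := by
          rw [← mul_add]; rfl
        nlinarith
      have h3 := F_anti h2 h1
      convert h3 using 1
      rw [pow_mul d, ← mul_pow]
      ring
    refine (zero_add (p + e * t)) ▸ NilF.mul (m := 0) (by simp [intCl_top]) ⟨F_root ht (F_anti (by omega) hmain), t, ht, hmain⟩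
  have hle : (n + 1) * t ≤ p + e * t := (Nat.mul_le_mul_right t hen).trans (Nat.le_add_left _ _)
  have hx't : x' ^ t ∈ intCl (Ideal.span {c, d} ^ (p + e * t - (n + 1) * t)) := by
    refine intCl_cancel_pow h _ ((n + 1) * t) ?_
    rw [Nat.sub_add_cancel hle]
    have h1 := add_mem hnil.1 (F_anti (by omega) (F_mul (hd (e * t)) hxt))
    rwa [sub_add_cancel] at h1
  have hfin := nil_of_pole h hm hMP hpt hxt hx't (E := e * t) (Nat.sub_add_cancel hle).symm hnil
  have h2 := (NilF.mul (hc ((n + 1) * t)) hfin)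
  rw [Nat.add_sub_cancel' hle] at h2
  have h3 := h2.add hnil.neg
  rw [neg_sub, add_sub_cancel] at h3
  obtain ⟨-, l, hl, h4⟩ := h3
  refine hxl l hl ?_
  rw [pow_mul]
  refine intCl_cancel_pow' h _ (e * t * l) ?_
  convert h4 using 1
  · ring_nf
  · rw [mul_pow, ← pow_mul d]

end B2

/-! ### Stability of the filtration of integral closures of a parameter ideal -/

section B3
open IsLocalRing Polynomial

section Gen
variable {R : Type*} [CommRing R] [IsNoetherianRing R] (c d : R)

/-- The `x ∈ F(n)` such that `d ^ e * x ∈ (c ^ j) + F(n + e + 1)`, for `F(n) = intCl ((c, d) ^ n)`. -/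
noncomputable def Ve (n j e : ℕ) : Ideal R :=
  intCl (Ideal.span {c, d} ^ n) ⊓
    Submodule.comap (LinearMap.mulLeft R (d ^ e))
      (Ideal.span {c ^ j} ⊔ intCl (Ideal.span {c, d} ^ (n + e + 1)))

/-- The union over `e` of the ideals `Ve c d n j e`. -/
noncomputable def Vu (n j : ℕ) : Ideal R := ⨆ e, Ve c d n j e

variable {c d}

lemma d_mem_F (k : ℕ) : d ^ k ∈ intCl (Ideal.span {c, d} ^ k) :=
  le_intCl _ (Ideal.pow_mem_pow (Ideal.subset_span (by simp)) k)

lemma c_mem_F (k : ℕ) : c ^ k ∈ intCl (Ideal.span {c, d} ^ k) :=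
  le_intCl _ (Ideal.pow_mem_pow (Ideal.subset_span (by simp)) k)

lemma mem_Ve {n j e : ℕ} {x : R} : x ∈ Ve c d n j e ↔ x ∈ intCl (Ideal.span {c, d} ^ n) ∧
    ∃ y, ∃ z ∈ intCl (Ideal.span {c, d} ^ (n + e + 1)), d ^ e * x = c ^ j * y + z := by
  rw [Ve, Submodule.mem_inf, Submodule.mem_comap, LinearMap.mulLeft_apply, Submodule.mem_sup]
  refine and_congr_right fun _ => ⟨?_, ?_⟩
  · rintro ⟨u, hu, z, hz, e⟩
    obtain ⟨y, rfl⟩ := Ideal.mem_span_singleton.1 hu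
    exact ⟨y, z, hz, e.symm⟩
  · rintro ⟨y, z, hz, e⟩
    exact ⟨c ^ j * y, Ideal.mem_span_singleton.2 ⟨y, rfl⟩, z, hz, e.symm⟩

lemma Ve_mono (n j : ℕ) : Monotone (Ve c d n j) := by
  refine monotone_nat_of_le_succ fun e x hx => ?_
  obtain ⟨hx, y, z, hz, he⟩ := mem_Ve.1 hx
  refine mem_Ve.2 ⟨hx, d * y, d * z, ?_, ?_⟩
  · convert F_mul (d_mem_F (c := c) 1) hz using 1
    · ring_nf
    · ring
  · rw [pow_succ, mul_right_comm, he]; ring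

lemma mem_Vu {n j : ℕ} {x : R} : x ∈ Vu c d n j ↔ ∃ e, x ∈ Ve c d n j e :=
  Submodule.mem_iSup_of_directed _ (Ve_mono n j).directed_le

lemma Vu_le (n j : ℕ) : Vu c d n j ≤ intCl (Ideal.span {c, d} ^ n) :=
  iSup_le fun _ => inf_le_left

lemma le_Vu (n j : ℕ) : intCl (Ideal.span {c, d} ^ (n + 1)) ≤ Vu c d n j := by
  intro x hx
  exact mem_Vu.2 ⟨0, mem_Ve.2 ⟨F_anti (by omega) hx, 0, x, by simpa using hx, by simp⟩⟩

lemma exists_Vu_eq (n j : ℕ) : ∃ e0, ∀ e, e0 ≤ e → Vu c d n j = Ve c d n j e := by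
  obtain ⟨e0, h⟩ := monotone_stabilizes_iff_noetherian.2 (inferInstance : IsNoetherian R R)
    ⟨Ve c d n j, Ve_mono n j⟩
  refine ⟨e0, fun e he => le_antisymm (iSup_le fun k => ?_) (le_iSup _ _)⟩
  have h1 : Ve c d n j e0 = Ve c d n j e := h e he
  have h2 : Ve c d n j e0 = Ve c d n j (max e0 k) := h _ (le_max_left _ _)
  rw [← h1, h2]
  exact Ve_mono n j (le_max_right _ _)

end Gen

variable {R : Type*} [CommRing R] [IsLocalRing R] [IsNoetherianRing R] {c d : R}

/-- Multiplication by `c ^ j` bounds `Vu n j / Vu n (j + 1)` by the quotients `F(m) / Vu m 1`. -/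
lemma Vu_step (h : Reg2 c d) (hMP : MP (Ideal.span {c, d})) {G : ℕ}
    (hG : ∀ m, cl (Vu c d m 1) ≤ cl (intCl (Ideal.span {c, d} ^ m)) + G) (n j : ℕ) :
    cl (Vu c d n (j + 1)) ≤ cl (Vu c d n j) + G := by
  have hF : ∀ n, MP (intCl (Ideal.span {c, d} ^ n)) := fun n => (hMP.pow n).intCl
  obtain ⟨e0, he0⟩ := exists_Vu_eq (c := c) (d := d) n j
  set e := max e0 j with he
  have hej : j ≤ e := le_max_right _ _
  obtain ⟨m, hm⟩ : ∃ m, n + e = j + m := ⟨n + e - j, by omega⟩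
  set U := Ideal.span {c, d} with hU
  set P1 := intCl (U ^ (n + e + 1)) ⊔ Ideal.span {c ^ j} * intCl (U ^ m) with hP1
  set P2 := intCl (U ^ (n + e + 1)) ⊔ Ideal.span {c ^ j} * Vu c d m 1 with hP2
  have hcj : ∀ k z, z ∈ intCl (U ^ k) → c ^ j * z ∈ intCl (U ^ (j + k)) := fun k z hz =>
    F_mul (c_mem_F j) hz
  have hcj' : ∀ k z, c ^ j * z ∈ intCl (U ^ (j + k)) → z ∈ intCl (U ^ k) := fun k z hz =>
    intCl_cancel_pow h k j (by rwa [add_comm k j])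
  have h1 := cl_tool (hF (n + e + 1)) (hF m) (c ^ j) hP1 (W := intCl (U ^ (m + 1))) (by
    intro z
    constructor
    · intro hz
      refine ⟨F_anti (by omega) hz, ?_⟩
      rw [hm, add_assoc]; exact hcj _ _ hz
    · rintro ⟨-, hz⟩
      rw [hm, add_assoc] at hz; exact hcj' _ _ hz)
  have h2 := cl_tool (hF (n + e + 1)) ((hF (m + 1)).mono (le_Vu m 1)) (c ^ j) hP2
    (W := intCl (U ^ (m + 1))) (by
    intro z
    constructor
    · intro hz
      refine ⟨le_Vu m 1 hz, ?_⟩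
      rw [hm, add_assoc]; exact hcj _ _ hz
    · rintro ⟨-, hz⟩
      rw [hm, add_assoc] at hz; exact hcj' _ _ hz)
  have h3 := cl_tool' ((hF (n + e + 1)).mono (le_sup_left : _ ≤ P1)) (d ^ e) rfl (W := Vu c d n j) (by
    intro z
    rw [he0 e (le_max_left _ _), mem_Ve]
    constructor
    · rintro ⟨hz, y, w, hw, e1⟩
      rw [e1, add_comm (c ^ j * y) w]
      refine add_mem (Ideal.mem_sup_left hw) (Ideal.mem_sup_right (Ideal.mul_mem_mul
        (Ideal.mem_span_singleton_self _) (hcj' _ _ ?_)))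
      rw [← hm, show c ^ j * y = d ^ e * z - w by rw [e1]; ring]
      refine sub_mem ?_ (F_anti (by omega) hw)
      rw [add_comm n e]; exact F_mul (d_mem_F e) hz
    · intro hz
      obtain ⟨w, hw, u, hu, e1⟩ := Submodule.mem_sup.1 hz
      obtain ⟨y, hy, rfl⟩ := Ideal.mem_span_singleton_mul.1 hu
      refine ⟨intCl_cancel_pow' h n e ?_, y, w, hw, by rw [← e1]; ring⟩
      rw [← e1]
      refine add_mem (F_anti (by omega) hw) ?_
      rw [hm]; exact hcj _ _ hy)
  set W2 : Ideal R := Submodule.comap (LinearMap.mulLeft R (d ^ e)) P2 with hW2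
  have h4 := cl_tool' ((hF (n + e + 1)).mono (le_sup_left : _ ≤ P2)) (d ^ e) rfl (W := W2) (by
    intro z; rfl)
  have hP21 : P2 ≤ P1 := sup_le_sup_left (Ideal.mul_mono_right (Vu_le _ _)) _
  have h5 : cl (P1 ⊔ Ideal.span {d ^ e}) ≤ cl (P2 ⊔ Ideal.span {d ^ e}) :=
    cl_mono (((hF (n + e + 1)).mono (le_sup_left : _ ≤ P2)).mono le_sup_left) (sup_le_sup_right hP21 _)
  have hle : W2 ≤ Vu c d n (j + 1) := by
    intro z hz
    obtain ⟨w, hw, u, hu, e1⟩ := Submodule.mem_sup.1 (hz : d ^ e * z ∈ P2)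
    obtain ⟨y, hy, rfl⟩ := Ideal.mem_span_singleton_mul.1 hu
    replace e1 : w + c ^ j * y = d ^ e * z := e1
    obtain ⟨e', he'⟩ := mem_Vu.1 hy
    obtain ⟨hym, y', z', hz', e2⟩ := mem_Ve.1 he'
    refine mem_Vu.2 ⟨e + e', mem_Ve.2 ⟨intCl_cancel_pow' h n e ?_, y', c ^ j * z' + d ^ e' * w, ?_, ?_⟩⟩
    · rw [← e1]
      refine add_mem (F_anti (by omega) hw) ?_
      rw [hm]; exact hcj _ _ hym
    · refine add_mem ?_ ?_
      · have := hcj _ _ hz'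
        rwa [show j + (m + e' + 1) = n + (e + e') + 1 by omega] at this
      · have := F_mul (d_mem_F (c := c) e') hw
        rwa [show e' + (n + e + 1) = n + (e + e') + 1 by omega] at this
    · rw [pow_add, mul_right_comm, ← e1]
      calc _ = w * d ^ e' + c ^ j * (d ^ e' * y) := by ring
        _ = _ := by rw [e2]; ring
  have h6 := cl_mono (X := W2) (Y := Vu c d n (j + 1)) ?_ hle
  · have := hG m
    change cl P1 = cl (P1 ⊔ Ideal.span {d ^ e}) + _ at h3
    change cl P2 = cl (P2 ⊔ Ideal.span {d ^ e}) + _ at h4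
    omega
  · refine (hF (n + 1)).mono fun z hz => ?_
    refine Ideal.mem_sup_left ?_
    have := F_mul (d_mem_F (c := c) e) hz
    rwa [show e + (n + 1) = n + e + 1 by omega] at this

/-- The integral closures of the powers of a parameter ideal `U = (c, d)` are eventually multiplied by
`U`. The lengths of `F(m) / Vu m 1` increase to at most the leading coefficient `e0`; by `key_mem`, the
polynomial growth of the colengths forces the value `e0` to be attained, which gives
`F(m + 1) = U F(m) + F(m + 2)` for large `m`. Separatedness of the filtration removes the last term. -/
theorem intCl_pow_stable (hur : AnalyticallyUnramified R) (h : Reg2 c d)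
    (hm : Ideal.span {c, d} ≤ maximalIdeal R) (hMP : MP (Ideal.span {c, d}))
    {e0 e1 e2 : ℤ} (hpoly : ∃ N : ℕ, ∀ n : ℕ, N ≤ n →
      (cl (intCl (Ideal.span {c, d} ^ n)) : ℤ) = e0 * ((n + 1).choose 2 : ℕ) - e1 * n + e2) :
    ∃ n1, ∀ n, n1 ≤ n →
      intCl (Ideal.span {c, d} ^ (n + 1)) = Ideal.span {c, d} * intCl (Ideal.span {c, d} ^ n) := by
  have hF : ∀ n, MP (intCl (Ideal.span {c, d} ^ n)) := fun n => (hMP.pow n).intCl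
  have hd1 : d ∈ intCl (Ideal.span {c, d} ^ 1) := by simpa using d_mem_F (c := c) (d := d) 1
  have hc1 : c ∈ intCl (Ideal.span {c, d} ^ 1) := by simpa using c_mem_F (c := c) (d := d) 1
  obtain ⟨N, hN⟩ := hpoly
  have hstep : ∀ n : ℕ, N ≤ n → (cl (intCl (Ideal.span {c, d} ^ (n + 1))) : ℤ) =
      cl (intCl (Ideal.span {c, d} ^ n)) + e0 * (n + 1) - e1 := by
    intro n hn
    rw [hN n hn, hN (n + 1) (by omega), Nat.choose_succ_succ' (n + 1) 1, Nat.choose_one_right]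
    push_cast
    ring
  have hg : ∃ A N : ℕ, ∀ n, N ≤ n → cl (intCl (Ideal.span {c, d} ^ (n + 1))) ≤
      cl (intCl (Ideal.span {c, d} ^ n)) + A * (n + 1) := by
    refine ⟨e0.natAbs + e1.natAbs, N, fun n hn => ?_⟩
    have h1 := hstep n hn
    zify
    rw [h1]
    have := le_abs_self e0
    have := neg_abs_le e1
    have : 0 ≤ |e1| := abs_nonneg _
    have : (0 : ℤ) ≤ n := by positivity
    nlinarith
  have hkey : ∀ n, Vu c d n (n + 1) = intCl (Ideal.span {c, d} ^ (n + 1)) := by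
    intro n
    refine le_antisymm (fun x hx => ?_) (le_Vu _ _)
    obtain ⟨e, he⟩ := mem_Vu.1 hx
    obtain ⟨-, y, z, hz, e1⟩ := mem_Ve.1 he
    exact key_mem h hm hMP hg hz e1
  have hzero : ∀ n, Vu c d n 0 = intCl (Ideal.span {c, d} ^ n) := by
    intro n
    refine le_antisymm (Vu_le _ _) fun x hx => mem_Vu.2 ⟨0, mem_Ve.2 ⟨hx, x, 0, zero_mem _, by simp⟩⟩
  -- comparison of `F(m) / Vu m 1` with `F(m) / (c F(m - 1) + F(m + 1))`
  set T : ℕ → Ideal R := fun m => intCl (Ideal.span {c, d} ^ (m + 2)) ⊔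
    Ideal.span {c} * intCl (Ideal.span {c, d} ^ m) with hT
  have hTV : ∀ m, T m ≤ Vu c d (m + 1) 1 := by
    intro m
    refine sup_le (le_Vu _ _) ?_
    rw [Ideal.span_singleton_mul_le_iff]
    intro z hz
    refine mem_Vu.2 ⟨0, mem_Ve.2 ⟨?_, z, 0, zero_mem _, by simp⟩⟩
    rw [add_comm]; exact F_mul hc1 hz
  have hTMP : ∀ m, MP (T m) := fun m => (hF (m + 2)).mono le_sup_left
  have hTcl : ∀ m, cl (intCl (Ideal.span {c, d} ^ (m + 2))) + cl (intCl (Ideal.span {c, d} ^ m)) =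
      cl (T m) + cl (intCl (Ideal.span {c, d} ^ (m + 1))) := by
    intro m
    refine cl_tool (hF _) (hF _) c rfl fun z => ⟨fun hz => ⟨F_anti (by omega) hz, ?_⟩, fun hz => ?_⟩
    · have := F_mul hc1 hz
      rwa [show 1 + (m + 1) = m + 2 by omega] at this
    · exact intCl_cancel_pow h (m + 1) 1 (by rw [pow_one]; exact hz.2)
  have hTe : ∀ m, N ≤ m → (cl (T m) : ℤ) = cl (intCl (Ideal.span {c, d} ^ (m + 1))) + e0 := by
    intro m hm
    have h1 := hTcl m
    have h2 := hstep m hm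
    have h3 := hstep (m + 1) (by omega)
    zify at h1
    push_cast at h3
    rw [show m + 1 + 1 = m + 2 by omega] at h3
    linarith
  have hVMP : ∀ m, MP (Vu c d m 1) := fun m => (hF (m + 1)).mono (le_Vu m 1)
  have hmono : ∀ m, cl (Vu c d (m + 1) 1) + cl (intCl (Ideal.span {c, d} ^ m)) =
      cl (Vu c d (m + 1) 1 ⊔ Ideal.span {d} * intCl (Ideal.span {c, d} ^ m)) + cl (Vu c d m 1) := by
    intro m
    refine cl_tool (hVMP _) (hF _) d rfl fun z => ⟨fun hz => ⟨Vu_le _ _ hz, ?_⟩, fun ⟨hz1, hz⟩ => ?_⟩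
    · obtain ⟨e, he⟩ := mem_Vu.1 hz
      obtain ⟨hz0, y, w, hw, e1⟩ := mem_Ve.1 he
      refine mem_Vu.2 ⟨e, mem_Ve.2 ⟨?_, d * y, d * w, ?_, ?_⟩⟩
      · rw [add_comm]; exact F_mul hd1 hz0
      · have := F_mul hd1 hw
        rwa [show 1 + (m + e + 1) = m + 1 + e + 1 by omega] at this
      · rw [mul_left_comm, e1]; ring
    · obtain ⟨e, he⟩ := mem_Vu.1 hz
      obtain ⟨hz0, y, w, hw, e1⟩ := mem_Ve.1 he
      refine mem_Vu.2 ⟨e + 1, mem_Ve.2 ⟨hz1, y, w, ?_, ?_⟩⟩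
      · rwa [show m + 1 + e + 1 = m + (e + 1) + 1 by omega] at hw
      · rw [pow_succ, mul_assoc, e1]
  have hsup : ∀ m, Vu c d (m + 1) 1 ⊔ Ideal.span {d} * intCl (Ideal.span {c, d} ^ m) ≤
      intCl (Ideal.span {c, d} ^ (m + 1)) := by
    intro m
    refine sup_le (Vu_le _ _) ?_
    rw [Ideal.span_singleton_mul_le_iff]
    intro z hz
    rw [add_comm]; exact F_mul hd1 hz
  have hsupMP : ∀ m, MP (Vu c d (m + 1) 1 ⊔ Ideal.span {d} * intCl (Ideal.span {c, d} ^ m)) :=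
    fun m => (hVMP _).mono le_sup_left
  set g : ℕ → ℤ := fun m => cl (Vu c d m 1) - cl (intCl (Ideal.span {c, d} ^ m)) with hgdef
  have hgmono : Monotone g := by
    refine monotone_nat_of_le_succ fun m => ?_
    have h1 := hmono m
    have h2 := cl_mono (hsupMP m) (hsup m)
    simp only [hgdef]
    omega
  have hgle : ∀ m, N ≤ m → g (m + 1) ≤ e0 := by
    intro m hm
    have h1 := cl_mono (hTMP m) (hTV m)
    have h2 := hTe m hm
    simp only [hgdef]
    omega
  obtain ⟨m0, hm0⟩ : ∃ m0, e0 ≤ g m0 := by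
    by_contra hcon
    push Not at hcon
    have hg0 : 0 ≤ g 0 := by
      have := cl_mono (hVMP 0) (Vu_le 0 1)
      simp only [hgdef]; omega
    have he0 : 0 < e0 := lt_of_le_of_lt hg0 (hcon 0)
    have hG : ∀ m, cl (Vu c d m 1) ≤ cl (intCl (Ideal.span {c, d} ^ m)) + (e0 - 1).toNat := by
      intro m
      have := hcon m
      simp only [hgdef] at this
      omega
    have hj : ∀ n j, cl (Vu c d n j) ≤ cl (Vu c d n 0) + j * (e0 - 1).toNat := by
      intro n j
      induction j with
      | zero => simp
      | succ j ih =>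
        have := Vu_step h hMP hG n j
        rw [add_mul, one_mul]
        omega
    have h1 := hj (N + e1.natAbs) (N + e1.natAbs + 1)
    rw [hkey, hzero] at h1
    have h2 := hstep (N + e1.natAbs) (by omega)
    zify at h1
    rw [Int.toNat_of_nonneg (by omega)] at h1
    push_cast at h1 h2
    have := le_abs_self e1
    nlinarith
  refine ⟨max m0 (N + 1), fun n hn => ?_⟩
  have hgeq : ∀ m, max m0 (N + 1) ≤ m → g m = e0 := by
    intro m hm
    obtain ⟨k, rfl⟩ : ∃ k, m = k + 1 := ⟨m - 1, by omega⟩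
    exact le_antisymm (hgle k (by omega)) (hm0.trans (hgmono (by omega)))
  have hone : ∀ m, max m0 (N + 1) ≤ m → intCl (Ideal.span {c, d} ^ (m + 1)) ≤
      Ideal.span {c, d} * intCl (Ideal.span {c, d} ^ m) ⊔ intCl (Ideal.span {c, d} ^ (m + 2)) := by
    intro m hm
    have h1 := hgeq m hm
    have h2 := hgeq (m + 1) (by omega)
    simp only [hgdef] at h1 h2
    have h3 := hmono m
    have h4 := eq_of_cl (hsupMP m) (hsup m) (by omega)
    have h5 := eq_of_cl (hTMP m) (hTV m) (by have := hTe m (by omega); omega)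
    rw [← h4, ← h5]
    refine sup_le (sup_le le_sup_right (le_trans (Ideal.mul_mono_left ?_) le_sup_left))
      (le_trans (Ideal.mul_mono_left ?_) le_sup_left)
    · exact Ideal.span_mono (by simp)
    · exact Ideal.span_mono (by simp)
  have hiter : ∀ k, intCl (Ideal.span {c, d} ^ (n + 1)) ≤
      Ideal.span {c, d} * intCl (Ideal.span {c, d} ^ n) ⊔ intCl (Ideal.span {c, d} ^ (n + 1 + k)) := by
    intro k
    induction k with
    | zero => exact le_sup_right
    | succ k ih =>
      refine ih.trans (sup_le le_sup_left ?_)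
      have := hone (n + k) (by omega)
      rw [show n + k + 1 = n + 1 + k by omega, show n + k + 2 = n + 1 + (k + 1) by omega] at this
      exact this.trans (sup_le_sup_right (Ideal.mul_mono_right (F_anti (by omega))) _)
  refine le_antisymm (fun x hx => mem_of_forall_mem_sup_pow fun j => ?_) ?_
  · obtain ⟨k, hk⟩ := exists_intCl_pow_le hur hm j
    exact sup_le_sup_left ((F_anti (by omega)).trans hk) _ (hiter k hx)
  · rw [pow_succ', ]
    exact (Ideal.mul_mono_left (le_intCl _)).trans (intCl_mul_le _ _)

end B3

/-! ### Existence of joint reductions with general elements -/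

section X
open IsLocalRing Polynomial

section Avoid
variable {R : Type*} [CommRing R] [IsLocalRing R]

/-- Over a local ring with infinite residue field an ideal is not contained in a finite union of
ideals not containing it. -/
lemma exists_avoid (hres : Infinite (ResidueField R)) (I : Ideal R) (S : Finset (Ideal R))
    (hS : ∀ V ∈ S, ¬ I ≤ V) : ∃ a ∈ I, ∀ V ∈ S, a ∉ V := by
  classical
  induction S using Finset.induction_on with
  | empty => exact ⟨0, I.zero_mem, by simp⟩
  | insert V S hV ih =>
    obtain ⟨a, ha, haS⟩ := ih fun W hW => hS W (Finset.mem_insert_of_mem hW)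
    by_cases haV : a ∈ V
    swap
    · exact ⟨a, ha, by simpa [haV] using haS⟩
    obtain ⟨z, hz, hzV⟩ := Set.not_subset.1 (hS V (Finset.mem_insert_self _ _))
    obtain ⟨σ, hσ⟩ := Function.surjective_iff_hasRightInverse.1 (residue_surjective (R := R))
    have key : ∃ u : R, u ∉ maximalIdeal R ∧ ∀ W ∈ S, a + u * z ∉ W := by
      by_contra! hcon
      have h1 : ∀ k : {k : ResidueField R // k ≠ 0}, ∃ W : S, a + σ k * z ∈ (W : Ideal R) := by
        intro k
        obtain ⟨W, hW, h⟩ := hcon (σ k) (by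
          rw [← residue_eq_zero_iff, hσ]; exact k.2)
        exact ⟨⟨W, hW⟩, h⟩
      choose f hf using h1
      have hinf : Infinite {k : ResidueField R // k ≠ 0} :=
        Set.infinite_coe_iff.2 (Set.Finite.infinite_compl (Set.finite_singleton (0 : ResidueField R)))
      obtain ⟨k, l, hkl, he⟩ := Finite.exists_ne_map_eq_of_infinite f
      have h2 := hf l
      rw [← he] at h2
      have h3 : (σ k - σ l) * z ∈ ((f k : S) : Ideal R) := by
        have := sub_mem (hf k) h2
        convert this using 1; ring
      have hu : IsUnit (σ k - σ l : R) := by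
        by_contra hu
        have : residue R (σ k - σ l) = 0 := residue_eq_zero_iff _ |>.2 ((mem_maximalIdeal _).2 hu)
        rw [map_sub, hσ, hσ, sub_eq_zero] at this
        exact hkl (Subtype.ext this)
      have h4 : z ∈ ((f k : S) : Ideal R) := (Ideal.unit_mul_mem_iff_mem _ hu).1 h3
      have h5 : a ∈ ((f k : S) : Ideal R) := by
        have := sub_mem (hf k) (Ideal.mul_mem_left _ (σ k : R) h4)
        simpa using this
      exact haS _ (f k).2 h5
    obtain ⟨u, hu, huS⟩ := key
    refine ⟨a + u * z, add_mem ha (I.mul_mem_left _ hz), fun W hW => ?_⟩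
    rcases Finset.mem_insert.1 hW with rfl | hW
    · intro h
      have hu' : IsUnit u := by
        by_contra h'; exact hu ((mem_maximalIdeal _).2 h')
      exact hzV ((Ideal.unit_mul_mem_iff_mem _ hu').1 ((add_mem_cancel_left haV).1 h))
    · exact huS W hW

end Avoid

section Core
variable {R : Type*} [CommRing R] (Q : Ideal R)

/-- The component of degree `n` of an ideal of the Rees algebra of `Q`. -/
def core (p : Ideal (reesAlgebra Q)) (n : ℕ) : Ideal R where
  carrier := {x | ∃ h : monomial n x ∈ reesAlgebra Q, (⟨monomial n x, h⟩ : reesAlgebra Q) ∈ p}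
  add_mem' := by
    rintro x y ⟨hx, hxp⟩ ⟨hy, hyp⟩
    refine ⟨by rw [map_add]; exact add_mem hx hy, ?_⟩
    convert p.add_mem hxp hyp using 1
    ext1; simp
  zero_mem' := ⟨by simp, by
    convert p.zero_mem using 1
    ext1; simp⟩
  smul_mem' := by
    rintro c x ⟨hx, hxp⟩
    have e : monomial n (c • x) = c • monomial n x := by rw [smul_monomial]
    refine ⟨by rw [e]; exact Subalgebra.smul_mem _ hx c, ?_⟩
    convert p.mul_mem_left (algebraMap R _ c) hxp using 1
    ext1
    rw [← Algebra.smul_def]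
    exact e

variable {Q}

lemma core_le (p : Ideal (reesAlgebra Q)) (n : ℕ) : core Q p n ≤ Q ^ n := by
  rintro x ⟨h, -⟩; exact reesAlgebra.monomial_mem.1 h

lemma core_mono {p q : Ideal (reesAlgebra Q)} (h : p ≤ q) (n : ℕ) : core Q p n ≤ core Q q n := by
  rintro x ⟨hx, hxp⟩; exact ⟨hx, h hxp⟩

lemma core_mul {p : Ideal (reesAlgebra Q)} {n k : ℕ} {x y : R} (hx : x ∈ core Q p n)
    (hy : y ∈ Q ^ k) : x * y ∈ core Q p (n + k) := by
  obtain ⟨hx, hxp⟩ := hx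
  have hy' := reesAlgebra.monomial_mem.2 hy
  refine ⟨by rw [← monomial_mul_monomial]; exact mul_mem hx hy', ?_⟩
  convert p.mul_mem_right ⟨_, hy'⟩ hxp using 1
  ext1; simp [monomial_mul_monomial]

lemma core_prime {p : Ideal (reesAlgebra Q)} [hp : p.IsPrime] {n k : ℕ} {x y : R} (hx : x ∈ Q ^ n)
    (hy : y ∈ Q ^ k) (h : x * y ∈ core Q p (n + k)) : x ∈ core Q p n ∨ y ∈ core Q p k := by
  obtain ⟨h1, h2⟩ := h
  have hx' := reesAlgebra.monomial_mem.2 hx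
  have hy' := reesAlgebra.monomial_mem.2 hy
  have : (⟨_, hx'⟩ : reesAlgebra Q) * ⟨_, hy'⟩ ∈ p := by
    convert h2 using 1
    ext1; simp [monomial_mul_monomial]
  rcases hp.mem_or_mem this with h | h
  · exact Or.inl ⟨hx', h⟩
  · exact Or.inr ⟨hy', h⟩

end Core

variable {R : Type*} [CommRing R] [IsLocalRing R] [IsNoetherianRing R] {Q : Ideal R}

lemma core_max {p : Ideal (reesAlgebra Q)} (hm : maximalIdeal R ≤ core Q p 0) (n : ℕ) :
    maximalIdeal R * Q ^ n ≤ core Q p n :=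
  Ideal.mul_le.2 fun x hx y hy => by simpa using core_mul (hm hx) hy

lemma core_step {p q : Ideal (reesAlgebra Q)} [p.IsPrime] (hQ : MP Q)
    (hm : maximalIdeal R ≤ core Q p 0) (hpq : p ≤ q)
    {d : R} (hd : d ∈ core Q q 1) (hdp : d ∉ core Q p 1) (n : ℕ) :
    cl (core Q q (n + 1)) + cl (core Q p n) ≤ cl (core Q p (n + 1)) + cl (Q ^ n) := by
  have hMPp : ∀ n, MP (core Q p n) := fun n => (MP.max.mul (hQ.pow n)).mono (core_max hm n)
  have h1 := cl_tool (hMPp (n + 1)) (hQ.pow n) d rfl (W := core Q p n) (by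
    intro z
    constructor
    · intro hz
      refine ⟨core_le _ _ hz, ?_⟩
      rw [mul_comm]
      exact core_mul hz (by simpa using core_le _ _ hd)
    · rintro ⟨hz, hdz⟩
      rw [add_comm] at hdz
      exact (core_prime (by simpa using core_le _ _ hd) hz hdz).resolve_left hdp)
  rw [h1]
  refine add_le_add_left (cl_mono ((hMPp (n + 1)).mono le_sup_left) (sup_le (core_mono hpq _) ?_)) _
  refine Ideal.mul_le.2 fun x hx y hy => ?_
  obtain ⟨u, rfl⟩ := Ideal.mem_span_singleton'.1 hx
  rw [mul_assoc, add_comm]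
  exact Ideal.mul_mem_left _ _ (core_mul hd hy)

lemma core_proper {p : Ideal (reesAlgebra Q)} [p.IsPrime] (h : ¬ Q ≤ core Q p 1) (n : ℕ) :
    core Q p n < Q ^ n := by
  refine lt_of_le_of_ne (core_le _ _) ?_
  obtain ⟨x, hx, hxp⟩ := Set.not_subset.1 h
  have : ∀ n, x ^ n ∉ core Q p n := by
    intro n
    induction n with
    | zero =>
      rintro ⟨h1, h2⟩
      refine Ideal.IsPrime.ne_top' (I := p) ((Ideal.eq_top_iff_one _).2 ?_)
      convert h2 using 1
      ext1; simp
    | succ n ih =>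
      intro hc
      rw [pow_succ] at hc
      rcases core_prime (Ideal.pow_mem_pow hx n) (by simpa using hx) hc with h | h
      · exact ih h
      · exact hxp h
  intro he
  exact this n (he ▸ Ideal.pow_mem_pow hx n)

/-- Three homogeneous primes of the fibre ring below the irrelevant ideal force cubic growth. -/
lemma no_chain {p0 p1 p2 : Ideal (reesAlgebra Q)} [p0.IsPrime] [p1.IsPrime] [p2.IsPrime] (hQ : MP Q)
    (hgr : ∃ C N : ℕ, ∀ n, N ≤ n → cl (Q ^ n) ≤ C * (n + 1) ^ 2)
    (hQm : Q ≤ maximalIdeal R)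
    (hm : maximalIdeal R ≤ core Q p0 0) (h01 : p0 ≤ p1) (h12 : p1 ≤ p2)
    {c d : R} (hc : c ∈ core Q p1 1) (hcp : c ∉ core Q p0 1)
    (hd : d ∈ core Q p2 1) (hdp : d ∉ core Q p1 1) (h2 : ¬ Q ≤ core Q p2 1) : False := by
  have hm1 := hm.trans (core_mono h01 0)
  have hMP : ∀ n, MP (core Q p0 n) := fun n => (MP.max.mul (hQ.pow n)).mono (core_max hm n)
  have hMP2 : ∀ n, MP (core Q p2 n) := fun n =>
    (MP.max.mul (hQ.pow n)).mono (core_max (hm1.trans (core_mono h12 0)) n)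
  have a2 : ∀ n, cl (Q ^ n) + 1 ≤ cl (core Q p2 n) := fun n => cl_lt (hMP2 n) (core_proper h2 n)
  have a1 : ∀ n, cl (Q ^ n) + n ≤ cl (core Q p1 n) := by
    intro n
    induction n with
    | zero => simp [cl_top]
    | succ n ih =>
      have := core_step hQ hm1 h12 hd hdp n
      have := a2 (n + 1)
      omega
  have a0 : ∀ n, 2 * cl (Q ^ n) + n * n ≤ 2 * cl (core Q p0 n) := by
    intro n
    induction n with
    | zero => simp [cl_top]
    | succ n ih =>
      have := core_step hQ hm h01 hc hcp n
      have := a1 (n + 1)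
      nlinarith
  have b0 : ∀ n, 2 * cl (Q ^ n) + n * n ≤ 2 * cl (Q ^ (n + 1)) := by
    intro n
    refine (a0 n).trans ?_
    have : cl (core Q p0 n) ≤ cl (Q ^ (n + 1)) := cl_mono (hQ.pow _) (le_trans (by
      rw [pow_succ, mul_comm]; exact Ideal.mul_mono_left hQm) (core_max hm n))
    omega
  have b1 : ∀ n, n * n * n ≤ 6 * cl (Q ^ (n + 1)) + 3 * (n * n) := by
    intro n
    induction n with
    | zero => simp
    | succ n ih => nlinarith [b0 (n + 1)]
  obtain ⟨C, N, h⟩ := hgr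
  have e1 := h (N + 24 * C + 10) (by omega)
  have e2 := b1 (N + 24 * C + 9)
  generalize hM : N + 24 * C + 9 = M at *
  have e3 : N + 24 * C + 10 = M + 1 := by omega
  rw [e3] at e1
  have hM9 : 9 ≤ M := by omega
  have hMC : 24 * C + 9 ≤ M := by omega
  have e4 : (M + 1 + 1) ^ 2 ≤ 2 * (M * M) := by nlinarith
  have e5 : C * (M + 1 + 1) ^ 2 ≤ C * (2 * (M * M)) := Nat.mul_le_mul_left _ e4
  have e6 : (24 * C + 9) * (M * M) ≤ M * (M * M) := Nat.mul_le_mul_right _ hMC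
  nlinarith

/-- The ideal `𝔪 A + (c t) + (d t)` of the Rees algebra, described by its components. -/
lemma mem_of_mem_sup {c d : R} {hc : monomial 1 c ∈ reesAlgebra Q} {hd : monomial 1 d ∈ reesAlgebra Q}
    {f : reesAlgebra Q}
    (hf : f ∈ (maximalIdeal R).map (algebraMap R (reesAlgebra Q)) ⊔ Ideal.span {⟨_, hc⟩} ⊔
      Ideal.span {⟨_, hd⟩}) (n : ℕ) :
    (f : R[X]).coeff (n + 1) ∈ maximalIdeal R * Q ^ (n + 1) ⊔ Ideal.span {c, d} * Q ^ n := by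
  obtain ⟨f', hf', g2, hg2, rfl⟩ := Submodule.mem_sup.1 hf
  obtain ⟨g0, hg0, g1, hg1, rfl⟩ := Submodule.mem_sup.1 hf'
  obtain ⟨y1, rfl⟩ := Ideal.mem_span_singleton.1 hg1
  obtain ⟨y2, rfl⟩ := Ideal.mem_span_singleton.1 hg2
  have hc' := (mem_reesAlgebra_iff _ _).1 y1.2
  have hd' := (mem_reesAlgebra_iff _ _).1 y2.2
  simp only [Subalgebra.coe_add, Subalgebra.coe_mul, coeff_add]
  have e : ∀ (x : R) (y : R[X]), (monomial 1 x * y).coeff (n + 1) = x * y.coeff n := by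
    intro x y
    rw [← C_mul_X_eq_monomial, mul_assoc, coeff_C_mul, coeff_X_mul]
  rw [e, e]
  refine add_mem (add_mem (Ideal.mem_sup_left ?_) (Ideal.mem_sup_right (Ideal.mul_mem_mul
    (Ideal.subset_span (by simp)) (hc' n)))) (Ideal.mem_sup_right (Ideal.mul_mem_mul
    (Ideal.subset_span (by simp)) (hd' n)))
  have key : ∀ k, (g0 : R[X]).coeff k ∈ maximalIdeal R * Q ^ k := by
    refine Submodule.span_induction (p := fun (g : reesAlgebra Q) _ =>
      ∀ k, (g : R[X]).coeff k ∈ maximalIdeal R * Q ^ k) ?_ (by simp) ?_ ?_ hg0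
    · rintro _ ⟨x, hx, rfl⟩ k
      rw [Subalgebra.coe_algebraMap, Polynomial.algebraMap_apply, Algebra.algebraMap_self, RingHom.id_apply,
        coeff_C]
      split_ifs with h
      · subst h; simpa using hx
      · exact zero_mem _
    · intro x y _ _ hx hy k
      rw [Subalgebra.coe_add, coeff_add]; exact add_mem (hx k) (hy k)
    · intro a x _ hx k
      rw [smul_eq_mul, Subalgebra.coe_mul, coeff_mul]
      refine sum_mem fun ij hij => ?_
      rw [← Finset.HasAntidiagonal.mem_antidiagonal.1 hij, pow_add, mul_left_comm]
      exact Ideal.mul_mem_mul ((mem_reesAlgebra_iff _ _).1 a.2 _) (hx _)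
  exact key _

lemma exists_avoid_min (hres : Infinite (ResidueField R)) (I J : Ideal R)
    (B : Ideal (reesAlgebra (I * J))) :
    ∃ a ∈ I, ∃ b ∈ J, ∀ p ∈ B.minimalPrimes, ¬ I * J ≤ core (I * J) p 1 →
      a * b ∉ core (I * J) p 1 := by
  classical
  have hfin : B.minimalPrimes.Finite := Ideal.finite_minimalPrimes_of_isNoetherianRing _ B
  set S := hfin.toFinset.filter fun p => ¬ I * J ≤ core (I * J) p 1 with hS
  obtain ⟨a, ha, haS⟩ := exists_avoid hres I (S.image fun p => (core (I * J) p 1).colon (J : Set R)) (by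
    intro V hV hIV
    obtain ⟨p, hp, rfl⟩ := Finset.mem_image.1 hV
    refine (Finset.mem_filter.1 hp).2 (Ideal.mul_le.2 fun x hx y hy => ?_)
    exact Submodule.mem_colon.1 (hIV hx) y hy)
  obtain ⟨b, hb, hbS⟩ := exists_avoid hres J (S.image fun p => (core (I * J) p 1).colon {a}) (by
    intro V hV hJV
    obtain ⟨p, hp, rfl⟩ := Finset.mem_image.1 hV
    refine haS _ (Finset.mem_image.2 ⟨p, hp, rfl⟩) (Submodule.mem_colon.2 fun y hy => ?_)
    have := Submodule.mem_colon_singleton.1 (hJV hy)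
    rwa [smul_eq_mul, mul_comm y a] at this)
  refine ⟨a, ha, b, hb, fun p hp hIJ hab => ?_⟩
  refine hbS _ (Finset.mem_image.2 ⟨p, Finset.mem_filter.2 ⟨hfin.mem_toFinset.2 hp, hIJ⟩, rfl⟩) ?_
  rw [Submodule.mem_colon_singleton, smul_eq_mul, mul_comm b a]
  exact hab

/-- Existence of a complete reduction: general `a₁, a₂ ∈ I` and `b₁, b₂ ∈ J` give a reduction
`(a₁ b₂, a₂ b₁)` of `I J`. -/
theorem exists_complete (hres : Infinite (ResidueField R)) {I J : Ideal R} (hI : MP I) (hJ : MP J)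
    (hIm : I ≤ maximalIdeal R)
    (hgr : ∃ C N : ℕ, ∀ n, N ≤ n → cl ((I * J) ^ n) ≤ C * (n + 1) ^ 2) :
    ∃ a1 ∈ I, ∃ a2 ∈ I, ∃ b1 ∈ J, ∃ b2 ∈ J, I * J ≤ intCl (Ideal.span {a1 * b2, a2 * b1}) := by
  set Q := I * J with hQ
  have hQm : Q ≤ maximalIdeal R := (Ideal.mul_le_left : I * J ≤ I).trans hIm
  set B0 : Ideal (reesAlgebra Q) := (maximalIdeal R).map (algebraMap R (reesAlgebra Q)) with hB0
  obtain ⟨a1, ha1, b2, hb2, hc⟩ := exists_avoid_min hres I J B0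
  have hcQ : monomial 1 (a1 * b2) ∈ reesAlgebra Q :=
    reesAlgebra.monomial_mem.2 (by simpa using Ideal.mul_mem_mul ha1 hb2)
  set B1 := B0 ⊔ Ideal.span {(⟨_, hcQ⟩ : reesAlgebra Q)} with hB1
  obtain ⟨a2, ha2, b1, hb1, hd⟩ := exists_avoid_min hres I J B1
  have hdQ : monomial 1 (a2 * b1) ∈ reesAlgebra Q :=
    reesAlgebra.monomial_mem.2 (by simpa using Ideal.mul_mem_mul ha2 hb1)
  set B2 := B1 ⊔ Ideal.span {(⟨_, hdQ⟩ : reesAlgebra Q)} with hB2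
  refine ⟨a1, ha1, a2, ha2, b1, hb1, b2, hb2, ?_⟩
  set U := Ideal.span {a1 * b2, a2 * b1} with hU
  have hUQ : U ≤ Q := Ideal.span_le.2 (by
    rintro x (rfl | rfl)
    · exact Ideal.mul_mem_mul ha1 hb2
    · exact Ideal.mul_mem_mul ha2 hb1)
  -- every prime containing `B2` contains the irrelevant ideal
  have h2 : ∀ p : Ideal (reesAlgebra Q), p.IsPrime → B2 ≤ p → Q ≤ core Q p 1 := by
    intro p2 hp2 hB2p
    by_contra hcon
    obtain ⟨p1, hp1, h12⟩ := Ideal.exists_minimalPrimes_le (le_sup_left.trans hB2p : B1 ≤ p2)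
    have := hp1.1.1
    obtain ⟨p0, hp0, h01⟩ := Ideal.exists_minimalPrimes_le (le_sup_left.trans hp1.1.2 : B0 ≤ p1)
    have := hp0.1.1
    have n1 : ¬ Q ≤ core Q p1 1 := fun h => hcon (h.trans (core_mono h12 1))
    have n0 : ¬ Q ≤ core Q p0 1 := fun h => n1 (h.trans (core_mono h01 1))
    refine no_chain (hI.mul hJ) hgr hQm (p0 := p0) ?_ h01 h12 (c := a1 * b2) (d := a2 * b1) 
      ?_ (hc p0 hp0 n0) ?_ (hd p1 hp1 n1) hcon
    · intro x hx
      refine ⟨by rw [monomial_zero_left]; exact Subalgebra.algebraMap_mem _ x, ?_⟩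
      exact hp0.1.2 (Ideal.mem_map_of_mem (algebraMap R (reesAlgebra Q)) hx)
    · exact ⟨hcQ, hp1.1.2 (Ideal.mem_sup_right (Ideal.mem_span_singleton_self _))⟩
    · exact ⟨hdQ, hB2p (Ideal.mem_sup_right (Ideal.mem_span_singleton_self _))⟩
  obtain ⟨n, hn⟩ := Ideal.exists_radical_pow_le_of_fg B2 (IsNoetherian.noetherian _)
  have h3 : ∀ x ∈ Q, ∃ h : monomial 1 x ∈ reesAlgebra Q, (⟨_, h⟩ : reesAlgebra Q) ∈ B2.radical := by
    intro x hx
    refine ⟨reesAlgebra.monomial_mem.2 (by simpa using hx), ?_⟩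
    rw [Ideal.radical_eq_sInf, Submodule.mem_sInf]
    rintro p ⟨hp1, hp2⟩
    exact (h2 p hp2 hp1 hx).2
  have h4 : ∀ k, Q ^ k ≤ core Q (B2.radical ^ k) k := by
    intro k
    induction k with
    | zero =>
      intro x hx
      exact ⟨reesAlgebra.monomial_mem.2 hx, by simp⟩
    | succ k ih =>
      rw [pow_succ]
      refine Ideal.mul_le.2 fun x hx y hy => ?_
      obtain ⟨g1, g2⟩ := ih hx
      obtain ⟨g3, g4⟩ := h3 y hy
      refine ⟨by rw [← monomial_mul_monomial]; exact mul_mem g1 g3, ?_⟩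
      rw [pow_succ]
      convert Ideal.mul_mem_mul g2 g4 using 1
      ext1; simp [monomial_mul_monomial]
  have h5 : Q ^ (n + 1) ≤ U * Q ^ n ⊔ maximalIdeal R • Q ^ (n + 1) := by
    intro x hx
    obtain ⟨g1, g2⟩ := h4 (n + 1) hx
    have := mem_of_mem_sup (hn (Ideal.pow_le_pow_right (Nat.le_succ n) g2)) n
    rw [coeff_monomial_same, sup_comm] at this
    exact this
  have h6 : Q ^ (n + 1) ≤ U * Q ^ n :=
    Submodule.le_of_le_smul_of_le_jacobson_bot (IsNoetherian.noetherian _)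
      (maximalIdeal_le_jacobson _) h5
  exact Red.le_intCl ⟨hUQ, n, h6⟩

end X

/-! ### Complete reductions and the resulting length formulas -/

section C1
open IsLocalRing

/-- The integral closure of `I ^ r * J ^ s`. -/
noncomputable def Fb {R : Type*} [CommRing R] (I J : Ideal R) (r s : ℕ) : Ideal R :=
  intCl (I ^ r * J ^ s)

variable {R : Type*} [CommRing R] [IsLocalRing R] [IsNoetherianRing R] {I J : Ideal R}

lemma Fb_mul {r s r' s' : ℕ} {x y : R} (hx : x ∈ Fb I J r s) (hy : y ∈ Fb I J r' s') :
    x * y ∈ Fb I J (r + r') (s + s') := by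
  have := intCl_mul_le _ _ (Ideal.mul_mem_mul hx hy)
  rwa [show I ^ r * J ^ s * (I ^ r' * J ^ s') = I ^ (r + r') * J ^ (s + s') by ring] at this

lemma mem_Fb_left {a : R} (ha : a ∈ I) : a ∈ Fb I J 1 0 := le_intCl _ (by simpa using ha)

lemma mem_Fb_right {b : R} (hb : b ∈ J) : b ∈ Fb I J 0 1 := le_intCl _ (by simpa using hb)

lemma Fb_left {r s : ℕ} {a x : R} (ha : a ∈ I) (hx : x ∈ Fb I J r s) : a * x ∈ Fb I J (r + 1) s := by
  rw [mul_comm]; simpa only [add_zero] using Fb_mul hx (mem_Fb_left (J := J) ha)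

lemma Fb_right {r s : ℕ} {b x : R} (hb : b ∈ J) (hx : x ∈ Fb I J r s) :
    b * x ∈ Fb I J r (s + 1) := by
  rw [mul_comm]; simpa only [add_zero] using Fb_mul hx (mem_Fb_right (I := I) hb)

lemma Fb_swap (r s : ℕ) : Fb J I s r = Fb I J r s := by rw [Fb, Fb, mul_comm]

lemma Fb_zero : Fb I J 0 0 = ⊤ := by rw [Fb, pow_zero, pow_zero, mul_one, Ideal.one_eq_top, intCl_top]

/-- `a₁, a₂ ∈ I` and `b₁, b₂ ∈ J` are such that `(a₁ b₂, a₂ b₁)` is a reduction of `I J`,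
for `𝔪`-primary ideals `I` and `J` of a two-dimensional Cohen-Macaulay local ring. -/
structure Cpl (I J : Ideal R) (a1 a2 b1 b2 : R) : Prop where
  hCM : IsCMLocalRing R
  hdim : ringKrullDim R = 2
  hI : MP I
  hJ : MP J
  hIm : I ≤ maximalIdeal R
  hJm : J ≤ maximalIdeal R
  ha1 : a1 ∈ I
  ha2 : a2 ∈ I
  hb1 : b1 ∈ J
  hb2 : b2 ∈ J
  hU : I * J ≤ intCl (Ideal.span {a1 * b2, a2 * b1})

namespace Cpl
variable {a1 a2 b1 b2 : R}

lemma symm (h : Cpl I J a1 a2 b1 b2) : Cpl I J a2 a1 b2 b1 :=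
  { h with ha1 := h.ha2, ha2 := h.ha1, hb1 := h.hb2, hb2 := h.hb1,
           hU := by rw [Ideal.span_pair_comm]; exact h.hU }

lemma swap (h : Cpl I J a1 a2 b1 b2) : Cpl J I b2 b1 a2 a1 :=
  { h with hI := h.hJ, hJ := h.hI, hIm := h.hJm, hJm := h.hIm, ha1 := h.hb2, ha2 := h.hb1,
           hb1 := h.ha2, hb2 := h.ha1, 
           hU := by rw [mul_comm, mul_comm b2, mul_comm b1]; exact h.hU }

lemma MPU (h : Cpl I J a1 a2 b1 b2) : MP (Ideal.span {a1 * b2, a2 * b1}) := by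
  obtain ⟨-, N, hN⟩ := red_intCl (Ideal.span {a1 * b2, a2 * b1})
  exact ((((h.hI.mul h.hJ).mono h.hU).pow (N + 1)).mono hN).mono Ideal.mul_le_left

lemma MPaa (h : Cpl I J a1 a2 b1 b2) : MP (Ideal.span {a1, a2}) := by
  refine h.MPU.mono (Ideal.span_le.2 ?_)
  rintro x (rfl | rfl)
  · exact Ideal.mul_mem_right _ _ (Ideal.subset_span (by simp))
  · exact Ideal.mul_mem_right _ _ (Ideal.subset_span (by simp))

lemma MPab (h : Cpl I J a1 a2 b1 b2) : MP (Ideal.span {a1, b1}) := by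
  refine h.MPU.mono (Ideal.span_le.2 ?_)
  rintro x (rfl | rfl)
  · exact Ideal.mul_mem_right _ _ (Ideal.subset_span (by simp))
  · exact Ideal.mul_mem_left _ _ (Ideal.subset_span (by simp))

lemma r_aa (h : Cpl I J a1 a2 b1 b2) : Reg2 a1 a2 :=
  reg2_of_MP h.hCM h.hdim (h.hIm h.ha1) (h.hIm h.ha2) h.MPaa

lemma r_ab (h : Cpl I J a1 a2 b1 b2) : Reg2 a1 b1 :=
  reg2_of_MP h.hCM h.hdim (h.hIm h.ha1) (h.hJm h.hb1) h.MPab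

lemma n_a2 (h : Cpl I J a1 a2 b1 b2) : a2 ∈ nonZeroDivisors R := h.r_aa.nzd
lemma n_a1 (h : Cpl I J a1 a2 b1 b2) : a1 ∈ nonZeroDivisors R := h.symm.r_aa.nzd
lemma n_b1 (h : Cpl I J a1 a2 b1 b2) : b1 ∈ nonZeroDivisors R := h.r_ab.nzd
lemma n_b2 (h : Cpl I J a1 a2 b1 b2) : b2 ∈ nonZeroDivisors R := h.symm.r_ab.nzd

lemma Um (h : Cpl I J a1 a2 b1 b2) : Ideal.span {a1 * b2, a2 * b1} ≤ I * J :=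
  Ideal.span_le.2 (by
    rintro x (rfl | rfl)
    · exact Ideal.mul_mem_mul h.ha1 h.hb2
    · exact Ideal.mul_mem_mul h.ha2 h.hb1)

lemma Umax (h : Cpl I J a1 a2 b1 b2) : Ideal.span {a1 * b2, a2 * b1} ≤ maximalIdeal R :=
  (h.Um.trans Ideal.mul_le_left).trans h.hIm

lemma r_U (h : Cpl I J a1 a2 b1 b2) : Reg2 (a1 * b2) (a2 * b1) :=
  reg2_of_MP h.hCM h.hdim (h.Umax (Ideal.subset_span (by simp))) (h.Umax (Ideal.subset_span (by simp)))
    h.MPU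

lemma diag (h : Cpl I J a1 a2 b1 b2) (n : ℕ) :
    Fb I J n n = intCl (Ideal.span {a1 * b2, a2 * b1} ^ n) := by
  rw [Fb, ← mul_pow]
  refine le_antisymm (intCl_le_of_le ((Ideal.pow_right_mono h.hU n).trans (intCl_pow_le _ n))) ?_
  exact intCl_mono (Ideal.pow_right_mono h.Um n)

lemma MPF (h : Cpl I J a1 a2 b1 b2) (r s : ℕ) : MP (Fb I J r s) :=
  ((h.hI.pow r).mul (h.hJ.pow s)).intCl

lemma I_le (h : Cpl I J a1 a2 b1 b2) : I ≤ intCl (Ideal.span {a1, a2}) := by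
  intro x hx
  refine mem_intCl_of_mul_le h.hb1 h.n_b1 (Ideal.subset_span (by simp)) h.n_a2 ?_
  refine (Ideal.mul_mono_left ((Ideal.span_singleton_le_iff_mem _).2 hx)).trans (h.hU.trans
    (intCl_mono (Ideal.span_le.2 ?_)))
  rintro y (rfl | rfl)
  · exact Ideal.mul_mem_mul (Ideal.subset_span (by simp)) h.hb2
  · exact Ideal.mul_mem_mul (Ideal.subset_span (by simp)) h.hb1

lemma row (h : Cpl I J a1 a2 b1 b2) (n : ℕ) : Fb I J n 0 = intCl (Ideal.span {a1, a2} ^ n) := by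
  rw [Fb, pow_zero, mul_one]
  refine le_antisymm (intCl_le_of_le ((Ideal.pow_right_mono h.I_le n).trans (intCl_pow_le _ n))) ?_
  refine intCl_mono (Ideal.pow_right_mono (Ideal.span_le.2 ?_) n)
  rintro x (rfl | rfl)
  · exact h.ha1
  · exact h.ha2

lemma cancel_a1 (h : Cpl I J a1 a2 b1 b2) {r s : ℕ} {x : R} (hx : a1 * x ∈ Fb I J (r + 1) s) :
    x ∈ Fb I J r s := by
  refine mem_intCl_of_mul_le (Y := I ^ s * J ^ r)
    (Ideal.mul_mem_mul (Ideal.pow_mem_pow h.ha1 s) (Ideal.pow_mem_pow h.hb1 r))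
    (mul_mem (pow_mem h.n_a1 _) (pow_mem h.n_b1 _)) 
    (Ideal.mul_mem_mul (Ideal.pow_mem_pow h.ha1 r) (Ideal.pow_mem_pow h.hb1 s))
    (mul_mem (pow_mem h.n_a1 _) (pow_mem h.n_b1 _)) ?_
  rw [Ideal.span_singleton_mul_le_iff]
  intro y hy
  have e : I ^ r * J ^ s * (I ^ s * J ^ r) = I ^ (r + s) * J ^ (r + s) := by ring
  rw [e]
  change _ ∈ Fb I J (r + s) (r + s)
  rw [h.diag]
  refine intCl_cancel_pow h.r_U (r + s) 1 ?_
  rw [← h.diag]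
  have h1 := Fb_mul (Fb_mul hx (mem_Fb_right h.hb2)) (le_intCl _ hy : y ∈ Fb I J s r)
  convert h1 using 1
  · congr 1 <;> ring
  · ring

lemma cancel_a2 (h : Cpl I J a1 a2 b1 b2) {r s : ℕ} {x : R} (hx : a2 * x ∈ Fb I J (r + 1) s) :
    x ∈ Fb I J r s := h.symm.cancel_a1 hx

lemma cancel_b1 (h : Cpl I J a1 a2 b1 b2) {r s : ℕ} {x : R} (hx : b1 * x ∈ Fb I J r (s + 1)) :
    x ∈ Fb I J r s := by
  rw [← Fb_swap] at hx ⊢; exact h.swap.cancel_a2 hx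

lemma cancel_b2 (h : Cpl I J a1 a2 b1 b2) {r s : ℕ} {x : R} (hx : b2 * x ∈ Fb I J r (s + 1)) :
    x ∈ Fb I J r s := h.symm.cancel_b1 hx

end Cpl

/-- The length formula for `a F(r, s + 1) + b F(r + 1, s)`. -/
lemma joint_count {a b : R} (hI : MP I) (hJ : MP J) (ha : a ∈ I) (hb : b ∈ J) (hr : Reg2 a b)
    (hMP : MP (Ideal.span {a, b}))
    (hca : ∀ r s x, a * x ∈ Fb I J (r + 1) s → x ∈ Fb I J r s)
    (r s : ℕ) :
    cl (Ideal.span {a} * Fb I J r (s + 1) ⊔ Ideal.span {b} * Fb I J (r + 1) s) + cl (Fb I J r s) =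
      cl (Ideal.span {a, b}) + cl (Fb I J r (s + 1)) + cl (Fb I J (r + 1) s) := by
  refine cl_two hr hMP ((hI.pow _).mul (hJ.pow _)).intCl ((hI.pow _).mul (hJ.pow _)).intCl rfl ?_
  intro z
  exact ⟨fun hz => ⟨Fb_right hb hz, Fb_left ha hz⟩, fun hz => hca _ _ _ hz.2⟩

lemma joint_le {a b : R} (ha : a ∈ I) (hb : b ∈ J) (r s : ℕ) :
    Ideal.span {a} * Fb I J r (s + 1) ⊔ Ideal.span {b} * Fb I J (r + 1) s ≤
      Fb I J (r + 1) (s + 1) := by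
  refine sup_le ?_ ?_
  · rw [Ideal.span_singleton_mul_le_iff]; exact fun z hz => Fb_left ha hz
  · rw [Ideal.span_singleton_mul_le_iff]; exact fun z hz => Fb_right hb hz

namespace Cpl
variable {a1 a2 b1 b2 : R}

/-- The length formula for `(a1, a2) F(r + 1, s)`. -/
lemma row_count (h : Cpl I J a1 a2 b1 b2) (r s : ℕ) :
    cl (Ideal.span {a1, a2} * Fb I J (r + 1) s) + cl (Fb I J r s) =
      cl (Ideal.span {a1, a2}) + cl (Fb I J (r + 1) s) + cl (Fb I J (r + 1) s) := by
  refine cl_two h.r_aa h.MPaa (h.MPF _ _) (h.MPF _ _) ?_ ?_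
  · rw [Ideal.span_insert, Ideal.sup_mul]
  · intro z
    exact ⟨fun hz => ⟨Fb_left h.ha2 hz, Fb_left h.ha1 hz⟩, fun hz => h.cancel_a1 hz.2⟩

lemma row_le (h : Cpl I J a1 a2 b1 b2) (r s : ℕ) :
    Ideal.span {a1, a2} * Fb I J r s ≤ Fb I J (r + 1) s := by
  rw [Ideal.span_insert, Ideal.sup_mul]
  refine sup_le ?_ ?_
  · rw [Ideal.span_singleton_mul_le_iff]; exact fun z hz => Fb_left h.ha1 hz
  · rw [Ideal.span_singleton_mul_le_iff]; exact fun z hz => Fb_left h.ha2 hz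

/-- Multiplicity of the complete reduction: additivity of the length in both generators. -/
lemma cl_U (h : Cpl I J a1 a2 b1 b2) : cl (Ideal.span {a1 * b2, a2 * b1}) =
    cl (Ideal.span {a1, a2}) + cl (Ideal.span {a1, b1}) + cl (Ideal.span {a2, b2}) +
      cl (Ideal.span {b2, b1}) := by
  have m1 : MP (Ideal.span {a1, a2 * b1}) := h.MPU.mono (Ideal.span_le.2 (by
    rintro x (rfl | rfl)
    · exact Ideal.mul_mem_right _ _ (Ideal.subset_span (by simp))
    · exact Ideal.subset_span (by simp)))
  have m2 : MP (Ideal.span {b2, a2 * b1}) := h.MPU.mono (Ideal.span_le.2 (by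
    rintro x (rfl | rfl)
    · exact Ideal.mul_mem_left _ _ (Ideal.subset_span (by simp))
    · exact Ideal.subset_span (by simp)))
  have hm2 := h.Umax (Ideal.subset_span (by simp) : a2 * b1 ∈ Ideal.span {a1 * b2, a2 * b1})
  have r1 : Reg2 a1 (a2 * b1) := reg2_of_MP h.hCM h.hdim (h.hIm h.ha1) hm2 m1
  rw [cl_mul r1 h.MPU, Ideal.span_pair_comm (x := a1), Ideal.span_pair_comm (x := b2), 
    cl_mul h.symm.r_aa (by rw [Ideal.span_pair_comm]; exact m1),
    cl_mul h.symm.r_ab (by rw [Ideal.span_pair_comm]; exact m2), Ideal.span_pair_comm (x := a2) (y := a1),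
    Ideal.span_pair_comm (x := b1) (y := a1), Ideal.span_pair_comm (x := b1) (y := b2)]
  ring

end Cpl
end C1

/-! ### Comparison of the normal Hilbert function with its polynomial -/

section C2
open IsLocalRing

/-- The numerical polynomial in two variables with the given coefficients. -/
def P2 (f20 f11 f02 f10 f01 f00 : ℤ) (r s : ℕ) : ℤ :=
  f20 * ((r + 1).choose 2 : ℕ) + f11 * (r * s) + f02 * ((s + 1).choose 2 : ℕ) - f10 * r - f01 * s + f00

lemma choose_two_succ (n : ℕ) : (((n + 2).choose 2 : ℕ) : ℤ) = ((n + 1).choose 2 : ℕ) + (n + 1) := by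
  rw [Nat.choose_succ_succ' (n + 1) 1, Nat.choose_one_right]; push_cast; ring

lemma two_mul_choose (n : ℕ) : 2 * (((n + 1).choose 2 : ℕ) : ℤ) = n * (n + 1) := by
  induction n with
  | zero => simp
  | succ n ih => rw [choose_two_succ, mul_add, ih]; push_cast; ring

variable {f20 f11 f02 f10 f01 f00 : ℤ}

local notation "P" => P2 f20 f11 f02 f10 f01 f00

lemma P2_D11 (r s : ℕ) : P (r + 1) (s + 1) + P r s = P r (s + 1) + P (r + 1) s + f11 := by
  simp only [P2, choose_two_succ]; push_cast; ring

lemma P2_D20 (r s : ℕ) : P (r + 2) s + P r s = 2 * P (r + 1) s + f20 := by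
  simp only [P2, choose_two_succ]; push_cast; ring

lemma P2_D02 (r s : ℕ) : P r (s + 2) + P r s = 2 * P r (s + 1) + f02 := by
  simp only [P2, choose_two_succ]; push_cast; ring

lemma P2_diag (n : ℕ) : P (n + 2) (n + 2) + P n n = 2 * P (n + 1) (n + 1) + (f20 + 2 * f11 + f02) := by
  simp only [P2, choose_two_succ]; push_cast; ring

lemma P2_zero : P 0 0 = f00 := by simp [P2]

/-- A function with nonnegative second differences that vanishes far from the axes decreases in both
variables, so it lies between `0` and its value at the origin. -/
lemma h_bounds {h : ℕ → ℕ → ℤ} (d11 : ∀ r s, h r (s + 1) + h (r + 1) s ≤ h (r + 1) (s + 1) + h r s)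
    (d20 : ∀ r s, 2 * h (r + 1) s ≤ h (r + 2) s + h r s)
    (d02 : ∀ r s, 2 * h r (s + 1) ≤ h r (s + 2) + h r s)
    {N : ℕ} (hN : ∀ r s, N ≤ r → N ≤ s → h r s = 0) (r s : ℕ) : 0 ≤ h r s ∧ h r s ≤ h 0 0 := by
  have m1 : ∀ r s, h (r + 1) s ≤ h r s := by
    intro r s
    have e1 : ∀ k, h (r + 1) s - h r s ≤ h (r + 1) (s + k) - h r (s + k) := by
      intro k
      induction k with
      | zero => simp
      | succ k ih => have := d11 r (s + k); rw [add_assoc] at this; omega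
    have e2 : ∀ k, h (r + 1) (s + N) - h r (s + N) ≤ h (r + k + 1) (s + N) - h (r + k) (s + N) := by
      intro k
      induction k with
      | zero => simp
      | succ k ih =>
        have : 2 * h (r + k + 1) (s + N) ≤ h (r + k + 1 + 1) (s + N) + h (r + k) (s + N) :=
          d20 (r + k) (s + N)
        simp only [← add_assoc] at *; omega
    have := e1 N
    have := e2 N
    rw [hN (r + N + 1) (s + N) (by omega) (by omega), hN (r + N) (s + N) (by omega) (by omega)] at this
    omega
  have m2 : ∀ r s, h r (s + 1) ≤ h r s := by
    intro r s
    have e1 : ∀ k, h r (s + 1) - h r s ≤ h (r + k) (s + 1) - h (r + k) s := by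
      intro k
      induction k with
      | zero => simp
      | succ k ih => have := d11 (r + k) s; rw [add_assoc] at this; omega
    have e2 : ∀ k, h (r + N) (s + 1) - h (r + N) s ≤ h (r + N) (s + k + 1) - h (r + N) (s + k) := by
      intro k
      induction k with
      | zero => simp
      | succ k ih =>
        have : 2 * h (r + N) (s + k + 1) ≤ h (r + N) (s + k + 1 + 1) + h (r + N) (s + k) :=
          d02 (r + N) (s + k)
        simp only [← add_assoc] at *; omega
    have := e1 N
    have := e2 N
    rw [hN (r + N) (s + N + 1) (by omega) (by omega), hN (r + N) (s + N) (by omega) (by omega)] at this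
    omega
  have a1 : ∀ r s, Antitone fun k => h (r + k) s := fun r s =>
    antitone_nat_of_succ_le fun k => m1 (r + k) s
  have a2 : ∀ r s, Antitone fun k => h r (s + k) := fun r s =>
    antitone_nat_of_succ_le fun k => m2 r (s + k)
  constructor
  · have h1 := a1 r s (Nat.zero_le N)
    have h2 := a2 (r + N) s (Nat.zero_le N)
    simp only [add_zero] at h1 h2
    rw [hN (r + N) (s + N) (by omega) (by omega)] at h2
    omega
  · have h1 := a1 0 0 (Nat.zero_le r)
    have h2 := a2 r 0 (Nat.zero_le s)
    simp only [zero_add, add_zero] at h1 h2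
    omega

/-- If the mixed second difference vanishes, and the pure ones on the axes, then a function vanishing far
from the axes vanishes at the origin. -/
lemma h_zero {h : ℕ → ℕ → ℤ} (d11 : ∀ r s, h r (s + 1) + h (r + 1) s = h (r + 1) (s + 1) + h r s)
    (d20 : ∀ r, 2 * h (r + 1) 0 = h (r + 2) 0 + h r 0)
    (d02 : ∀ s, 2 * h 0 (s + 1) = h 0 (s + 2) + h 0 s)
    {N : ℕ} (hN : ∀ r s, N ≤ r → N ≤ s → h r s = 0) : h 0 0 = 0 := by
  have e1 : ∀ r : ℕ, h (r + 1) 0 - h r 0 = h 1 0 - h 0 0 := by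
    intro r
    induction r with
    | zero => simp
    | succ r ih => have := d20 r; simp only [add_assoc, one_add_one_eq_two] at *; omega
  have e1' : ∀ r : ℕ, h r 0 = h 0 0 + r * (h 1 0 - h 0 0) := by
    intro r
    induction r with
    | zero => simp
    | succ r ih => have := e1 r; push_cast; linarith
  have e2 : ∀ s : ℕ, h 0 (s + 1) - h 0 s = h 0 1 - h 0 0 := by
    intro r
    induction r with
    | zero => simp
    | succ r ih => have := d02 r; simp only [add_assoc, one_add_one_eq_two] at *; omega
  have e2' : ∀ s : ℕ, h 0 s = h 0 0 + s * (h 0 1 - h 0 0) := by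
    intro r
    induction r with
    | zero => simp
    | succ r ih => have := e2 r; push_cast; linarith
  have e3 : ∀ r s, h (r + 1) s - h r s = h (r + 1) 0 - h r 0 := by
    intro r s
    induction s with
    | zero => simp
    | succ s ih => have := d11 r s; omega
  have e3' : ∀ r s, h r s = h r 0 + h 0 s - h 0 0 := by
    intro r s
    induction r with
    | zero => simp
    | succ r ih => have := e3 r s; omega
  have k0 := hN N N le_rfl le_rfl
  have k1 := hN (N + 1) N (by omega) le_rfl
  have k2 := hN N (N + 1) le_rfl (by omega)
  rw [e3', e1' N, e2' N] at k0
  rw [e3', e1' (N + 1), e2' N] at k1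
  rw [e3', e1' N, e2' (N + 1)] at k2
  push_cast at k1 k2
  have c1 : h 1 0 - h 0 0 = 0 := by linarith
  have c2 : h 0 1 - h 0 0 = 0 := by linarith
  rw [c1, c2] at k0
  linarith

lemma quad_eq {A B C : ℤ} {N : ℕ} (h : ∀ n : ℕ, N ≤ n → A * (n * n) + B * n + C = 0) :
    A = 0 ∧ B = 0 ∧ C = 0 := by
  have h0 := h N le_rfl
  have h1 := h (N + 1) (by omega)
  have h2 := h (N + 2) (by omega)
  push_cast at *
  have hA : A = 0 := by nlinarith
  subst hA
  have hB : B = 0 := by linarith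
  subst hB
  exact ⟨rfl, rfl, by linarith⟩

lemma quad_le {A B C D E : ℤ} {N : ℕ} (h : ∀ n : ℕ, N ≤ n → A * (n * n) + B * n + C ≤ D * n + E) :
    A ≤ 0 := by
  by_contra! hA
  have h1 := h (N + (D - B).natAbs + (E - C).natAbs + 1) (by omega)
  have e1 : D - B ≤ (D - B).natAbs := Int.le_natAbs
  have e2 : E - C ≤ (E - C).natAbs := Int.le_natAbs
  push_cast at h1
  try rw [Int.natCast_natAbs] at e1
  try rw [Int.natCast_natAbs] at e2
  have p1 := abs_nonneg (D - B)
  have p2 := abs_nonneg (E - C)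
  generalize |D - B| = u at *
  generalize |E - C| = v at *
  have hNn : (0 : ℤ) ≤ N := by positivity
  generalize (N : ℤ) = n at *
  set M := n + u + v + 1 with hM
  have : M * M ≤ A * (M * M) := by nlinarith [mul_self_nonneg M]
  have h3 : (D - B) * M ≤ u * M := by apply mul_le_mul_of_nonneg_right e1; omega
  have h4 : M * M = n * M + u * M + v * M + M := by rw [hM]; ring
  have h5 : v ≤ v * M := by nlinarith
  nlinarith

/-- Coefficient comparison for two numerical polynomials of degree two. -/
lemma mixed_eq {g20 g11 g02 g10 g01 g00 : ℤ} {N : ℕ}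
    (h1 : ∀ r s : ℕ, N ≤ r → N ≤ s → P r s ≤ P2 g20 g11 g02 g10 g01 g00 r s)
    (h2 : ∀ r s : ℕ, N ≤ r → N ≤ s → P2 g20 g11 g02 g10 g01 g00 r s ≤ P (r + 1) (s + 1)) :
    f11 = g11 := by
  have key : ∀ a b : ℕ, 1 ≤ a → 1 ≤ b →
      (g20 - f20) * (a * a) + 2 * (g11 - f11) * (a * b) + (g02 - f02) * (b * b) = 0 := by
    intro a b ha hb
    have e : ∀ (u v w x y z : ℤ) (n : ℕ), 2 * P2 u v w x y z (a * n) (b * n) =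
        (u * (a * a) + 2 * v * (a * b) + w * (b * b)) * (n * n) +
          (u * a + w * b - 2 * x * a - 2 * y * b) * n + 2 * z := by
      intro u v w x y z n
      have := two_mul_choose (a * n)
      have := two_mul_choose (b * n)
      simp only [P2]
      push_cast at *
      linear_combination u * ‹2 * (((a * n + 1).choose 2 : ℕ) : ℤ) = _› + w * this
    have e' : ∀ (u v w x y z : ℤ) (n : ℕ), 2 * P2 u v w x y z (a * n + 1) (b * n + 1) =
        (u * (a * a) + 2 * v * (a * b) + w * (b * b)) * (n * n) +
          (3 * u * a + 3 * w * b + 2 * v * a + 2 * v * b - 2 * x * a - 2 * y * b) * n +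
            2 * (z + u + v + w - x - y) := by
      intro u v w x y z n
      have := two_mul_choose (a * n + 1)
      have := two_mul_choose (b * n + 1)
      simp only [P2]
      push_cast at *
      linear_combination u * ‹2 * (((a * n + 1 + 1).choose 2 : ℕ) : ℤ) = _› + w * this
    refine le_antisymm ?_ ?_
    · refine quad_le (B := 0) (C := 0) (N := N)
        (D := (3 * f20 * a + 3 * f02 * b + 2 * f11 * a + 2 * f11 * b - 2 * f10 * a - 2 * f01 * b) -
          (g20 * a + g02 * b - 2 * g10 * a - 2 * g01 * b))
        (E := 2 * (f00 + f20 + f11 + f02 - f10 - f01) - 2 * g00) fun n hn => ?_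
      have := h2 (a * n) (b * n) (by nlinarith) (by nlinarith)
      linarith [e g20 g11 g02 g10 g01 g00 n, e' f20 f11 f02 f10 f01 f00 n]
    · have : (f20 - g20) * (a * a) + 2 * (f11 - g11) * (a * b) + (f02 - g02) * (b * b) ≤ 0 := by
        refine quad_le (B := 0) (C := 0) (N := N)
          (D := (g20 * a + g02 * b - 2 * g10 * a - 2 * g01 * b) -
            (f20 * a + f02 * b - 2 * f10 * a - 2 * f01 * b))
          (E := 2 * g00 - 2 * f00) fun n hn => ?_
        have := h1 (a * n) (b * n) (by nlinarith) (by nlinarith)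
        linarith [e g20 g11 g02 g10 g01 g00 n, e f20 f11 f02 f10 f01 f00 n]
      linarith
  have k1 := key 1 1 le_rfl le_rfl
  have k2 := key 2 1 (by omega) le_rfl
  have k3 := key 1 2 le_rfl (by omega)
  norm_num at k1 k2 k3
  omega

end C2

section C3
open IsLocalRing

variable {R : Type*} [CommRing R] [IsLocalRing R] [IsNoetherianRing R] {I J : Ideal R}
  {a1 a2 b1 b2 : R} {f20 f11 f02 f10 f01 f00 : ℤ}

local notation "P" => P2 f20 f11 f02 f10 f01 f00

/-- The Hilbert function of `F(r, s) = intCl (I ^ r * J ^ s)` is eventually the polynomial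
with coefficients `f`. -/
def HP (I J : Ideal R) (f20 f11 f02 f10 f01 f00 : ℤ) : Prop :=
  ∃ N : ℕ, ∀ r s : ℕ, N ≤ r → N ≤ s → (cl (Fb I J r s) : ℤ) = P2 f20 f11 f02 f10 f01 f00 r s

/-- The difference between the polynomial and the Hilbert function. -/
noncomputable def hh (I J : Ideal R) (f20 f11 f02 f10 f01 f00 : ℤ) (r s : ℕ) : ℤ :=
  P2 f20 f11 f02 f10 f01 f00 r s - cl (Fb I J r s)

local notation "H" => hh I J f20 f11 f02 f10 f01 f00

lemma P2_swap (r s : ℕ) : P2 f02 f11 f20 f01 f10 f00 s r = P r s := by simp only [P2]; ring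

lemma HP.swap (h : HP I J f20 f11 f02 f10 f01 f00) : HP J I f02 f11 f20 f01 f10 f00 := by
  obtain ⟨N, h⟩ := h
  exact ⟨N, fun r s hr hs => by rw [Fb_swap, P2_swap, h s r hs hr]⟩

lemma hh_swap (r s : ℕ) : hh J I f02 f11 f20 f01 f10 f00 s r = H r s := by
  rw [hh, hh, Fb_swap, P2_swap]

lemma HP.h_zero (h : HP I J f20 f11 f02 f10 f01 f00) :
    ∃ N : ℕ, ∀ r s, N ≤ r → N ≤ s → H r s = 0 := by
  obtain ⟨N, h⟩ := h
  exact ⟨N, fun r s hr hs => by rw [hh, h r s hr hs, sub_self]⟩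

lemma hh_zero : H 0 0 = f00 := by rw [hh, P2_zero, Fb_zero, cl_top]; simp

lemma joint_hh {a b : R} (hI : MP I) (hJ : MP J) (ha : a ∈ I) (hb : b ∈ J) (hr : Reg2 a b)
    (hMP : MP (Ideal.span {a, b}))
    (hca : ∀ r s x, a * x ∈ Fb I J (r + 1) s → x ∈ Fb I J r s) (r s : ℕ) :
    H (r + 1) (s + 1) + H r s = H r (s + 1) + H (r + 1) s + (f11 - cl (Ideal.span {a, b})) +
      (cl (Ideal.span {a} * Fb I J r (s + 1) ⊔ Ideal.span {b} * Fb I J (r + 1) s) -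
        cl (Fb I J (r + 1) (s + 1))) := by
  have h1 := joint_count hI hJ ha hb hr hMP hca r s
  have h2 := P2_D11 (f20 := f20) (f11 := f11) (f02 := f02) (f10 := f10) (f01 := f01) (f00 := f00) r s
  simp only [hh]
  zify at h1
  linarith

lemma joint_MP {a b : R} (_hr : Reg2 a b) (hMP : MP (Ideal.span {a, b})) {X Y : Ideal R} (hX : MP X)
    (hY : MP Y) : MP (Ideal.span {a} * X ⊔ Ideal.span {b} * Y) := by
  refine (hMP.mul (hX.inf hY)).mono ?_
  rw [Ideal.span_insert, Ideal.sup_mul]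
  exact sup_le_sup (Ideal.mul_mono_right inf_le_left) (Ideal.mul_mono_right inf_le_right)

lemma joint_ge {a b : R} (hI : MP I) (hJ : MP J) (ha : a ∈ I) (hb : b ∈ J) (hr : Reg2 a b)
    (hMP : MP (Ideal.span {a, b})) (r s : ℕ) : cl (Fb I J (r + 1) (s + 1)) ≤
      cl (Ideal.span {a} * Fb I J r (s + 1) ⊔ Ideal.span {b} * Fb I J (r + 1) s) :=
  cl_mono (joint_MP hr hMP ((hI.pow _).mul (hJ.pow _)).intCl ((hI.pow _).mul (hJ.pow _)).intCl)
    (joint_le ha hb r s)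

lemma joint_eq {a b : R} (hI : MP I) (hJ : MP J) (ha : a ∈ I) (hb : b ∈ J) (hr : Reg2 a b)
    (hMP : MP (Ideal.span {a, b})) {r s : ℕ} (he : cl (Ideal.span {a} * Fb I J r (s + 1) ⊔
      Ideal.span {b} * Fb I J (r + 1) s) ≤ cl (Fb I J (r + 1) (s + 1))) :
    Fb I J (r + 1) (s + 1) = Ideal.span {a} * Fb I J r (s + 1) ⊔ Ideal.span {b} * Fb I J (r + 1) s :=
  (eq_of_cl (joint_MP hr hMP ((hI.pow _).mul (hJ.pow _)).intCl ((hI.pow _).mul (hJ.pow _)).intCl)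
    (joint_le ha hb r s) he).symm

namespace Cpl

lemma row_hh (h : Cpl I J a1 a2 b1 b2) (r s : ℕ) :
    H (r + 2) s + H r s = 2 * H (r + 1) s + (f20 - cl (Ideal.span {a1, a2})) +
      (cl (Ideal.span {a1, a2} * Fb I J (r + 1) s) - cl (Fb I J (r + 2) s)) := by
  have h1 := h.row_count r s
  have h2 := P2_D20 (f20 := f20) (f11 := f11) (f02 := f02) (f10 := f10) (f01 := f01) (f00 := f00) r s
  simp only [hh]
  zify at h1
  linarith

lemma row_ge (h : Cpl I J a1 a2 b1 b2) (r s : ℕ) :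
    cl (Fb I J (r + 1) s) ≤ cl (Ideal.span {a1, a2} * Fb I J r s) :=
  cl_mono (h.MPaa.mul (h.MPF _ _)) (h.row_le r s)

lemma row_eq (h : Cpl I J a1 a2 b1 b2) {r s : ℕ}
    (he : cl (Ideal.span {a1, a2} * Fb I J r s) ≤ cl (Fb I J (r + 1) s)) :
    Fb I J (r + 1) s = Ideal.span {a1, a2} * Fb I J r s :=
  (eq_of_cl (h.MPaa.mul (h.MPF _ _)) (h.row_le r s) he).symm

/-- The length of `R/(a1, a2)` dominates the leading coefficient, by `row_count` and the inclusion of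
`(a1, a2) F(r + 1, s)` in `F(r + 2, s)`. -/
lemma f20_le (h : Cpl I J a1 a2 b1 b2) (hP : HP I J f20 f11 f02 f10 f01 f00) :
    f20 ≤ cl (Ideal.span {a1, a2}) := by
  obtain ⟨N, hN⟩ := hP.h_zero
  have h1 := h.row_hh (f20 := f20) (f11 := f11) (f02 := f02) (f10 := f10) (f01 := f01) (f00 := f00) N N
  have h2 := h.row_ge (N + 1) N
  rw [hN _ _ (by omega) (by omega), hN _ _ (by omega) (by omega), hN _ _ (by omega) (by omega)] at h1
  zify at h2
  change _ = _ + _ + (_ - (cl (Fb I J (N + 1 + 1) N) : ℤ)) at h1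
  linarith

/-- The length of `R/(a1, b1)` dominates the mixed coefficient, by `joint_count`. -/
lemma f11_le (h : Cpl I J a1 a2 b1 b2) (hP : HP I J f20 f11 f02 f10 f01 f00) :
    f11 ≤ cl (Ideal.span {a1, b1}) := by
  obtain ⟨N, hN⟩ := hP.h_zero
  have h1 := joint_hh (f20 := f20) (f11 := f11) (f02 := f02) (f10 := f10) (f01 := f01) (f00 := f00)
    h.hI h.hJ h.ha1 h.hb1 h.r_ab h.MPab (fun _ _ _ => h.cancel_a1) N N
  have h2 := joint_ge h.hI h.hJ h.ha1 h.hb1 h.r_ab h.MPab N N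
  rw [hN _ _ (by omega) (by omega), hN _ _ (by omega) (by omega), hN _ _ (by omega) (by omega),
    hN _ _ (by omega) (by omega)] at h1
  zify at h2
  linarith

/-- The complete reduction computes the leading coefficient of the Hilbert polynomial on the diagonal; this
is where stability of the filtration enters. -/
lemma sum_eq (h : Cpl I J a1 a2 b1 b2) (hur : AnalyticallyUnramified R)
    (hP : HP I J f20 f11 f02 f10 f01 f00) :
    (cl (Ideal.span {a1 * b2, a2 * b1}) : ℤ) = f20 + 2 * f11 + f02 := by
  obtain ⟨N, hN⟩ := hP
  obtain ⟨n1, hn1⟩ := intCl_pow_stable hur h.r_U h.Umax h.MPU (e0 := f20 + 2 * f11 + f02)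
    (e1 := f10 + f01 + f11) (e2 := f00) ⟨N, fun n hn => by
      rw [← h.diag, hN n n hn hn, P2]
      have := two_mul_choose n
      linear_combination -f11 * this⟩
  have h1 := cl_two h.r_U h.MPU (h.MPF (N + n1 + 1) (N + n1 + 1)) (h.MPF (N + n1 + 1) (N + n1 + 1)) 
    (V := Fb I J (N + n1 + 2) (N + n1 + 2)) (W := Fb I J (N + n1) (N + n1)) (by
      rw [h.diag, h.diag, hn1 (N + n1 + 1) (by omega), Ideal.span_insert, Ideal.sup_mul]) (by
      intro z
      constructor
      · intro hz
        exact ⟨by rw [mul_assoc]; exact Fb_left h.ha2 (Fb_right h.hb1 hz),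
          by rw [mul_assoc]; exact Fb_left h.ha1 (Fb_right h.hb2 hz)⟩
      · rintro ⟨hz, -⟩
        rw [mul_assoc] at hz
        exact h.cancel_b1 (h.cancel_a2 hz))
  have h2 := P2_diag (f20 := f20) (f11 := f11) (f02 := f02) (f10 := f10) (f01 := f01) (f00 := f00)
    (N + n1)
  zify at h1
  rw [hN _ _ (by omega) (by omega), hN _ _ (by omega) (by omega), hN _ _ (by omega) (by omega)] at h1
  linarith

/-- The inequalities `f20_le` and `f11_le` are equalities since their sum is one. -/
lemma coeffs (h : Cpl I J a1 a2 b1 b2) (hur : AnalyticallyUnramified R)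
    (hP : HP I J f20 f11 f02 f10 f01 f00) :
    (cl (Ideal.span {a1, a2}) : ℤ) = f20 ∧ (cl (Ideal.span {a1, b1}) : ℤ) = f11 ∧
      (cl (Ideal.span {b2, b1}) : ℤ) = f02 := by
  have e1 := h.f20_le hP
  have e2 := h.f11_le hP
  have e3 := h.symm.f11_le hP
  have e4 := h.swap.f20_le hP.swap
  have e5 := h.sum_eq hur hP
  rw [h.cl_U] at e5
  push_cast at e5
  refine ⟨?_, ?_, ?_⟩ <;> linarith

lemma D11 (h : Cpl I J a1 a2 b1 b2) (hur : AnalyticallyUnramified R)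
    (hP : HP I J f20 f11 f02 f10 f01 f00) (r s : ℕ) :
    H (r + 1) (s + 1) + H r s = H r (s + 1) + H (r + 1) s +
      (cl (Ideal.span {a1} * Fb I J r (s + 1) ⊔ Ideal.span {b1} * Fb I J (r + 1) s) -
        cl (Fb I J (r + 1) (s + 1))) := by
  rw [joint_hh h.hI h.hJ h.ha1 h.hb1 h.r_ab h.MPab (fun _ _ _ => h.cancel_a1), (h.coeffs hur hP).2.1]
  ring

lemma D20 (h : Cpl I J a1 a2 b1 b2) (hur : AnalyticallyUnramified R)
    (hP : HP I J f20 f11 f02 f10 f01 f00) (r s : ℕ) :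
    H (r + 2) s + H r s = 2 * H (r + 1) s +
      (cl (Ideal.span {a1, a2} * Fb I J (r + 1) s) - cl (Fb I J (r + 2) s)) := by
  rw [h.row_hh, (h.coeffs hur hP).1]; ring

lemma D11_le (h : Cpl I J a1 a2 b1 b2) (hur : AnalyticallyUnramified R)
    (hP : HP I J f20 f11 f02 f10 f01 f00) (r s : ℕ) :
    H r (s + 1) + H (r + 1) s ≤ H (r + 1) (s + 1) + H r s := by
  have := h.D11 hur hP r s
  have h2 := joint_ge h.hI h.hJ h.ha1 h.hb1 h.r_ab h.MPab r s
  zify at h2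
  linarith

lemma D20_le (h : Cpl I J a1 a2 b1 b2) (hur : AnalyticallyUnramified R)
    (hP : HP I J f20 f11 f02 f10 f01 f00) (r s : ℕ) : 2 * H (r + 1) s ≤ H (r + 2) s + H r s := by
  have := h.D20 hur hP r s
  have h2 := h.row_ge (r + 1) s
  zify at h2
  linarith

lemma D02_le (h : Cpl I J a1 a2 b1 b2) (hur : AnalyticallyUnramified R)
    (hP : HP I J f20 f11 f02 f10 f01 f00) (r s : ℕ) : 2 * H r (s + 1) ≤ H r (s + 2) + H r s := by
  simp only [← hh_swap (I := I) (J := J)]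
  exact h.swap.D20_le hur hP.swap s r

/-- If the constant term vanishes the Hilbert function is a polynomial everywhere. -/
lemma H_eq_zero (h : Cpl I J a1 a2 b1 b2) (hur : AnalyticallyUnramified R)
    (hP : HP I J f20 f11 f02 f10 f01 f00) (h0 : f00 = 0) (r s : ℕ) : H r s = 0 := by
  obtain ⟨N, hN⟩ := hP.h_zero
  obtain ⟨p, q⟩ := h_bounds (h.D11_le hur hP) (h.D20_le hur hP) (h.D02_le hur hP) hN r s
  rw [hh_zero] at q
  exact le_antisymm (q.trans h0.le) p

/-- If the second differences of `H` vanish then so does the constant term. -/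
lemma f00_eq_zero (h : Cpl I J a1 a2 b1 b2) (hur : AnalyticallyUnramified R)
    (hP : HP I J f20 f11 f02 f10 f01 f00)
    (h11 : ∀ r s, Fb I J (r + 1) (s + 1) =
      Ideal.span {a1} * Fb I J r (s + 1) ⊔ Ideal.span {b1} * Fb I J (r + 1) s)
    (h20 : ∀ r, Fb I J (r + 2) 0 = Ideal.span {a1, a2} * Fb I J (r + 1) 0)
    (h02 : ∀ s, Fb I J 0 (s + 2) = Ideal.span {b2, b1} * Fb I J 0 (s + 1)) : f00 = 0 := by
  obtain ⟨N, hN⟩ := hP.h_zero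
  have e : H 0 0 = f00 := hh_zero
  refine e.symm.trans (h_zero ?_ ?_ ?_ hN)
  · intro r s
    have := h.D11 hur hP r s
    rw [← h11] at this
    linarith
  · intro r
    have := h.D20 hur hP r 0
    rw [← h20] at this
    linarith
  · intro s
    have := h.swap.D20 hur hP.swap s 0
    rw [Fb_swap (I := I) 0 (s + 1), Fb_swap (I := I) 0 (s + 2), ← h02] at this
    simp only [hh_swap] at this
    linarith

/-- Vanishing of the constant term gives joint reduction number zero for `(a1, b1)`. -/
lemma joint_of (h : Cpl I J a1 a2 b1 b2) (hur : AnalyticallyUnramified R)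
    (hP : HP I J f20 f11 f02 f10 f01 f00) (h0 : f00 = 0) (r s : ℕ) :
    Fb I J (r + 1) (s + 1) =
      Ideal.span {a1} * Fb I J r (s + 1) ⊔ Ideal.span {b1} * Fb I J (r + 1) s := by
  have hz := h.H_eq_zero hur hP h0
  refine joint_eq h.hI h.hJ h.ha1 h.hb1 h.r_ab h.MPab ?_
  have := h.D11 hur hP r s
  simp only [hz] at this
  omega

/-- Vanishing of the constant term gives the reduction number at most one, uniformly in `s`. -/
lemma row_of (h : Cpl I J a1 a2 b1 b2) (hur : AnalyticallyUnramified R)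
    (hP : HP I J f20 f11 f02 f10 f01 f00) (h0 : f00 = 0) (r s : ℕ) :
    Fb I J (r + 2) s = Ideal.span {a1, a2} * Fb I J (r + 1) s := by
  have hz := h.H_eq_zero hur hP h0
  refine h.row_eq ?_
  have := h.D20 hur hP r s
  simp only [hz] at this
  change cl _ ≤ cl (Fb I J (r + 2) s)
  omega

lemma col_of (h : Cpl I J a1 a2 b1 b2) (hur : AnalyticallyUnramified R)
    (hP : HP I J f20 f11 f02 f10 f01 f00) (h0 : f00 = 0) (r s : ℕ) :
    Fb I J r (s + 2) = Ideal.span {b2, b1} * Fb I J r (s + 1) := by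
  rw [← Fb_swap, ← Fb_swap (I := I)]; exact h.swap.row_of hur hP.swap h0 s r

/-- The pair `(a₁, b₁)` is eventually a joint reduction of the filtration. -/
lemma joint_eventually (h : Cpl I J a1 a2 b1 b2) (hur : AnalyticallyUnramified R)
    (hP : HP I J f20 f11 f02 f10 f01 f00) : ∃ N, ∀ r s, N ≤ r → N ≤ s → 
    Fb I J (r + 1) (s + 1) =
      Ideal.span {a1} * Fb I J r (s + 1) ⊔ Ideal.span {b1} * Fb I J (r + 1) s := by
  obtain ⟨N, hN⟩ := hP.h_zero
  refine ⟨N, fun r s hr hs => joint_eq h.hI h.hJ h.ha1 h.hb1 h.r_ab h.MPab ?_⟩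
  have := h.D11 hur hP r s
  rw [hN _ _ (by omega) (by omega), hN _ _ (by omega) (by omega), hN _ _ (by omega) (by omega),
    hN _ _ (by omega) (by omega)] at this
  omega

/-- Any good joint reduction satisfies the joint reduction equation everywhere. -/
lemma joint_any (h : Cpl I J a1 a2 b1 b2) (hur : AnalyticallyUnramified R)
    (hP : HP I J f20 f11 f02 f10 f01 f00) (h0 : f00 = 0) {a b : R} (ha : a ∈ I) (hb : b ∈ J)
    {M : ℕ} (hM : ∀ r s, M ≤ r → M ≤ s → Fb I J (r + 1) (s + 1) =
      Ideal.span {a} * Fb I J r (s + 1) ⊔ Ideal.span {b} * Fb I J (r + 1) s)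
    (hca : ∀ r s, Ideal.span {a} ⊓ Fb I J (r + 1) s = Ideal.span {a} * Fb I J r s) (r s : ℕ) :
    Fb I J (r + 1) (s + 1) =
      Ideal.span {a} * Fb I J r (s + 1) ⊔ Ideal.span {b} * Fb I J (r + 1) s := by
  have hz := h.H_eq_zero hur hP h0
  have hMP : MP (Ideal.span {a, b}) := by
    refine (h.MPF (M + 1) (M + 1)).mono ?_
    rw [hM M M le_rfl le_rfl, Ideal.span_insert]
    exact sup_le_sup Ideal.mul_le_left Ideal.mul_le_left
  have hr : Reg2 a b := reg2_of_MP h.hCM h.hdim (h.hIm ha) (h.hJm hb) hMP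
  have hr' : Reg2 b a := reg2_of_MP h.hCM h.hdim (h.hJm hb) (h.hIm ha) (by
    rwa [Ideal.span_pair_comm])
  have hca' : ∀ r s x, a * x ∈ Fb I J (r + 1) s → x ∈ Fb I J r s := by
    intro r s x hx
    have h1 : a * x ∈ Ideal.span {a} * Fb I J r s := by
      rw [← hca]; exact ⟨Ideal.mul_mem_right _ _ (Ideal.mem_span_singleton_self _), hx⟩
    obtain ⟨y, hy, e⟩ := Ideal.mem_span_singleton_mul.1 h1
    have : a * (x - y) = 0 := by rw [mul_sub, e, sub_self]
    rw [sub_eq_zero.1 (hr'.1 _ this)]; exact hy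
  have key := joint_hh (f20 := f20) (f11 := f11) (f02 := f02) (f10 := f10) (f01 := f01) (f00 := f00)
    h.hI h.hJ ha hb hr hMP hca'
  simp only [hz] at key
  have k1 := key M M
  rw [← hM M M le_rfl le_rfl] at k1
  refine joint_eq h.hI h.hJ ha hb hr hMP ?_
  have := key r s
  omega

end Cpl
end C3

section C4
open IsLocalRing

variable {R : Type*} [CommRing R] [IsLocalRing R] [IsNoetherianRing R] {I J : Ideal R}
  {a1 a2 b1 b2 : R} {f20 f11 f02 f10 f01 f00 : ℤ}

lemma IsMPrimary.MP (h : IsMPrimary I) : MP I := by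
  obtain ⟨n, hn⟩ := Ideal.exists_radical_pow_le_of_fg I (IsNoetherian.noetherian _)
  rw [h] at hn
  exact ⟨n, hn⟩

lemma IsMPrimary.le (h : IsMPrimary I) : I ≤ maximalIdeal R := h ▸ Ideal.le_radical

lemma Fb_n0 (n : ℕ) : Fb I J n 0 = intCl (I ^ n) := by rw [Fb, pow_zero, Ideal.one_eq_top, Ideal.mul_top]

lemma Fb_0n (n : ℕ) : Fb I J 0 n = intCl (J ^ n) := by rw [← Fb_swap, Fb_n0]

lemma IJbar_eq (r s : ℤ) : IJbar I J r s = Fb I J r.toNat s.toNat := rfl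

lemma pair_aux {a b x α β : R} {K' : Ideal R} (hK' : K' ≤ Ideal.span {a, b})
    (hne : K' ≠ Ideal.span {a, b}) (hx : x ∈ K') (e : α * a + β * b = x) (hα : IsUnit α) :
    K' ≤ Ideal.span {x} ⊔ maximalIdeal R * Ideal.span {a, b} := by
  obtain ⟨u, rfl⟩ := hα
  intro y hy
  obtain ⟨p, q, rfl⟩ := Ideal.mem_span_pair.1 (hK' hy)
  set γ := q - p * ↑u⁻¹ * β with hγ
  have e1 : p * a + q * b = p * ↑u⁻¹ * x + γ * b := by
    rw [← e, hγ]
    linear_combination (-p * a) * u.inv_mul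
  have e2 : γ * b ∈ K' := by
    have := K'.sub_mem hy (K'.mul_mem_left (p * ↑u⁻¹) hx)
    rwa [e1, add_sub_cancel_left] at this
  by_cases hu : IsUnit γ
  · refine absurd (le_antisymm hK' ?_) hne
    have hb : b ∈ K' := (Ideal.unit_mul_mem_iff_mem K' hu).1 e2
    have ha : a ∈ K' := by
      refine (Ideal.unit_mul_mem_iff_mem K' u.isUnit).1 ?_
      have := K'.sub_mem hx (K'.mul_mem_left β hb)
      rwa [← e, add_sub_cancel_right] at this
    rw [Ideal.span_le]
    rintro _ (rfl | rfl)
    exacts [ha, hb]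
  · rw [e1]
    refine Submodule.add_mem_sup (Ideal.mul_mem_left _ _ (Ideal.mem_span_singleton_self _)) ?_
    exact Ideal.mul_mem_mul ((mem_maximalIdeal _).2 hu) (Ideal.subset_span (by simp))

/-- A proper subideal of a two-generated ideal is, modulo `𝔪 K`, generated by one element. -/
lemma exists_kappa {a b : R} {K' : Ideal R} (hK' : K' ≤ Ideal.span {a, b})
    (hne : K' ≠ Ideal.span {a, b}) : ∃ κ ∈ Ideal.span {a, b},
    K' ≤ Ideal.span {κ} ⊔ maximalIdeal R * Ideal.span {a, b} := by
  by_cases h : K' ≤ maximalIdeal R * Ideal.span {a, b}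
  · exact ⟨0, zero_mem _, h.trans le_sup_right⟩
  obtain ⟨x, hx, hxn⟩ := SetLike.not_le_iff_exists.1 h
  refine ⟨x, hK' hx, ?_⟩
  obtain ⟨α, β, e⟩ := Ideal.mem_span_pair.1 (hK' hx)
  by_cases hα : IsUnit α
  · exact pair_aux hK' hne hx e hα
  by_cases hβ : IsUnit β
  · rw [Ideal.span_pair_comm] at hK' hne ⊢
    exact pair_aux hK' hne hx (by rw [← e, add_comm]) hβ
  · refine absurd ?_ hxn
    rw [← e]
    exact add_mem (Ideal.mul_mem_mul ((mem_maximalIdeal _).2 hα) (Ideal.subset_span (by simp)))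
      (Ideal.mul_mem_mul ((mem_maximalIdeal _).2 hβ) (Ideal.subset_span (by simp)))

lemma minimal_of (hCM : IsCMLocalRing R) (hdim : ringKrullDim R = 2) (hI : MP I)
    (hIm : I ≤ maximalIdeal R) {a b : R} (h : IsNormalReduction I (Ideal.span {a, b})) :
    IsMinimalNormalReduction I (Ideal.span {a, b}) := by
  refine ⟨h, fun K' hK' hr => ?_⟩
  by_contra hne
  obtain ⟨κ, hκ, hle⟩ := exists_kappa hK' hne
  obtain ⟨hKI, N, hN⟩ := h
  obtain ⟨-, N', hN'⟩ := hr
  set n := N + N'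
  have h1 : intCl (I ^ (n + 1)) ≤ Ideal.span {κ} * intCl (I ^ n) ⊔
      maximalIdeal R • intCl (I ^ (n + 1)) := by
    conv_lhs => rw [← hN' n (by omega)]
    rw [← hN n (by omega), smul_eq_mul, ← mul_assoc, ← Ideal.sup_mul]
    exact Ideal.mul_mono_left hle
  have h2 := Submodule.le_of_le_smul_of_le_jacobson_bot (IsNoetherian.noetherian _)
    (maximalIdeal_le_jacobson _) h1
  have h3 : MP (Ideal.span {κ, 0}) := by
    refine ((hI.pow (n + 1)).intCl).mono (h2.trans (Ideal.mul_le_left.trans ?_))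
    exact Ideal.span_mono (by simp)
  have := (reg2_of_MP hCM hdim (hIm (hKI hκ)) (zero_mem _) h3).1 1 (zero_mul _)
  exact one_ne_zero this

/-- `exists_complete` supplies general elements; Cohen–Macaulayness makes the parameters regular sequences. -/
lemma exists_Cpl (hCM : IsCMLocalRing R) (hdim : ringKrullDim R = 2)
    (hres : Infinite (ResidueField R)) (hI : MP I) (hJ : MP J)
    (hIm : I ≤ maximalIdeal R) (hJm : J ≤ maximalIdeal R)
    (hgr : ∃ C N : ℕ, ∀ n, N ≤ n → cl ((I * J) ^ n) ≤ C * (n + 1) ^ 2) :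
    ∃ a1 a2 b1 b2, Cpl I J a1 a2 b1 b2 := by
  obtain ⟨a1, h1, a2, h2, b1, h3, b2, h4, h5⟩ := exists_complete hres hI hJ hIm hgr
  exact ⟨a1, a2, b1, b2, hCM, hdim, hI, hJ, hIm, hJm, h1, h2, h3, h4, h5⟩

lemma Cpl.normalRed1 (h : Cpl I J a1 a2 b1 b2) (hur : AnalyticallyUnramified R)
    (hP : HP I J f20 f11 f02 f10 f01 f00) (h0 : f00 = 0) : NormalReductionNumberLE I 1 := by
  refine ⟨_, minimal_of h.hCM h.hdim h.hI h.hIm (a := a1) (b := a2) ⟨?_, 1, fun n hn => ?_⟩,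
    fun n hn => ?_⟩
  · rw [Ideal.span_le]
    rintro _ (rfl | rfl)
    exacts [h.ha1, h.ha2]
  · obtain ⟨k, rfl⟩ := Nat.exists_eq_add_of_le' hn
    have := h.row_of hur hP h0 k 0
    rw [Fb_n0, Fb_n0] at this
    exact this.symm
  · obtain ⟨k, rfl⟩ := Nat.exists_eq_add_of_le' hn
    have := h.row_of hur hP h0 k 0
    rwa [Fb_n0, Fb_n0] at this

/-- The joint reduction number of the pair is zero for every good joint reduction. -/
def JR0 (I J : Ideal R) : Prop := ∀ a b : R, IsGoodJointReduction I J a b →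
          ∀ r s : ℤ, 1 ≤ r → 1 ≤ s →
            IJbar I J r s =
              Ideal.span {a} * IJbar I J (r - 1) s ⊔
                Ideal.span {b} * IJbar I J r (s - 1)

lemma Cpl.jr0 (h : Cpl I J a1 a2 b1 b2) (hur : AnalyticallyUnramified R)
    (hP : HP I J f20 f11 f02 f10 f01 f00) (h0 : f00 = 0) : JR0 I J := by
  rintro a b ⟨ha, hb, ⟨N, hN⟩, hca, -⟩ r s hr hs
  have key := h.joint_any hur hP h0 ha hb (M := N.toNat) (by
    intro r s hr hs
    have := hN (r + 1 : ℕ) (s + 1 : ℕ) (by omega) (by omega)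
    simpa [IJbar_eq] using this) (by
    intro r s
    have := hca (r + 1 : ℕ) s (by omega)
    simpa [IJbar_eq] using this) (r - 1).toNat (s - 1).toNat
  rw [show (r - 1).toNat + 1 = r.toNat by omega, show (s - 1).toNat + 1 = s.toNat by omega] at key
  exact key

/-- `K` is a normal reduction, so `I` is integral over `K`. -/
lemma Cpl.red_of (h : Cpl I J a1 a2 b1 b2) {K : Ideal R} (hK : IsNormalReduction I K) :
    I ≤ intCl K ∧ MP K := by
  obtain ⟨hKI, N, hN⟩ := hK
  have hMP : MP K := ((h.hI.pow (N + 1)).intCl).mono (by rw [← hN N le_rfl]; exact Ideal.mul_le_left)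
  refine ⟨fun x hx => ?_, hMP⟩
  obtain ⟨j, hj⟩ := hMP
  refine mem_intCl_of_mul_le (Y := intCl (I ^ N)) (y := a1 ^ N) (z := a1 ^ j)
    (le_intCl _ (Ideal.pow_mem_pow h.ha1 _)) (pow_mem h.n_a1 _)
    (hj (Ideal.pow_mem_pow (h.hIm h.ha1) _)) (pow_mem h.n_a1 _) ?_
  rw [hN N le_rfl]
  refine le_trans ?_ (le_intCl _)
  rw [Ideal.span_singleton_mul_le_iff]
  intro z hz
  have := Fb_left (J := J) hx (by rwa [Fb_n0] : z ∈ Fb I J N 0)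
  rwa [Fb_n0] at this

end C4

section C5
open IsLocalRing

variable {R : Type*} [CommRing R] [IsLocalRing R] [IsNoetherianRing R] {I J : Ideal R}
  {a1 a2 b1 b2 : R} {f20 f11 f02 f10 f01 f00 : ℤ}

/-- The growth condition on the powers of `I * J`. -/
def Gr (I J : Ideal R) : Prop := ∃ C N : ℕ, ∀ n, N ≤ n → cl ((I * J) ^ n) ≤ C * (n + 1) ^ 2

/-- The Hilbert function of the filtration of integral closures of powers is eventually polynomial. -/
def HP1 (I : Ideal R) (e0 e1 e2 : ℤ) : Prop := ∃ N : ℕ, ∀ n : ℕ, N ≤ n →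
  (cl (intCl (I ^ n)) : ℤ) = e0 * ((n + 1).choose 2 : ℕ) - e1 * n + e2

lemma exists_pow_le {I K : Ideal R} (h : I ≤ intCl K) : ∃ N, ∀ n, I ^ (N + n) ≤ K ^ n := by
  obtain ⟨-, N, hN⟩ := red_intCl K
  exact ⟨N, fun n => (Ideal.pow_right_mono h _).trans ((Red.pow_le hN n).trans Ideal.mul_le_left)⟩

lemma Gr.of_red {K L : Ideal R} (hI : MP I) (hJ : MP J) (hgr : Gr I J) (hK : I ≤ intCl K)
    (hL : J ≤ intCl L) : Gr K L := by
  obtain ⟨C, N, hN⟩ := hgr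
  obtain ⟨p, hp⟩ := exists_pow_le hK
  obtain ⟨q, hq⟩ := exists_pow_le hL
  refine ⟨C * (p + q + 1) ^ 2, N, fun n hn => ?_⟩
  have h1 : (I * J) ^ (p + q + n) ≤ (K * L) ^ n := by
    rw [mul_pow, mul_pow]
    refine Ideal.mul_mono ((Ideal.pow_le_pow_right ?_).trans (hp n))
      ((Ideal.pow_le_pow_right ?_).trans (hq n)) <;> omega
  refine (cl_mono ((hI.mul hJ).pow _) h1).trans ((hN _ (by omega)).trans ?_)
  rw [mul_assoc, ← mul_pow]
  refine Nat.mul_le_mul_left _ (Nat.pow_le_pow_left ?_ 2)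
  nlinarith

lemma Cpl.good (h : Cpl I J a1 a2 b1 b2) (hur : AnalyticallyUnramified R)
    (hP : HP I J f20 f11 f02 f10 f01 f00) : IsGoodJointReduction I J a1 b1 := by
  obtain ⟨N, hN⟩ := h.joint_eventually hur hP
  refine ⟨h.ha1, h.hb1, ⟨N + 1, fun r s hr hs => ?_⟩, fun r s hr => ?_, fun r s hs => ?_⟩
  · have := hN (r - 1).toNat (s - 1).toNat (by omega) (by omega)
    rwa [show (r - 1).toNat + 1 = r.toNat by omega, show (s - 1).toNat + 1 = s.toNat by omega] at this
  · rw [IJbar_eq, IJbar_eq, show r.toNat = (r - 1).toNat + 1 by omega]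
    refine le_antisymm ?_ (le_inf Ideal.mul_le_left ?_)
    · rintro x ⟨hx, hx'⟩
      obtain ⟨y, rfl⟩ := Ideal.mem_span_singleton.1 hx
      exact Ideal.mul_mem_mul (Ideal.mem_span_singleton_self _) (h.cancel_a1 hx')
    · rw [Ideal.span_singleton_mul_le_iff]
      exact fun z hz => Fb_left h.ha1 hz
  · rw [IJbar_eq, IJbar_eq, show s.toNat = (s - 1).toNat + 1 by omega]
    refine le_antisymm ?_ (le_inf Ideal.mul_le_left ?_)
    · rintro x ⟨hx, hx'⟩
      obtain ⟨y, rfl⟩ := Ideal.mem_span_singleton.1 hx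
      exact Ideal.mul_mem_mul (Ideal.mem_span_singleton_self _) (h.cancel_b1 hx')
    · rw [Ideal.span_singleton_mul_le_iff]
      exact fun z hz => Fb_right h.hb1 hz

lemma Cpl.normal_red (h : Cpl I J a1 a2 b1 b2) (hur : AnalyticallyUnramified R) {e0 e1 e2 : ℤ}
    (hI : HP1 I e0 e1 e2) : IsNormalReduction I (Ideal.span {a1, a2}) := by
  have hle : Ideal.span {a1, a2} ≤ I := by
    rw [Ideal.span_le]
    rintro _ (rfl | rfl)
    exacts [h.ha1, h.ha2]
  have hrow : ∀ n, intCl (Ideal.span {a1, a2} ^ n) = intCl (I ^ n) := fun n => by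
    rw [← h.row, Fb_n0]
  obtain ⟨N, hN⟩ := hI
  obtain ⟨n1, hn⟩ := intCl_pow_stable hur h.r_aa (hle.trans h.hIm) h.MPaa (e0 := e0) (e1 := e1)
    (e2 := e2) ⟨N, fun n hn => by rw [hrow, hN n hn]⟩
  exact ⟨hle, n1, fun n hle => by rw [← hrow, ← hrow, hn n hle]⟩

/-- Vanishing of the joint reduction number and normal reduction numbers at most one force the
constant term of the normal Hilbert polynomial to vanish. -/
lemma f00_of_two (hur : AnalyticallyUnramified R) (hCM : IsCMLocalRing R)
    (hdim : ringKrullDim R = 2) (hres : Infinite (ResidueField R)) (hI : MP I) (hJ : MP J)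
    (hIm : I ≤ maximalIdeal R) (hJm : J ≤ maximalIdeal R) (hgr : Gr I J)
    (hP : HP I J f20 f11 f02 f10 f01 f00) {e0 e1 e2 e0' e1' e2' : ℤ}
    (hPI : HP1 I e0 e1 e2) (hPJ : HP1 J e0' e1' e2') (hjr : JR0 I J)
    (hnI : NormalReductionNumberLE I 1) (hnJ : NormalReductionNumberLE J 1) : f00 = 0 := by
  obtain ⟨c1, c2, d1, d2, h0⟩ := exists_Cpl hCM hdim hres hI hJ hIm hJm hgr
  obtain ⟨K, ⟨hK1, hK2⟩, hK3⟩ := hnI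
  obtain ⟨L, ⟨hL1, hL2⟩, hL3⟩ := hnJ
  obtain ⟨hK4, hK5⟩ := h0.red_of hK1
  obtain ⟨hL4, hL5⟩ := h0.swap.red_of hL1
  obtain ⟨a1, ha1, a2, ha2, b1, hb1, b2, hb2, hU⟩ := exists_complete hres hK5 hL5
    (hK1.1.trans hIm) (hgr.of_red hI hJ hK4 hL4)
  have h : Cpl I J a1 a2 b1 b2 := ⟨hCM, hdim, hI, hJ, hIm, hJm, hK1.1 ha1, hK1.1 ha2, hL1.1 hb1,
    hL1.1 hb2, (Ideal.mul_mono hK4 hL4).trans ((intCl_mul_le _ _).trans (intCl_le_of_le hU))⟩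
  have eK := hK2 _ (by
    rw [Ideal.span_le]
    rintro _ (rfl | rfl)
    exacts [ha1, ha2]) (h.normal_red hur hPI)
  have eL := hL2 _ (by
    rw [Ideal.span_le]
    rintro _ (rfl | rfl)
    exacts [hb2, hb1]) (h.swap.normal_red hur hPJ)
  refine h.f00_eq_zero hur hP ?_ ?_ ?_
  · intro r s
    have := hjr a1 b1 (h.good hur hP) (r + 1 : ℕ) (s + 1 : ℕ) (by omega) (by omega)
    simpa [IJbar_eq] using this
  · intro r
    rw [Fb_n0, Fb_n0, eK]; exact hK3 (r + 2) (by omega)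
  · intro r
    rw [Fb_0n, Fb_0n, eL]; exact hL3 (r + 2) (by omega)

lemma P2_n0 {a b c d e f : ℤ} (n : ℕ) : P2 a b c d e f n 0 = a * ((n + 1).choose 2 : ℕ) - d * n + f := by
  simp [P2]

lemma poly1_eq {a b c a' b' c' : ℤ} {N : ℕ} (h : ∀ n : ℕ, N ≤ n →
    a * ((n + 1).choose 2 : ℕ) - b * n + c = a' * ((n + 1).choose 2 : ℕ) - b' * n + c') :
    a = a' ∧ b = b' ∧ c = c' := by
  obtain ⟨h1, h2, h3⟩ := quad_eq (A := a - a') (B := (a - a') - 2 * (b - b')) (C := 2 * (c - c'))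
    (N := N) fun n hn => by
      have := h n hn
      linear_combination 2 * this - (a - a') * two_mul_choose n
  omega

lemma Cpl.first_coeffs (h : Cpl I J a1 a2 b1 b2) (hur : AnalyticallyUnramified R)
    (hP : HP I J f20 f11 f02 f10 f01 f00) (h0 : f00 = 0) {e0 e1 e2 : ℤ} (hI : HP1 I e0 e1 e2) :
    f20 = e0 ∧ f10 = e1 ∧ f00 = e2 := by
  obtain ⟨N, hN⟩ := hI
  refine poly1_eq (N := N) fun n hn => ?_
  have := h.H_eq_zero hur hP h0 n 0
  rw [hh, P2_n0, Fb_n0, hN n hn] at this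
  linarith

/-- If the constant term vanishes, the integral closures are trapped between shifts of the ordinary powers. -/
lemma Cpl.F_le (h : Cpl I J a1 a2 b1 b2) (hur : AnalyticallyUnramified R)
    (hP : HP I J f20 f11 f02 f10 f01 f00) (h0 : f00 = 0) (r s : ℕ) :
    Fb I J (r + 1) (s + 1) ≤ I ^ r * J ^ s := by
  have h1 : ∀ r, Fb I J (r + 1) (s + 1) ≤ I ^ r * Fb I J 1 (s + 1) := by
    intro r
    induction r with
    | zero => simp
    | succ r ih =>
      rw [h.row_of hur hP h0, pow_succ', mul_assoc]
      refine Ideal.mul_mono ?_ ih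
      rw [Ideal.span_le]
      rintro _ (rfl | rfl)
      exacts [h.ha1, h.ha2]
  have h2 : ∀ s, Fb I J 1 (s + 1) ≤ J ^ s := by
    intro s
    induction s with
    | zero => simp
    | succ s ih =>
      rw [h.col_of hur hP h0, pow_succ']
      refine Ideal.mul_mono ?_ ih
      rw [Ideal.span_le]
      rintro _ (rfl | rfl)
      exacts [h.hb2, h.hb1]
  exact (h1 r).trans (Ideal.mul_mono_right (h2 s))

/-- The mixed coefficient of the normal polynomial is the mixed multiplicity of the ordinary filtration. -/
lemma Cpl.f11_eq (h : Cpl I J a1 a2 b1 b2) (hur : AnalyticallyUnramified R)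
    (hP : HP I J f20 f11 f02 f10 f01 f00) (h0 : f00 = 0) {e20 e11 e02 e10 e01 e00 : ℤ}
    (hB : ∃ N : ℕ, ∀ r s : ℕ, N ≤ r → N ≤ s →
      (cl (I ^ r * J ^ s) : ℤ) = P2 e20 e11 e02 e10 e01 e00 r s) : f11 = e11 := by
  obtain ⟨N, hN⟩ := hB
  have hz : ∀ r s, (P2 f20 f11 f02 f10 f01 f00 r s) = cl (Fb I J r s) := fun r s =>
    sub_eq_zero.1 (h.H_eq_zero hur hP h0 r s)
  refine mixed_eq (N := N) (f20 := f20) (f02 := f02) (f10 := f10) (f01 := f01) (f00 := f00)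
    (g20 := e20) (g02 := e02) (g10 := e10) (g01 := e01) (g00 := e00) (fun r s hr hs => ?_) (fun r s hr hs => ?_)
  · rw [hz, ← hN r s hr hs]
    exact_mod_cast cl_mono ((h.hI.pow _).mul (h.hJ.pow _)) (le_intCl _)
  · rw [hz, ← hN r s hr hs]
    exact_mod_cast cl_mono (h.MPF _ _) (h.F_le hur hP h0 r s)

end C5

/-! ### Uniform eventual behaviour of the filtration near the axes -/

section G0
open IsLocalRing

/-- A bounded convex sequence of nonnegative integers is eventually constant. -/
lemma convex_const {g : ℕ → ℤ} {B : ℤ} (h0 : ∀ n, 0 ≤ g n) (hB : ∀ n, g n ≤ B)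
    (hc : ∀ n, 2 * g (n + 1) ≤ g (n + 2) + g n) : ∃ N, ∀ n, N ≤ n → g (n + 1) = g n := by
  have m : ∀ n, g (n + 1) ≤ g n := by
    intro n
    by_contra hcon
    have h1 : ∀ k, g (n + k) + 1 ≤ g (n + k + 1) := by
      intro k
      induction k with
      | zero => simp only [add_zero]; omega
      | succ k ih =>
        have : 2 * g (n + k + 1) ≤ g (n + k + 1 + 1) + g (n + k) := hc (n + k)
        simp only [← add_assoc]; omega
    have h2 : ∀ k : ℕ, (k : ℤ) ≤ g (n + k) := by
      intro k
      induction k with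
      | zero => simpa using h0 n
      | succ k ih => have := h1 k; simp only [← add_assoc]; push_cast; omega
    have := h2 (B.toNat + 1)
    have := hB (n + (B.toNat + 1))
    have := Int.self_le_toNat B
    push_cast at *; omega
  have ha : Antitone g := antitone_nat_of_succ_le m
  let f : ℕ →o ℕᵒᵈ := ⟨fun n => OrderDual.toDual (g n).toNat, fun a b hab => by
    simp only [OrderDual.toDual_le_toDual]; exact Int.toNat_le_toNat (ha hab)⟩
  obtain ⟨N, hN⟩ := WellFoundedGT.monotone_chain_condition f
  refine ⟨N, fun n hn => ?_⟩
  have e1 : (g N).toNat = (g n).toNat := hN n hn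
  have e2 : (g N).toNat = (g (n + 1)).toNat := hN (n + 1) (by omega)
  have := h0 n
  have := h0 (n + 1)
  omega

variable {R : Type*} [CommRing R] [IsLocalRing R] [IsNoetherianRing R] {I J : Ideal R}
  {a1 a2 b1 b2 : R} {f20 f11 f02 f10 f01 f00 : ℤ}

local notation "H" => hh I J f20 f11 f02 f10 f01 f00

namespace Cpl

/-- The bound on `r` is uniform in `s`, since for large `r` the row `H r s` is zero for all but finitely
many `s`. -/
lemma H_const (h : Cpl I J a1 a2 b1 b2) (hur : AnalyticallyUnramified R)
    (hP : HP I J f20 f11 f02 f10 f01 f00) : ∃ N, ∀ r s, N ≤ r → H (r + 1) s = H r s := by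
  obtain ⟨N, hN⟩ := hP.h_zero
  have hb := h_bounds (h.D11_le hur hP) (h.D20_le hur hP) (h.D02_le hur hP) hN
  have hc : ∀ s, ∃ N, ∀ r, N ≤ r → H (r + 1) s = H r s := fun s =>
    convex_const (fun r => (hb r s).1) (fun r => (hb r s).2) (fun r => h.D20_le hur hP r s)
  choose K hK using hc
  refine ⟨N + ∑ s ∈ Finset.range N, K s, fun r s hr => ?_⟩
  by_cases hs : N ≤ s
  · rw [hN _ _ (by omega) hs, hN _ _ (by omega) hs]
  · refine hK s r ?_
    have := Finset.single_le_sum (f := K) (fun i _ => Nat.zero_le _)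
      (Finset.mem_range.2 (not_le.1 hs))
    omega

/-- Second differences of `H` vanish for large `r`, uniformly in `s`. -/
lemma row_ev (h : Cpl I J a1 a2 b1 b2) (hur : AnalyticallyUnramified R)
    (hP : HP I J f20 f11 f02 f10 f01 f00) : ∃ N, ∀ r s, N ≤ r →
    Fb I J (r + 2) s = Ideal.span {a1, a2} * Fb I J (r + 1) s := by
  obtain ⟨N, hN⟩ := h.H_const hur hP
  refine ⟨N, fun r s hr => h.row_eq ?_⟩
  have := h.D20 hur hP r s
  have e1 := hN r s hr
  have e2 : H (r + 2) s = _ := hN (r + 1) s (by omega)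
  change cl _ ≤ cl (Fb I J (r + 2) s)
  omega

lemma col_ev (h : Cpl I J a1 a2 b1 b2) (hur : AnalyticallyUnramified R)
    (hP : HP I J f20 f11 f02 f10 f01 f00) : ∃ N, ∀ r s, N ≤ s →
    Fb I J r (s + 2) = Ideal.span {b2, b1} * Fb I J r (s + 1) := by
  obtain ⟨N, hN⟩ := h.swap.row_ev hur hP.swap
  exact ⟨N, fun r s hs => by simpa only [Fb_swap (I := I)] using hN s r hs⟩

/-- The mixed equality holds as soon as one of the two indices is large. -/
lemma joint_ev (h : Cpl I J a1 a2 b1 b2) (hur : AnalyticallyUnramified R)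
    (hP : HP I J f20 f11 f02 f10 f01 f00) : ∃ N, ∀ r s, N ≤ r ∨ N ≤ s →
    Fb I J (r + 1) (s + 1) =
      Ideal.span {a1} * Fb I J r (s + 1) ⊔ Ideal.span {b1} * Fb I J (r + 1) s := by
  obtain ⟨N, hN⟩ := h.H_const hur hP
  obtain ⟨N', hN'⟩ := h.swap.H_const hur hP.swap
  refine ⟨N + N', fun r s hrs => joint_eq h.hI h.hJ h.ha1 h.hb1 h.r_ab h.MPab ?_⟩
  have := h.D11 hur hP r s
  rcases hrs with hr | hs
  · have e1 := hN r s (by omega)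
    have e2 := hN r (s + 1) (by omega)
    omega
  · have e1 := hN' s r (by omega)
    have e2 := hN' s (r + 1) (by omega)
    simp only [hh_swap] at e1 e2
    omega

/-- The filtrations `F(r, s)` and `I ^ r * J ^ s` are uniformly close. -/
lemma F_le_ev (h : Cpl I J a1 a2 b1 b2) (hur : AnalyticallyUnramified R)
    (hP : HP I J f20 f11 f02 f10 f01 f00) : ∃ c ∈ nonZeroDivisors R,
    ∀ r s, ∀ x ∈ Fb I J r s, c * x ∈ I ^ r * J ^ s := by
  obtain ⟨N, hN⟩ := h.row_ev hur hP
  obtain ⟨K, hK⟩ := h.col_ev hur hP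
  have h1 : ∀ r s, Fb I J (r + (N + 1)) s ≤ I ^ r * Fb I J (N + 1) s := by
    intro r s
    induction r with
    | zero => simp
    | succ r ih =>
      have e : Fb I J (r + 1 + (N + 1)) s = _ := 
        (by rw [show r + 1 + (N + 1) = r + N + 2 by ring] : Fb I J (r + 1 + (N + 1)) s = Fb I J (r + N + 2) s).trans
          (hN (r + N) s (by omega))
      rw [e, pow_succ', mul_assoc]
      refine Ideal.mul_mono ?_ ih
      rw [Ideal.span_le]
      rintro _ (rfl | rfl)
      exacts [h.ha1, h.ha2]
  have h2 : ∀ r s, Fb I J r (s + (K + 1)) ≤ J ^ s := by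
    intro r s
    induction s with
    | zero => simp
    | succ s ih =>
      have e : Fb I J r (s + 1 + (K + 1)) = _ := 
        (by rw [show s + 1 + (K + 1) = s + K + 2 by ring] : Fb I J r (s + 1 + (K + 1)) = Fb I J r (s + K + 2)).trans
          (hK r (s + K) (by omega))
      rw [e, pow_succ']
      refine Ideal.mul_mono ?_ ih
      rw [Ideal.span_le]
      rintro _ (rfl | rfl)
      exacts [h.hb2, h.hb1]
  refine ⟨a1 ^ (N + 1) * b1 ^ (K + 1), mul_mem (pow_mem h.n_a1 _) (pow_mem h.n_b1 _), 
    fun r s x hx => ?_⟩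
  refine (h1 r (s + (K + 1))).trans (Ideal.mul_mono_right (h2 _ s)) ?_
  have := Fb_mul hx (le_intCl _ (Ideal.mul_mem_mul (Ideal.pow_mem_pow h.ha1 (N + 1)) 
    (Ideal.pow_mem_pow h.hb1 (K + 1))) : a1 ^ (N + 1) * b1 ^ (K + 1) ∈ Fb I J (N + 1) (K + 1))
  rwa [mul_comm]

end Cpl
end G0

/-! ### Graded rings: the Cohen–Macaulay property is detected at the irrelevant maximal ideal -/

section CM4
open Polynomial

/-- If `f z = 0` then a power of the leading coefficient of `f` annihilates `z`. -/
lemma exists_lc_pow {B : Type*} [CommRing B] (f : B[X]) : ∀ (n : ℕ) (z : B[X]), z.natDegree < n →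
    f * z = 0 → ∃ k, C f.leadingCoeff ^ k * z = 0 := by
  intro n
  induction n with
  | zero => intro z hz; omega
  | succ n ih =>
    intro z hz h
    have h1 : f.leadingCoeff * z.leadingCoeff = 0 := by
      rw [← coeff_mul_degree_add_degree, h, coeff_zero]
    by_cases h0 : z.natDegree = 0
    · refine ⟨1, ?_⟩
      rw [eq_C_of_natDegree_eq_zero h0, pow_one, ← C_mul]
      rw [leadingCoeff, leadingCoeff, h0] at h1
      rw [leadingCoeff, h1, C_0]
    · obtain ⟨k, hk⟩ := ih (C f.leadingCoeff * z) (by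
        have h2 : (C f.leadingCoeff * z).natDegree ≤ z.natDegree - 1 := by
          rw [natDegree_le_iff_coeff_eq_zero]
          intro N hN
          rw [coeff_C_mul]
          rcases (show z.natDegree = N ∨ z.natDegree < N by omega) with rfl | hN'
          · exact h1
          · rw [coeff_eq_zero_of_natDegree_lt hN', mul_zero]
        omega) (by rw [mul_left_comm, h, mul_zero])
      exact ⟨k + 1, by rw [pow_succ, mul_assoc, hk]⟩

variable {A : Type*} [CommRing A]

/-- An `ℕ`-grading of `A`, given by the ring homomorphism `a ↦ ∑ aᵢ Xⁱ`, where `aᵢ` is the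
component of degree `i` of `a`. -/
structure NGrading (φ : A →+* A[X]) : Prop where
  sum : ∀ a, (φ a).eval 1 = a
  comp : ∀ a i, φ ((φ a).coeff i) = monomial i ((φ a).coeff i)

variable {φ : A →+* A[X]}

/-- `x` is homogeneous of degree `i`. -/
def Hg (φ : A →+* A[X]) (i : ℕ) (x : A) : Prop := φ x = monomial i x

/-- Homogeneous ideals. -/
def HI (φ : A →+* A[X]) (𝔞 : Ideal A) : Prop := ∀ a ∈ 𝔞, ∀ i, (φ a).coeff i ∈ 𝔞

/-- The largest homogeneous ideal contained in `P`. -/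
noncomputable def core' (φ : A →+* A[X]) (P : Ideal A) : Ideal A := (P.map C).comap φ

lemma mem_core' {P : Ideal A} {a : A} : a ∈ core' φ P ↔ ∀ i, (φ a).coeff i ∈ P := by
  rw [core', Ideal.mem_comap, Ideal.mem_map_C_iff]

lemma core'_prime {P : Ideal A} (hP : P.IsPrime) : (core' φ P).IsPrime :=
  haveI : (P.map (C : A →+* A[X])).IsPrime := Ideal.isPrime_map_C_of_isPrime
  Ideal.comap_isPrime φ (P.map C)

lemma Hg.mul {i j : ℕ} {x y : A} (hx : Hg φ i x) (hy : Hg φ j y) : Hg φ (i + j) (x * y) := by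
  rw [Hg, map_mul, hx, hy, monomial_mul_monomial]

lemma Hg.add {i : ℕ} {x y : A} (hx : Hg φ i x) (hy : Hg φ i y) : Hg φ i (x + y) := by
  rw [Hg, map_add, hx, hy, map_add]

lemma Hg.pow {i : ℕ} {x : A} (hx : Hg φ i x) (n : ℕ) : Hg φ (i * n) (x ^ n) := by
  rw [Hg, map_pow, hx, monomial_pow]

lemma Hg.one : Hg φ 0 (1 : A) := by
  rw [Hg, map_one, monomial_zero_left, C_1]

lemma Hg.coeff_mul {d : ℕ} {x : A} (hx : Hg φ d x) (f : A) (i : ℕ) :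
    (φ (x * f)).coeff i = if d ≤ i then x * (φ f).coeff (i - d) else 0 := by
  rw [map_mul, hx, ← C_mul_X_pow_eq_monomial, mul_assoc, coeff_C_mul, coeff_X_pow_mul']
  split_ifs <;> simp

namespace NGrading

lemma mem_of (h : NGrading φ) {𝔞 : Ideal A} {a : A} (ha : ∀ i, (φ a).coeff i ∈ 𝔞) : a ∈ 𝔞 := by
  rw [← h.sum a, eval_eq_sum_range]
  exact sum_mem fun i _ => by simpa using ha i

lemma hg (h : NGrading φ) (a : A) (i : ℕ) : Hg φ i ((φ a).coeff i) := h.comp a i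

lemma core_le (h : NGrading φ) (P : Ideal A) : core' φ P ≤ P := fun _ ha => h.mem_of (mem_core'.1 ha)

lemma core_HI (h : NGrading φ) (P : Ideal A) : HI φ (core' φ P) := by
  intro a ha i
  rw [mem_core'] at ha ⊢
  intro j
  rw [h.comp, coeff_monomial]
  split_ifs
  · exact ha i
  · exact zero_mem _

lemma core_mem (_h : NGrading φ) {P : Ideal A} {i : ℕ} {x : A} (hx : Hg φ i x) (hxP : x ∈ P) :
    x ∈ core' φ P := by
  rw [mem_core']
  intro j
  rw [hx, coeff_monomial]
  split_ifs
  · exact hxP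
  · exact zero_mem _

lemma le_core (_h : NGrading φ) {𝔞 P : Ideal A} (ha : HI φ 𝔞) (hle : 𝔞 ≤ P) : 𝔞 ≤ core' φ P :=
  fun a h => mem_core'.2 fun i => hle (ha a h i)

lemma exists_hg (h : NGrading φ) {𝔞 P : Ideal A} (ha : HI φ 𝔞) (hle : ¬ 𝔞 ≤ P) :
    ∃ i x, Hg φ i x ∧ x ∈ 𝔞 ∧ x ∉ P := by
  by_contra! hcon
  exact hle fun a haa => h.mem_of fun i => hcon i _ (h.hg a i) (ha a haa i)

/-- Homogeneous prime avoidance, in the presence of a homogeneous element `T` of positive degree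
avoiding all the given primes. -/
lemma havoid (h : NGrading φ) {T : A} {d : ℕ} (hT : Hg φ d T) (hd : 0 < d) {𝔞 : Ideal A} (ha : HI φ 𝔞)
    (S : Finset (Ideal A)) (hS : ∀ q ∈ S, q.IsPrime ∧ HI φ q ∧ T ∉ q ∧ ¬ 𝔞 ≤ q) :
    ∃ i x, Hg φ i x ∧ x ∈ 𝔞 ∧ ∀ q ∈ S, x ∉ q := by
  classical
  induction S using Finset.strongInduction with
  | H S ih =>
    rcases S.eq_empty_or_nonempty with rfl | hne
    · exact ⟨0, 0, by rw [Hg, map_zero, map_zero], zero_mem _, by simp⟩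
    obtain ⟨q, hq, hmin⟩ := S.exists_minimal hne
    obtain ⟨i, x, hx, hxa, hxS⟩ := ih (S.erase q) (Finset.erase_ssubset hq)
      fun p hp => hS p (Finset.mem_of_mem_erase hp)
    by_cases hxq : x ∈ q
    swap
    · refine ⟨i, x, hx, hxa, fun p hp => ?_⟩
      by_cases e : p = q
      · rwa [e]
      · exact hxS p (Finset.mem_erase.2 ⟨e, hp⟩)
    obtain ⟨hqp, hqh, hTq, haq⟩ := hS q hq
    have key : ∀ S' : Finset (Ideal A), S' ⊆ S.erase q →
        ∃ j y, Hg φ j y ∧ y ∈ 𝔞 ∧ y ∉ q ∧ ∀ p ∈ S', y ∈ p := by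
      intro S'
      induction S' using Finset.induction_on with
      | empty =>
        intro _
        obtain ⟨j, y, h1, h2, h3⟩ := h.exists_hg ha haq
        exact ⟨j, y, h1, h2, h3, by simp⟩
      | insert p S' hp ih' =>
        intro hsub
        obtain ⟨j, y, h1, h2, h3, h4⟩ := ih' ((Finset.subset_insert _ _).trans hsub)
        have hpS := Finset.mem_erase.1 (hsub (Finset.mem_insert_self _ _))
        obtain ⟨l, w, h5, h6, h7⟩ := h.exists_hg (hS p hpS.2).2.1 (P := q)
          (fun hle => hpS.1 (le_antisymm hle (hmin hpS.2 hle)))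
        refine ⟨_, _, h1.mul h5, Ideal.mul_mem_right _ _ h2, fun hm => ?_, ?_⟩
        · rcases hqp.mem_or_mem hm with hm | hm
          exacts [h3 hm, h7 hm]
        · intro p' hp'
          rcases Finset.mem_insert.1 hp' with rfl | hp'
          · exact Ideal.mul_mem_left _ _ h6
          · exact Ideal.mul_mem_right _ _ (h4 p' hp')
    obtain ⟨j, y, hy, hya, hyq, hyS⟩ := key _ le_rfl
    have e1 : Hg φ (i * d + d * j) (x ^ d * T ^ j) := (hx.pow d).mul (hT.pow j)
    have e2 : Hg φ (i * d + d * j) (y ^ d * T ^ i) := by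
      have := (hy.pow d).mul (hT.pow i)
      rwa [show j * d + d * i = i * d + d * j by ring] at this
    refine ⟨_, _, e1.add e2, add_mem (Ideal.mul_mem_right _ _ (Ideal.pow_mem_of_mem _ hxa d hd))
      (Ideal.mul_mem_right _ _ (Ideal.pow_mem_of_mem _ hya d hd)), fun p hp hm => ?_⟩
    obtain ⟨hpp, -, hTp, -⟩ := hS p hp
    by_cases e : p = q
    · subst e
      rw [Ideal.add_mem_iff_right _ (Ideal.mul_mem_right _ _ (Ideal.pow_mem_of_mem _ hxq d hd))] at hm
      rcases hpp.mem_or_mem hm with hm | hm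
      exacts [hyq (hpp.mem_of_pow_mem _ hm), hTp (hpp.mem_of_pow_mem _ hm)]
    · have hp' := Finset.mem_erase.2 ⟨e, hp⟩
      rw [Ideal.add_mem_iff_left _ (Ideal.mul_mem_right _ _ (Ideal.pow_mem_of_mem _ (hyS p hp') d hd))] at hm
      rcases hpp.mem_or_mem hm with hm | hm
      exacts [hxS p hp' (hpp.mem_of_pow_mem _ hm), hTp (hpp.mem_of_pow_mem _ hm)]

/-- Associated primes of homogeneous ideals are homogeneous. -/
lemma ass_HI (h : NGrading φ) {𝔞 p : Ideal A} (ha : HI φ 𝔞) (hp : IsAss 𝔞 p) : p ≤ core' φ p := by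
  intro f
  obtain ⟨hpp, z, hz⟩ := hp
  have hz1 : z ∉ 𝔞 := fun hz1 => hpp.ne_top ((Ideal.eq_top_iff_one _).2 ((hz 1).2 (by rwa [one_mul])))
  let ψ : A →+* (A ⧸ 𝔞)[X] := (mapRingHom (Ideal.Quotient.mk 𝔞)).comp φ
  have hψ : ∀ a, ψ a = 0 ↔ a ∈ 𝔞 := by
    intro a
    have e : ∀ i, (ψ a).coeff i = Ideal.Quotient.mk 𝔞 ((φ a).coeff i) := fun i => by simp [ψ]
    constructor
    · intro h0
      refine h.mem_of fun i => ?_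
      rw [← Ideal.Quotient.eq_zero_iff_mem, ← e, h0, coeff_zero]
    · intro haa
      ext i
      rw [e, coeff_zero, Ideal.Quotient.eq_zero_iff_mem]
      exact ha a haa i
  -- the top component of an element of `p` lies in `p`
  have top : ∀ f ∈ p, ∀ n, (∀ i, n < i → (φ f).coeff i = 0) → (φ f).coeff n ∈ p := by
    intro f hf n hn
    by_cases hc : (ψ f).coeff n = 0
    · have : (φ f).coeff n ∈ 𝔞 := by
        simpa [ψ, Ideal.Quotient.eq_zero_iff_mem] using hc
      exact (hz _).2 (Ideal.mul_mem_right _ _ this)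
    have hdeg : (ψ f).natDegree = n := by
      refine le_antisymm ?_ (le_natDegree_of_ne_zero hc)
      rw [natDegree_le_iff_coeff_eq_zero]
      intro N hN
      simp [ψ, hn N hN]
    obtain ⟨k, hk⟩ := exists_lc_pow (ψ f) _ (ψ z) (Nat.lt_succ_self _)
      (by rw [← map_mul, hψ]; exact (hz f).1 hf)
    have h1 : ψ ((φ f).coeff n ^ k * z) = 0 := by
      have h2 : ψ ((φ f).coeff n) = C (ψ f).leadingCoeff * X ^ n := by
        rw [leadingCoeff, hdeg]
        simp only [ψ, RingHom.comp_apply, h.comp, coe_mapRingHom, coeff_map, map_monomial,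
          C_mul_X_pow_eq_monomial]
      rw [map_mul, map_pow, h2, mul_pow, mul_right_comm, hk, zero_mul]
    exact hpp.mem_of_pow_mem _ ((hz _).2 ((hψ _).1 h1))
  have key : ∀ n, ∀ f ∈ p, (∀ i, n ≤ i → (φ f).coeff i = 0) → f ∈ core' φ p := by
    intro n
    induction n with
    | zero =>
      intro f _ hn
      exact mem_core'.2 fun i => by rw [hn i (Nat.zero_le _)]; exact zero_mem _
    | succ n ih =>
      intro f hf hn
      have h1 := top f hf n fun i hi => hn i hi
      have h2 := ih (f - (φ f).coeff n) (p.sub_mem hf h1) (by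
        intro i hi
        rw [map_sub, coeff_sub, h.comp, coeff_monomial]
        split_ifs with e
        · rw [e, sub_self]
        · rw [hn i (by omega), sub_zero])
      have h3 := add_mem h2 (h.core_mem (h.hg f n) h1)
      rwa [sub_add_cancel] at h3
  exact fun hf => key ((φ f).natDegree + 1) f hf fun i hi => coeff_eq_zero_of_natDegree_lt hi

/-- For a homogeneous sequence, regularity at the core of `P` implies regularity at `P`. -/
lemma nzl (h : NGrading φ) {𝔞 P : Ideal A} (hP : P.IsPrime) (ha : HI φ 𝔞) {i : ℕ} {x : A}
    (hx : Hg φ i x) (hn : NZL (core' φ P) 𝔞 x) : NZL P 𝔞 x := by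
  classical
  intro z hz
  have h1 : ∀ j, ∃ s, s ∉ P ∧ s * (φ z).coeff j ∈ 𝔞 := by
    intro j
    obtain ⟨s, hs, hs'⟩ := hn ((φ z).coeff j) (by
      have := ha _ hz (i + j)
      rwa [hx.coeff_mul, if_pos (by omega), Nat.add_sub_cancel_left] at this)
    obtain ⟨l, hl⟩ : ∃ l, (φ s).coeff l ∉ P := by
      by_contra! hcon
      exact hs (mem_core'.2 hcon)
    refine ⟨_, hl, ?_⟩
    have := ha _ hs' (j + l)
    rwa [mul_comm s, (h.hg z j).coeff_mul, if_pos (by omega), Nat.add_sub_cancel_left, mul_comm] at this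
  choose s hs hs' using h1
  refine ⟨∏ j ∈ Finset.range ((φ z).natDegree + 1), s j, ?_, ?_⟩
  · rw [hP.prod_mem_iff]; rintro ⟨j, -, hj⟩; exact hs j hj
  · conv => enter [2, 2]; rw [← h.sum z, eval_eq_sum_range]
    rw [Finset.mul_sum]
    refine sum_mem fun j hj => ?_
    rw [one_pow, mul_one, ← Finset.mul_prod_erase _ _ hj, mul_right_comm]
    exact Ideal.mul_mem_right _ _ (hs' j)

end NGrading
end CM4

section CM5
open Polynomial

variable {A : Type*} [CommRing A] {φ : A →+* A[X]}

lemma HI.sup_span {𝔞 : Ideal A} (ha : HI φ 𝔞) {i : ℕ} {x : A} (hx : Hg φ i x) :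
    HI φ (𝔞 ⊔ Ideal.span {x}) := by
  intro a haa j
  obtain ⟨b, hb, c, hc, rfl⟩ := Submodule.mem_sup.1 haa
  obtain ⟨w, rfl⟩ := Ideal.mem_span_singleton.1 hc
  rw [map_add, coeff_add, hx.coeff_mul]
  refine Submodule.add_mem_sup (ha b hb j) ?_
  split_ifs
  · exact Ideal.mul_mem_right _ _ (Ideal.mem_span_singleton_self _)
  · exact zero_mem _

namespace NGrading

/-- A homogeneous regular sequence of maximal length in the core of `P`. -/
lemma exists_RSL [IsNoetherianRing A] (h : NGrading φ) {P : Ideal A} (hP : P.IsPrime)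
    [hc : (core' φ P).IsPrime] (hCM : IsCMLocalRing (Localization.AtPrime (core' φ P)))
    {T : A} {d : ℕ} (hT : Hg φ d T) (hd : 0 < d) (hTP : T ∉ P) {n : ℕ}
    (hn : (n : ℕ∞) ≤ (core' φ P).height) :
    ∃ 𝔞, HI φ 𝔞 ∧ RSL (core' φ P) n 𝔞 ∧ RSL P n 𝔞 := by
  classical
  induction n with
  | zero => exact ⟨⊥, fun a ha i => by rw [Ideal.mem_bot] at ha ⊢; rw [ha, map_zero, coeff_zero], RSL.nil, RSL.nil⟩
  | succ n ih =>
    have hn' : (n : ℕ∞) < (core' φ P).height := lt_of_lt_of_le (by exact_mod_cast n.lt_succ_self) hn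
    obtain ⟨𝔞, h1, h2, h3⟩ := ih hn'.le
    have hna := not_ass_of_isCM_loc hCM h2 hn'
    have hfin : {q | IsAss 𝔞 q ∧ q ≤ core' φ P}.Finite := (finite_ass 𝔞).subset fun q hq => hq.1
    obtain ⟨i, x, hx, hxP, hxS⟩ := h.havoid hT hd (h.core_HI P) (hfin.toFinset) (by
      intro q hq
      obtain ⟨hq1, hq2⟩ := hfin.mem_toFinset.1 hq
      have e : core' φ q = q := le_antisymm (h.core_le q) (h.ass_HI h1 hq1)
      refine ⟨hq1.1, e ▸ h.core_HI q, fun hTq => hTP (h.core_le P (hq2 hTq)), fun hle => hna ?_⟩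
      rwa [le_antisymm hle hq2])
    have hnz : NZL (core' φ P) 𝔞 x := nzl_of_ass fun q hq hq' =>
      hxS q (hfin.mem_toFinset.2 ⟨hq, hq'⟩)
    exact ⟨_, h1.sup_span hx, h2.cons hxP hnz, h3.cons (h.core_le P hxP) (h.nzl hP h1 hx hnz)⟩

/-- All components of `f` outside an interval of length `n` lie in `Q`. -/
def Sp (φ : A →+* A[X]) (Q : Ideal A) (n : ℕ) (f : A) : Prop :=
  ∃ c, ∀ i, (φ f).coeff i ∉ Q → c ≤ i ∧ i < c + n

lemma exists_Sp (Q : Ideal A) (f : A) : ∃ n, Sp φ Q n f :=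
  ⟨(φ f).natDegree + 1, 0, fun i hi => ⟨Nat.zero_le _, by
    by_contra hcon
    exact hi (by rw [coeff_eq_zero_of_natDegree_lt (by omega)]; exact zero_mem _)⟩⟩

/-- `P` is, up to homogeneous denominators, generated by one element over its core. -/
lemma exists_gen (h : NGrading φ) {P : Ideal A} (hP : P.IsPrime) (hne : ¬ P ≤ core' φ P) :
    ∃ g ∈ P, g ∉ core' φ P ∧ ∀ f ∈ P, ∃ t, t ∉ P ∧ t * f ∈ core' φ P ⊔ Ideal.span {g} := by
  classical
  have hcp := core'_prime (φ := φ) hP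
  have hex : ∃ n, ∃ g ∈ P, g ∉ core' φ P ∧ Sp φ (core' φ P) n g := by
    obtain ⟨g, hg, hg'⟩ := SetLike.not_le_iff_exists.1 hne
    obtain ⟨n, hn⟩ := exists_Sp (φ := φ) (core' φ P) g
    exact ⟨n, g, hg, hg', hn⟩
  obtain ⟨g, hg, hg', c, hc⟩ := Nat.find_spec hex
  have hmin := fun m => Nat.find_min hex (m := m)
  set n := Nat.find hex
  have hn0 : n ≠ 0 := by
    intro e
    refine hg' (h.mem_of fun i => ?_)
    by_contra hi
    have := hc i hi
    omega
  have htop : (φ g).coeff (c + n - 1) ∉ core' φ P := by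
    intro htop
    refine hmin (n - 1) (by omega) ⟨g, hg, hg', c, fun i hi => ?_⟩
    have h1 := hc i hi
    have h2 : i ≠ c + n - 1 := by rintro rfl; exact hi htop
    omega
  have htop' : (φ g).coeff (c + n - 1) ∉ P := fun hm => htop (h.core_mem (h.hg _ _) hm)
  refine ⟨g, hg, hg', ?_⟩
  suffices key : ∀ n', ∀ f ∈ P, Sp φ (core' φ P) n' f → ∃ t, t ∉ P ∧ t * f ∈ core' φ P ⊔ Ideal.span {g} by
    intro f hf
    obtain ⟨n', hn'⟩ := exists_Sp (φ := φ) (core' φ P) f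
    exact key n' f hf hn'
  intro n'
  induction n' with
  | zero =>
    rintro f hf ⟨c', hc'⟩
    refine ⟨1, fun h1 => hP.ne_top ((Ideal.eq_top_iff_one _).2 h1), ?_⟩
    rw [one_mul]
    refine Ideal.mem_sup_left (h.mem_of fun i => ?_)
    by_contra hi
    have := hc' i hi
    omega
  | succ n' ih =>
    rintro f hf ⟨c', hc'⟩
    by_cases hfc : f ∈ core' φ P
    · exact ⟨1, fun h1 => hP.ne_top ((Ideal.eq_top_iff_one _).2 h1), Ideal.mem_sup_left (by rwa [one_mul])⟩
    have hnn : n ≤ n' + 1 := by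
      by_contra hlt
      exact hmin (n' + 1) (by omega) ⟨f, hf, hfc, c', hc'⟩
    set u := (φ g).coeff (c + n - 1) with hu
    set v := (φ f).coeff (c' + n') with hv
    have hu' : Hg φ _ u := h.hg g _
    have hv' : Hg φ _ v := h.hg f _
    obtain ⟨t, ht, ht'⟩ := ih (u * f - v * g) (P.sub_mem (P.mul_mem_left _ hf) (P.mul_mem_left _ hg))
      ⟨c + n - 1 + c', fun i hi => by
        rw [map_sub, coeff_sub, hu'.coeff_mul, hv'.coeff_mul] at hi
        by_contra hcon
        refine hi ?_
        by_cases e : i = (c + n - 1) + (c' + n')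
        · rw [if_pos (by omega), if_pos (by omega), show i - (c + n - 1) = c' + n' by omega,
            show i - (c' + n') = c + n - 1 by omega, ← hu, ← hv, mul_comm, sub_self]
          exact zero_mem _
        · refine sub_mem ?_ ?_
          · split_ifs
            · refine Ideal.mul_mem_left _ _ ?_
              by_contra hx
              have := hc' _ hx
              omega
            · exact zero_mem _
          · split_ifs
            · refine Ideal.mul_mem_left _ _ ?_
              by_contra hx
              have := hc _ hx
              omega
            · exact zero_mem _⟩
    refine ⟨t * u, fun hm => (hP.mem_or_mem hm).elim ht htop', ?_⟩
    have h1 : t * v * g ∈ core' φ P ⊔ Ideal.span {g} :=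
      Ideal.mem_sup_right (Ideal.mul_mem_left _ _ (Ideal.mem_span_singleton_self _))
    have := add_mem ht' h1
    rwa [show t * (u * f - v * g) + t * v * g = t * u * f by ring] at this

/-- A Noetherian graded ring all of whose homogeneous elements outside the prime `M` are units is
Cohen–Macaulay as soon as its localization at `M` is. -/
theorem isCMRing [IsNoetherianRing A] (h : NGrading φ) (M : Ideal A) [M.IsPrime]
    (hM : ∀ i x, Hg φ i x → x ∉ M → IsUnit x) (hCM : IsCMLocalRing (Localization.AtPrime M)) :
    IsCMRing A := by
  intro P hP
  have hcp := core'_prime (φ := φ) hP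
  have hcM : core' φ P ≤ M := by
    intro a ha
    refine h.mem_of fun i => ?_
    by_contra hi
    exact hP.ne_top (Ideal.eq_top_of_isUnit_mem _ (mem_core'.1 ha i) (hM i _ (h.hg a i) hi))
  have hc : IsCMLocalRing (Localization.AtPrime (core' φ P)) := isCM_loc_of_le hcM hCM
  by_cases hle : P ≤ core' φ P
  · have e : core' φ P = P := le_antisymm (h.core_le P) hle
    exact isCM_loc_of_le hle hc
  obtain ⟨g, hg, hg', hgen⟩ := h.exists_gen hP hle
  -- a homogeneous element of positive degree outside `P`
  obtain ⟨d, hd, hdP⟩ : ∃ d, 0 < d ∧ (φ g).coeff d ∉ P := by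
    by_contra! hcon
    have h1 : ∀ i, 0 < i → (φ g).coeff i ∈ core' φ P := fun i hi => h.core_mem (h.hg g i) (hcon i hi)
    have h2 : g - (φ g).coeff 0 ∈ core' φ P := by
      rw [mem_core']
      intro i
      rw [map_sub, coeff_sub, h.comp, coeff_monomial]
      split_ifs with e
      · rw [← e, sub_self]; exact zero_mem _
      · rw [sub_zero]; exact hcon i (by omega)
    have h3 : (φ g).coeff 0 ∈ P := by
      have := P.sub_mem hg (h.core_le P h2)
      rwa [sub_sub_cancel] at this
    have := add_mem h2 (h.core_mem (h.hg g 0) h3)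
    rw [sub_add_cancel] at this
    exact hg' this
  obtain ⟨n, hn⟩ := ENat.ne_top_iff_exists.1 (Ideal.height_ne_top (I := core' φ P) hcp.ne_top)
  obtain ⟨𝔞, h1, h2, h3⟩ := h.exists_RSL hP hc (h.hg g d) hd hdP hn.le
  -- the core is a minimal prime of `𝔞`
  have hmin : ∀ Q : Ideal A, Q.IsPrime → 𝔞 ≤ Q → Q ≤ core' φ P → Q = core' φ P := by
    intro Q hQ haQ hQP
    by_contra hne
    have e1 := h2.height_le haQ hQP
    have e2 := Ideal.height_add_one_le_of_lt_of_isPrime (lt_of_le_of_ne hQP hne)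
    rw [← hn] at e2
    have e3 : ((n + 1 : ℕ) : ℕ∞) ≤ n := by push_cast; exact (add_le_add_left e1 1).trans e2
    have : n + 1 ≤ n := by exact_mod_cast e3
    omega
  have h4 : RSL P (n + 1) (𝔞 ⊔ Ideal.span {g}) := by
    refine h3.cons hg (nzl_of_ass fun p hp hpP => ?_)
    have e : p ≤ core' φ P := (h.ass_HI h1 hp).trans fun a ha => mem_core'.2 fun i => hpP (mem_core'.1 ha i)
    rw [hmin p hp.1 hp.le e]
    exact hg'
  refine isCM_loc_of_RSL h4 (h4.height_le_of_minimal ⟨⟨hP, h4.le⟩, ?_⟩)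
  rintro Q ⟨hQ, haQ⟩ hQP f hf
  have e : core' φ Q = core' φ P := hmin _ (core'_prime hQ) (h.le_core h1 (le_sup_left.trans haQ))
    fun a ha => mem_core'.2 fun i => hQP (mem_core'.1 ha i)
  obtain ⟨t, ht, htf⟩ := hgen f hf
  have : t * f ∈ Q := by
    refine (sup_le ?_ (le_sup_right.trans haQ)) htf
    rw [← e]; exact h.core_le Q
  exact (hQ.mem_or_mem this).resolve_left fun htQ => ht (hQP htQ)

end NGrading
end CM5

/-! ### The coefficients of the elements of the bigraded Rees rings -/

section G1
open IsLocalRing Polynomial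

variable {R : Type*} [CommRing R]

lemma coeff_sg {p q : ℕ × ℕ} {c : R} [Decidable (q = p)] :
    (AddMonoidAlgebra.single q c : Amb2 R).coeff p = if q = p then c else 0 := Finsupp.single_apply

/-- The grading of `R[t₁, t₂]` given by a weight `w`, as a homomorphism `f ↦ ∑ fᵢ Xⁱ`. -/
noncomputable def wgt (R : Type*) [CommRing R] (w : ℕ × ℕ →+ ℕ) : Amb2 R →+* (Amb2 R)[X] :=
  (AddMonoidAlgebra.lift R ((Amb2 R)[X]) (ℕ × ℕ)
    { toFun := fun p => monomial (w p.toAdd) (AddMonoidAlgebra.single p.toAdd 1)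
      map_one' := by
        rw [toAdd_one, map_zero]; rfl
      map_mul' := fun p q => by
        rw [monomial_mul_monomial, AddMonoidAlgebra.single_mul_single, mul_one, toAdd_mul, map_add] }).toRingHom

lemma wgt_single (w : ℕ × ℕ →+ ℕ) (p : ℕ × ℕ) (c : R) :
    wgt R w (AddMonoidAlgebra.single p c) = monomial (w p) (AddMonoidAlgebra.single p c) := by
  change AddMonoidAlgebra.lift R ((Amb2 R)[X]) (ℕ × ℕ) _ _ = _
  rw [AddMonoidAlgebra.lift_single]
  change c • monomial (w p) (AddMonoidAlgebra.single p 1) = _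
  rw [smul_monomial, AddMonoidAlgebra.smul_single, smul_eq_mul, mul_one]

lemma wgt_coeff (w : ℕ × ℕ →+ ℕ) (f : Amb2 R) (i : ℕ) (p : ℕ × ℕ) :
    ((wgt R w f).coeff i).coeff p = if w p = i then f.coeff p else 0 := by
  classical
  induction f using AddMonoidAlgebra.induction_linear with
  | zero => simp
  | add f g hf hg =>
    rw [map_add, Polynomial.coeff_add, AddMonoidAlgebra.coeff_add, Finsupp.add_apply, hf, hg, AddMonoidAlgebra.coeff_add,
      Finsupp.add_apply]
    split_ifs <;> simp
  | single q c =>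
    rw [wgt_single, coeff_monomial]
    by_cases hq : q = p
    · subst hq; split_ifs <;> simp
    · split_ifs <;> simp [hq]

lemma exists_ringHom_lift {S U V : Type*} [CommRing S] [CommRing U] [CommRing V] (i : V →+* U)
    (hi : Function.Injective i) (g : S →+* U) (h : ∀ s, ∃ v, i v = g s) :
    ∃ ψ : S →+* V, ∀ s, i (ψ s) = g s := by
  choose ψ hψ using h
  have h1 : ψ 1 = 1 := hi (by rw [hψ, map_one, map_one])
  have h2 : ∀ x y, ψ (x * y) = ψ x * ψ y := fun x y => hi (by simp only [hψ, map_mul])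
  have h3 : ∀ x y, ψ (x + y) = ψ x + ψ y := fun x y => hi (by simp only [hψ, map_add])
  exact ⟨RingHom.mk' ⟨⟨ψ, h1⟩, h2⟩ h3, hψ⟩

/-- A homomorphism `T → T[X]` preserving a subalgebra `S` restricts to `S → S[X]`. -/
lemma exists_restrict {T : Type*} [CommRing T] [Algebra R T] (S : Subalgebra R T) (φ : T →+* T[X])
    (h : ∀ s ∈ S, ∀ i, (φ s).coeff i ∈ S) :
    ∃ ψ : S →+* S[X], ∀ s : S, ∀ i, (((ψ s).coeff i : S) : T) = (φ s).coeff i := by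
  obtain ⟨ψ, hψ⟩ := exists_ringHom_lift (mapRingHom (algebraMap S T))
    (by rw [coe_mapRingHom]; exact map_injective _ Subtype.val_injective) (φ.comp (algebraMap S T)) (by
      intro s
      have : φ s ∈ lifts (algebraMap S T) := by
        rw [lifts_iff_coeff_lifts]
        exact fun n => ⟨⟨_, h s s.2 n⟩, rfl⟩
      obtain ⟨q, hq⟩ := (mem_lifts _).1 this
      exact ⟨q, hq⟩)
  refine ⟨ψ, fun s i => ?_⟩
  have := congrArg (fun q => q.coeff i) (hψ s)
  simp only [coe_mapRingHom, coeff_map] at this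
  exact this

attribute [local instance] Polynomial.algebra in
/-- The integral closure of a graded subalgebra is graded. -/
lemma integral_coeff {T : Type*} [CommRing T] [Algebra R T] (S : Subalgebra R T) (φ : T →+* T[X])
    (h : ∀ s ∈ S, ∀ i, (φ s).coeff i ∈ S) {f : T} (hf : IsIntegral S f) (i : ℕ) :
    IsIntegral S ((φ f).coeff i) := by
  obtain ⟨ψ, hψ⟩ := exists_restrict S φ h
  have h1 : IsIntegral S[X] (φ f) := hf.map_of_comp_eq ψ φ (by
    refine RingHom.ext fun s => Polynomial.ext fun n => ?_
    rw [RingHom.comp_apply, Polynomial.algebraMap_def, coe_mapRingHom, coeff_map]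
    exact hψ s n)
  exact Polynomial.isIntegral_iff_isIntegral_coeff.1 h1 i

lemma coeff_mem_mul {G G' G'' : ℕ × ℕ → Ideal R} 
    (h : ∀ p q, ∀ x ∈ G p, ∀ y ∈ G' q, x * y ∈ G'' (p + q)) {f g : Amb2 R} 
    (hf : ∀ p, f.coeff p ∈ G p) (hg : ∀ p, g.coeff p ∈ G' p) (p : ℕ × ℕ) : (f * g).coeff p ∈ G'' p := by
  classical
  rw [AddMonoidAlgebra.coeff_mul, Finsupp.sum]
  refine sum_mem fun q _ => sum_mem fun q' _ => ?_
  dsimp only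
  split_ifs with hq
  · rw [← hq]; exact h _ _ _ (hf q) _ (hg q')
  · exact zero_mem _

lemma mem_of_single {S : Subalgebra R (Amb2 R)} {f : Amb2 R}
    (h : ∀ p, AddMonoidAlgebra.single p (f.coeff p) ∈ S) : f ∈ S := by
  rw [← AddMonoidAlgebra.sum_coeff_single f]
  exact sum_mem fun p _ => h p

lemma mem_rees2 {I J : Ideal R} {f : Amb2 R} :
    f ∈ rees2 I J ↔ ∀ p : ℕ × ℕ, f.coeff p ∈ I ^ p.1 * J ^ p.2 := by
  classical
  constructor
  · intro hf
    induction hf using Algebra.adjoin_induction with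
    | mem x hx =>
      intro p
      rcases hx with ⟨a, ha, rfl⟩ | ⟨a, ha, rfl⟩
      · rw [coeff_sg]
        split_ifs with h
        · rw [← h]; simpa using ha
        · exact zero_mem _
      · rw [coeff_sg]
        split_ifs with h
        · rw [← h]; simpa using ha
        · exact zero_mem _
    | algebraMap x =>
      intro p
      change (AddMonoidAlgebra.single (0 : ℕ × ℕ) x).coeff p ∈ _
      rw [coeff_sg]
      split_ifs with h
      · rw [← h]; simp
      · exact zero_mem _
    | add x y _ _ hx hy => exact fun p => add_mem (hx p) (hy p)
    | mul x y _ _ hx hy =>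
      refine coeff_mem_mul (G := fun p => I ^ p.1 * J ^ p.2) (G' := fun p => I ^ p.1 * J ^ p.2)
        (G'' := fun p => I ^ p.1 * J ^ p.2) ?_ hx hy
      intro p q u hu v hv
      have := Ideal.mul_mem_mul hu hv
      rwa [show I ^ p.1 * J ^ p.2 * (I ^ q.1 * J ^ q.2) = I ^ (p + q).1 * J ^ (p + q).2 by
        rw [Prod.fst_add, Prod.snd_add]; ring] at this
  · intro hf
    refine mem_of_single fun p => ?_
    have h1 : ∀ n, ∀ x ∈ I ^ n, AddMonoidAlgebra.single (n, 0) x ∈ rees2 I J := by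
      intro n
      induction n with
      | zero => exact fun x _ => (rees2 I J).algebraMap_mem x
      | succ n ih =>
        intro x hx
        rw [pow_succ] at hx
        refine Submodule.mul_induction_on hx ?_ ?_
        · intro u hu v hv
          have := mul_mem (ih u hu) (Algebra.subset_adjoin (Or.inl ⟨v, hv, rfl⟩) : _ ∈ rees2 I J)
          rwa [AddMonoidAlgebra.single_mul_single] at this
        · intro u v hu hv
          rw [AddMonoidAlgebra.single_add]; exact add_mem hu hv
    have h2 : ∀ n, ∀ x ∈ J ^ n, AddMonoidAlgebra.single (0, n) x ∈ rees2 I J := by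
      intro n
      induction n with
      | zero => exact fun x _ => (rees2 I J).algebraMap_mem x
      | succ n ih =>
        intro x hx
        rw [pow_succ] at hx
        refine Submodule.mul_induction_on hx ?_ ?_
        · intro u hu v hv
          have := mul_mem (ih u hu) (Algebra.subset_adjoin (Or.inr ⟨v, hv, rfl⟩) : _ ∈ rees2 I J)
          rwa [AddMonoidAlgebra.single_mul_single] at this
        · intro u v hu hv
          rw [AddMonoidAlgebra.single_add]; exact add_mem hu hv
    refine Submodule.mul_induction_on (hf p) ?_ ?_
    · intro u hu v hv
      have := mul_mem (h1 _ u hu) (h2 _ v hv)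
      rw [AddMonoidAlgebra.single_mul_single] at this
      convert this using 2
      simp
    · intro u v hu hv
      rw [AddMonoidAlgebra.single_add]; exact add_mem hu hv

/-- The coefficients of an element integral over `𝓡(I, J)`, for monomials. -/
lemma intCl_of_integral {I J : Ideal R} {p : ℕ × ℕ} {c : R}
    (h : IsIntegral (rees2 I J) (AddMonoidAlgebra.single p c : Amb2 R)) :
    c ∈ intCl (I ^ p.1 * J ^ p.2) := by
  classical
  by_cases h1 : (1 : rees2 I J) = 0
  · have : Subsingleton (rees2 I J) := subsingleton_of_zero_eq_one h1.symm
    have h2 : c = 0 := by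
      have h3 := (rees2 I J).algebraMap_mem c
      have h4 : (⟨_, h3⟩ : rees2 I J) = 0 := Subsingleton.elim _ _
      have h5 := congrArg (fun f : rees2 I J => (f : Amb2 R).coeff 0) h4
      have h6 : (algebraMap R (Amb2 R) c).coeff 0 = c := by
        change (AddMonoidAlgebra.single (0 : ℕ × ℕ) c : Amb2 R).coeff 0 = c
        rw [coeff_sg, if_pos rfl]
      rw [← h6]; exact h5
    rw [h2]; exact zero_mem _
  have : Nontrivial (rees2 I J) := ⟨1, 0, h1⟩
  obtain ⟨q, hq, he, hpos⟩ : ∃ q : (rees2 I J)[X], q.Monic ∧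
      q.eval₂ (algebraMap _ _) (AddMonoidAlgebra.single p c : Amb2 R) = 0 ∧ 0 < q.natDegree := by
    obtain ⟨q, hq, he⟩ := h
    refine ⟨q * X, hq.mul monic_X, by rw [eval₂_mul_X, he, zero_mul], ?_⟩
    rw [hq.natDegree_mul monic_X, natDegree_X]; omega
  refine Ideal.subset_span ⟨q.natDegree, hpos, fun i =>
    (q.coeff (q.natDegree - i) : Amb2 R).coeff (i • p), ?_, ?_⟩
  · intro i
    have := mem_rees2.1 (q.coeff (q.natDegree - i)).2 (i • p)
    convert this using 1
    simp only [Prod.smul_fst, Prod.smul_snd, smul_eq_mul]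
    rw [mul_pow, ← pow_mul, ← pow_mul, mul_comm p.1, mul_comm p.2]
  · have key : ∀ k ≤ q.natDegree, (((q.coeff k : rees2 I J) : Amb2 R) * (AddMonoidAlgebra.single p c) ^ k).coeff
        (q.natDegree • p) = (q.coeff k : Amb2 R).coeff ((q.natDegree - k) • p) * c ^ k := by
      intro k hk
      rw [AddMonoidAlgebra.single_pow]
      refine AddMonoidAlgebra.coeff_mul_single_eq_coeff_mul _ fun m _ => ?_
      have e : q.natDegree • p = (q.natDegree - k) • p + k • p := by rw [← add_smul]; congr 1; omega
      rw [e, add_left_inj]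
    rw [eval₂_eq_sum_range] at he
    have h2 : (∑ k ∈ Finset.range (q.natDegree + 1), (q.coeff k : Amb2 R).coeff ((q.natDegree - k) • p) * c ^ k) = 0 := by
      have h3 := congrArg (fun f : Amb2 R => f.coeff (q.natDegree • p)) he
      simp only [AddMonoidAlgebra.coeff_sum, Finsupp.finsetSum_apply] at h3
      refine (Finset.sum_congr rfl fun k hk => ?_).trans h3
      exact (key k (by simpa [Nat.lt_succ_iff] using hk)).symm
    rw [Finset.sum_range_succ, ← Finset.sum_range_reflect, add_comm, hq.coeff_natDegree, Nat.sub_self, zero_smul] at h2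
    have e1 : ((1 : rees2 I J) : Amb2 R).coeff 0 = 1 := by
      change (AddMonoidAlgebra.single (0 : ℕ × ℕ) 1 : Amb2 R).coeff 0 = 1
      rw [coeff_sg, if_pos rfl]
    rw [e1, one_mul] at h2
    rw [← h2]
    congr 1
    refine Finset.sum_congr rfl fun i hi => ?_
    have := Finset.mem_range.1 hi
    rw [show q.natDegree - 1 - i = q.natDegree - (i + 1) by omega,
      show q.natDegree - (q.natDegree - (i + 1)) = i + 1 by omega]

lemma integral_of_intCl [IsNoetherianRing R] {I J : Ideal R} {p : ℕ × ℕ} {c : R} (h : c ∈ intCl (I ^ p.1 * J ^ p.2)) :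
    IsIntegral (rees2 I J) (AddMonoidAlgebra.single p c : Amb2 R) := by
  classical
  obtain ⟨n, hn, d, hd, he⟩ := mem_intCl.1 h
  have hm : ∀ i, (AddMonoidAlgebra.single (i • p) (d i) : Amb2 R) ∈ rees2 I J := by
    intro i
    rw [mem_rees2]
    intro q
    rw [coeff_sg]
    split_ifs with hq
    · rw [← hq]
      convert hd i using 1
      simp only [Prod.smul_fst, Prod.smul_snd, smul_eq_mul]
      rw [mul_pow, ← pow_mul, ← pow_mul, mul_comm p.1, mul_comm p.2]
    · exact zero_mem _
  refine ⟨X ^ n + ∑ i ∈ Finset.range n, C (⟨_, hm (i + 1)⟩ : rees2 I J) * X ^ (n - (i + 1)), ?_, ?_⟩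
  · refine monic_X_pow_add ?_
    refine (degree_sum_le _ _).trans_lt ?_
    refine (Finset.sup_lt_iff (WithBot.bot_lt_coe n)).2 fun i hi => ?_
    refine (degree_C_mul_X_pow_le _ _).trans_lt ?_
    have := Finset.mem_range.1 hi
    exact WithBot.coe_lt_coe.2 (by omega : n - (i + 1) < n)
  · rw [eval₂_add, eval₂_X_pow, eval₂_finsetSum]
    have e1 : ∀ i ∈ Finset.range n, (C (⟨_, hm (i + 1)⟩ : rees2 I J) * X ^ (n - (i + 1))).eval₂
        (algebraMap (rees2 I J) (Amb2 R)) (AddMonoidAlgebra.single p c) = 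
        AddMonoidAlgebra.single (n • p) (d (i + 1) * c ^ (n - (i + 1))) := by
      intro i hi
      rw [eval₂_mul, eval₂_C, eval₂_X_pow, AddMonoidAlgebra.single_pow]
      change AddMonoidAlgebra.single _ _ * _ = _
      rw [AddMonoidAlgebra.single_mul_single, ← add_smul]
      have := Finset.mem_range.1 hi
      rw [show i + 1 + (n - (i + 1)) = n by omega]
    rw [Finset.sum_congr rfl e1, AddMonoidAlgebra.single_pow]
    refine AddMonoidAlgebra.ext (Finsupp.ext fun q => ?_)
    rw [AddMonoidAlgebra.coeff_add, AddMonoidAlgebra.coeff_sum, Finsupp.add_apply, Finsupp.finsetSum_apply]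
    simp only [coeff_sg]
    split_ifs
    · exact he
    · simp

lemma rees2_wgt {I J : Ideal R} (w : ℕ × ℕ →+ ℕ) : ∀ s ∈ rees2 I J, ∀ i, (wgt R w s).coeff i ∈ rees2 I J := by
  intro s hs i
  rw [mem_rees2] at hs ⊢
  intro p
  rw [wgt_coeff]
  split_ifs
  exacts [hs p, zero_mem _]

/-- `\overline{𝓡}(I, J)` is `⊕ F(r, s) t₁^r t₂^s`. -/
lemma mem_reesBar2 [IsNoetherianRing R] {I J : Ideal R} {f : Amb2 R} :
    f ∈ reesBar2 I J ↔ ∀ p : ℕ × ℕ, f.coeff p ∈ intCl (I ^ p.1 * J ^ p.2) := by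
  classical
  constructor
  · intro hf p
    have h1 : IsIntegral (rees2 I J) f := hf
    have h2 := integral_coeff _ _ (rees2_wgt (AddMonoidHom.snd ℕ ℕ)) (integral_coeff _ _ (rees2_wgt (AddMonoidHom.fst ℕ ℕ)) h1 p.1) p.2
    refine intCl_of_integral (p := p) ?_
    suffices e : (AddMonoidAlgebra.single p (f.coeff p) : Amb2 R) =
        ((wgt R (AddMonoidHom.snd ℕ ℕ)) (((wgt R (AddMonoidHom.fst ℕ ℕ)) f).coeff p.1)).coeff p.2 by
      rw [e]; exact h2
    refine AddMonoidAlgebra.ext (Finsupp.ext fun q => ?_)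
    rw [wgt_coeff, wgt_coeff, coeff_sg]
    simp only [AddMonoidHom.coe_fst, AddMonoidHom.coe_snd]
    by_cases hq : p = q
    · subst hq; simp
    · rw [if_neg hq]
      by_cases h3 : q.2 = p.2
      · by_cases h4 : q.1 = p.1
        · exact absurd (Prod.ext h4.symm h3.symm) hq
        · simp [h4]
      · simp [h3]
  · exact fun hf => mem_of_single fun p => integral_of_intCl (hf p)

end G1

/-! ### The Rees ring of the normal filtration is Noetherian -/

section G2
open IsLocalRing Polynomial

variable {R : Type*} [CommRing R]

/-- The Rees algebra is generated by the finitely many `a t₁`, `b t₂`. -/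
lemma rees2_noeth [IsNoetherianRing R] (I J : Ideal R) : IsNoetherianRing (rees2 I J) := by
  obtain ⟨S, hS⟩ : I.FG := IsNoetherian.noetherian I
  obtain ⟨U, hU⟩ : J.FG := IsNoetherian.noetherian J
  have hfin : ((fun a => (AddMonoidAlgebra.single (1, 0) a : Amb2 R)) '' S ∪
      (fun a => (AddMonoidAlgebra.single (0, 1) a : Amb2 R)) '' U).Finite :=
    (S.finite_toSet.image _).union (U.finite_toSet.image _)
  have e : rees2 I J = Algebra.adjoin R ((fun a => (AddMonoidAlgebra.single (1, 0) a : Amb2 R)) '' S ∪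
      (fun a => (AddMonoidAlgebra.single (0, 1) a : Amb2 R)) '' U) := by
    have key : ∀ (V : Subalgebra R (Amb2 R)) (p : ℕ × ℕ) (W : Set R) (K : Ideal R), Ideal.span W = K →
        (∀ a ∈ W, AddMonoidAlgebra.single p a ∈ V) → ∀ a ∈ K, AddMonoidAlgebra.single p a ∈ V := by
      rintro V p W K rfl hW a ha
      induction ha using Submodule.span_induction with
      | mem x hx => exact hW x hx
      | zero => rw [AddMonoidAlgebra.single_zero]; exact zero_mem _
      | add x y _ _ hx hy => rw [AddMonoidAlgebra.single_add]; exact add_mem hx hy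
      | smul c x _ hx =>
        rw [← AddMonoidAlgebra.smul_single]
        exact V.smul_mem hx c
    refine le_antisymm (Algebra.adjoin_le ?_) (Algebra.adjoin_mono ?_)
    · rintro x (⟨a, ha, rfl⟩ | ⟨a, ha, rfl⟩)
      · exact key _ _ _ _ hS (fun a ha => Algebra.subset_adjoin (Or.inl ⟨a, ha, rfl⟩)) a ha
      · exact key _ _ _ _ hU (fun a ha => Algebra.subset_adjoin (Or.inr ⟨a, ha, rfl⟩)) a ha
    · rintro x (⟨a, ha, rfl⟩ | ⟨a, ha, rfl⟩)
      · exact Or.inl ⟨a, hS ▸ Ideal.subset_span ha, rfl⟩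
      · exact Or.inr ⟨a, hU ▸ Ideal.subset_span ha, rfl⟩
  have hfg : (rees2 I J).FG := Subalgebra.fg_def.2 ⟨_, hfin, e.symm⟩
  have : Algebra.FiniteType R (rees2 I J) := (Subalgebra.fg_iff_finiteType _).1 hfg
  exact Algebra.FiniteType.isNoetherianRing R _

/-- An extension ring with a regular conductor element is Noetherian. -/
lemma noeth_of_conductor {S T : Type*} [CommRing S] [CommRing T] [Algebra S T] [IsNoetherianRing S]
    (g : T →ₗ[S] S) (hg : Function.Injective g) : IsNoetherianRing T := by
  have : IsNoetherian S T := isNoetherian_of_injective g hg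
  exact isNoetherian_of_tower S this

/-- Multiplication by `c` embeds the integral closure into the Noetherian Rees ring. -/
lemma reesBar2_noeth [IsNoetherianRing R] {I J : Ideal R} {c : R} (hc : c ∈ nonZeroDivisors R)
    (h : ∀ r s, ∀ x ∈ Fb I J r s, c * x ∈ I ^ r * J ^ s) : IsNoetherianRing (reesBar2 I J) := by
  have := rees2_noeth I J
  have key : ∀ f : integralClosure (rees2 I J) (Amb2 R), c • (f : Amb2 R) ∈ rees2 I J := by
    intro f
    rw [mem_rees2]
    intro p
    have := mem_reesBar2.1 (show (f : Amb2 R) ∈ reesBar2 I J from f.2) p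
    rw [AddMonoidAlgebra.coeff_smul, Finsupp.smul_apply]
    exact h _ _ _ this
  let g : integralClosure (rees2 I J) (Amb2 R) →ₗ[rees2 I J] rees2 I J :=
    { toFun := fun f => ⟨_, key f⟩
      map_add' := fun f f' => Subtype.ext (smul_add c (f : Amb2 R) f')
      map_smul' := fun a f => Subtype.ext (mul_smul_comm c (a : Amb2 R) (f : Amb2 R)).symm }
  refine noeth_of_conductor (T := integralClosure (rees2 I J) (Amb2 R)) g ?_
  intro f f' hff
  refine Subtype.ext (AddMonoidAlgebra.ext (Finsupp.ext fun p => ?_))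
  have h1 := congrArg (fun a : rees2 I J => (a : Amb2 R).coeff p) hff
  change c * (f : Amb2 R).coeff p = c * (f' : Amb2 R).coeff p at h1
  exact (mul_cancel_left_mem_nonZeroDivisors hc).1 h1

/-- The grading of `\overline{𝓡}(I, J)` by total degree. -/
lemma exists_grading [IsNoetherianRing R] (I J : Ideal R) :
    ∃ φ : reesBar2 I J →+* (reesBar2 I J)[X], NGrading φ ∧ ∀ f i p,
      (((φ f).coeff i : reesBar2 I J) : Amb2 R).coeff p = if p.1 + p.2 = i then (f : Amb2 R).coeff p else 0 := by
  obtain ⟨ψ, hψ⟩ := exists_restrict (reesBar2 I J) (wgt R (AddMonoidHom.fst ℕ ℕ + AddMonoidHom.snd ℕ ℕ)) (by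
    intro f hf i
    rw [mem_reesBar2] at hf ⊢
    intro p
    rw [wgt_coeff]
    split_ifs
    exacts [hf p, zero_mem _])
  have hc : ∀ f i p, (((ψ f).coeff i : reesBar2 I J) : Amb2 R).coeff p =
      if p.1 + p.2 = i then (f : Amb2 R).coeff p else 0 := by
    intro f i p
    rw [hψ, wgt_coeff]
    rfl
  refine ⟨ψ, ⟨fun f => ?_, fun f i => ?_⟩, hc⟩
  · refine Subtype.ext (AddMonoidAlgebra.ext (Finsupp.ext fun p => ?_))
    rw [eval_eq_sum_range, AddSubmonoidClass.coe_finsetSum, AddMonoidAlgebra.coeff_sum, Finsupp.finsetSum_apply]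
    simp only [one_pow, mul_one, hc]
    rw [Finset.sum_ite_eq]
    by_cases h : p.1 + p.2 ∈ Finset.range ((ψ f).natDegree + 1)
    · rw [if_pos h]
    · rw [if_neg h]
      have h1 := hc f (p.1 + p.2) p
      rw [if_pos rfl, coeff_eq_zero_of_natDegree_lt (by rw [Finset.mem_range] at h; omega)] at h1
      rw [← h1]; rfl
  · refine Polynomial.ext fun j => Subtype.ext (AddMonoidAlgebra.ext (Finsupp.ext fun p => ?_))
    rw [hc, hc, coeff_monomial]
    by_cases h1 : p.1 + p.2 = j
    · by_cases h2 : i = j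
      · rw [if_pos h1, if_pos (h1.trans h2.symm), if_pos h2, hc, if_pos (h1.trans h2.symm)]
      · rw [if_pos h1, if_neg (fun h => h2 (h.symm.trans h1)), if_neg h2]; rfl
    · rw [if_neg h1]
      by_cases h2 : i = j
      · rw [if_pos h2, hc, if_neg (fun h => h1 (h.trans h2))]
      · rw [if_neg h2]; rfl

end G2

/-! ### Bigraded rings with components given by ideals -/

section G3
open IsLocalRing

variable {R : Type*} [CommRing R] {A : Type*} [CommRing A]

/-- `f` is the monomial `x t₁^r t₂^s`. -/
def Mono (co : ℕ → ℕ → A →+ R) (f : A) (r s : ℕ) (x : R) : Prop :=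
  ∀ r' s', co r' s' f = if r' = r ∧ s' = s then x else 0

lemma Mono.swap {co : ℕ → ℕ → A →+ R} {f : A} {r s : ℕ} {x : R} (h : Mono co f r s x) :
    Mono (fun r s => co s r) f s r x := fun r' s' => (h s' r').trans (if_congr and_comm rfl rfl)

/-- `A` is the bigraded ring `⊕ F(r, s) t₁^r t₂^s`, with coefficient maps `co r s`. -/
structure BG (F : ℕ → ℕ → Ideal R) (co : ℕ → ℕ → A →+ R) : Prop where
  mem : ∀ r s f, co r s f ∈ F r s
  ext : ∀ f g, (∀ r s, co r s f = co r s g) → f = g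
  ex : ∀ r s, ∀ x ∈ F r s, ∃ f, Mono co f r s x
  mul : ∀ {f r s x}, Mono co f r s x → ∀ g r' s', co (r' + r) (s' + s) (f * g) = x * co r' s' g
  mul0 : ∀ {f r s x}, Mono co f r s x → ∀ g r' s', r' < r ∨ s' < s → co r' s' (f * g) = 0
  bdd : ∀ f, ∃ N, ∀ r s, N ≤ r ∨ N ≤ s → co r s f = 0
  one00 : co 0 0 1 = 1
  mul00 : ∀ f g, co 0 0 (f * g) = co 0 0 f * co 0 0 g

namespace BG
variable {F : ℕ → ℕ → Ideal R} {co : ℕ → ℕ → A →+ R}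

lemma swap (B : BG F co) : BG (fun r s => F s r) (fun r s => co s r) where
  mem := fun r s f => B.mem s r f
  ext := fun f g h => B.ext f g fun r s => h s r
  ex := fun r s x hx => by
    obtain ⟨f, hf⟩ := B.ex s r x hx
    exact ⟨f, hf.swap⟩
  mul := fun {f r s x} hf g r' s' => B.mul (r := s) (s := r) (x := x) hf.swap g s' r'
  mul0 := fun {f r s x} hf g r' s' h =>
    B.mul0 (r := s) (s := r) (x := x) hf.swap g s' r' h.symm
  bdd := fun f => by
    obtain ⟨N, hN⟩ := B.bdd f
    exact ⟨N, fun r s h => hN s r h.symm⟩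
  one00 := B.one00
  mul00 := B.mul00

end BG

lemma Mono.self {co : ℕ → ℕ → A →+ R} {f : A} {r s : ℕ} {x : R} (h : Mono co f r s x) :
    co r s f = x := by rw [h, if_pos ⟨rfl, rfl⟩]

lemma Mono.ne {co : ℕ → ℕ → A →+ R} {f : A} {r s r' s' : ℕ} {x : R} (h : Mono co f r s x)
    (hn : r' ≠ r ∨ s' ≠ s) : co r' s' f = 0 := by
  rw [h, if_neg]; omega

lemma Mono.add {co : ℕ → ℕ → A →+ R} {f g : A} {r s : ℕ} {x y : R} (h : Mono co f r s x)
    (h' : Mono co g r s y) : Mono co (f + g) r s (x + y) := fun r' s' => by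
  rw [map_add, h, h']; split_ifs <;> simp

lemma Mono.sub {co : ℕ → ℕ → A →+ R} {f g : A} {r s : ℕ} {x y : R} (h : Mono co f r s x)
    (h' : Mono co g r s y) : Mono co (f - g) r s (x - y) := fun r' s' => by
  rw [map_sub, h, h']; split_ifs <;> simp

namespace BG
variable {F : ℕ → ℕ → Ideal R} {co : ℕ → ℕ → A →+ R}

lemma mono_mul (B : BG F co) {f g : A} {r s r' s' : ℕ} {x y : R} (hf : Mono co f r s x)
    (hg : Mono co g r' s' y) : Mono co (f * g) (r' + r) (s' + s) (x * y) := by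
  intro u v
  by_cases h : u < r ∨ v < s
  · rw [B.mul0 hf _ _ _ h, if_neg (by omega)]
  · obtain ⟨u, rfl⟩ : ∃ u', u = u' + r := ⟨u - r, by omega⟩
    obtain ⟨v, rfl⟩ : ∃ v', v = v' + s := ⟨v - s, by omega⟩
    rw [B.mul hf, hg]
    by_cases h : u = r' ∧ v = s'
    · rw [if_pos h, if_pos (by omega)]
    · rw [if_neg h, if_neg (by omega), mul_zero]

lemma mono_eq (B : BG F co) {f g : A} {r s : ℕ} {x : R} (hf : Mono co f r s x) (hg : Mono co g r s x) :
    f = g := B.ext _ _ fun r' s' => by rw [hf, hg]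

lemma mono_zero (B : BG F co) {f : A} {r s : ℕ} (hf : Mono co f r s 0) : f = 0 :=
  B.ext _ _ fun r' s' => by rw [hf, map_zero, ite_self]

/-- Membership in an ideal can be tested on bihomogeneous components. -/
lemma mem_of (B : BG F co) {𝔞 : Ideal A} {f : A} (h : ∀ r s, ∃ g ∈ 𝔞, Mono co g r s (co r s f)) : f ∈ 𝔞 := by
  choose g hg hm using h
  obtain ⟨N, hN⟩ := B.bdd f
  have e : f = ∑ r ∈ Finset.range N, ∑ s ∈ Finset.range N, g r s := by
    refine B.ext _ _ fun r s => ?_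
    rw [map_sum]
    simp only [map_sum, hm _ _ r s]
    rw [Finset.sum_eq_single r, Finset.sum_eq_single s]
    · rw [if_pos ⟨rfl, rfl⟩]
    · intro u _ hu; rw [if_neg (by omega)]
    · intro hs
      rw [if_pos ⟨rfl, rfl⟩, hN r s (Or.inr (by simpa using hs))]
    · intro u _ hu
      exact Finset.sum_eq_zero fun v _ => by rw [if_neg (by omega)]
    · intro hr
      refine Finset.sum_eq_zero fun v _ => ?_
      split_ifs with h
      · rw [h.2.symm, hN r s (Or.inl (by simpa using hr))]
      · rfl
  rw [e]
  exact sum_mem fun r _ => sum_mem fun s _ => hg r s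

/-- The constant coefficient. -/
def c0 (B : BG F co) : A →+* R where
  toFun := co 0 0
  map_one' := B.one00
  map_mul' := B.mul00
  map_zero' := map_zero _
  map_add' := map_add _

lemma c0_surj (B : BG F co) (h0 : F 0 0 = ⊤) : Function.Surjective B.c0 := fun x => by
  obtain ⟨f, hf⟩ := B.ex 0 0 x (h0 ▸ Submodule.mem_top)
  exact ⟨f, hf.self⟩

/-- The ideal of the elements with constant coefficient in `p`. -/
def Pl (B : BG F co) (p : Ideal R) : Ideal A := p.comap B.c0

lemma mem_Pl (B : BG F co) {p : Ideal R} {f : A} : f ∈ B.Pl p ↔ co 0 0 f ∈ p := Iff.rfl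

lemma Pl_lt (B : BG F co) (h0 : F 0 0 = ⊤) {p q : Ideal R} (h : p < q) : B.Pl p < B.Pl q := by
  refine lt_of_le_not_ge (Ideal.comap_mono h.le) fun h1 => h.not_ge fun x hx => ?_
  obtain ⟨f, rfl⟩ := B.c0_surj h0 x
  exact h1 (show f ∈ B.Pl q from hx)

lemma eq_one (B : BG F co) {f : A} (hf : Mono co f 0 0 1) : f = 1 := by
  have : f * 1 = 1 := B.ext _ _ fun r s => by
    rw [show co r s (f * 1) = co (r + 0) (s + 0) (f * 1) from rfl, B.mul hf, one_mul]
  rwa [mul_one] at this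

lemma isUnit_of (B : BG F co) (h0 : F 0 0 = ⊤) {f : A} {x : R} (hf : Mono co f 0 0 x) (hx : IsUnit x) :
    IsUnit f := by
  obtain ⟨y, hy⟩ := hx.exists_right_inv
  obtain ⟨g, hg⟩ := B.ex 0 0 y (h0 ▸ Submodule.mem_top)
  have := B.mono_mul hf hg
  rw [hy] at this
  exact IsUnit.of_mul_eq_one _ (B.eq_one this)

end BG

/-- The coefficient maps of `\overline{𝓡}(I, J)`. -/
noncomputable def rco (I J : Ideal R) (r s : ℕ) : reesBar2 I J →+ R where
  toFun := fun f => (f : Amb2 R).coeff (r, s)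
  map_zero' := rfl
  map_add' := fun _ _ => rfl

lemma rees_BG [IsNoetherianRing R] (I J : Ideal R) : BG (Fb I J) (rco I J) := by
  classical
  have hmono : ∀ {f : reesBar2 I J} {r s : ℕ} {x : R}, Mono (rco I J) f r s x →
      (f : Amb2 R) = AddMonoidAlgebra.single (r, s) x := by
    intro f r s x hf
    refine AddMonoidAlgebra.ext (Finsupp.ext fun p => ?_)
    rw [coeff_sg]
    refine (hf p.1 p.2).trans ?_
    by_cases h : (r, s) = p
    · rw [if_pos h, ← h, if_pos ⟨rfl, rfl⟩]
    · rw [if_neg h, if_neg]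
      rintro ⟨h1, h2⟩
      exact h (Prod.ext h1.symm h2.symm)
  constructor
  · intro r s f
    exact mem_reesBar2.1 f.2 (r, s)
  · intro f g h
    exact Subtype.ext (AddMonoidAlgebra.ext (Finsupp.ext fun p => h p.1 p.2))
  · intro r s x hx
    refine ⟨⟨AddMonoidAlgebra.single (r, s) x, mem_reesBar2.2 fun p => ?_⟩, fun r' s' => ?_⟩
    · rw [coeff_sg]
      split_ifs with h
      · rw [← h]; exact hx
      · exact zero_mem _
    · change (AddMonoidAlgebra.single (r, s) x : Amb2 R).coeff (r', s') = _
      rw [coeff_sg]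
      simp only [Prod.mk.injEq, eq_comm]
  · intro f r s x hf g r' s'
    change ((f : Amb2 R) * g).coeff (r' + r, s' + s) = x * (g : Amb2 R).coeff (r', s')
    rw [hmono hf]
    refine AddMonoidAlgebra.coeff_single_mul_eq_mul_coeff _ fun m _ => ?_
    rw [Prod.ext_iff, Prod.ext_iff]
    simp only [Prod.fst_add, Prod.snd_add]
    omega
  · intro f r s x hf g r' s' h
    change ((f : Amb2 R) * g).coeff (r', s') = 0
    rw [hmono hf]
    refine AddMonoidAlgebra.coeff_single_mul_of_forall_add_ne _ _ fun m => ?_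
    rw [Ne, Prod.ext_iff]
    simp only [Prod.fst_add, Prod.snd_add]
    omega
  · intro f
    obtain ⟨N, hN⟩ := ((f : Amb2 R).coeff.support.image (fun p => p.1 + p.2)).bddAbove
    refine ⟨N + 1, fun r s h => ?_⟩
    by_contra hne
    have := hN (Finset.mem_coe.2 (Finset.mem_image_of_mem _ (Finsupp.mem_support_iff.2 hne)))
    simp only at this
    omega
  · change (AddMonoidAlgebra.single (0 : ℕ × ℕ) 1 : Amb2 R).coeff (0, 0) = 1
    rw [coeff_sg]; exact if_pos rfl
  · intro f g
    change ((f : Amb2 R) * g).coeff (0, 0) = (f : Amb2 R).coeff (0, 0) * (g : Amb2 R).coeff (0, 0)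
    generalize (f : Amb2 R) = f
    generalize (g : Amb2 R) = g
    induction f using AddMonoidAlgebra.induction_linear with
    | zero => simp
    | add u v hu hv =>
      rw [add_mul, AddMonoidAlgebra.coeff_add, Finsupp.add_apply, hu, hv, AddMonoidAlgebra.coeff_add,
        Finsupp.add_apply, add_mul]
    | single q c =>
      by_cases hq : q = (0, 0)
      · subst hq
        rw [coeff_sg, if_pos rfl]
        refine AddMonoidAlgebra.coeff_single_mul_eq_mul_coeff _ fun m _ => ?_
        rw [Prod.ext_iff, Prod.ext_iff]
        simp only [Prod.fst_add, Prod.snd_add]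
        omega
      · rw [coeff_sg, if_neg hq, zero_mul]
        refine AddMonoidAlgebra.coeff_single_mul_of_forall_add_ne _ _ fun m => ?_
        rw [Prod.ext_iff] at hq
        rw [Ne, Prod.ext_iff]
        simp only [Prod.fst_add, Prod.snd_add] at hq ⊢
        omega

end G3

/-! ### A regular sequence in the bigraded Rees ring -/

section D1
open IsLocalRing

variable {R : Type*} [CommRing R] [IsLocalRing R] [IsNoetherianRing R] {I J : Ideal R}
variable {A : Type*} [CommRing A]

/-- The ideal `(α, β)`. -/
def bI (α β : A) : Ideal A := Ideal.span {α} ⊔ Ideal.span {β}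

/-- The ideal `(α, β, y)`. -/
def cI (α β y : A) : Ideal A := bI α β ⊔ Ideal.span {y}

lemma bI_comm (α β : A) : bI α β = bI β α := sup_comm _ _

/-- The elements `α = a₁ t₁`, `β = b₁ t₂`, `α₂ = a₂ t₁`, `β₂ = b₂ t₂` and `γ = a₁ b₁` of the
bigraded ring with components `F(r, s)`, for a complete reduction `(a₁ b₂, a₂ b₁)`. -/
structure Sys (I J : Ideal R) (a1 a2 b1 b2 : R) (co : ℕ → ℕ → A →+ R) (α β α2 β2 γ : A) : Prop where
  h : Cpl I J a1 a2 b1 b2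
  B : BG (Fb I J) co
  hα : Mono co α 1 0 a1
  hβ : Mono co β 0 1 b1
  hα2 : Mono co α2 1 0 a2
  hβ2 : Mono co β2 0 1 b2
  hγ : Mono co γ 0 0 (a1 * b1)

lemma exists_Sys {a1 a2 b1 b2 : R} (h : Cpl I J a1 a2 b1 b2) {co : ℕ → ℕ → A →+ R} (B : BG (Fb I J) co) :
    ∃ α β α2 β2 γ, Sys I J a1 a2 b1 b2 co α β α2 β2 γ := by
  obtain ⟨α, hα⟩ := B.ex 1 0 a1 (mem_Fb_left h.ha1)
  obtain ⟨β, hβ⟩ := B.ex 0 1 b1 (mem_Fb_right h.hb1)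
  obtain ⟨α2, hα2⟩ := B.ex 1 0 a2 (mem_Fb_left h.ha2)
  obtain ⟨β2, hβ2⟩ := B.ex 0 1 b2 (mem_Fb_right h.hb2)
  obtain ⟨γ, hγ⟩ := B.ex 0 0 (a1 * b1) (Fb_zero (I := I) (J := J) ▸ Submodule.mem_top)
  exact ⟨α, β, α2, β2, γ, h, B, hα, hβ, hα2, hβ2, hγ⟩

namespace Sys
variable {a1 a2 b1 b2 : R} {co : ℕ → ℕ → A →+ R} {α β α2 β2 γ : A}

lemma swap (S : Sys I J a1 a2 b1 b2 co α β α2 β2 γ) :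
    Sys J I b1 b2 a1 a2 (fun r s => co s r) β α β2 α2 γ where
  h := S.h.symm.swap
  B := by
    have := S.B.swap
    rwa [show (fun r s => Fb I J s r) = Fb J I from funext fun r => funext fun s => (Fb_swap s r).symm] at this
  hα := S.hβ.swap
  hβ := S.hα.swap
  hα2 := S.hβ2.swap
  hβ2 := S.hα2.swap
  hγ := by rw [mul_comm]; exact S.hγ.swap

lemma co_α (S : Sys I J a1 a2 b1 b2 co α β α2 β2 γ) (u : A) (r s : ℕ) :
    co (r + 1) s (α * u) = a1 * co r s u := S.B.mul S.hα u r s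

lemma co_α0 (S : Sys I J a1 a2 b1 b2 co α β α2 β2 γ) (u : A) (s : ℕ) :
    co 0 s (α * u) = 0 := S.B.mul0 S.hα u 0 s (Or.inl one_pos)

lemma co_β (S : Sys I J a1 a2 b1 b2 co α β α2 β2 γ) (u : A) (r s : ℕ) :
    co r (s + 1) (β * u) = b1 * co r s u := S.B.mul S.hβ u r s

lemma co_β0 (S : Sys I J a1 a2 b1 b2 co α β α2 β2 γ) (u : A) (r : ℕ) :
    co r 0 (β * u) = 0 := S.B.mul0 S.hβ u r 0 (Or.inr one_pos)

lemma co_y (S : Sys I J a1 a2 b1 b2 co α β α2 β2 γ) (u : A) (r : ℕ) :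
    co (r + 1) 0 ((α2 + β2 - γ) * u) = a2 * co r 0 u - a1 * b1 * co (r + 1) 0 u := by
  have h1 : co (r + 1) 0 (α2 * u) = a2 * co r 0 u := S.B.mul S.hα2 u r 0
  have h2 : co (r + 1) 0 (β2 * u) = 0 := S.B.mul0 S.hβ2 u (r + 1) 0 (Or.inr one_pos)
  have h3 : co (r + 1) 0 (γ * u) = a1 * b1 * co (r + 1) 0 u := S.B.mul S.hγ u (r + 1) 0
  rw [sub_mul, add_mul, map_sub, map_add, h1, h2, h3, add_zero]

lemma co_y0 (S : Sys I J a1 a2 b1 b2 co α β α2 β2 γ) (u : A) :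
    co 0 0 ((α2 + β2 - γ) * u) = - (a1 * b1 * co 0 0 u) := by
  have h1 : co 0 0 (α2 * u) = 0 := S.B.mul0 S.hα2 u 0 0 (Or.inl one_pos)
  have h2 : co 0 0 (β2 * u) = 0 := S.B.mul0 S.hβ2 u 0 0 (Or.inr one_pos)
  have h3 : co 0 0 (γ * u) = a1 * b1 * co 0 0 u := S.B.mul S.hγ u 0 0
  rw [sub_mul, add_mul, map_sub, map_add, h1, h2, h3]; ring

lemma ex_α (S : Sys I J a1 a2 b1 b2 co α β α2 β2 γ) {r s : ℕ} {x : R} (hx : x ∈ Fb I J r s) :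
    ∃ g ∈ Ideal.span {α}, Mono co g (r + 1) s (a1 * x) := by
  obtain ⟨e, he⟩ := S.B.ex r s x hx
  exact ⟨α * e, Ideal.mem_span_singleton.2 (dvd_mul_right _ _), S.B.mono_mul S.hα he⟩

lemma ex_β (S : Sys I J a1 a2 b1 b2 co α β α2 β2 γ) {r s : ℕ} {x : R} (hx : x ∈ Fb I J r s) :
    ∃ g ∈ Ideal.span {β}, Mono co g r (s + 1) (b1 * x) := by
  obtain ⟨e, he⟩ := S.B.ex r s x hx
  exact ⟨β * e, Ideal.mem_span_singleton.2 (dvd_mul_right _ _), S.B.mono_mul S.hβ he⟩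

lemma ex_zero (_ : Sys I J a1 a2 b1 b2 co α β α2 β2 γ) {r s : ℕ} {x : R} (hx : x = 0) (𝔞 : Ideal A) :
    ∃ g ∈ 𝔞, Mono co g r s x := ⟨0, zero_mem _, fun r' s' => by rw [map_zero, hx, ite_self]⟩

lemma ex_G (S : Sys I J a1 a2 b1 b2 co α β α2 β2 γ) {r s : ℕ} {x : R}
    (hx : x ∈ Ideal.span {a1} * Fb I J r (s + 1) ⊔ Ideal.span {b1} * Fb I J (r + 1) s) :
    ∃ g ∈ bI α β, Mono co g (r + 1) (s + 1) x := by
  obtain ⟨u, hu, v, hv, rfl⟩ := Submodule.mem_sup.1 hx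
  obtain ⟨u', hu', rfl⟩ := Ideal.mem_span_singleton_mul.1 hu
  obtain ⟨v', hv', rfl⟩ := Ideal.mem_span_singleton_mul.1 hv
  obtain ⟨g, hg, hm⟩ := S.ex_α hu'
  obtain ⟨g', hg', hm'⟩ := S.ex_β hv'
  exact ⟨g + g', add_mem (Submodule.mem_sup_left hg) (Submodule.mem_sup_right hg'), hm.add hm'⟩

lemma of_b (S : Sys I J a1 a2 b1 b2 co α β α2 β2 γ) {f : A} (hf : f ∈ bI α β) :
    co 0 0 f = 0 ∧ (∀ r, ∃ x ∈ Fb I J r 0, co (r + 1) 0 f = a1 * x) ∧ ∀ r s,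
      co (r + 1) (s + 1) f ∈ Ideal.span {a1} * Fb I J r (s + 1) ⊔ Ideal.span {b1} * Fb I J (r + 1) s := by
  obtain ⟨u, hu, v, hv, rfl⟩ := Submodule.mem_sup.1 hf
  obtain ⟨u, rfl⟩ := Ideal.mem_span_singleton.1 hu
  obtain ⟨v, rfl⟩ := Ideal.mem_span_singleton.1 hv
  refine ⟨?_, fun r => ⟨co r 0 u, S.B.mem _ _ _, ?_⟩, fun r s => ?_⟩
  · rw [map_add, S.co_α0, S.co_β0, add_zero]
  · rw [map_add, S.co_α, S.co_β0, add_zero]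
  · rw [map_add, S.co_α, S.co_β]
    exact add_mem (Submodule.mem_sup_left (Ideal.mul_mem_mul (Ideal.mem_span_singleton_self _) (S.B.mem _ _ _)))
      (Submodule.mem_sup_right (Ideal.mul_mem_mul (Ideal.mem_span_singleton_self _) (S.B.mem _ _ _)))

lemma nz1 (S : Sys I J a1 a2 b1 b2 co α β α2 β2 γ) : NZ ⊥ α := by
  intro z hz
  rw [Ideal.mem_bot] at hz ⊢
  refine S.B.ext _ _ fun r s => ?_
  have := S.co_α z r s
  rw [hz, map_zero] at this
  rw [map_zero]
  exact (mul_left_mem_nonZeroDivisors_eq_zero_iff S.h.n_a1).1 this.symm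

lemma nz2 (S : Sys I J a1 a2 b1 b2 co α β α2 β2 γ) : NZ (Ideal.span {α}) β := by
  intro z hz
  obtain ⟨u, hu⟩ := Ideal.mem_span_singleton.1 hz
  refine S.B.mem_of fun r s => ?_
  have h1 := S.co_β z r s
  rw [hu] at h1
  rcases r with _ | r
  · rw [S.co_α0] at h1
    exact S.ex_zero ((mul_left_mem_nonZeroDivisors_eq_zero_iff S.h.n_b1).1 h1.symm) _
  · rw [S.co_α] at h1
    obtain ⟨w, hw⟩ := S.swap.h.r_ab.2 _ _ h1.symm
    rw [hw]
    refine S.ex_α (S.h.cancel_a1 ?_)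
    rw [← hw]; exact S.B.mem _ _ _

/-- Elements with components in the expected ideals belong to `(α, β)`. -/
lemma mem_b (S : Sys I J a1 a2 b1 b2 co α β α2 β2 γ)
    (h11 : ∀ r s, Fb I J (r + 1) (s + 1) = Ideal.span {a1} * Fb I J r (s + 1) ⊔ Ideal.span {b1} * Fb I J (r + 1) s)
    {f : A} (h0 : co 0 0 f = 0) (h1 : ∀ r, ∃ x ∈ Fb I J r 0, co (r + 1) 0 f = a1 * x)
    (h2 : ∀ s, ∃ x ∈ Fb I J 0 s, co 0 (s + 1) f = b1 * x) : f ∈ bI α β := by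
  refine S.B.mem_of fun r s => ?_
  rcases r with _ | r
  · rcases s with _ | s
    · exact S.ex_zero h0 _
    · obtain ⟨x, hx, e⟩ := h2 s
      obtain ⟨g, hg, hm⟩ := S.ex_β hx
      exact ⟨g, Submodule.mem_sup_right hg, e ▸ hm⟩
  · rcases s with _ | s
    · obtain ⟨x, hx, e⟩ := h1 r
      obtain ⟨g, hg, hm⟩ := S.ex_α hx
      exact ⟨g, Submodule.mem_sup_left hg, e ▸ hm⟩
    · exact S.ex_G (h11 r s ▸ S.B.mem _ _ _)

lemma swap11 (h11 : ∀ r s, Fb I J (r + 1) (s + 1) = Ideal.span {a1} * Fb I J r (s + 1) ⊔ Ideal.span {b1} * Fb I J (r + 1) s) :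
    ∀ r s, Fb J I (r + 1) (s + 1) = Ideal.span {b1} * Fb J I r (s + 1) ⊔ Ideal.span {a1} * Fb J I (r + 1) s := by
  intro r s
  rw [Fb_swap (I := I) (J := J) (s + 1) (r + 1), Fb_swap (I := I) (J := J) (s + 1) r, Fb_swap (I := I) (J := J) s (r + 1), h11,
    sup_comm]

/-- One half of the computation showing that `y = α₂ + β₂ - γ` is regular modulo `(α, β)`. -/
lemma nz3_aux (S : Sys I J a1 a2 b1 b2 co α β α2 β2 γ) {z : A} (hz : (α2 + β2 - γ) * z ∈ bI α β) :
    co 0 0 z = 0 ∧ ∀ r, ∃ x ∈ Fb I J r 0, co (r + 1) 0 z = a1 * x := by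
  obtain ⟨h0, h1, -⟩ := S.of_b hz
  constructor
  · rw [S.co_y0, neg_eq_zero] at h0
    exact (mul_left_mem_nonZeroDivisors_eq_zero_iff (mul_mem S.h.n_a1 S.h.n_b1)).1 h0
  · intro r
    obtain ⟨x, hx, e⟩ := h1 (r + 1)
    rw [S.co_y] at e
    obtain ⟨w, hw⟩ := S.h.symm.r_aa.2 (co (r + 1) 0 z) (x + b1 * co (r + 1 + 1) 0 z) (by linear_combination e)
    refine ⟨w, S.h.cancel_a1 ?_, hw⟩
    rw [← hw]; exact S.B.mem _ _ _

/-- `y = α₂ + β₂ - γ` is regular modulo `(α, β)`. -/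
lemma nz3 (S : Sys I J a1 a2 b1 b2 co α β α2 β2 γ)
    (h11 : ∀ r s, Fb I J (r + 1) (s + 1) = Ideal.span {a1} * Fb I J r (s + 1) ⊔ Ideal.span {b1} * Fb I J (r + 1) s) :
    NZ (bI α β) (α2 + β2 - γ) := by
  intro z hz
  obtain ⟨h0, h1⟩ := S.nz3_aux hz
  obtain ⟨-, h2⟩ := S.swap.nz3_aux (z := z) (by rw [bI_comm, add_comm β2]; exact hz)
  refine S.mem_b h11 h0 h1 fun s => ?_
  obtain ⟨x, hx, e⟩ := h2 s
  exact ⟨x, Fb_swap (I := I) 0 s ▸ hx, e⟩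

end Sys
end D1

/-! ### Vanishing of the constant coefficient makes the Rees ring Cohen–Macaulay -/

section D2
open IsLocalRing

variable {R : Type*} [CommRing R] [IsLocalRing R] [IsNoetherianRing R] {I J : Ideal R}
variable {A : Type*} [CommRing A]

namespace Sys
variable {a1 a2 b1 b2 : R} {co : ℕ → ℕ → A →+ R} {α β α2 β2 γ : A}

lemma ex_c (S : Sys I J a1 a2 b1 b2 co α β α2 β2 γ)
    (h11 : ∀ r s, Fb I J (r + 1) (s + 1) = Ideal.span {a1} * Fb I J r (s + 1) ⊔ Ideal.span {b1} * Fb I J (r + 1) s)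
    {r : ℕ} {x : R} (hx : x ∈ Fb I J (r + 1) 0) :
    ∃ g ∈ cI α β (α2 + β2 - γ), Mono co g (r + 2) 0 (a2 * x) := by
  obtain ⟨e, he⟩ := S.B.ex _ _ x hx
  refine ⟨α2 * e, ?_, S.B.mono_mul S.hα2 he⟩
  have h1 : β2 * e ∈ bI α β := by
    obtain ⟨g, hg, hm⟩ := S.ex_G (r := r) (s := 0) (x := b2 * x) (h11 r 0 ▸ Fb_right S.h.hb2 hx)
    rw [S.B.mono_eq (S.B.mono_mul S.hβ2 he) (by simpa only [Nat.zero_add, Nat.add_zero] using hm)]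
    exact hg
  have h2 : γ * e ∈ bI α β := by
    obtain ⟨g, hg, hm⟩ := S.ex_α (r := r) (s := 0) (x := b1 * x)
      (S.h.cancel_a1 (Ideal.mul_mem_left _ _ (Ideal.mul_mem_left _ _ hx)))
    rw [S.B.mono_eq (S.B.mono_mul S.hγ he) (by rw [mul_assoc]; exact hm)]
    exact Submodule.mem_sup_left hg
  have e1 : α2 * e = (γ * e - β2 * e) + (α2 + β2 - γ) * e := by ring
  rw [e1]
  exact add_mem (Submodule.mem_sup_left (sub_mem h2 h1))
    (Submodule.mem_sup_right (Ideal.mem_span_singleton.2 (dvd_mul_right _ _)))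

lemma ex_K (S : Sys I J a1 a2 b1 b2 co α β α2 β2 γ)
    (h11 : ∀ r s, Fb I J (r + 1) (s + 1) = Ideal.span {a1} * Fb I J r (s + 1) ⊔ Ideal.span {b1} * Fb I J (r + 1) s)
    {r : ℕ} {x : R} (hx : x ∈ Ideal.span {a1, a2} * Fb I J (r + 1) 0) :
    ∃ g ∈ cI α β (α2 + β2 - γ), Mono co g (r + 2) 0 x := by
  rw [Ideal.span_insert, Ideal.sup_mul] at hx
  obtain ⟨u, hu, v, hv, rfl⟩ := Submodule.mem_sup.1 hx
  obtain ⟨u', hu', rfl⟩ := Ideal.mem_span_singleton_mul.1 hu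
  obtain ⟨v', hv', rfl⟩ := Ideal.mem_span_singleton_mul.1 hv
  obtain ⟨g, hg, hm⟩ := S.ex_α hu'
  obtain ⟨g', hg', hm'⟩ := S.ex_c h11 hv'
  exact ⟨g + g', add_mem (Submodule.mem_sup_left (Submodule.mem_sup_left hg)) hg', hm.add hm'⟩

lemma reg_d (S : Sys I J a1 a2 b1 b2 co α β α2 β2 γ) {z t : R} (e : (a1 * b2 + a2 * b1) * z = a1 * t) :
    ∃ w, z = a1 * w := by
  obtain ⟨w, hw⟩ := S.h.symm.r_aa.2 (b1 * z) (t - b2 * z) (by linear_combination e)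
  exact S.swap.h.r_ab.2 z w hw

lemma reg_dd (S : Sys I J a1 a2 b1 b2 co α β α2 β2 γ) {z t : R}
    (e : (a1 * b2 + a2 * b1) * z = a1 * b1 * t) : ∃ w, z = a1 * b1 * w := by
  obtain ⟨w, rfl⟩ := S.reg_d (z := z) (t := b1 * t) (by rw [e, mul_assoc])
  have e2 : (a1 * b2 + a2 * b1) * w = b1 * t :=
    (mul_cancel_left_mem_nonZeroDivisors S.h.n_a1).1 (by linear_combination e)
  obtain ⟨v, rfl⟩ := S.swap.reg_d (z := w) (t := t) (by rw [← e2]; ring)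
  exact ⟨v, (mul_assoc _ _ _).symm⟩

lemma nz4_aux (S : Sys I J a1 a2 b1 b2 co α β α2 β2 γ) {δ : A} (hδ : Mono co δ 0 0 (a1 * b2 + a2 * b1))
    {z w b : A} (hb : b ∈ bI α β) (hw : co 0 0 w = 0) (e : δ * z = b + (α2 + β2 - γ) * w) :
    ∃ x, co 1 0 z = a1 * x := by
  obtain ⟨-, h1, -⟩ := S.of_b hb
  obtain ⟨x, -, hx⟩ := h1 0
  have h2 : co 1 0 (δ * z) = (a1 * b2 + a2 * b1) * co 1 0 z := S.B.mul hδ z 1 0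
  have h3 := S.co_y w 0
  rw [Nat.zero_add] at h3 hx
  rw [e, map_add, hx, h3, hw] at h2
  exact S.reg_d (z := co 1 0 z) (t := x - b1 * co 1 0 w) (by linear_combination -h2)

/-- `δ = a₁ b₂ + a₂ b₁`, in degree `(0, 0)`, is regular modulo `(α, β, y)`. -/
lemma nz4 (S : Sys I J a1 a2 b1 b2 co α β α2 β2 γ) {δ : A} (hδ : Mono co δ 0 0 (a1 * b2 + a2 * b1))
    (h11 : ∀ r s, Fb I J (r + 1) (s + 1) = Ideal.span {a1} * Fb I J r (s + 1) ⊔ Ideal.span {b1} * Fb I J (r + 1) s)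
    (h20 : ∀ r, Fb I J (r + 2) 0 = Ideal.span {a1, a2} * Fb I J (r + 1) 0)
    (h02 : ∀ s, Fb J I (s + 2) 0 = Ideal.span {b1, b2} * Fb J I (s + 1) 0) :
    NZ (cI α β (α2 + β2 - γ)) δ := by
  intro z hz
  obtain ⟨b, hb, v, hv, e⟩ := Submodule.mem_sup.1 hz
  obtain ⟨w, rfl⟩ := Ideal.mem_span_singleton.1 hv
  -- a multiple of `y` is subtracted from `z`, so as to make the constant coefficients vanish
  have h0 : (a1 * b2 + a2 * b1) * co 0 0 z = a1 * b1 * (- co 0 0 w) := by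
    have h1 : co 0 0 (δ * z) = (a1 * b2 + a2 * b1) * co 0 0 z := S.B.mul hδ z 0 0
    rw [← h1, ← e, map_add, S.co_y0, (S.of_b hb).1]; ring
  obtain ⟨p, hp⟩ := S.reg_dd h0
  have hw : co 0 0 w = - ((a1 * b2 + a2 * b1) * p) := by
    refine (mul_cancel_left_mem_nonZeroDivisors (mul_mem S.h.n_a1 S.h.n_b1)).1 ?_
    rw [hp] at h0
    linear_combination h0
  obtain ⟨ν, hν⟩ := S.B.ex 0 0 p (Fb_zero (I := I) (J := J) ▸ Submodule.mem_top)
  set y := α2 + β2 - γ with hy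
  have e' : δ * (z + y * ν) = b + y * (w + δ * ν) := by rw [mul_add, ← e]; ring
  have hz0 : co 0 0 (z + y * ν) = 0 := by
    rw [map_add, S.co_y0, hν.self, hp, add_neg_cancel]
  have hw0 : co 0 0 (w + δ * ν) = 0 := by
    have h1 : co 0 0 (δ * ν) = (a1 * b2 + a2 * b1) * co 0 0 ν := S.B.mul hδ ν 0 0
    rw [map_add, h1, hν.self, hw, neg_add_cancel]
  suffices h : z + y * ν ∈ cI α β y by
    have h2 : z = (z + y * ν) - y * ν := by ring
    rw [h2]
    exact sub_mem h (Submodule.mem_sup_right (Ideal.mem_span_singleton.2 (dvd_mul_right _ _)))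
  have hz1 := S.nz4_aux hδ hb hw0 e'
  have hz2 := S.swap.nz4_aux (δ := δ) (by
      have := hδ.swap
      rwa [show a1 * b2 + a2 * b1 = b1 * a2 + b2 * a1 by ring] at this)
    (by rw [bI_comm]; exact hb) hw0 (by rw [add_comm β2, ← hy]; exact e')
  refine S.B.mem_of fun r s => ?_
  have htop : ∀ x : R, x ∈ Fb I J 0 0 := fun x => Fb_zero (I := I) (J := J) ▸ Submodule.mem_top
  rcases r with _ | r
  · rcases s with _ | _ | s
    · exact S.ex_zero hz0 _
    · obtain ⟨x, hx⟩ := hz2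
      obtain ⟨g, hg, hm⟩ := S.ex_β (htop x)
      exact ⟨g, Submodule.mem_sup_left (Submodule.mem_sup_right hg), hx ▸ hm⟩
    · obtain ⟨g, hg, hm⟩ := S.swap.ex_K (swap11 h11) (r := s) (x := co 0 (s + 2) (z + y * ν))
        (h02 s ▸ Fb_swap (I := I) (J := J) 0 (s + 2) ▸ S.B.mem _ _ _)
      refine ⟨g, ?_, hm.swap⟩
      rw [hy, cI, bI_comm, add_comm α2]
      exact hg
  · rcases s with _ | s
    · rcases r with _ | r
      · obtain ⟨x, hx⟩ := hz1
        obtain ⟨g, hg, hm⟩ := S.ex_α (htop x)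
        exact ⟨g, Submodule.mem_sup_left (Submodule.mem_sup_left hg), hx ▸ hm⟩
      · exact S.ex_K h11 (h20 r ▸ S.B.mem _ _ _)
    · obtain ⟨g, hg, hm⟩ := S.ex_G (h11 r s ▸ S.B.mem (r + 1) (s + 1) (z + y * ν))
      exact ⟨g, Submodule.mem_sup_left hg, hm⟩

/-- `α, β` is a regular sequence in the maximal ideal `M`. -/
lemma rsl2 (S : Sys I J a1 a2 b1 b2 co α β α2 β2 γ) : RSL (S.B.Pl (maximalIdeal R)) 2 (bI α β) := by
  have hne : S.B.Pl (maximalIdeal R) ≠ ⊤ := Ideal.comap_ne_top _ (maximalIdeal.isMaximal R).ne_top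
  have h1 : RSL (S.B.Pl (maximalIdeal R)) 1 (Ideal.span {α}) := by
    have := RSL.cons (P := S.B.Pl (maximalIdeal R)) (x := α) RSL.nil
      (S.B.mem_Pl.2 (by rw [S.hα.ne (Or.inl zero_ne_one)]; exact zero_mem _)) (S.nz1.nzl hne)
    rwa [bot_sup_eq] at this
  exact RSL.cons h1 (S.B.mem_Pl.2 (by rw [S.hβ.ne (Or.inr zero_ne_one)]; exact zero_mem _)) (S.nz2.nzl hne)

/-- `α, β, y` is a regular sequence in the maximal ideal `M`, given the joint reduction equalities. -/
lemma rsl3 (S : Sys I J a1 a2 b1 b2 co α β α2 β2 γ)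
    (h11 : ∀ r s, Fb I J (r + 1) (s + 1) = Ideal.span {a1} * Fb I J r (s + 1) ⊔ Ideal.span {b1} * Fb I J (r + 1) s) :
    RSL (S.B.Pl (maximalIdeal R)) 3 (cI α β (α2 + β2 - γ)) := by
  have hne : S.B.Pl (maximalIdeal R) ≠ ⊤ := Ideal.comap_ne_top _ (maximalIdeal.isMaximal R).ne_top
  refine RSL.cons S.rsl2 (S.B.mem_Pl.2 ?_) ((S.nz3 h11).nzl hne)
  have := S.co_y0 1
  rw [mul_one] at this
  rw [this]
  exact neg_mem (Ideal.mul_mem_right _ _ (Ideal.mul_mem_right _ _ (S.h.hIm S.h.ha1)))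

/-- The components of degree `(r + 1, 0)` lie in every prime containing `(α, β, y)`. -/
lemma row_Q (S : Sys I J a1 a2 b1 b2 co α β α2 β2 γ)
    (h11 : ∀ r s, Fb I J (r + 1) (s + 1) = Ideal.span {a1} * Fb I J r (s + 1) ⊔ Ideal.span {b1} * Fb I J (r + 1) s)
    (h20 : ∀ r, Fb I J (r + 2) 0 = Ideal.span {a1, a2} * Fb I J (r + 1) 0) {Q : Ideal A} [hQ : Q.IsPrime]
    (hc : cI α β (α2 + β2 - γ) ≤ Q) {r : ℕ} {x : R} (hx : x ∈ Fb I J (r + 1) 0) :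
    ∃ g ∈ Q, Mono co g (r + 1) 0 x := by
  rcases r with _ | r
  · obtain ⟨e, he⟩ := S.B.ex _ _ x hx
    refine ⟨e, ?_, he⟩
    have h1 : x * x ∈ Fb I J (0 + 1 + (0 + 1)) (0 + 0) := Fb_mul hx hx
    have h2 : x * x ∈ Ideal.span {a1, a2} * Fb I J (0 + 1) 0 := by
      rw [← h20 0]
      simpa only [Nat.zero_add, Nat.reduceAdd] using h1
    obtain ⟨g, hg, hm⟩ := S.ex_K h11 h2
    have h3 : Mono co (e * e) (0 + 2) 0 (x * x) := by
      have := S.B.mono_mul he he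
      simpa only [Nat.zero_add, Nat.reduceAdd] using this
    rw [← S.B.mono_eq h3 hm] at hg
    exact (or_self_iff).1 (hQ.mem_or_mem (hc hg))
  · obtain ⟨g, hg, hm⟩ := S.ex_K h11 (h20 r ▸ hx)
    exact ⟨g, hc hg, hm⟩

/-- Any prime containing `α, β, y, δ` contains the maximal ideal `M`. -/
lemma le_Q (S : Sys I J a1 a2 b1 b2 co α β α2 β2 γ) {δ : A} (hδ : Mono co δ 0 0 (a1 * b2 + a2 * b1))
    (h11 : ∀ r s, Fb I J (r + 1) (s + 1) = Ideal.span {a1} * Fb I J r (s + 1) ⊔ Ideal.span {b1} * Fb I J (r + 1) s)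
    (h20 : ∀ r, Fb I J (r + 2) 0 = Ideal.span {a1, a2} * Fb I J (r + 1) 0)
    (h02 : ∀ s, Fb J I (s + 2) 0 = Ideal.span {b1, b2} * Fb J I (s + 1) 0) {Q : Ideal A} [hQ : Q.IsPrime]
    (hd : cI α β (α2 + β2 - γ) ⊔ Ideal.span {δ} ≤ Q) : S.B.Pl (maximalIdeal R) ≤ Q := by
  have htop : ∀ x : R, x ∈ Fb I J 0 0 := fun x => Fb_zero (I := I) (J := J) ▸ Submodule.mem_top
  have hc : cI α β (α2 + β2 - γ) ≤ Q := le_sup_left.trans hd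
  have hb : bI α β ≤ Q := le_sup_left.trans hc
  have hy : α2 + β2 - γ ∈ Q := hc (Submodule.mem_sup_right (Ideal.mem_span_singleton_self _))
  have hδQ : δ ∈ Q := hd (Submodule.mem_sup_right (Ideal.mem_span_singleton_self _))
  choose κ hκ using fun p : R => S.B.ex 0 0 p (htop p)
  let k : R →+* A := RingHom.mk' ⟨⟨κ, S.B.eq_one (hκ 1)⟩, fun p q => S.B.mono_eq (hκ _) (S.B.mono_mul (hκ p) (hκ q))⟩
    fun p q => S.B.mono_eq (hκ _) ((hκ p).add (hκ q))
  have hk : ∀ p, Mono co (k p) 0 0 p := hκ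
  have h1 : α2 * β2 ∈ Q := by
    obtain ⟨g, hg, hm⟩ := S.ex_G (r := 0) (s := 0) (x := a2 * b2)
      (h11 0 0 ▸ Fb_left S.h.ha2 (mem_Fb_right S.h.hb2))
    rw [S.B.mono_eq (S.B.mono_mul S.hα2 S.hβ2) hm]
    exact hb hg
  have h2 : γ * α2 ∈ Q := by
    obtain ⟨g, hg, hm⟩ := S.ex_α (htop (b1 * a2))
    rw [S.B.mono_eq (S.B.mono_mul S.hγ S.hα2) (by rw [mul_assoc]; exact hm)]
    exact hb (Submodule.mem_sup_left hg)
  have h3 : α2 ∈ Q := by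
    refine or_self_iff.1 (hQ.mem_or_mem ?_)
    have e : α2 * α2 = (α2 + β2 - γ) * α2 - α2 * β2 + γ * α2 := by ring
    rw [e]
    exact add_mem (sub_mem (Ideal.mul_mem_right _ _ hy) h1) h2
  have h4 : γ * β2 ∈ Q := by
    obtain ⟨g, hg, hm⟩ := S.ex_β (htop (a1 * b2))
    rw [S.B.mono_eq (S.B.mono_mul S.hγ S.hβ2)
      (by rw [show a1 * b1 * b2 = b1 * (a1 * b2) by ring]; exact hm)]
    exact hb (Submodule.mem_sup_right hg)
  have h5 : β2 ∈ Q := by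
    refine or_self_iff.1 (hQ.mem_or_mem ?_)
    have e : β2 * β2 = (α2 + β2 - γ) * β2 - α2 * β2 + γ * β2 := by ring
    rw [e]
    exact add_mem (sub_mem (Ideal.mul_mem_right _ _ hy) h1) h4
  have h6 : γ ∈ Q := by
    have e : γ = α2 + β2 - (α2 + β2 - γ) := by ring
    rw [e]
    exact sub_mem (add_mem h3 h5) hy
  have hq : (Q.comap k).IsPrime := Ideal.IsPrime.comap k
  have hmp : ∀ x y : R, x ∈ Q.comap k → y ∈ Q.comap k → MP (Ideal.span {x, y}) → maximalIdeal R ≤ Q.comap k := by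
    rintro x y hx hy ⟨j, hj⟩
    refine hq.le_of_pow_le (n := j) (hj.trans (Ideal.span_le.2 ?_))
    rintro w (rfl | rfl)
    exacts [hx, hy]
  have h7 : a1 * b1 ∈ Q.comap k := by
    rw [Ideal.mem_comap, S.B.mono_eq (hk _) S.hγ]; exact h6
  have h8 : a1 * b2 + a2 * b1 ∈ Q.comap k := by
    rw [Ideal.mem_comap, S.B.mono_eq (hk _) hδ]; exact hδQ
  have hm : maximalIdeal R ≤ Q.comap k := by
    rcases hq.mem_or_mem h7 with h | h
    · have h9 : a2 * b1 ∈ Q.comap k := (Ideal.add_mem_iff_right _ (Ideal.mul_mem_right _ _ h)).1 h8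
      rcases hq.mem_or_mem h9 with h' | h'
      · exact hmp _ _ h h' S.h.MPaa
      · exact hmp _ _ h h' S.h.MPab
    · have h9 : a1 * b2 ∈ Q.comap k := (Ideal.add_mem_iff_left _ (Ideal.mul_mem_left _ _ h)).1 h8
      rcases hq.mem_or_mem h9 with h' | h'
      · exact hmp _ _ h' h S.h.MPab
      · exact hmp _ _ h h' S.swap.h.MPaa
  intro f hf
  refine S.B.mem_of fun r s => ?_
  rcases r with _ | r
  · rcases s with _ | s
    · exact ⟨k (co 0 0 f), hm (S.B.mem_Pl.1 hf), hk _⟩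
    · obtain ⟨g, hg, hm⟩ := S.swap.row_Q (swap11 h11) h02 (Q := Q) (by rw [cI, bI_comm, add_comm β2]; exact hc)
        (r := s) (x := co 0 (s + 1) f) (Fb_swap (I := I) (J := J) 0 (s + 1) ▸ S.B.mem _ _ _)
      exact ⟨g, hg, hm.swap⟩
  · rcases s with _ | s
    · exact S.row_Q h11 h20 hc (S.B.mem _ _ _)
    · obtain ⟨g, hg, hm⟩ := S.ex_G (h11 r s ▸ S.B.mem (r + 1) (s + 1) f)
      exact ⟨g, hb hg, hm⟩

/-- The regular sequence `α, β, y, δ` has radical `M`, so the localization at `M` is Cohen–Macaulay. -/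
lemma isCM_loc [IsNoetherianRing A] (S : Sys I J a1 a2 b1 b2 co α β α2 β2 γ)
    (h11 : ∀ r s, Fb I J (r + 1) (s + 1) = Ideal.span {a1} * Fb I J r (s + 1) ⊔ Ideal.span {b1} * Fb I J (r + 1) s)
    (h20 : ∀ r, Fb I J (r + 2) 0 = Ideal.span {a1, a2} * Fb I J (r + 1) 0)
    (h02 : ∀ s, Fb J I (s + 2) 0 = Ideal.span {b1, b2} * Fb J I (s + 1) 0)
    [hM : (S.B.Pl (maximalIdeal R)).IsPrime] :
    IsCMLocalRing (Localization.AtPrime (S.B.Pl (maximalIdeal R))) := by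
  obtain ⟨δ, hδ⟩ := S.B.ex 0 0 (a1 * b2 + a2 * b1) (Fb_zero (I := I) (J := J) ▸ Submodule.mem_top)
  have h4 : RSL (S.B.Pl (maximalIdeal R)) 4 (cI α β (α2 + β2 - γ) ⊔ Ideal.span {δ}) := by
    refine RSL.cons (S.rsl3 h11) (S.B.mem_Pl.2 ?_) ((S.nz4 hδ h11 h20 h02).nzl hM.ne_top)
    rw [hδ.self]
    exact add_mem (Ideal.mul_mem_right _ _ (S.h.hIm S.h.ha1)) (Ideal.mul_mem_right _ _ (S.h.hIm S.h.ha2))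
  refine isCM_loc_of_RSL h4 (h4.height_le_of_minimal ⟨⟨hM, h4.le⟩, ?_⟩)
  rintro Q ⟨hQ, hQ'⟩ -
  exact S.le_Q hδ h11 h20 h02 hQ'

end Sys

end D2

section D3
open IsLocalRing Polynomial

variable {R : Type*} [CommRing R] [IsLocalRing R] [IsNoetherianRing R] {I J : Ideal R}
variable {a1 a2 b1 b2 : R} {f20 f11 f02 f10 f01 f00 : ℤ}

lemma isCMRing_of_BG {A : Type*} [CommRing A] [IsNoetherianRing A] (h : Cpl I J a1 a2 b1 b2)
    {co : ℕ → ℕ → A →+ R} (B : BG (Fb I J) co) {φ : A →+* A[X]} (hφ : NGrading φ)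
    (hco : ∀ f i r s, co r s ((φ f).coeff i) = if r + s = i then co r s f else 0)
    (h11 : ∀ r s, Fb I J (r + 1) (s + 1) = Ideal.span {a1} * Fb I J r (s + 1) ⊔ Ideal.span {b1} * Fb I J (r + 1) s)
    (h20 : ∀ r, Fb I J (r + 2) 0 = Ideal.span {a1, a2} * Fb I J (r + 1) 0)
    (h02 : ∀ s, Fb J I (s + 2) 0 = Ideal.span {b1, b2} * Fb J I (s + 1) 0) : IsCMRing A := by
  obtain ⟨α, β, α2, β2, γ, S⟩ := exists_Sys h B
  haveI hM : (S.B.Pl (maximalIdeal R)).IsPrime := Ideal.IsPrime.comap _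
  refine hφ.isCMRing (S.B.Pl (maximalIdeal R)) ?_ (S.isCM_loc h11 h20 h02)
  intro i x hx hxM
  have hu : IsUnit (co 0 0 x) := by
    by_contra hn
    exact hxM (S.B.mem_Pl.2 ((mem_maximalIdeal _).2 hn))
  have hi : (φ x).coeff i = x := by rw [show φ x = monomial i x from hx, coeff_monomial, if_pos rfl]
  have h1 : ∀ r s, co r s x = if r + s = i then co r s x else 0 := fun r s => by
    rw [← hco x i r s, hi]
  have h0 : i = 0 := by
    by_contra hne
    have := h1 0 0
    rw [if_neg (fun h => hne h.symm)] at this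
    rw [this] at hu
    exact not_isUnit_zero hu
  refine S.B.isUnit_of Fb_zero (x := co 0 0 x) (fun r s => ?_) hu
  split_ifs with hrs
  · rw [hrs.1, hrs.2]
  · rw [h1 r s, if_neg (by omega)]

/-- If the constant coefficient of the normal Hilbert polynomial of `(I, J)` vanishes, then the Rees ring
`\overline{𝓡}(I, J)` is Cohen–Macaulay. -/
lemma Cpl.isCMRing (h : Cpl I J a1 a2 b1 b2) (hur : AnalyticallyUnramified R)
    (hP : HP I J f20 f11 f02 f10 f01 f00) (h0 : f00 = 0) : IsCMRing (reesBar2 I J) := by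
  obtain ⟨c, hc, hc'⟩ := h.F_le_ev hur hP
  haveI := reesBar2_noeth hc hc'
  obtain ⟨φ, hφ, hφ'⟩ := exists_grading I J
  refine isCMRing_of_BG h (rees_BG I J) hφ (fun f i r s => hφ' f i (r, s)) (h.joint_of hur hP h0)
    (fun r => h.row_of hur hP h0 r 0) fun s => ?_
  rw [Fb_swap (I := I) (J := J) 0 (s + 2), Fb_swap (I := I) (J := J) 0 (s + 1), Ideal.span_pair_comm]
  exact h.col_of hur hP h0 0 s

end D3

/-! ### Cohen–Macaulayness of the Rees ring forces the constant coefficient to vanish -/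

section E
open IsLocalRing

variable {R : Type*} [CommRing R] [IsLocalRing R] [IsNoetherianRing R] {I J : Ideal R}
variable {A : Type*} [CommRing A]

/-- If `G ⊊ F` and `G` contains a power of `𝔪`, then `F / G` has a nonzero socle. -/
lemma exists_socle {F G : Ideal R} (hG : MP G) (h : ¬ F ≤ G) :
    ∃ x ∈ F, x ∉ G ∧ ∀ y ∈ maximalIdeal R, y * x ∈ G := by
  classical
  obtain ⟨j, hj⟩ := hG
  have hex : ∃ k, maximalIdeal R ^ k * F ≤ G := ⟨j, Ideal.mul_le_left.trans hj⟩
  have hk := Nat.find_spec hex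
  have hmin := fun k (hk : k < Nat.find hex) => Nat.find_min hex hk
  generalize Nat.find hex = k at hk hmin
  rcases k with _ | k
  · rw [pow_zero, Ideal.one_eq_top, Ideal.top_mul] at hk
    exact absurd hk h
  · obtain ⟨x, hx, hxG⟩ := Set.not_subset.1 (hmin k k.lt_succ_self)
    refine ⟨x, Ideal.mul_le_right hx, hxG, fun y hy => hk ?_⟩
    rw [pow_succ', mul_assoc]
    exact Ideal.mul_mem_mul hy hx

lemma isAss_of_max {𝔞 M : Ideal A} (hM : M.IsMaximal) {z : A} (hz : z ∉ 𝔞) (h : ∀ w ∈ M, w * z ∈ 𝔞) :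
    IsAss 𝔞 M := by
  refine ⟨hM.isPrime, z, fun w => ⟨h w, fun hw => ?_⟩⟩
  by_contra hwM
  obtain ⟨y, i, hi, e⟩ := hM.exists_inv hwM
  refine hz ?_
  rw [← one_mul z, ← e, add_mul, mul_assoc]
  exact add_mem (Ideal.mul_mem_left _ _ hw) (h i hi)

namespace Sys
variable {a1 a2 b1 b2 : R} {co : ℕ → ℕ → A →+ R} {α β α2 β2 γ : A}

lemma Pl_max (S : Sys I J a1 a2 b1 b2 co α β α2 β2 γ) : (S.B.Pl (maximalIdeal R)).IsMaximal :=
  Ideal.comap_isMaximal_of_surjective _ (S.B.c0_surj Fb_zero)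

/-- The primes of elements with constant term in a prime of `R` contain the regular sequence `α, β`, so a
chain of length two in `R` adds two to the height. -/
lemma four_le_height (S : Sys I J a1 a2 b1 b2 co α β α2 β2 γ) (hdim : ringKrullDim R = 2) :
    (4 : ℕ∞) ≤ (S.B.Pl (maximalIdeal R)).height := by
  obtain ⟨l, hl⟩ := Order.le_krullDim_iff.1 (show ((2 : ℕ) : WithBot ℕ∞) ≤ Order.krullDim (PrimeSpectrum R) from
    hdim.ge)
  have hp : ∀ p : PrimeSpectrum R, (S.B.Pl p.asIdeal).IsPrime := fun p => by
    haveI := p.isPrime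
    exact Ideal.IsPrime.comap _
  have hle : ∀ p : PrimeSpectrum R, S.B.Pl p.asIdeal ≤ S.B.Pl (maximalIdeal R) := fun p =>
    Ideal.comap_mono (le_maximalIdeal p.isPrime.ne_top)
  let p0 := l ⟨0, by omega⟩
  let p1 := l ⟨1, by omega⟩
  let p2 := l ⟨2, by omega⟩
  have h01 : p0 < p1 := l.strictMono (Fin.mk_lt_mk.2 zero_lt_one)
  have h12 : p1 < p2 := l.strictMono (Fin.mk_lt_mk.2 one_lt_two)
  haveI := hp p0
  haveI := hp p1
  haveI := hp p2
  have h1 : ((2 : ℕ) : ℕ∞) ≤ (S.B.Pl p0.asIdeal).height := by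
    refine S.rsl2.height_le (fun f hf => ?_) (hle _)
    rw [S.B.mem_Pl, (S.of_b hf).1]
    exact zero_mem _
  have h2 := Ideal.height_add_one_le_of_lt_of_isPrime (S.B.Pl_lt Fb_zero (show p0.asIdeal < p1.asIdeal from h01))
  have h3 := Ideal.height_add_one_le_of_lt_of_isPrime (S.B.Pl_lt Fb_zero (show p1.asIdeal < p2.asIdeal from h12))
  calc (4 : ℕ∞) = ((2 : ℕ) : ℕ∞) + 1 + 1 := by norm_num
    _ ≤ (S.B.Pl p0.asIdeal).height + 1 + 1 := by gcongr
    _ ≤ (S.B.Pl p1.asIdeal).height + 1 := by gcongr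
    _ ≤ (S.B.Pl p2.asIdeal).height := h3
    _ ≤ _ := Ideal.height_mono (hle _)

/-- An element of `M z`, for a homogeneous `z` of degree `(r, s)`, lies in `𝔞` as soon as its homogeneous
components do. -/
lemma mul_mem_of (S : Sys I J a1 a2 b1 b2 co α β α2 β2 γ) {r s : ℕ} {x : R} {z : A} (hz : Mono co z r s x)
    {𝔞 : Ideal A} (hx : ∀ y ∈ maximalIdeal R, ∃ g ∈ 𝔞, Mono co g r s (y * x))
    (h : ∀ i j, 0 < i + j → ∀ y ∈ Fb I J (i + r) (j + s), ∃ g ∈ 𝔞, Mono co g (i + r) (j + s) y) :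
    ∀ w ∈ S.B.Pl (maximalIdeal R), w * z ∈ 𝔞 := by
  intro w hw
  rw [mul_comm]
  refine S.B.mem_of fun i j => ?_
  by_cases hij : i < r ∨ j < s
  · exact S.ex_zero (S.B.mul0 hz w i j hij) _
  · obtain ⟨i', rfl⟩ := Nat.exists_eq_add_of_le' (not_lt.1 (fun h => hij (Or.inl h)))
    obtain ⟨j', rfl⟩ := Nat.exists_eq_add_of_le' (not_lt.1 (fun h => hij (Or.inr h)))
    by_cases h0 : 0 < i' + j'
    · exact h i' j' h0 _ (S.B.mem _ _ _)
    · obtain ⟨rfl, rfl⟩ : i' = 0 ∧ j' = 0 := by omega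
      rw [S.B.mul hz w 0 0, mul_comm]
      simpa only [Nat.zero_add] using hx _ (S.B.mem_Pl.1 hw)

/-- A failing joint reduction equality of largest total degree yields an element whose class modulo
`(α, β)` is killed by `M`; but `A/(α, β)` has positive depth at `M`, as `M` has height at least four. -/
lemma joint_of_CM (S : Sys I J a1 a2 b1 b2 co α β α2 β2 γ) (hdim : ringKrullDim R = 2)
    [hM : (S.B.Pl (maximalIdeal R)).IsPrime] [IsNoetherianRing A]
    (hCM : IsCMLocalRing (Localization.AtPrime (S.B.Pl (maximalIdeal R)))) {N : ℕ}
    (hN : ∀ r s, N ≤ r ∨ N ≤ s →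
      Fb I J (r + 1) (s + 1) = Ideal.span {a1} * Fb I J r (s + 1) ⊔ Ideal.span {b1} * Fb I J (r + 1) s) :
    ∀ r s, Fb I J (r + 1) (s + 1) = Ideal.span {a1} * Fb I J r (s + 1) ⊔ Ideal.span {b1} * Fb I J (r + 1) s := by
  suffices h : ∀ k r s, 2 * N ≤ r + s + k →
      Fb I J (r + 1) (s + 1) = Ideal.span {a1} * Fb I J r (s + 1) ⊔ Ideal.span {b1} * Fb I J (r + 1) s from
    fun r s => h (2 * N) r s (by omega)
  intro k
  induction k with
  | zero => exact fun r s hrs => hN r s (by omega)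
  | succ k ih =>
    intro r s hrs
    refine le_antisymm ?_ (joint_le S.h.ha1 S.h.hb1 r s)
    by_contra hne
    obtain ⟨x, hx, hxG, hs⟩ := exists_socle (joint_MP S.h.r_ab S.h.MPab (S.h.MPF _ _) (S.h.MPF _ _)) hne
    obtain ⟨z, hz⟩ := S.B.ex _ _ x hx
    refine not_ass_of_isCM_loc hCM S.rsl2 (lt_of_lt_of_le (by norm_num) (S.four_le_height hdim))
      (isAss_of_max S.Pl_max (z := z) ?_ ?_)
    · intro hzb
      have := (S.of_b hzb).2.2 r s
      rw [hz.self] at this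
      exact hxG this
    · refine S.mul_mem_of hz (fun y hy => S.ex_G (hs y hy)) fun i j hij y hy => ?_
      exact S.ex_G (r := i + r) (s := j + s) (ih (i + r) (j + s) (by omega) ▸ hy)

/-- The analogue of `joint_of_CM` on the axis, modulo the regular sequence `α, β, y`. -/
lemma row_of_CM (S : Sys I J a1 a2 b1 b2 co α β α2 β2 γ) (hdim : ringKrullDim R = 2)
    [hM : (S.B.Pl (maximalIdeal R)).IsPrime] [IsNoetherianRing A]
    (hCM : IsCMLocalRing (Localization.AtPrime (S.B.Pl (maximalIdeal R))))
    (h11 : ∀ r s, Fb I J (r + 1) (s + 1) = Ideal.span {a1} * Fb I J r (s + 1) ⊔ Ideal.span {b1} * Fb I J (r + 1) s)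
    {N : ℕ} (hN : ∀ r, N ≤ r → Fb I J (r + 2) 0 = Ideal.span {a1, a2} * Fb I J (r + 1) 0) :
    ∀ r, Fb I J (r + 2) 0 = Ideal.span {a1, a2} * Fb I J (r + 1) 0 := by
  suffices h : ∀ k r, N ≤ r + k → Fb I J (r + 2) 0 = Ideal.span {a1, a2} * Fb I J (r + 1) 0 from
    fun r => h N r (by omega)
  intro k
  induction k with
  | zero => exact fun r hr => hN r (by omega)
  | succ k ih =>
    intro r hr
    refine le_antisymm ?_ (S.h.row_le (r + 1) 0)
    by_contra hne
    obtain ⟨x, hx, hxG, hs⟩ := exists_socle (S.h.MPaa.mul (S.h.MPF _ _)) hne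
    obtain ⟨z, hz⟩ := S.B.ex _ _ x hx
    refine not_ass_of_isCM_loc hCM (S.rsl3 h11) (lt_of_lt_of_le (by norm_num) (S.four_le_height hdim))
      (isAss_of_max S.Pl_max (z := z) ?_ ?_)
    · intro hzc
      obtain ⟨b, hb, v, hv, e⟩ := Submodule.mem_sup.1 hzc
      obtain ⟨w, rfl⟩ := Ideal.mem_span_singleton.1 hv
      obtain ⟨x', hx', e'⟩ := (S.of_b hb).2.1 (r + 1)
      have h1 := hz.self
      have hy : co (r + 2) 0 ((α2 + β2 - γ) * w) = a2 * co (r + 1) 0 w - a1 * b1 * co (r + 2) 0 w :=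
        S.co_y w (r + 1)
      rw [← e, map_add, hy, show co (r + 2) 0 b = a1 * x' from e'] at h1
      refine hxG (h1 ▸ ?_)
      have ha1 : a1 ∈ Ideal.span {a1, a2} := Ideal.subset_span (Or.inl rfl)
      have ha2 : a2 ∈ Ideal.span {a1, a2} := Ideal.subset_span (Or.inr rfl)
      have hw : b1 * co (r + 2) 0 w ∈ Fb I J (r + 1) 0 := by
        refine S.h.cancel_a1 (Ideal.mul_mem_left _ _ (Ideal.mul_mem_left _ _ ?_))
        exact S.B.mem (r + 2) 0 w
      rw [mul_assoc a1 b1]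
      exact add_mem (Ideal.mul_mem_mul ha1 hx') (sub_mem (Ideal.mul_mem_mul ha2 (S.B.mem _ _ _))
        (Ideal.mul_mem_mul ha1 hw))
    · refine S.mul_mem_of hz (fun y hy => S.ex_K h11 (hs y hy)) fun i j hij y hy => ?_
      rcases j with _ | j
      · have hy' : y ∈ Fb I J ((i + r) + 2) 0 := hy
        rw [ih (i + r) (by omega)] at hy'
        exact S.ex_K h11 hy'
      · have hy' : y ∈ Fb I J ((i + r + 1) + 1) (j + 1) := hy
        rw [h11] at hy'
        obtain ⟨g, hg, hm⟩ := S.ex_G hy'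
        exact ⟨g, Submodule.mem_sup_left hg, hm⟩

end Sys

variable {a1 a2 b1 b2 : R} {f20 f11 f02 f10 f01 f00 : ℤ}

lemma f00_of_BG [IsNoetherianRing A] (h : Cpl I J a1 a2 b1 b2) (hur : AnalyticallyUnramified R)
    (hdim : ringKrullDim R = 2) (hP : HP I J f20 f11 f02 f10 f01 f00)
    {co : ℕ → ℕ → A →+ R} (B : BG (Fb I J) co) (hCM : IsCMRing A) : f00 = 0 := by
  obtain ⟨α, β, α2, β2, γ, S⟩ := exists_Sys h B
  obtain ⟨N, hN⟩ := h.joint_ev hur hP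
  obtain ⟨N1, hN1⟩ := h.row_ev hur hP
  obtain ⟨N2, hN2⟩ := h.col_ev hur hP
  haveI := S.Pl_max.isPrime
  haveI := S.swap.Pl_max.isPrime
  have h11 := S.joint_of_CM hdim (hCM _ inferInstance) hN
  have h20 := S.row_of_CM hdim (hCM _ inferInstance) h11 (N := N1) fun r hr => hN1 r 0 hr
  have h02 := S.swap.row_of_CM hdim (hCM _ inferInstance) (Sys.swap11 h11) (N := N2) fun s hs => by
    rw [Fb_swap (I := I) (J := J) 0 (s + 2), Fb_swap (I := I) (J := J) 0 (s + 1), Ideal.span_pair_comm]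
    exact hN2 0 s hs
  refine h.f00_eq_zero hur hP h11 h20 fun s => ?_
  have := h02 s
  rwa [Fb_swap (I := I) (J := J) 0 (s + 2), Fb_swap (I := I) (J := J) 0 (s + 1), Ideal.span_pair_comm] at this

lemma Cpl.f00_of_isCMRing (h : Cpl I J a1 a2 b1 b2) (hur : AnalyticallyUnramified R)
    (hdim : ringKrullDim R = 2) (hP : HP I J f20 f11 f02 f10 f01 f00) (hCM : IsCMRing (reesBar2 I J)) :
    f00 = 0 := by
  obtain ⟨c, hc, hc'⟩ := h.F_le_ev hur hP
  haveI := reesBar2_noeth hc hc'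
  exact f00_of_BG h hur hdim hP (rees_BG I J) hCM

end E

/-! ### The equivalences -/

section F
open IsLocalRing

variable {R : Type*} [CommRing R] [IsLocalRing R] [IsNoetherianRing R] {I J : Ideal R}

/-- The Bhattacharya polynomial bounds the growth of `λ(R/(IJ)^n)`. -/
lemma Gr.of_poly {e20 e11 e02 e10 e01 e00 : ℤ} (hB : ∃ N : ℕ, ∀ r s : ℕ, N ≤ r → N ≤ s →
      (cl (I ^ r * J ^ s) : ℤ) = P2 e20 e11 e02 e10 e01 e00 r s) : Gr I J := by
  obtain ⟨N, hN⟩ := hB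
  refine ⟨e20.natAbs + e11.natAbs + e02.natAbs + e10.natAbs + e01.natAbs + e00.natAbs, N, fun n hn => ?_⟩
  rw [mul_pow]
  have h1 := hN n n hn hn
  have h2 := two_mul_choose n
  have hb : ∀ e x : ℤ, 0 ≤ x → x ≤ (n + 1) ^ 2 → e * x ≤ |e| * (n + 1) ^ 2 ∧ -(e * x) ≤ |e| * (n + 1) ^ 2 := by
    intro e x hx hx'
    have h3 : |e * x| ≤ |e| * (n + 1) ^ 2 := by
      rw [abs_mul, abs_of_nonneg hx]
      exact mul_le_mul_of_nonneg_left hx' (abs_nonneg e)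
    exact ⟨(le_abs_self _).trans h3, (neg_le_abs _).trans h3⟩
  have hn0 : (0 : ℤ) ≤ n := by positivity
  have hc0 : (0 : ℤ) ≤ ((n + 1).choose 2 : ℕ) := by positivity
  have hc : (((n + 1).choose 2 : ℕ) : ℤ) ≤ (n + 1) ^ 2 := by nlinarith
  have hnn : (n : ℤ) ≤ (n + 1) ^ 2 := by nlinarith
  have hnn' : (n : ℤ) * n ≤ (n + 1) ^ 2 := by nlinarith
  have h11 : (1 : ℤ) ≤ (n + 1) ^ 2 := by nlinarith
  have i1 := (hb e20 _ hc0 hc).1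
  have i2 := (hb e11 _ (mul_nonneg hn0 hn0) hnn').1
  have i3 := (hb e02 _ hc0 hc).1
  have i4 := (hb e10 _ hn0 hnn).2
  have i5 := (hb e01 _ hn0 hnn).2
  have i6 := (hb e00 1 zero_le_one h11).1
  zify
  rw [h1, P2]
  linarith

/-- On the diagonal the normal Hilbert polynomial of `(I, J)` is that of `IJ`. -/
lemma HP.e2_eq {f20 f11 f02 f10 f01 f00 e0 e1 e2 : ℤ} (hP : HP I J f20 f11 f02 f10 f01 f00)
    (h : ∃ N : ℕ, ∀ n : ℕ, N ≤ n →
      (cl (Fb I J n n) : ℤ) = e0 * ((n + 1).choose 2 : ℕ) - e1 * n + e2) : e2 = f00 := by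
  obtain ⟨N, hN⟩ := hP
  obtain ⟨N', hN'⟩ := h
  refine (poly1_eq (a := e0) (b := e1) (a' := f20 + 2 * f11 + f02) (b' := f10 + f01 + f11) (N := max N N')
    fun n hn => ?_).2.2
  have h1 := hN n n (le_of_max_le_left hn) (le_of_max_le_left hn)
  rw [hN' n (le_of_max_le_right hn), P2] at h1
  linear_combination h1 - f11 * two_mul_choose n

end F

/-- Theorem 5.13.  Let `(R,𝔪)` be an analytically unramified
Cohen-Macaulay local ring of dimension `2` with infinite residue field and `I, J`
`𝔪`-primary ideals.  The following are equivalent: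
(1) `ē₂(IJ) = 0`;
(2) the normal joint reduction number of `I` and `J` is zero with respect to every good
joint reduction, and `r̄(I) ≤ 1`, `r̄(J) ≤ 1`;
(3) `\overline{𝓡}(I,J)` is Cohen-Macaulay.
In this case `P̄_{I,J}(r,s) = λ(R/\overline{I^r J^s})` for all `r, s ≥ 0` and
`P̄_{I,J}(x,y) = P̄_I(x) + e(I|J) x y + P̄_J(y)`. -/
theorem e2IJ_eq_zero_tfae
    {R : Type*} [CommRing R] [IsLocalRing R] [IsNoetherianRing R]
    (hur : AnalyticallyUnramified R) (hCM : IsCMLocalRing R)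
    (hdim : ringKrullDim R = 2) (hres : Infinite (IsLocalRing.ResidueField R))
    (I J : Ideal R) (hI : IsMPrimary I) (hJ : IsMPrimary J)
    -- the normal Hilbert function of the pair `(I,J)`: `L r s = λ(R/\overline{I^r J^s})`
    (L : ℤ → ℤ → ℕ)
    (hL : ∀ r s : ℤ, moduleLength R (R ⧸ IJbar I J r s) = (L r s : WithBot ℕ∞))
    -- the normal Hilbert coefficients of `I`, of `J` and of `IJ`
    (e0I e1I e2I e0J e1J e2J e0IJ e1IJ e2IJ : ℤ)
    (hPI : ∃ N : ℕ, ∀ n : ℕ, N ≤ n →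
      (L n 0 : ℤ) = e0I * ((n + 1).choose 2 : ℕ) - e1I * n + e2I)
    (hPJ : ∃ N : ℕ, ∀ n : ℕ, N ≤ n →
      (L 0 n : ℤ) = e0J * ((n + 1).choose 2 : ℕ) - e1J * n + e2J)
    (hPIJ : ∃ N : ℕ, ∀ n : ℕ, N ≤ n →
      (L n n : ℤ) = e0IJ * ((n + 1).choose 2 : ℕ) - e1IJ * n + e2IJ)
    -- the Bhattacharya function and the mixed multiplicity `e(I|J) = e₁₁`
    (LB : ℕ → ℕ → ℕ)
    (hLB : ∀ r s : ℕ, moduleLength R (R ⧸ (I ^ r * J ^ s)) = (LB r s : WithBot ℕ∞))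
    (e20 e11 e02 e10 e01 e00 : ℤ)
    (hB : ∃ N : ℕ, ∀ r s : ℕ, N ≤ r → N ≤ s →
      (LB r s : ℤ) = e20 * ((r + 1).choose 2 : ℕ) + e11 * (r * s)
        + e02 * ((s + 1).choose 2 : ℕ) - e10 * r - e01 * s + e00)
    -- the normal Hilbert polynomial `P̄_{I,J}` of the pair `(I,J)`
    (f20 f11 f02 f10 f01 f00 : ℤ)
    (hPpair : ∃ N : ℕ, ∀ r s : ℕ, N ≤ r → N ≤ s →
      (L r s : ℤ) = f20 * ((r + 1).choose 2 : ℕ) + f11 * (r * s)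
        + f02 * ((s + 1).choose 2 : ℕ) - f10 * r - f01 * s + f00) :
    ((e2IJ = 0 ↔
      ((∀ a b : R, IsGoodJointReduction I J a b →
          ∀ r s : ℤ, 1 ≤ r → 1 ≤ s →
            IJbar I J r s =
              Ideal.span {a} * IJbar I J (r - 1) s ⊔
                Ideal.span {b} * IJbar I J r (s - 1)) ∧
        NormalReductionNumberLE I 1 ∧ NormalReductionNumberLE J 1)) ∧
      (((∀ a b : R, IsGoodJointReduction I J a b →
          ∀ r s : ℤ, 1 ≤ r → 1 ≤ s →
            IJbar I J r s =
              Ideal.span {a} * IJbar I J (r - 1) s ⊔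
                Ideal.span {b} * IJbar I J r (s - 1)) ∧
        NormalReductionNumberLE I 1 ∧ NormalReductionNumberLE J 1) ↔
        IsCMRing ↥(reesBar2 I J))) ∧
    (e2IJ = 0 →
      (∀ r s : ℕ,
        (L r s : ℤ) = f20 * ((r + 1).choose 2 : ℕ) + f11 * (r * s)
          + f02 * ((s + 1).choose 2 : ℕ) - f10 * r - f01 * s + f00) ∧
      (∀ x y : ℕ,
        f20 * ((x + 1).choose 2 : ℕ) + f11 * (x * y)
            + f02 * ((y + 1).choose 2 : ℕ) - f10 * x - f01 * y + f00 =
          (e0I * ((x + 1).choose 2 : ℕ) - e1I * x + e2I) + e11 * (x * y) +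
            (e0J * ((y + 1).choose 2 : ℕ) - e1J * y + e2J))) := by
  have hcl : ∀ r s : ℕ, cl (Fb I J r s) = L r s := fun r s => cl_eq_of_moduleLength (hL r s)
  have hP : HP I J f20 f11 f02 f10 f01 f00 := by
    obtain ⟨N, hN⟩ := hPpair
    exact ⟨N, fun r s hr hs => by rw [hcl]; exact hN r s hr hs⟩
  have hI1 : HP1 I e0I e1I e2I := by
    obtain ⟨N, hN⟩ := hPI
    exact ⟨N, fun n hn => by rw [← Fb_n0 (J := J), hcl]; exact hN n hn⟩
  have hJ1 : HP1 J e0J e1J e2J := by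
    obtain ⟨N, hN⟩ := hPJ
    exact ⟨N, fun n hn => by rw [← Fb_0n (I := I), hcl]; exact hN n hn⟩
  have hB1 : ∃ N : ℕ, ∀ r s : ℕ, N ≤ r → N ≤ s →
      (cl (I ^ r * J ^ s) : ℤ) = P2 e20 e11 e02 e10 e01 e00 r s := by
    obtain ⟨N, hN⟩ := hB
    exact ⟨N, fun r s hr hs => by rw [cl_eq_of_moduleLength (hLB r s)]; exact hN r s hr hs⟩
  have hgr : Gr I J := Gr.of_poly hB1
  have he2 : e2IJ = f00 := by
    obtain ⟨N, hN⟩ := hPIJ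
    exact hP.e2_eq ⟨N, fun n hn => by rw [hcl]; exact hN n hn⟩
  subst he2
  obtain ⟨a1, a2, b1, b2, h⟩ := exists_Cpl hCM hdim hres hI.MP hJ.MP hI.le hJ.le hgr
  have h12 : e2IJ = 0 → JR0 I J ∧ NormalReductionNumberLE I 1 ∧ NormalReductionNumberLE J 1 := fun h0 =>
    ⟨h.jr0 hur hP h0, h.normalRed1 hur hP h0, h.swap.normalRed1 hur hP.swap h0⟩
  have h21 : JR0 I J ∧ NormalReductionNumberLE I 1 ∧ NormalReductionNumberLE J 1 → e2IJ = 0 :=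
    fun ⟨hj, hnI, hnJ⟩ =>
      f00_of_two hur hCM hdim hres hI.MP hJ.MP hI.le hJ.le hgr hP hI1 hJ1 hj hnI hnJ
  refine ⟨⟨⟨h12, h21⟩, fun h2 => h.isCMRing hur hP (h21 h2), fun h3 => h12 (h.f00_of_isCMRing hur hdim hP h3)⟩,
    fun h0 => ⟨fun r s => ?_, fun x y => ?_⟩⟩
  · have := h.H_eq_zero hur hP h0 r s
    rw [hh, hcl, P2] at this
    linarith
  · obtain ⟨rfl, rfl, rfl⟩ := h.first_coeffs hur hP h0 hI1
    obtain ⟨rfl, rfl, h3⟩ := h.swap.first_coeffs hur hP.swap h0 hJ1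
    obtain rfl := h.f11_eq hur hP h0 hB1
    rw [← h3, h0]
    ring
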